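/- For each dimension d ≥ 1 and each ρ > 0 there exists a constant c > 0 such that for every ρ-strictly admissible ordered triple E = (E₁,E₂,E₃) of Lebesgue measurable subsets of ℝ^d with finite measures, one has ∫_{E₃} (1_{E₁} * 1_{E₂}) ≤ ∫_{E₃⋆} (1_{E₁⋆} * 1_{E₂⋆}) − c · Distance(E, O(E⋆))². -/

import Mathlib

/-!
# A sharpened Riesz–Sobolev inequality

Replacing `E₃` by `-E₃` turns the left side into the symmetric trilinear form
`T(A) = ∬ 1_{A₀}(x) 1_{A₁}(y) 1_{A₂}(-x-y)`, which is invariant under a common measure-preserving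
linear map and under translations summing to zero. Let `dst` be the distance from a triple to the
orbit of the balls under these symmetries. After a dilation, which makes the radii range over a
compact set of strictly admissible triples (`Adm`), the claim is `global_stability`: the deficit
`T(balls) - T(E)` is at least a constant times `dst(E)²`.

*Riesz's inequality.* For sets with finitely many interval pieces in each fibre, the pieces slide to
the origin and merge on collision (`GoodPath`, `flow_cset`); `T` does not decrease along this path,
which ends at the Steiner symmetrization. Some direction of symmetrization always brings a set
closer to its ball (`exists_decrease`), hence `riesz_sobolev`.

*On the line* (`oneD_local`), `1_A - 1_I` is split into parts near the two endpoints of the interval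
`I` and a far part. The first variation of `T` gains the squares of the masses at the endpoints and
a multiple of the far mass, which beats the second variation.

*Near the balls, in any dimension* (`local_stability`).
* Either the deficit dominates the squared distance, or `E_j Δ B_j` lives close to the spheres
  (`nc_or`).
* In the second case some direction of symmetrization brings `E` closer to the balls by a fixed
  proportion of the distance (`contraction`).
* In that direction, the estimate on the line, applied to the fibres over `x₀ + x₁ + x₂ = 0`, shows
  that the fibres are nearly intervals with centres `f_j(x_j)` nearly satisfying
  `f₀(x₀) + f₁(x₁) + f₂(x₂) = 0`. Such functions are nearly affine with a common linear part
  (`patch` near the origin, `prop_line` further out, together `affine_approx`). A shear, which is a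
  symmetry of `T`, then moves `E` almost as close to the balls as its symmetrization
  (`shear_approx`). For a triple in nearly optimal position this is impossible, unless the deficit
  is comparable to `dst²`.

*Far from the balls.* By the local result, triples at distance in `[η/2, η]` have deficit at least
`2c₀`. If `E` had distance above `η` and deficit below `c₀`, the same would hold for all its iterated
symmetrizations: the path to a symmetrization cannot cross that zone (`no_jump`). But suitable
iterated symmetrizations converge to the balls.
-/

open MeasureTheory Set

noncomputable section

/-- `ℝ^d` with Lebesgue measure. -/
abbrev Vec (d : ℕ) := EuclideanSpace ℝ (Fin d)

/-- Indicator function of a set, with value `1 : ℝ`. -/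
def ind {d : ℕ} (E : Set (Vec d)) : Vec d → ℝ := E.indicator 1

/-- Convolution of two functions on `ℝ^d`. -/
def conv {d : ℕ} (f g : Vec d → ℝ) (x : Vec d) : ℝ := ∫ y, f y * g (x - y)

/-- `E⋆`: the closed ball centered at the origin with the same measure as `E`. -/
def ballStar {d : ℕ} (E : Set (Vec d)) : Set (Vec d) :=
  Metric.closedBall 0
    (((volume E).toReal / (volume (Metric.closedBall (0 : Vec d) 1)).toReal) ^ ((1 : ℝ) / d))

/-- A triple of positive reals is `ρ`-strictly admissible. -/
def RhoStrictlyAdmissible (ρ : ℝ) (r : Fin 3 → ℝ) : Prop :=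
  (∀ j, 0 < r j) ∧
  (∀ i j k : Fin 3, ({i, j, k} : Set (Fin 3)) = Set.univ → r k ≤ (1 - ρ) * (r i + r j)) ∧
  (∀ i j, ρ * r i ≤ r j)

/-- `Distance(E, O(F))`: infimum over measure-preserving linear maps `ψ` and translations
`v` with `v₃ = v₁ + v₂` of the maximal measure of the symmetric differences
`E_j Δ (ψ(F_j) + v_j)`. -/
def tripleDistance {d : ℕ} (E F : Fin 3 → Set (Vec d)) : ℝ :=
  sInf { r : ℝ | ∃ (ψ : Vec d ≃ₗ[ℝ] Vec d) (v : Fin 3 → Vec d),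
    v 2 = v 0 + v 1 ∧ MeasurePreserving (⇑ψ) volume volume ∧
    r = max (volume (symmDiff (E 0) ((fun y => ψ y + v 0) '' F 0))).toReal
        (max (volume (symmDiff (E 1) ((fun y => ψ y + v 1) '' F 1))).toReal
             (volume (symmDiff (E 2) ((fun y => ψ y + v 2) '' F 2))).toReal) }

namespace RS
open Metric ENNReal Measure
set_option linter.unusedSectionVars false

/-! ### The trilinear form -/

/-- Triples of sets. -/
abbrev Tri (α : Type*) := Fin 3 → Set α

/-- The closed ball of radius `s` about the origin. -/
abbrev cb (n : ℕ) (s : ℝ) : Set (Vec n) := closedBall 0 s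

instance instHaarY (n : ℕ) : (volume : Measure (Vec n × ℝ)).IsAddHaarMeasure := by
  rw [volume_eq_prod]; infer_instance
instance instLeftY (n : ℕ) : (volume : Measure (Vec n × ℝ)).IsAddLeftInvariant := by
  infer_instance
instance instNegY (n : ℕ) : (volume : Measure (Vec n × ℝ)).IsNegInvariant := by
  infer_instance

/-- Indicator function of a set, as a real function. -/
def one {α : Type*} (A : Set α) : α → ℝ := A.indicator (fun _ => 1)

lemma one_apply {α : Type*} (A : Set α) (x : α) [Decidable (x ∈ A)] :
    one A x = if x ∈ A then 1 else 0 := by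
  classical
  unfold one; rw [indicator_apply]

lemma one_mem {α : Type*} {A : Set α} {x : α} (h : x ∈ A) : one A x = 1 := by
  unfold one; simp [h]

lemma one_notMem {α : Type*} {A : Set α} {x : α} (h : x ∉ A) : one A x = 0 := by
  unfold one; simp [h]

lemma one_nonneg {α : Type*} (A : Set α) (x : α) : 0 ≤ one A x := by
  classical
  rw [one_apply]; split_ifs <;> norm_num

lemma one_le_one {α : Type*} (A : Set α) (x : α) : one A x ≤ 1 := by
  classical
  rw [one_apply]; split_ifs <;> norm_num

lemma abs_one_sub_one {α : Type*} (A B : Set α) (x : α) :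
    |one A x - one B x| = one (symmDiff A B) x := by
  classical
  simp only [one_apply, mem_symmDiff]
  grind

/-- Bounded integrable measurable functions, the class on which the trilinear form is used. -/
structure Nice {α : Type*} [MeasureSpace α] (f : α → ℝ) : Prop where
  meas : Measurable f
  int : Integrable f
  bdd : ∀ x, |f x| ≤ 1

section basic
variable {α : Type*} [MeasureSpace α]

/-- Symmetric-difference distance of two sets. -/
def sd (A B : Set α) : ℝ := volume.real (symmDiff A B)

lemma measurable_one {A : Set α} (hA : MeasurableSet A) : Measurable (one A) :=
  measurable_const.indicator hA

lemma integrable_one {A : Set α} (hA : MeasurableSet A) (h : volume A ≠ ⊤) :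
    Integrable (one A) := by
  unfold one
  exact (integrable_indicator_iff hA).2 (integrableOn_const h)

lemma nice_one {A : Set α} (hA : MeasurableSet A) (h : volume A ≠ ⊤) : Nice (one A) :=
  ⟨measurable_one hA, integrable_one hA h, fun x => by
    rw [abs_of_nonneg (one_nonneg A x)]; exact one_le_one A x⟩

lemma nice_sub_one {A B : Set α} (hA : MeasurableSet A) (h : volume A ≠ ⊤)
    (hB : MeasurableSet B) (h' : volume B ≠ ⊤) : Nice (one A - one B) :=
  ⟨(measurable_one hA).sub (measurable_one hB), (integrable_one hA h).sub (integrable_one hB h'),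
    fun x => by rw [Pi.sub_apply, abs_one_sub_one]; exact one_le_one _ x⟩

lemma integral_one {A : Set α} (hA : MeasurableSet A) : ∫ x, one A x = volume.real A := by
  unfold one; rw [integral_indicator hA]; simp

lemma sd_eq {A B : Set α} (hA : MeasurableSet A) (hB : MeasurableSet B) :
    ∫ x, |one A x - one B x| = sd A B := by
  simp_rw [abs_one_sub_one]; exact integral_one (hA.symmDiff hB)

lemma sd_nonneg (A B : Set α) : 0 ≤ sd A B := measureReal_nonneg

lemma sd_comm (A B : Set α) : sd A B = sd B A := by unfold sd; rw [symmDiff_comm]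

lemma sd_self (A : Set α) : sd A A = 0 := by unfold sd; simp

lemma symmDiff_ne_top {A B : Set α} (hA : volume A ≠ ⊤) (hB : volume B ≠ ⊤) :
    volume (symmDiff A B) ≠ ⊤ :=
  ne_top_of_le_ne_top (measure_union_ne_top hA hB) (measure_mono (symmDiff_le_sup))

lemma sd_triangle {A B C : Set α} (hA : volume A ≠ ⊤) (hB : volume B ≠ ⊤) (hC : volume C ≠ ⊤) :
    sd A C ≤ sd A B + sd B C := by
  unfold sd
  refine (measureReal_mono (symmDiff_triangle A B C) ?_).trans (measureReal_union_le _ _)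
  exact measure_union_ne_top (symmDiff_ne_top hA hB) (symmDiff_ne_top hB hC)

lemma abs_vol_sub_le {A B : Set α} (hmA : MeasurableSet A) (hmB : MeasurableSet B)
    (hA : volume A ≠ ⊤) (hB : volume B ≠ ⊤) :
    |volume.real A - volume.real B| ≤ sd A B := by
  rw [← integral_one hmA, ← integral_one hmB, ← sd_eq hmA hmB,
    ← integral_sub (integrable_one hmA hA) (integrable_one hmB hB)]
  exact abs_integral_le_integral_abs

end basic

section tri
variable {G : Type*} [AddCommGroup G] [MeasureSpace G]

/-- The trilinear form `∬ f(x) g(y) h(-(x+y)) dx dy`. -/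
def tri (f g h : G → ℝ) : ℝ := ∫ p : G × G, f p.1 * g p.2 * h (-(p.1 + p.2))

/-- The trilinear form evaluated on a triple of sets. -/
def T (A : Tri G) : ℝ := tri (one (A 0)) (one (A 1)) (one (A 2))

variable [MeasurableAdd₂ G] [MeasurableNeg G] [SFinite (volume : Measure G)]

lemma tri_integrable {f g h : G → ℝ} (hf : Nice f) (hg : Nice g) (hh : Measurable h)
    {C : ℝ} (hb : ∀ x, |h x| ≤ C) :
    Integrable (fun p : G × G => f p.1 * g p.2 * h (-(p.1 + p.2))) := by
  have h1 : Integrable (fun p : G × G => f p.1 * g p.2) := hf.int.mul_prod hg.int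
  refine h1.mul_bdd (c := C) ?_ ?_
  · exact (hh.comp (measurable_fst.add measurable_snd).neg).aestronglyMeasurable
  · simp [*]

lemma tri_eq_iter {f g h : G → ℝ} (hf : Nice f) (hg : Nice g) (hh : Nice h) :
    tri f g h = ∫ x, f x * ∫ y, g y * h (-(x + y)) := by
  unfold tri
  rw [volume_eq_prod, integral_prod _ (tri_integrable hf hg hh.meas hh.bdd)]
  congr 1; ext x
  rw [← integral_const_mul]; simp [mul_assoc]

lemma tri_add0 {f f' g h : G → ℝ} (hf : Nice f) (hf' : Nice f') (hg : Nice g) (hh : Nice h) :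
    tri (f + f') g h = tri f g h + tri f' g h := by
  unfold tri
  rw [← integral_add (tri_integrable hf hg hh.meas hh.bdd) (tri_integrable hf' hg hh.meas hh.bdd)]
  congr 1; ext p; simp; ring

lemma abs_tri_le01 {f g h : G → ℝ} (hf : Nice f) (hg : Nice g) (hh : Nice h) :
    |tri f g h| ≤ (∫ x, |f x|) * ∫ x, |g x| := by
  unfold tri
  refine abs_integral_le_integral_abs.trans ?_
  rw [← integral_prod_mul (fun x => |f x|) (fun x => |g x|), ← volume_eq_prod]
  refine integral_mono (tri_integrable hf hg hh.meas hh.bdd).abs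
    (hf.int.abs.mul_prod hg.int.abs) fun p => ?_
  simp only [abs_mul]
  exact mul_le_of_le_one_right (by positivity) (hh.bdd _)

variable [(volume : Measure G).IsAddLeftInvariant]

lemma tri_swap01 (f g h : G → ℝ) : tri f g h = tri g f h := by
  unfold tri
  have := (measurePreserving_swap (μ := (volume : Measure G)) (ν := (volume : Measure G)))
  rw [volume_eq_prod, ← this.integral_comp MeasurableEquiv.prodComm.measurableEmbedding]
  congr 1; ext p; simp [add_comm, mul_comm]

variable [(volume : Measure G).IsNegInvariant]

lemma tri_swap12 (f g h : G → ℝ) : tri f g h = tri f h g := by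
  unfold tri
  have hm : MeasurePreserving (fun p : G × G => (p.1, -(p.1 + p.2)))
      ((volume : Measure G).prod volume) ((volume : Measure G).prod volume) := by
    refine MeasurePreserving.skew_product (g := fun x y => -(x + y)) (MeasurePreserving.id _)
      (measurable_fst.add measurable_snd).neg ?_
    refine .of_forall fun x => ?_
    exact ((measurePreserving_neg volume).comp (measurePreserving_add_left volume x)).map_eq
  let e : (G × G) ≃ᵐ (G × G) :=
    { toFun := fun p : G × G => (p.1, -(p.1 + p.2))
      invFun := fun p : G × G => (p.1, -(p.1 + p.2))
      left_inv := fun p => by simp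
      right_inv := fun p => by simp
      measurable_toFun := measurable_fst.prodMk (measurable_fst.add measurable_snd).neg
      measurable_invFun := measurable_fst.prodMk (measurable_fst.add measurable_snd).neg }
  rw [volume_eq_prod]
  refine (hm.integral_comp e.measurableEmbedding
    (fun p : G × G => f p.1 * g p.2 * h (-(p.1 + p.2)))).symm.trans ?_
  congr 1; ext p; simp; ring

lemma tri_add1 {f g g' h : G → ℝ} (hf : Nice f) (hg : Nice g) (hg' : Nice g') (hh : Nice h) :
    tri f (g + g') h = tri f g h + tri f g' h := by
  rw [tri_swap01, tri_add0 hg hg' hf hh, tri_swap01 g, tri_swap01 g']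

lemma tri_add2 {f g h h' : G → ℝ} (hf : Nice f) (hg : Nice g) (hh : Nice h) (hh' : Nice h') :
    tri f g (h + h') = tri f g h + tri f g h' := by
  rw [tri_swap12, tri_add1 hf hh hh' hg, tri_swap12 f h, tri_swap12 f h']

lemma abs_tri_le02 {f g h : G → ℝ} (hf : Nice f) (hg : Nice g) (hh : Nice h) :
    |tri f g h| ≤ (∫ x, |f x|) * ∫ x, |h x| := by
  rw [tri_swap12]; exact abs_tri_le01 hf hh hg

lemma abs_tri_le12 {f g h : G → ℝ} (hf : Nice f) (hg : Nice g) (hh : Nice h) :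
    |tri f g h| ≤ (∫ x, |g x|) * ∫ x, |h x| := by
  rw [tri_swap01]; exact abs_tri_le02 hg hf hh

/-- Triples of measurable sets of finite measure. -/
def Fm (A : Tri G) : Prop := ∀ j, MeasurableSet (A j) ∧ volume (A j) ≠ ⊤

lemma Fm.nice {A : Tri G} (h : Fm A) (j : Fin 3) : Nice (one (A j)) :=
  nice_one (h j).1 (h j).2

/-- Sum of the three symmetric-difference distances. -/
def D3 (A B : Tri G) : ℝ := ∑ j, sd (A j) (B j)

/-- Second-order expansion of the trilinear form around a triple of sets, as an identity. -/
lemma tri_expand {b f : Fin 3 → G → ℝ} (hb : ∀ j, Nice (b j)) (hf : ∀ j, Nice (f j))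
    (hs : ∀ j, Nice (b j + f j)) :
    tri (b 0 + f 0) (b 1 + f 1) (b 2 + f 2) = tri (b 0) (b 1) (b 2)
      + (tri (f 0) (b 1) (b 2) + tri (b 0) (f 1) (b 2) + tri (b 0) (b 1) (f 2))
      + (tri (f 0) (f 1) (b 2) + tri (f 0) (b 1) (f 2) + tri (b 0) (f 1) (f 2))
      + tri (f 0) (f 1) (f 2) := by
  rw [tri_add0 (hb 0) (hf 0) (hs 1) (hs 2), tri_add1 (hb 0) (hb 1) (hf 1) (hs 2),
    tri_add1 (hf 0) (hb 1) (hf 1) (hs 2), tri_add2 (hb 0) (hb 1) (hb 2) (hf 2),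
    tri_add2 (hb 0) (hf 1) (hb 2) (hf 2), tri_add2 (hf 0) (hb 1) (hb 2) (hf 2),
    tri_add2 (hf 0) (hf 1) (hb 2) (hf 2)]
  ring

/-- `T` is Lipschitz for the symmetric-difference distance on triples of bounded measure. -/
lemma T_lipschitz {A B : Tri G} (hA : Fm A) (hB : Fm B) {M : ℝ}
    (hMA : ∀ j, volume.real (A j) ≤ M) (hMB : ∀ j, volume.real (B j) ≤ M) :
    |T A - T B| ≤ M * D3 A B := by
  have hd : ∀ j, Nice (one (A j) - one (B j)) := fun j =>
    nice_sub_one (hA j).1 (hA j).2 (hB j).1 (hB j).2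
  have hsum : ∀ j, one (A j) = one (B j) + (one (A j) - one (B j)) := fun j => by simp
  have L : ∀ j, ∫ x, |(one (A j) - one (B j)) x| = sd (A j) (B j) := fun j => by
    rw [← sd_eq (hA j).1 (hB j).1]; rfl
  have L1 : ∀ (C : Tri G) (_ : Fm C) (j : Fin 3), ∫ x, |one (C j) x| = volume.real (C j) :=
    fun C hC j => by
      rw [← integral_one (hC j).1]; congr 1; ext x; rw [abs_of_nonneg (one_nonneg _ _)]
  have e : T A - T B = tri (one (A 0) - one (B 0)) (one (A 1)) (one (A 2))
      + tri (one (B 0)) (one (A 1) - one (B 1)) (one (A 2))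
      + tri (one (B 0)) (one (B 1)) (one (A 2) - one (B 2)) := by
    unfold T
    have e0 := tri_add0 (hB.nice 0) (hd 0) (hA.nice 1) (hA.nice 2)
    have e1 := tri_add1 (hB.nice 0) (hB.nice 1) (hd 1) (hA.nice 2)
    have e2 := tri_add2 (hB.nice 0) (hB.nice 1) (hB.nice 2) (hd 2)
    rw [← hsum] at e0 e1 e2
    linarith
  have b0 := abs_tri_le01 (hd 0) (hA.nice 1) (hA.nice 2)
  have b1 := abs_tri_le01 (hB.nice 0) (hd 1) (hA.nice 2)
  have b2 := abs_tri_le02 (hB.nice 0) (hB.nice 1) (hd 2)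
  rw [L, L1 A hA] at b0
  rw [L, L1 B hB] at b1 b2
  rw [e]
  refine (abs_add_three _ _ _).trans ?_
  have := mul_le_mul_of_nonneg_left (hMA 1) (sd_nonneg (A 0) (B 0))
  have := mul_le_mul_of_nonneg_right (hMB 0) (sd_nonneg (A 1) (B 1))
  have := mul_le_mul_of_nonneg_right (hMB 0) (sd_nonneg (A 2) (B 2))
  unfold D3; rw [Fin.sum_univ_three]
  nlinarith

end tri

/-! ### Fibres over the first factor -/

section fiber
variable {n : ℕ}

/-- Length of the fibre of `E` over `x`. -/
def len (E : Set (Vec n × ℝ)) (x : Vec n) : ℝ := volume.real (Prod.mk x ⁻¹' E)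

lemma len_nonneg (E : Set (Vec n × ℝ)) (x : Vec n) : 0 ≤ len E x := measureReal_nonneg

lemma measurable_len {E : Set (Vec n × ℝ)} (hE : MeasurableSet E) : Measurable (len E) :=
  (measurable_measure_prodMk_left hE).ennreal_toReal

lemma integrable_len {E : Set (Vec n × ℝ)} (hE : MeasurableSet E) (h : volume E ≠ ⊤) :
    Integrable (len E) := by
  rw [volume_eq_prod] at h
  exact integrable_measure_prodMk_left hE h

lemma ae_fiber_ne_top {E : Set (Vec n × ℝ)} (hE : MeasurableSet E) (h : volume E ≠ ⊤) :
    ∀ᵐ x : Vec n, volume (Prod.mk x ⁻¹' E) ≠ ⊤ := by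
  rw [volume_eq_prod] at h
  filter_upwards [ae_measure_lt_top hE h] with x hx using hx.ne

lemma integral_len {E : Set (Vec n × ℝ)} (hE : MeasurableSet E) (h : volume E ≠ ⊤) :
    ∫ x, len E x = volume.real E := by
  unfold len Measure.real
  have h2 := ae_fiber_ne_top hE h
  rw [integral_toReal (measurable_measure_prodMk_left hE).aemeasurable
    (h2.mono fun x hx => lt_top_iff_ne_top.2 hx), volume_eq_prod, prod_apply hE]

lemma len_symmDiff (E F : Set (Vec n × ℝ)) (x : Vec n) :
    len (symmDiff E F) x = sd (Prod.mk x ⁻¹' E) (Prod.mk x ⁻¹' F) := rfl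

lemma integrable_sd_fiber {E F : Set (Vec n × ℝ)} (hE : MeasurableSet E) (h : volume E ≠ ⊤)
    (hF : MeasurableSet F) (h' : volume F ≠ ⊤) :
    Integrable (fun x : Vec n => sd (Prod.mk x ⁻¹' E) (Prod.mk x ⁻¹' F)) :=
  integrable_len (hE.symmDiff hF) (symmDiff_ne_top h h')

lemma integral_sd_fiber {E F : Set (Vec n × ℝ)} (hE : MeasurableSet E) (h : volume E ≠ ⊤)
    (hF : MeasurableSet F) (h' : volume F ≠ ⊤) :
    ∫ x : Vec n, sd (Prod.mk x ⁻¹' E) (Prod.mk x ⁻¹' F) = sd E F :=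
  integral_len (hE.symmDiff hF) (symmDiff_ne_top h h')

lemma ae_abs_len_sub_le {E F : Set (Vec n × ℝ)} (hE : MeasurableSet E) (h : volume E ≠ ⊤)
    (hF : MeasurableSet F) (h' : volume F ≠ ⊤) :
    ∀ᵐ x : Vec n, |len E x - len F x| ≤ sd (Prod.mk x ⁻¹' E) (Prod.mk x ⁻¹' F) := by
  filter_upwards [ae_fiber_ne_top hE h, ae_fiber_ne_top hF h'] with x h1 h2
  exact abs_vol_sub_le (measurable_prodMk_left hE) (measurable_prodMk_left hF) h1 h2

/-- Steiner symmetrization in the last coordinate: each fibre is replaced by the centred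
half-open interval of the same length (by the empty set if the fibre has infinite measure). -/
def St (E : Set (Vec n × ℝ)) : Set (Vec n × ℝ) := {p | -(len E p.1 / 2) ≤ p.2 ∧ p.2 < len E p.1 / 2}

lemma fiber_St (E : Set (Vec n × ℝ)) (x : Vec n) :
    Prod.mk x ⁻¹' St E = Ico (-(len E x / 2)) (len E x / 2) := rfl

lemma measurableSet_St {E : Set (Vec n × ℝ)} (hE : MeasurableSet E) : MeasurableSet (St E) := by
  have h1 : Measurable fun p : Vec n × ℝ => len E p.1 / 2 :=
    ((measurable_len hE).comp measurable_fst).div_const 2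
  exact (measurableSet_le h1.neg measurable_snd).inter (measurableSet_lt measurable_snd h1)

lemma St_congr {E F : Set (Vec n × ℝ)} (h : ∀ x, len E x = len F x) : St E = St F := by
  unfold St; simp [h]

lemma volume_St {E : Set (Vec n × ℝ)} (hE : MeasurableSet E) (h : volume E ≠ ⊤) :
    volume (St E) = volume E := by
  rw [volume_eq_prod] at h ⊢
  rw [prod_apply hE, prod_apply (measurableSet_St hE)]
  refine lintegral_congr_ae ?_
  filter_upwards [ae_measure_lt_top hE h] with x hx
  rw [fiber_St, Real.volume_Ico]
  unfold len Measure.real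
  rw [neg_div', neg_div, sub_neg_eq_add, add_halves, ofReal_toReal hx.ne]

lemma volume_St_ne_top {E : Set (Vec n × ℝ)} (hE : MeasurableSet E) (h : volume E ≠ ⊤) :
    volume (St E) ≠ ⊤ := by rwa [volume_St hE h]

lemma sd_Ico {a b : ℝ} (ha : 0 ≤ a) (hb : 0 ≤ b) :
    sd (Ico (-(a / 2)) (a / 2)) (Ico (-(b / 2)) (b / 2)) = |a - b| := by
  wlog hab : a ≤ b generalizing a b
  · rw [sd_comm, abs_sub_comm]; exact this hb ha (le_of_not_ge hab)
  have hsub : Ico (-(a / 2)) (a / 2) ⊆ Ico (-(b / 2)) (b / 2) :=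
    Ico_subset_Ico (by linarith) (by linarith)
  unfold sd
  rw [symmDiff_of_le hsub, measureReal_sdiff hsub measurableSet_Ico (by simp [Real.volume_Ico])]
  · simp only [measureReal_def, Real.volume_Ico]
    rw [toReal_ofReal (by linarith), toReal_ofReal (by linarith),
      abs_of_nonpos (by linarith)]
    ring

lemma sd_St {E F : Set (Vec n × ℝ)} (hE : MeasurableSet E) (h : volume E ≠ ⊤)
    (hF : MeasurableSet F) (h' : volume F ≠ ⊤) :
    sd (St E) (St F) = ∫ x, |len E x - len F x| := by
  rw [← integral_sd_fiber (measurableSet_St hE) (volume_St_ne_top hE h) (measurableSet_St hF)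
    (volume_St_ne_top hF h')]
  congr 1; ext x
  rw [fiber_St, fiber_St, sd_Ico (len_nonneg _ _) (len_nonneg _ _)]

lemma sd_St_le {E F : Set (Vec n × ℝ)} (hE : MeasurableSet E) (h : volume E ≠ ⊤)
    (hF : MeasurableSet F) (h' : volume F ≠ ⊤) : sd (St E) (St F) ≤ sd E F := by
  rw [sd_St hE h hF h', ← integral_sd_fiber hE h hF h']
  exact integral_mono_ae ((integrable_len hE h).sub (integrable_len hF h')).abs
    (integrable_sd_fiber hE h hF h') (ae_abs_len_sub_le hE h hF h')

lemma mp_rearrange (n : ℕ) : MeasurePreserving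
    (fun q : (Vec n × ℝ) × (Vec n × ℝ) => ((q.1.1, q.2.1), (q.1.2, q.2.2)))
    volume volume := by
  have a1 := volume_preserving_prodAssoc (α₁ := Vec n) (β₁ := ℝ) (γ₁ := Vec n × ℝ)
  have a2 : MeasurePreserving (fun q : ℝ × (Vec n × ℝ) => (q.2.1, (q.1, q.2.2))) volume volume := by
    have b1 := (volume_preserving_prodAssoc (α₁ := ℝ) (β₁ := Vec n) (γ₁ := ℝ)).symm
    have b2 : MeasurePreserving (Prod.map (Prod.swap (α := ℝ) (β := Vec n)) (id : ℝ → ℝ))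
      volume volume := measurePreserving_swap.prod (MeasurePreserving.id volume)
    have b3 := volume_preserving_prodAssoc (α₁ := Vec n) (β₁ := ℝ) (γ₁ := ℝ)
    exact b3.comp (b2.comp b1)
  have a3 : MeasurePreserving (Prod.map (id : Vec n → Vec n)
      (fun q : ℝ × (Vec n × ℝ) => (q.2.1, (q.1, q.2.2)))) volume volume :=
    (MeasurePreserving.id volume).prod a2
  have a4 := (volume_preserving_prodAssoc (α₁ := Vec n) (β₁ := Vec n) (γ₁ := ℝ × ℝ)).symm
  exact a4.comp (a3.comp a1)

/-- The rearrangement `((x, s), (y, t)) ↦ ((x, y), (s, t))` as a measurable equivalence. -/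
def reEquiv (n : ℕ) : ((Vec n × ℝ) × (Vec n × ℝ)) ≃ᵐ ((Vec n × Vec n) × (ℝ × ℝ)) where
  toFun q := ((q.1.1, q.2.1), (q.1.2, q.2.2))
  invFun q := ((q.1.1, q.2.1), (q.1.2, q.2.2))
  left_inv _ := rfl
  right_inv _ := rfl
  measurable_toFun := (mp_rearrange n).measurable
  measurable_invFun := by
    change Measurable fun q : (Vec n × Vec n) × (ℝ × ℝ) => ((q.1.1, q.2.1), (q.1.2, q.2.2))
    fun_prop

lemma integrable_rearrange {f g h : Vec n × ℝ → ℝ} (hf : Nice f) (hg : Nice g) (hh : Nice h) :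
    Integrable (fun z : (Vec n × Vec n) × (ℝ × ℝ) =>
      f (z.1.1, z.2.1) * g (z.1.2, z.2.2) * h (-(z.1.1 + z.1.2), -(z.2.1 + z.2.2))) := by
  refine ((mp_rearrange n).integrable_comp_emb (reEquiv n).measurableEmbedding).1 ?_
  exact tri_integrable hf hg hh.meas hh.bdd

/-- Fubini: the trilinear form on the product is the integral of the one-dimensional forms of
the fibres. -/
lemma tri_fiber {f g h : Vec n × ℝ → ℝ} (hf : Nice f) (hg : Nice g) (hh : Nice h) :
    tri f g h = ∫ q : Vec n × Vec n, tri (fun s => f (q.1, s)) (fun s => g (q.2, s))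
      (fun s => h (-(q.1 + q.2), s)) := by
  have := integral_prod _ (integrable_rearrange hf hg hh)
  unfold tri
  rw [← volume_eq_prod] at this
  rw [← this, ← (mp_rearrange n).integral_comp (reEquiv n).measurableEmbedding]
  rfl

lemma integrable_tri_fiber {f g h : Vec n × ℝ → ℝ} (hf : Nice f) (hg : Nice g) (hh : Nice h) :
    Integrable (fun q : Vec n × Vec n => tri (fun s => f (q.1, s)) (fun s => g (q.2, s))
      (fun s => h (-(q.1 + q.2), s))) := by
  have := (integrable_rearrange hf hg hh).integral_prod_left
  exact this

/-- The triple of fibres of three sets over `x`, `y` and `-(x+y)`. -/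
def fib3 (E : Tri (Vec n × ℝ)) (q : Vec n × Vec n) : Tri ℝ :=
  ![Prod.mk q.1 ⁻¹' E 0, Prod.mk q.2 ⁻¹' E 1, Prod.mk (-(q.1 + q.2)) ⁻¹' E 2]

lemma T_fiber {E : Tri (Vec n × ℝ)} (hE : Fm E) :
    T E = ∫ q : Vec n × Vec n, T (fib3 E q) :=
  tri_fiber (hE.nice 0) (hE.nice 1) (hE.nice 2)

lemma integrable_T_fiber {E : Tri (Vec n × ℝ)} (hE : Fm E) :
    Integrable fun q : Vec n × Vec n => T (fib3 E q) :=
  integrable_tri_fiber (hE.nice 0) (hE.nice 1) (hE.nice 2)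

lemma one_prod {α β : Type*} (A : Set α) (B : Set β) (p : α × β) :
    one (A ×ˢ B) p = one A p.1 * one B p.2 := by
  classical
  simp only [one_apply, mem_prod]
  grind

lemma T_prod {P : Tri (Vec n)} {I : Tri ℝ} (hP : Fm P) (hI : Fm I) :
    T (fun j => P j ×ˢ I j) = T P * T I := by
  have hn : ∀ j, Nice (one (P j ×ˢ I j)) := fun j => by
    refine nice_one ((hP j).1.prod (hI j).1) ?_
    rw [volume_eq_prod, prod_prod]
    exact mul_ne_top (hP j).2 (hI j).2
  change tri _ _ _ = _
  rw [tri_fiber (hn 0) (hn 1) (hn 2)]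
  unfold T
  conv_rhs => enter [1]; unfold tri
  rw [← integral_mul_const]
  congr 1; ext q
  simp_rw [one_prod]
  unfold tri
  rw [← integral_const_mul]
  congr 1; ext z; simp only; ring

end fiber

/-! ### Three intervals -/

/-- The half-open interval with centre `c` and half-length `h`. -/
def iv (c h : ℝ) : Set ℝ := Ico (c - h) (c + h)

lemma measurableSet_iv (c h : ℝ) : MeasurableSet (iv c h) := measurableSet_Ico

lemma volume_iv_ne_top (c h : ℝ) : volume (iv c h) ≠ ⊤ := by simp [iv, Real.volume_Ico]

lemma volume_real_iv {c h : ℝ} (hh : 0 ≤ h) : volume.real (iv c h) = 2 * h := by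
  rw [iv, measureReal_def, Real.volume_Ico, toReal_ofReal] <;> linarith

lemma Fm_iv (c h : Fin 3 → ℝ) : Fm (fun j => iv (c j) (h j)) := fun _ =>
  ⟨measurableSet_iv _ _, volume_iv_ne_top _ _⟩

/-- The convolution of the indicators of two centred intervals of half-lengths `a` and `b`. -/
def tent (a b z : ℝ) : ℝ := max 0 (min (min (2 * a) (2 * b)) (a + b - |z|))

lemma continuous_tent (a b : ℝ) : Continuous (tent a b) := by unfold tent; fun_prop

lemma tent_nonneg (a b z : ℝ) : 0 ≤ tent a b z := le_max_left _ _

lemma tent_neg (a b z : ℝ) : tent a b (-z) = tent a b z := by unfold tent; simp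

lemma tent_anti (a b : ℝ) {z z' : ℝ} (h : |z| ≤ |z'|) : tent a b z' ≤ tent a b z := by
  unfold tent
  gcongr

lemma tent_len {a b : ℝ} (ha : 0 ≤ a) (hb : 0 ≤ b) (z : ℝ) :
    max 0 (min a (-z + b) - max (-a) (-z - b)) = tent a b z := by
  unfold tent
  grind

lemma integral_one_mul_one_iv {a b : ℝ} (ha : 0 ≤ a) (hb : 0 ≤ b) (z : ℝ) :
    ∫ x, one (iv 0 a) x * one (iv 0 b) (-(z + x)) = tent a b z := by
  have e : (fun x => one (iv 0 a) x * one (iv 0 b) (-(z + x)))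
      =ᵐ[volume] one (Ico (-a) a ∩ Ico (-z - b) (-z + b)) := by
    have h1 : (Ioc (-z - b) (-z + b) : Set ℝ) =ᵐ[volume] Ico (-z - b) (-z + b) :=
      Ico_ae_eq_Ioc.symm
    filter_upwards [h1] with x hx
    classical
    have hx' : x ∈ Ioc (-z - b) (-z + b) ↔ x ∈ Ico (-z - b) (-z + b) := by
      exact iff_of_eq hx
    simp only [one_apply, iv, mem_inter_iff, ← hx']
    grind
  rw [integral_congr_ae e, integral_one (measurableSet_Ico.inter measurableSet_Ico),
    Ico_inter_Ico, measureReal_def, Real.volume_Ico, toReal_ofReal', max_comm]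
  exact tent_len ha hb z

/-- Value of the form on three intervals with sum of centres `u`, as an interval integral. -/
def Phi (a b h u : ℝ) : ℝ := ∫ z in (u - h)..(u + h), tent a b z

lemma tri_intervals {a b h : ℝ} (ha : 0 ≤ a) (hb : 0 ≤ b) (hh : 0 ≤ h) (u : ℝ) :
    tri (one (iv 0 a)) (one (iv 0 b)) (one (iv u h)) = Phi a b h u := by
  have n := fun c h => nice_one (measurableSet_iv c h) (volume_iv_ne_top c h)
  rw [tri_swap12, tri_swap01, tri_eq_iter (n _ _) (n _ _) (n _ _)]
  simp_rw [integral_one_mul_one_iv ha hb]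
  unfold Phi one
  rw [intervalIntegral.integral_of_le (by linarith), ← integral_Ico_eq_integral_Ioc,
    ← integral_indicator measurableSet_Ico]
  congr 1; ext x
  change (iv u h).indicator _ x * _ = (iv u h).indicator _ x
  by_cases hx : x ∈ iv u h <;> simp [hx]

lemma one_iv_shift (c h x : ℝ) : one (iv c h) x = one (iv 0 h) (x - c) := by
  classical
  have : x ∈ iv c h ↔ x - c ∈ iv 0 h := by
    simp only [iv, mem_Ico]; constructor <;> rintro ⟨h, h'⟩ <;> constructor <;> linarith
  simp [one_apply, this]

lemma T_iv (c h : Fin 3 → ℝ) (hh : ∀ j, 0 ≤ h j) :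
    T (fun j => iv (c j) (h j)) = Phi (h 0) (h 1) (h 2) (c 0 + c 1 + c 2) := by
  rw [← tri_intervals (hh 0) (hh 1) (hh 2)]
  unfold T tri
  rw [← integral_add_right_eq_self _ ((c 0, c 1) : ℝ × ℝ)]
  congr 1; ext p
  rw [one_iv_shift (c 0), one_iv_shift (c 1), one_iv_shift (c 2),
    one_iv_shift (c 0 + c 1 + c 2)]
  simp only [Prod.fst_add, Prod.snd_add]
  grind

lemma Phi_neg (a b h u : ℝ) : Phi a b h (-u) = Phi a b h u := by
  unfold Phi
  have := intervalIntegral.integral_comp_neg (tent a b) (a := u - h) (b := u + h)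
  simp_rw [tent_neg] at this
  rw [this]; congr 1 <;> ring

lemma Phi_abs (a b h u : ℝ) : Phi a b h |u| = Phi a b h u := by
  rcases abs_cases u with ⟨e, _⟩ | ⟨e, _⟩ <;> rw [e]
  exact Phi_neg _ _ _ _

/-- The form on three intervals decreases with the distance of the sum of centres to `0`. -/
lemma Phi_anti (a b : ℝ) {h : ℝ} (hh : 0 ≤ h) {u v : ℝ} (huv : |u| ≤ |v|) :
    Phi a b h v ≤ Phi a b h u := by
  rw [← Phi_abs a b h u, ← Phi_abs a b h v]
  have h0 := abs_nonneg u
  generalize |u| = u at *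
  generalize |v| = v at *
  unfold Phi
  have I : ∀ s t, IntervalIntegrable (tent a b) volume s t := fun s t =>
    (continuous_tent a b).intervalIntegrable s t
  have e := intervalIntegral.integral_interval_sub_interval_comm (I (u - h) (u + h))
    (I (v - h) (v + h)) (I (u - h) (v - h))
  have e2 : ∫ z in (u + h)..(v + h), tent a b z = ∫ z in (u - h)..(v - h), tent a b (z + 2 * h) := by
    rw [intervalIntegral.integral_comp_add_right (fun z => tent a b z)]; congr 1 <;> ring
  have e3 : ∫ z in (u - h)..(v - h), tent a b (z + 2 * h) ≤ ∫ z in (u - h)..(v - h), tent a b z := by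
    refine intervalIntegral.integral_mono_on (by linarith)
      (((continuous_tent a b).comp (by fun_prop)).intervalIntegrable _ _) (I _ _) fun z hz => ?_
    refine tent_anti a b ?_
    grind
  linarith

/-! ### The sliding flow of step sets -/

section flow
variable {n : ℕ} {ι : Type*}

open Classical in
/-- The triple of sets described by a configuration: the piece `i` is `P i ×ˢ iv (c i) (h i)`, it
belongs to the set number `ty i`, and only the pieces in `I` are present. -/
def cset (P : ι → Set (Vec n)) (ty : ι → Fin 3) (I : Finset ι) (c h : ι → ℝ) (j : Fin 3) :
    Set (Vec n × ℝ) := ⋃ i ∈ I.filter (fun i => ty i = j), P i ×ˢ iv (c i) (h i)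

/-- Validity of a configuration: bases of pieces of the same set are disjoint, or equal with
non-overlapping intervals. -/
structure Valid (P : ι → Set (Vec n)) (ty : ι → Fin 3) (I : Finset ι) (c h : ι → ℝ) : Prop where
  meas : ∀ i, MeasurableSet (P i)
  fin : ∀ i, volume (P i) ≠ ⊤
  pos : ∀ i, 0 < h i
  sep : ∀ i ∈ I, ∀ k ∈ I, i ≠ k → ty i = ty k →
    Disjoint (P i) (P k) ∨ (P i = P k ∧ h i + h k ≤ |c i - c k|)

variable {P : ι → Set (Vec n)} {ty : ι → Fin 3} {I : Finset ι} {c h : ι → ℝ}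

lemma disjoint_iv {c c' h h' : ℝ} (H : h + h' ≤ |c - c'|) : Disjoint (iv c h) (iv c' h') := by
  rw [Set.disjoint_left]
  rintro x ⟨h1, h2⟩ ⟨h3, h4⟩
  grind

lemma piece_fin (hv : Valid P ty I c h) (i : ι) : volume (P i ×ˢ iv (c i) (h i)) ≠ ⊤ := by
  rw [volume_eq_prod, prod_prod]
  exact mul_ne_top (hv.fin i) (volume_iv_ne_top _ _)

lemma piece_meas (hv : Valid P ty I c h) (i : ι) : MeasurableSet (P i ×ˢ iv (c i) (h i)) :=
  (hv.meas i).prod (measurableSet_iv _ _)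

open Classical in
lemma one_cset (hv : Valid P ty I c h) (j : Fin 3) (p : Vec n × ℝ) :
    one (cset P ty I c h j) p
      = ∑ i ∈ I.filter (fun i => ty i = j), one (P i ×ˢ iv (c i) (h i)) p := by
  unfold one cset
  refine Finset.indicator_biUnion_apply _ _ ?_ p
  intro i hi k hk hik
  simp only [Finset.coe_filter, mem_ofPred_eq] at hi hk
  change Disjoint _ _
  rw [Set.disjoint_prod]
  rcases hv.sep i hi.1 k hk.1 hik (hi.2.trans hk.2.symm) with H | H
  · exact Or.inl H
  · exact Or.inr (disjoint_iv H.2)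

lemma Fm_cset (hv : Valid P ty I c h) : Fm (cset P ty I c h) := by
  classical
  intro j
  refine ⟨Finset.measurableSet_biUnion _ fun i _ => piece_meas hv i, ?_⟩
  refine ((measure_biUnion_finset_le _ _).trans_lt ?_).ne
  exact sum_lt_top.2 fun i _ => lt_top_iff_ne_top.2 (piece_fin hv i)

open Classical in
lemma len_cset (hv : Valid P ty I c h) (j : Fin 3) (x : Vec n) :
    len (cset P ty I c h j) x
      = ∑ i ∈ I.filter (fun i => ty i = j), one (P i) x * (2 * h i) := by
  unfold len
  rw [← integral_one (measurable_prodMk_left (Fm_cset hv j).1)]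
  have : ∀ s, one (Prod.mk x ⁻¹' cset P ty I c h j) s
      = ∑ i ∈ I.filter (fun i => ty i = j), one (P i) x * one (iv (c i) (h i)) s := fun s => by
    have := one_cset hv j (x, s)
    simp_rw [one_prod] at this
    exact this
  simp_rw [this]
  rw [integral_finsetSum _ fun i _ =>
    (integrable_one (measurableSet_iv _ _) (volume_iv_ne_top _ _)).const_mul _]
  refine Finset.sum_congr rfl fun i _ => ?_
  rw [integral_const_mul, integral_one (measurableSet_iv _ _), volume_real_iv (hv.pos i).le]

open Classical in
lemma T_cset (hv : Valid P ty I c h) : T (cset P ty I c h)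
    = ∑ i ∈ I.filter (fun i => ty i = 0), ∑ k ∈ I.filter (fun i => ty i = 1),
      ∑ l ∈ I.filter (fun i => ty i = 2),
        T ![P i, P k, P l] * Phi (h i) (h k) (h l) (c i + c k + c l) := by
  have key : ∀ i k l, T ![P i, P k, P l] * Phi (h i) (h k) (h l) (c i + c k + c l)
      = tri (one (P i ×ˢ iv (c i) (h i))) (one (P k ×ˢ iv (c k) (h k)))
        (one (P l ×ˢ iv (c l) (h l))) := fun i k l => by
    have e1 := T_iv ![c i, c k, c l] ![h i, h k, h l] (by
      intro j; fin_cases j <;> simp [(hv.pos _).le])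
    have e2 := T_prod (P := ![P i, P k, P l])
      (I := fun j => iv (![c i, c k, c l] j) (![h i, h k, h l] j)) (by
      intro j; fin_cases j <;> exact ⟨hv.meas _, hv.fin _⟩) (Fm_iv _ _)
    rw [e1] at e2
    exact e2.symm
  simp_rw [key]
  have nn := fun i => nice_one (piece_meas hv i) (piece_fin hv i)
  have ii := fun i k l => tri_integrable (nn i) (nn k) (nn l).meas (nn l).bdd
  unfold T tri
  have e : ∀ p : (Vec n × ℝ) × (Vec n × ℝ), one (cset P ty I c h 0) p.1 *
      one (cset P ty I c h 1) p.2 * one (cset P ty I c h 2) (-(p.1 + p.2))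
      = ∑ i ∈ I.filter (fun i => ty i = 0), ∑ k ∈ I.filter (fun i => ty i = 1),
      ∑ l ∈ I.filter (fun i => ty i = 2), one (P i ×ˢ iv (c i) (h i)) p.1 *
        one (P k ×ˢ iv (c k) (h k)) p.2 * one (P l ×ˢ iv (c l) (h l)) (-(p.1 + p.2)) := fun p => by
    rw [one_cset hv, one_cset hv, one_cset hv, Finset.sum_mul_sum, Finset.sum_mul]
    refine Finset.sum_congr rfl fun i _ => ?_
    rw [Finset.sum_mul_sum]
  simp_rw [e]
  rw [integral_finsetSum _ fun i _ => integrable_finsetSum _ fun k _ =>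
    integrable_finsetSum _ fun l _ => ii i k l]
  refine Finset.sum_congr rfl fun i _ => ?_
  rw [integral_finsetSum _ fun k _ => integrable_finsetSum _ fun l _ => ii i k l]
  refine Finset.sum_congr rfl fun k _ => ?_
  rw [integral_finsetSum _ fun l _ => ii i k l]

lemma T_nonneg {G : Type*} [AddCommGroup G] [MeasureSpace G] (A : Tri G) : 0 ≤ T A :=
  integral_nonneg fun _ =>
    mul_nonneg (mul_nonneg (one_nonneg _ _) (one_nonneg _ _)) (one_nonneg _ _)

lemma T_cset_le {c' : ι → ℝ} (hv : Valid P ty I c h) (hv' : Valid P ty I c' h)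
    {q : ℝ} (hq0 : 0 ≤ q) (hq1 : q ≤ 1) (hq : ∀ i, c' i = q * c i) :
    T (cset P ty I c h) ≤ T (cset P ty I c' h) := by
  classical
  rw [T_cset hv, T_cset hv']
  refine Finset.sum_le_sum fun i _ => Finset.sum_le_sum fun k _ => Finset.sum_le_sum fun l _ => ?_
  refine mul_le_mul_of_nonneg_left (Phi_anti _ _ (hv.pos l).le ?_) (T_nonneg _)
  rw [hq, hq, hq, ← mul_add, ← mul_add, abs_mul, abs_of_nonneg hq0]
  exact mul_le_of_le_one_left (abs_nonneg _) hq1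

lemma St_cset_congr {c' : ι → ℝ} (hv : Valid P ty I c h) (hv' : Valid P ty I c' h) (j : Fin 3) :
    St (cset P ty I c h j) = St (cset P ty I c' h j) := by
  classical
  exact St_congr fun x => by rw [len_cset hv, len_cset hv']

lemma sd_iv_le (c c' h : ℝ) : sd (iv c h) (iv c' h) ≤ 2 * |c - c'| := by
  wlog hc : c ≤ c' generalizing c c'
  · rw [sd_comm, abs_sub_comm]; exact this _ _ (le_of_not_ge hc)
  unfold sd
  have hs : symmDiff (iv c h) (iv c' h) ⊆ Ico (c - h) (c' - h) ∪ Ico (c + h) (c' + h) := by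
    intro x hx
    simp only [iv, mem_symmDiff, mem_Ico, mem_union, not_and, not_lt] at hx ⊢
    grind
  refine (measureReal_mono hs (by simp [Real.volume_Ico])).trans
    ((measureReal_union_le _ _).trans ?_)
  simp only [measureReal_def, Real.volume_Ico]
  rw [toReal_ofReal (by linarith), toReal_ofReal (by linarith),
    abs_of_nonpos (by linarith)]
  linarith

open Classical in
lemma sd_cset_le {c' : ι → ℝ} (hv : Valid P ty I c h) (hv' : Valid P ty I c' h) (j : Fin 3) :
    sd (cset P ty I c h j) (cset P ty I c' h j)
      ≤ ∑ i ∈ I.filter (fun i => ty i = j), volume.real (P i) * (2 * |c i - c' i|) := by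
  have nn := fun i => integrable_one (piece_meas hv i) (piece_fin hv i)
  have nn' := fun i => integrable_one (piece_meas hv' i) (piece_fin hv' i)
  rw [← sd_eq (Fm_cset hv j).1 (Fm_cset hv' j).1]
  calc ∫ p, |one (cset P ty I c h j) p - one (cset P ty I c' h j) p|
      ≤ ∫ p, ∑ i ∈ I.filter (fun i => ty i = j),
        |one (P i ×ˢ iv (c i) (h i)) p - one (P i ×ˢ iv (c' i) (h i)) p| := by
        refine integral_mono ((((Fm_cset hv).nice j).int.sub ((Fm_cset hv').nice j).int).abs)
          (integrable_finsetSum _ fun i _ => ((nn i).sub (nn' i)).abs) fun p => ?_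
        simp only
        rw [one_cset hv, one_cset hv', ← Finset.sum_sub_distrib]
        exact Finset.abs_sum_le_sum_abs _ _
    _ ≤ _ := by
        have := fun i => ((nn i).sub (nn' i)).abs
        simp only [Pi.sub_apply] at this
        rw [integral_finsetSum _ fun i _ => this i]
        refine Finset.sum_le_sum fun i _ => ?_
        rw [sd_eq (piece_meas hv i) (piece_meas hv' i)]
        have : symmDiff (P i ×ˢ iv (c i) (h i)) (P i ×ˢ iv (c' i) (h i))
            = P i ×ˢ symmDiff (iv (c i) (h i)) (iv (c' i) (h i)) := by grind
        unfold sd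
        rw [this, measureReal_def, volume_eq_prod, prod_prod, toReal_mul]
        exact mul_le_mul_of_nonneg_left (sd_iv_le _ _ _) toReal_nonneg

/-- A deformation of triples which is Lipschitz for the symmetric-difference distance, keeps the
measures and does not decrease `T` below its initial value. -/
structure GoodPath (γ : ℝ → Tri (Vec n × ℝ)) : Prop where
  fm : ∀ s ∈ Icc (0 : ℝ) 1, Fm (γ s)
  vol : ∀ s ∈ Icc (0 : ℝ) 1, ∀ j, volume.real (γ s j) = volume.real (γ 0 j)
  lip : ∃ L : ℝ, ∀ s ∈ Icc (0 : ℝ) 1, ∀ t ∈ Icc (0 : ℝ) 1, D3 (γ s) (γ t) ≤ L * |s - t|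
  mono : ∀ s ∈ Icc (0 : ℝ) 1, T (γ 0) ≤ T (γ s)

/-- Contracting all centres by factors between `1` and `q` is a good path as long as the
configuration stays valid. -/
lemma goodPath_slide {q : ℝ} (hq0 : 0 ≤ q) (hq1 : q ≤ 1)
    (hv : ∀ r ∈ Icc q 1, Valid P ty I (fun i => r * c i) h) :
    GoodPath (fun s => cset P ty I (fun i => (1 - s + s * q) * c i) h) := by
  classical
  have hr : ∀ s ∈ Icc (0 : ℝ) 1, (1 - s + s * q) ∈ Icc q 1 := fun s hs => by
    obtain ⟨h0, h1⟩ := hs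
    constructor <;> nlinarith
  have hv0 := hv _ (hr 0 (by simp))
  refine ⟨fun s hs => Fm_cset (hv _ (hr s hs)), fun s hs j => ?_, ?_, fun s hs => ?_⟩
  · have f := Fm_cset (hv _ (hr s hs)) j
    have f0 := Fm_cset hv0 j
    rw [← integral_len f.1 f.2, ← integral_len f0.1 f0.2]
    congr 1; ext x
    rw [len_cset (hv _ (hr s hs)), len_cset hv0]
  · refine ⟨∑ j : Fin 3, ∑ i ∈ I.filter (fun i => ty i = j), volume.real (P i) * (2 * |c i|),
      fun s hs t ht => ?_⟩
    unfold D3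
    rw [Finset.sum_mul]
    refine Finset.sum_le_sum fun j _ => ?_
    refine (sd_cset_le (hv _ (hr s hs)) (hv _ (hr t ht)) j).trans ?_
    rw [Finset.sum_mul]
    refine Finset.sum_le_sum fun i _ => ?_
    rw [← sub_mul, abs_mul, mul_assoc, mul_assoc]
    refine mul_le_mul_of_nonneg_left ?_ measureReal_nonneg
    refine mul_le_mul_of_nonneg_left ?_ (by norm_num)
    rw [mul_comm]
    refine mul_le_mul_of_nonneg_left ?_ (abs_nonneg _)
    have : (1 - s + s * q) - (1 - t + t * q) = (s - t) * (q - 1) := by ring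
    rw [this, abs_mul]
    refine mul_le_of_le_one_right (abs_nonneg _) (abs_le.2 ⟨by linarith, by linarith⟩)
  · refine T_cset_le (q := 1 - s + s * q) hv0 (hv _ (hr s hs)) ?_ (hr s hs).2 fun i => ?_
    · exact hq0.trans (hr s hs).1
    · simp

end flow

section flow2
variable {n : ℕ} {ι : Type*}
variable {P : ι → Set (Vec n)} {ty : ι → Fin 3} {I : Finset ι} {c h : ι → ℝ}

open Classical in
/-- Merging two adjacent pieces with the same base. -/
lemma cset_merge (hv : Valid P ty I c h) {a b : ι} (ha : a ∈ I) (hb : b ∈ I) (hab : a ≠ b)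
    (hty : ty a = ty b) (hP : P a = P b) (hc : c b - c a = h a + h b) :
    Valid P ty (I.erase b) (Function.update c a (c a + h b)) (Function.update h a (h a + h b)) ∧
    cset P ty I c h
      = cset P ty (I.erase b) (Function.update c a (c a + h b)) (Function.update h a (h a + h b)) := by
  have pa := hv.pos a
  have pb := hv.pos b
  have main : ∀ k ∈ I, k ≠ a → k ≠ b → ty a = ty k → Disjoint (P a) (P k) ∨
      (P a = P k ∧ (h a + h b) + h k ≤ |c a + h b - c k|) := by
    intro k hk hka hkb ht
    by_cases hd : Disjoint (P a) (P k)
    · exact Or.inl hd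
    · right
      have s1 := (hv.sep a ha k hk (Ne.symm hka) ht).resolve_left hd
      have s2 := (hv.sep b hb k hk (Ne.symm hkb) (hty.symm.trans ht)).resolve_left (hP ▸ hd)
      refine ⟨s1.1, ?_⟩
      have pk := hv.pos k
      grind
  constructor
  · refine ⟨hv.meas, hv.fin, fun i => ?_, fun i hi k hk hik ht => ?_⟩
    · by_cases hi : i = a
      · subst hi; simp; linarith
      · simp [hi, hv.pos i]
    · rw [Finset.mem_erase] at hi hk
      by_cases hia : i = a
      · subst hia
        have hki : k ≠ i := Ne.symm hik
        simpa [hki] using main k hk.2 hki hk.1 ht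
      · by_cases hka : k = a
        · subst hka
          have := main i hi.2 hik hi.1 ht.symm
          simp only [Function.update_self, ne_eq, hia, not_false_eq_true, Function.update_of_ne]
          rw [disjoint_comm, add_comm, abs_sub_comm, eq_comm (a := P i)]
          exact this
        · simpa [hia, hka] using hv.sep i hi.2 k hk.2 hik ht
  · ext j p
    simp only [cset, mem_iUnion, Finset.mem_filter, Finset.mem_erase, exists_prop, mem_prod]
    constructor
    · rintro ⟨i, ⟨hi, hj⟩, hp, hq⟩
      by_cases hia : i = a
      · subst hia
        refine ⟨i, ⟨⟨hab, hi⟩, hj⟩, hp, ?_⟩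
        simp only [iv, mem_Ico, Function.update_self] at hq ⊢
        constructor <;> linarith [hq.1, hq.2]
      by_cases hib : i = b
      · subst hib
        refine ⟨a, ⟨⟨hab, ha⟩, hty.trans hj⟩, hP ▸ hp, ?_⟩
        simp only [iv, mem_Ico, Function.update_self] at hq ⊢
        constructor <;> linarith [hq.1, hq.2]
      · exact ⟨i, ⟨⟨hib, hi⟩, hj⟩, hp, by simpa [hia] using hq⟩
    · rintro ⟨i, ⟨⟨hib, hi⟩, hj⟩, hp, hq⟩
      by_cases hia : i = a
      · subst hia
        simp only [iv, mem_Ico, Function.update_self] at hq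
        by_cases hlt : p.2 < c i + h i
        · refine ⟨i, ⟨hi, hj⟩, hp, ?_⟩
          simp only [iv, mem_Ico]; constructor <;> linarith [hq.1, hq.2]
        · refine ⟨b, ⟨hb, hty.symm.trans hj⟩, hP ▸ hp, ?_⟩
          simp only [iv, mem_Ico]; constructor <;> linarith [hq.1, hq.2]
      · exact ⟨i, ⟨hi, hj⟩, hp, by simpa [hia] using hq⟩

/-- A configuration with all centres at `0` and disjoint bases is Steiner symmetric. -/
lemma cset_zero (hv : Valid P ty I (fun _ => 0) h)
    (hd : ∀ i ∈ I, ∀ k ∈ I, i ≠ k → ty i = ty k → Disjoint (P i) (P k)) (j : Fin 3) :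
    St (cset P ty I (fun _ => 0) h j) = cset P ty I (fun _ => 0) h j := by
  classical
  ext ⟨x, t⟩
  have e : (x, t) ∈ St (cset P ty I (fun _ => 0) h j) ↔
    -(len (cset P ty I (fun _ => 0) h j) x / 2) ≤ t ∧
      t < len (cset P ty I (fun _ => 0) h j) x / 2 := Iff.rfl
  rw [e, len_cset hv]
  simp only [cset, mem_iUnion, Finset.mem_filter, exists_prop, mem_prod]
  by_cases hx : ∃ i ∈ I, ty i = j ∧ x ∈ P i
  · obtain ⟨i, hi, hj, hxi⟩ := hx
    have hu : ∀ k ∈ I, ty k = j → x ∈ P k → k = i := fun k hk hkj hxk => by grind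
    have hs : ∑ i ∈ I.filter (fun i => ty i = j), one (P i) x * (2 * h i) = 2 * h i := by
      rw [Finset.sum_eq_single_of_mem i (by simp [hi, hj]), one_mem hxi, one_mul]
      intro k hk hki
      rw [Finset.mem_filter] at hk
      rw [one_notMem fun hxk => hki (hu k hk.1 hk.2 hxk), zero_mul]
    rw [hs]
    constructor
    · rintro ⟨h1, h2⟩
      refine ⟨i, ⟨hi, hj⟩, hxi, ?_⟩
      simp only [iv, mem_Ico]; constructor <;> linarith
    · rintro ⟨k, ⟨hk, hkj⟩, hxk, h3⟩
      have := hu k hk hkj hxk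
      subst this
      simp only [iv, mem_Ico] at h3
      constructor <;> linarith [h3.1, h3.2]
  · have hs : ∑ i ∈ I.filter (fun i => ty i = j), one (P i) x * (2 * h i) = 0 := by
      refine Finset.sum_eq_zero fun k hk => ?_
      rw [Finset.mem_filter] at hk
      rw [one_notMem fun hxk => hx ⟨k, hk.1, hk.2, hxk⟩, zero_mul]
    rw [hs]
    constructor
    · rintro ⟨h1, h2⟩; exfalso; linarith
    · rintro ⟨k, ⟨hk, hkj⟩, hxk, h3⟩; exact absurd ⟨k, hk, hkj, hxk⟩ hx

/-- A property of triples which is transported along good paths. -/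
def PathClosed (Q : (Tri (Vec n × ℝ)) → Prop) : Prop :=
  ∀ γ, GoodPath γ → Q (γ 0) → Q (γ 1)

/-- Pieces slide towards the origin and are merged when they collide; the process ends at the
Steiner symmetrization. -/
lemma flow_cset {Q : (Tri (Vec n × ℝ)) → Prop} (hQ : PathClosed Q) (N : ℕ) :
    ∀ (I : Finset ι) (c h : ι → ℝ), I.card = N → Valid P ty I c h → Q (cset P ty I c h) →
      Q (fun j => St (cset P ty I c h j)) := by
  classical
  induction N using Nat.strong_induction_on with
  | _ N ih =>
  intro I c h hN hv hq
  -- the pairs that can collide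
  set pr := (I ×ˢ I).filter (fun p => p.1 ≠ p.2 ∧ ty p.1 = ty p.2 ∧ ¬ Disjoint (P p.1) (P p.2))
    with hpr
  have hvalid : ∀ r : ℝ, 0 ≤ r → (∀ p ∈ pr, h p.1 + h p.2 ≤ r * |c p.1 - c p.2|) →
      Valid P ty I (fun i => r * c i) h := fun r hr0 hr =>
    ⟨hv.meas, hv.fin, hv.pos, fun i hi k hk hik ht => by
      by_cases hd : Disjoint (P i) (P k)
      · exact Or.inl hd
      · refine Or.inr ⟨((hv.sep i hi k hk hik ht).resolve_left hd).1, ?_⟩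
        rw [← mul_sub, abs_mul, abs_of_nonneg hr0]
        exact hr (i, k) (by simp [hpr, hi, hk, hik, ht, hd])⟩
  have hsep : ∀ p ∈ pr, P p.1 = P p.2 ∧ h p.1 + h p.2 ≤ |c p.1 - c p.2| := fun p hp => by
    simp only [hpr, Finset.mem_filter, Finset.mem_product] at hp
    exact (hv.sep p.1 hp.1.1 p.2 hp.1.2 hp.2.1 hp.2.2.1).resolve_left hp.2.2.2
  by_cases hne : pr.Nonempty
  · obtain ⟨p, hp, hmax⟩ := Finset.exists_max_image pr
      (fun p => (h p.1 + h p.2) / |c p.1 - c p.2|) hne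
    set q := (h p.1 + h p.2) / |c p.1 - c p.2| with hqdef
    have hpos : ∀ p ∈ pr, 0 < |c p.1 - c p.2| := fun p hp => by
      have := (hsep p hp).2
      linarith [hv.pos p.1, hv.pos p.2]
    have hq0 : 0 < q := div_pos (by linarith [hv.pos p.1, hv.pos p.2]) (hpos p hp)
    have hq1 : q ≤ 1 := (div_le_one (hpos p hp)).2 (hsep p hp).2
    have hval : ∀ r ∈ Icc q 1, Valid P ty I (fun i => r * c i) h := fun r hr =>
      hvalid r (hq0.le.trans hr.1) fun p' hp' =>
        (div_le_iff₀ (hpos p' hp')).1 ((hmax p' hp').trans hr.1)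
    have hpath := goodPath_slide hq0.le hq1 hval
    have hq' := hQ _ hpath (by simpa using hq)
    simp only [sub_self, one_mul, zero_add] at hq'
    have hvq := hval q (left_mem_Icc.2 hq1)
    have heq : (fun j => St (cset P ty I c h j))
        = fun j => St (cset P ty I (fun i => q * c i) h j) := by
      funext j; exact St_cset_congr hv hvq j
    rw [heq]
    have hp2 := hp
    simp only [hpr, Finset.mem_filter, Finset.mem_product] at hp2
    have finish : ∀ a b : ι, a ∈ I → b ∈ I → a ≠ b → ty a = ty b → P a = P b →
        q * c b - q * c a = h a + h b → Q (fun j => St (cset P ty I (fun i => q * c i) h j)) := by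
      intro a b ha hb hab ht hP hc
      obtain ⟨v', e'⟩ := cset_merge hvq ha hb hab ht hP hc
      rw [e'] at hq' ⊢
      grind
    grind
  · rw [Finset.not_nonempty_iff_eq_empty] at hne
    have hval : ∀ r ∈ Icc (0 : ℝ) 1, Valid P ty I (fun i => r * c i) h := fun r hr =>
      hvalid r hr.1 fun p' hp' => by rw [hne] at hp'; simp at hp'
    have hpath := goodPath_slide le_rfl zero_le_one hval
    have hq' := hQ _ hpath (by simpa using hq)
    simp only [sub_self, zero_add, mul_zero, zero_mul] at hq'
    have hv0 := hval 0 (by simp)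
    simp only [zero_mul] at hv0
    have heq : (fun j => St (cset P ty I c h j)) = cset P ty I (fun _ => 0) h := by
      funext j
      rw [St_cset_congr hv hv0 j]
      refine cset_zero hv0 (fun i hi k hk hik ht => ?_) j
      by_contra hd
      have : (i, k) ∈ pr := by simp [hpr, hi, hk, hik, ht, hd]
      rw [hne] at this; simp at this
    rw [heq]; exact hq'

end flow2

/-! ### Step sets and Riesz's inequality for Steiner symmetrization -/

section step
variable {n : ℕ}

/-- Sets whose fibres are unions of cells of one finite partition of the line. -/
def IsStep (E : Set (Vec n × ℝ)) : Prop :=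
  MeasurableSet E ∧ ∃ s : Finset ℝ, ∀ x t t', (∀ a ∈ s, a ≤ t ↔ a ≤ t') → ((x, t) ∈ E ↔ (x, t') ∈ E)

lemma isSetRing_isStep : IsSetRing {E : Set (Vec n × ℝ) | IsStep E} where
  empty_mem := ⟨MeasurableSet.empty, ∅, by simp⟩
  union_mem := by
    classical
    rintro E F ⟨hE, s, hs⟩ ⟨hF, s', hs'⟩
    refine ⟨hE.union hF, s ∪ s', fun x t t' h => ?_⟩
    rw [mem_union, mem_union, hs x t t' fun a ha => h a (Finset.mem_union_left _ ha),
      hs' x t t' fun a ha => h a (Finset.mem_union_right _ ha)]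
  sdiff_mem := by
    classical
    rintro E F ⟨hE, s, hs⟩ ⟨hF, s', hs'⟩
    refine ⟨hE.diff hF, s ∪ s', fun x t t' h => ?_⟩
    rw [mem_sdiff, mem_sdiff, hs x t t' fun a ha => h a (Finset.mem_union_left _ ha),
      hs' x t t' fun a ha => h a (Finset.mem_union_right _ ha)]

lemma isStep_prod_Ici {A : Set (Vec n)} (hA : MeasurableSet A) (a : ℝ) :
    IsStep (A ×ˢ Ici a) :=
  ⟨hA.prod measurableSet_Ici, {a}, fun x t t' h => by
    have := h a (by simp)
    simp only [mem_prod, mem_Ici, this]⟩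

lemma isStep_prod_univ {A : Set (Vec n)} (hA : MeasurableSet A) : IsStep (A ×ˢ (univ : Set ℝ)) :=
  ⟨hA.prod MeasurableSet.univ, ∅, fun x t t' _ => by simp⟩

lemma isStep_box {A : Set (Vec n)} (hA : MeasurableSet A) (a b : ℝ) : IsStep (A ×ˢ Ico a b) := by
  have := isSetRing_isStep.sdiff_mem (isStep_prod_Ici hA a) (isStep_prod_Ici hA b)
  have e : A ×ˢ Ici a \ A ×ˢ Ici b = A ×ˢ Ico a b := by grind
  rwa [e] at this

lemma generateFrom_isStep : (inferInstance : MeasurableSpace (Vec n × ℝ))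
    = MeasurableSpace.generateFrom {E : Set (Vec n × ℝ) | IsStep E} := by
  apply le_antisymm
  · refine sup_le ?_ ?_
    · rintro _ ⟨A, hA, rfl⟩
      refine MeasurableSpace.measurableSet_generateFrom ?_
      have := isStep_prod_univ hA
      rwa [prod_univ] at this
    · have : borel ℝ = MeasurableSpace.generateFrom (range Ici) := borel_eq_generateFrom_Ici ℝ
      have hb : (inferInstance : MeasurableSpace ℝ) = borel ℝ := BorelSpace.measurable_eq
      change MeasurableSpace.comap Prod.snd (inferInstance : MeasurableSpace ℝ) ≤ _
      rw [hb, this, MeasurableSpace.comap_generateFrom]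
      refine MeasurableSpace.generateFrom_mono ?_
      rintro _ ⟨_, ⟨a, rfl⟩, rfl⟩
      have := isStep_prod_Ici (n := n) MeasurableSet.univ a
      rwa [univ_prod] at this
  · exact MeasurableSpace.generateFrom_le fun E hE => hE.1

/-- The box used to truncate sets. -/
def box (n : ℕ) (M : ℝ) : Set (Vec n × ℝ) := cb n M ×ˢ Ico (-M) M

lemma measurableSet_box (M : ℝ) : MeasurableSet (box n M) :=
  isClosed_closedBall.measurableSet.prod measurableSet_Ico

lemma volume_box_ne_top (M : ℝ) : volume (box n M) ≠ ⊤ := by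
  rw [box, volume_eq_prod, prod_prod]
  exact mul_ne_top measure_closedBall_lt_top.ne (by simp [Real.volume_Ico])

lemma exists_box {E : Set (Vec n × ℝ)} (hE : MeasurableSet E) (h : volume E ≠ ⊤) {ε : ℝ}
    (hε : 0 < ε) : ∃ M : ℝ, 0 < M ∧ volume.real (E \ box n M) < ε := by
  have ht := tendsto_measure_iInter_atTop (μ := volume) (s := fun k : ℕ => E \ box n (k + 1 : ℝ))
    (fun k => (hE.diff (measurableSet_box _)).nullMeasurableSet) (by
      intro a b hab
      refine sdiff_subset_sdiff_right ?_
      have : (a : ℝ) ≤ b := by exact_mod_cast hab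
      exact prod_mono (closedBall_subset_closedBall (by linarith))
        (Ico_subset_Ico (by linarith) (by linarith))) ⟨0, (measure_mono sdiff_subset).trans_lt
          (lt_top_iff_ne_top.2 h) |>.ne⟩
  have he : ⋂ k : ℕ, E \ box n (k + 1 : ℝ) = ∅ := by
    rw [eq_empty_iff_forall_notMem]
    intro p hp
    obtain ⟨k, hk⟩ := exists_nat_ge (max ‖p.1‖ |p.2|)
    rw [mem_iInter] at hp
    refine (hp k).2 ?_
    have h1 := (le_max_left _ _).trans hk
    have h2 := (le_max_right _ _).trans hk
    refine ⟨by simp; linarith, ?_⟩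
    grind
  rw [he, measure_empty] at ht
  have := (ht.eventually (gt_mem_nhds (ofReal_pos.2 hε))).exists
  obtain ⟨k, hk⟩ := this
  refine ⟨k + 1, by positivity, ?_⟩
  rw [measureReal_def]
  exact (lt_ofReal_iff_toReal_lt (ne_top_of_lt hk)).1 hk

/-- Approximation of sets of finite measure by bounded step sets. -/
lemma exists_isStep {E : Set (Vec n × ℝ)} (hE : MeasurableSet E) (h : volume E ≠ ⊤) {ε : ℝ}
    (hε : 0 < ε) : ∃ F : Set (Vec n × ℝ), IsStep F ∧ (∃ M > 0, F ⊆ box n M) ∧ sd E F < ε := by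
  obtain ⟨M, hM, hM'⟩ := exists_box hE h (half_pos hε)
  have : IsFiniteMeasure ((volume : Measure (Vec n × ℝ)).restrict (box n M)) :=
    ⟨by rw [restrict_apply_univ]; exact lt_top_iff_ne_top.2 (volume_box_ne_top M)⟩
  obtain ⟨t, ht, hlt⟩ := exists_measure_symmDiff_lt_of_generateFrom_isSetRing
    (μ := (volume : Measure (Vec n × ℝ)).restrict (box n M)) isSetRing_isStep
    ⟨{univ}, by simp, by
      simpa using (isStep_prod_univ (n := n) MeasurableSet.univ), by simp⟩
    generateFrom_isStep hE (ofReal_pos.2 (half_pos hε))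
  refine ⟨t ∩ box n M, isSetRing_isStep.inter_mem ht (isStep_box
    isClosed_closedBall.measurableSet _ _), ⟨M, hM, inter_subset_right⟩, ?_⟩
  rw [restrict_apply (ht.1.symmDiff hE)] at hlt
  have h2 : volume.real (symmDiff t E ∩ box n M) < ε / 2 :=
    (lt_ofReal_iff_toReal_lt (ne_top_of_lt hlt)).1 hlt
  have hs : symmDiff E (t ∩ box n M) ⊆ (E \ box n M) ∪ (symmDiff t E ∩ box n M) := by grind
  calc sd E (t ∩ box n M) ≤ volume.real ((E \ box n M) ∪ (symmDiff t E ∩ box n M)) :=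
        measureReal_mono hs (measure_union_ne_top
          (ne_top_of_le_ne_top h (measure_mono sdiff_subset)) (ne_top_of_lt hlt))
    _ ≤ _ := measureReal_union_le _ _
    _ < ε := by linarith

lemma exists_nxt (s : Finset ℝ) : ∃ f : ℝ → ℝ, ∀ k, k < f k ∧ (∀ a ∈ s, k < a → f k ≤ a) ∧
    ((∃ a ∈ s, k < a) → f k ∈ s) := by
  classical
  have : ∀ k : ℝ, ∃ b, k < b ∧ (∀ a ∈ s, k < a → b ≤ a) ∧ ((∃ a ∈ s, k < a) → b ∈ s) := by
    intro k
    by_cases hne : (s.filter (fun a => k < a)).Nonempty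
    · refine ⟨(s.filter (fun a => k < a)).min' hne, ?_, fun a ha hka => ?_, fun _ => ?_⟩
      · simp
      · exact Finset.min'_le _ _ (by simp [ha, hka])
      · exact (Finset.mem_filter.1 (Finset.min'_mem _ hne)).1
    · have hno : ¬ ∃ a ∈ s, k < a := fun ⟨a, ha, hka⟩ => hne ⟨a, by simp [ha, hka]⟩
      exact ⟨k + 1, by linarith, fun a ha hka => absurd ⟨a, ha, hka⟩ hno, fun h => absurd h hno⟩
  choose f hf using this
  exact ⟨f, hf⟩

/-- Bounded step triples come from configurations, hence path-closed properties pass to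
their Steiner symmetrizations. -/
lemma flow_step {Q : (Tri (Vec n × ℝ)) → Prop} (hQ : PathClosed Q)
    {E : Tri (Vec n × ℝ)} (hE : ∀ j, IsStep (E j)) {M : ℝ} (hM : ∀ j, E j ⊆ box n M)
    (hq : Q E) : Q (fun j => St (E j)) := by
  classical
  choose hm s0 hs0 using hE
  set s : Finset ℝ := s0 0 ∪ s0 1 ∪ s0 2 ∪ {-M, M} with hs
  have hsub : ∀ j, s0 j ⊆ s := fun j a ha => by
    fin_cases j <;> simp only [hs, Finset.mem_union] <;> simp at ha <;> tauto
  have hs' : ∀ j x t t', (∀ a ∈ s, a ≤ t ↔ a ≤ t') → ((x, t) ∈ E j ↔ (x, t') ∈ E j) :=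
    fun j x t t' H => hs0 j x t t' fun a ha => H a (hsub j ha)
  have hMs : M ∈ s := by simp [hs]
  have hMs' : -M ∈ s := by simp [hs]
  obtain ⟨nxt, hn⟩ := exists_nxt s
  let P : Fin 3 × Finset ℝ × ℝ → Set (Vec n) := fun i =>
    cb n M ∩ ⋂ a ∈ s, {x | (x, a) ∈ E i.1 ↔ a ∈ i.2.1}
  let c : Fin 3 × Finset ℝ × ℝ → ℝ := fun i => (i.2.2 + nxt i.2.2) / 2
  let h : Fin 3 × Finset ℝ × ℝ → ℝ := fun i => (nxt i.2.2 - i.2.2) / 2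
  let I : Finset (Fin 3 × Finset ℝ × ℝ) :=
    ((Finset.univ : Finset (Fin 3)) ×ˢ (s.powerset ×ˢ s)).filter (fun i => i.2.2 ∈ i.2.1)
  have hv : Valid P (fun i => i.1) I c h := by
    refine ⟨fun i => ?_, fun i => ?_, fun i => ?_, ?_⟩
    · refine isClosed_closedBall.measurableSet.inter
        (Finset.measurableSet_biInter _ fun a _ => ?_)
      have : MeasurableSet {x : Vec n | (x, a) ∈ E i.1} := measurable_prodMk_right (hm i.1)
      by_cases ha : a ∈ i.2.1
      · simpa [ha] using this
      · have e : {x : Vec n | (x, a) ∈ E i.1 ↔ a ∈ i.2.1} = {x : Vec n | (x, a) ∈ E i.1}ᶜ := by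
          ext x; simp [ha]
        rw [e]; exact this.compl
    · exact ne_top_of_le_ne_top measure_closedBall_lt_top.ne (measure_mono inter_subset_left)
    · grind
    · rintro ⟨j, σ, k⟩ hi ⟨j', σ', k'⟩ hi' hne ht
      simp only [I, Finset.mem_filter, Finset.mem_product, Finset.mem_powerset] at hi hi'
      simp only at ht
      subst ht
      by_cases hσ : σ = σ'
      · subst hσ
        refine Or.inr ⟨rfl, ?_⟩
        have hk : k ≠ k' := fun e => hne (by rw [e])
        have key : ∀ a b : ℝ, b ∈ s → a < b → (nxt a - a) / 2 + (nxt b - b) / 2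
            ≤ (b + nxt b) / 2 - (a + nxt a) / 2 := fun a b hb hab => by grind
        simp only [c, h]
        rcases lt_or_gt_of_ne hk with hlt | hlt
        · rw [abs_sub_comm]
          exact (key k k' hi'.1.2.2 hlt).trans (le_abs_self _)
        · rw [add_comm]
          exact (key k' k hi.1.2.2 hlt).trans (le_abs_self _)
      · left
        rw [Set.disjoint_left]
        rintro x ⟨_, hx⟩ ⟨_, hx'⟩
        simp only [mem_iInter, mem_ofPred_eq] at hx hx'
        grind
  have hmem : ∀ (k t : ℝ), t ∈ iv ((k + nxt k) / 2) ((nxt k - k) / 2) ↔ k ≤ t ∧ t < nxt k := by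
    intro k t
    simp only [iv, mem_Ico]
    grind
  have hset : cset P (fun i => i.1) I c h = E := by
    ext j ⟨x, t⟩
    simp only [cset, mem_iUnion, Finset.mem_filter, exists_prop, mem_prod, I, P, c, h, hmem,
      Finset.mem_product, Finset.mem_powerset, Finset.mem_univ, true_and, mem_inter_iff,
      mem_iInter, mem_ofPred_eq]
    constructor
    · rintro ⟨⟨j', σ, k⟩, ⟨⟨⟨hσ, hk⟩, hkσ⟩, rfl⟩, ⟨-, hx⟩, hkt, htk⟩
      simp only at *
      refine (hs' j' x k t fun a ha => ⟨fun hak => hak.trans hkt, fun hat => ?_⟩).1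
        ((hx k hk).2 hkσ)
      by_contra hc
      have := (hn k).2.1 a ha (not_le.1 hc)
      linarith
    · intro hp
      have hb := hM j hp
      have hne : (s.filter (fun a => a ≤ t)).Nonempty := ⟨-M, by simp [hMs', hb.2.1]⟩
      set k := (s.filter (fun a => a ≤ t)).max' hne with hk
      have hks := Finset.mem_filter.1 (Finset.max'_mem _ hne)
      rw [← hk] at hks
      have heq : ∀ a ∈ s, a ≤ k ↔ a ≤ t := fun a ha =>
        ⟨fun hak => hak.trans hks.2, fun hat => Finset.le_max' _ _ (by simp [ha, hat])⟩
      have hkE : (x, k) ∈ E j := (hs' j x k t heq).2 hp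
      refine ⟨(j, s.filter (fun a => (x, a) ∈ E j), k), ⟨⟨⟨Finset.filter_subset _ _, hks.1⟩, ?_⟩,
        rfl⟩, ⟨hb.1, fun a ha => ?_⟩, hks.2, ?_⟩
      · simp [hks.1, hkE]
      · simp [ha]
      · by_contra hc
        have h1 := (hn k).2.2 ⟨M, hMs, lt_of_le_of_lt hks.2 hb.2.2⟩
        grind
  have := flow_cset hQ _ I c h rfl hv (hset.symm ▸ hq)
  rwa [hset] at this

lemma D3_nonneg {G : Type*} [AddCommGroup G] [MeasureSpace G] (A B : Tri G) :
    0 ≤ D3 A B := Finset.sum_nonneg fun _ _ => sd_nonneg _ _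

lemma sd_le_D3 {G : Type*} [AddCommGroup G] [MeasureSpace G] (A B : Tri G) (j : Fin 3) :
    sd (A j) (B j) ≤ D3 A B :=
  Finset.single_le_sum (f := fun j => sd (A j) (B j)) (fun _ _ => sd_nonneg _ _) (Finset.mem_univ j)

lemma Fm_St {E : Tri (Vec n × ℝ)} (hE : Fm E) : Fm fun j => St (E j) := fun j =>
  ⟨measurableSet_St (hE j).1, volume_St_ne_top (hE j).1 (hE j).2⟩

lemma volume_real_St {E : Set (Vec n × ℝ)} (hE : MeasurableSet E) (h : volume E ≠ ⊤) :
    volume.real (St E) = volume.real E := by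
  rw [measureReal_def, volume_St hE h, measureReal_def]

lemma D3_St_le {E F : Tri (Vec n × ℝ)} (hE : Fm E) (hF : Fm F) :
    D3 (fun j => St (E j)) (fun j => St (F j)) ≤ D3 E F :=
  Finset.sum_le_sum fun j _ => sd_St_le (hE j).1 (hE j).2 (hF j).1 (hF j).2

lemma exists_step_triple {E : Tri (Vec n × ℝ)} (hE : Fm E) {ε : ℝ} (hε : 0 < ε) :
    ∃ F : Tri (Vec n × ℝ), (∀ j, IsStep (F j)) ∧ Fm F ∧ (∃ M, ∀ j, F j ⊆ box n M) ∧
      D3 E F < ε := by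
  choose F hF hM hd using fun j => exists_isStep (hE j).1 (hE j).2 (show 0 < ε / 3 by positivity)
  choose M hM0 hM using hM
  have hsub : ∀ j, F j ⊆ box n (max (M 0) (max (M 1) (M 2))) := fun j => by
    have : M j ≤ max (M 0) (max (M 1) (M 2)) := by fin_cases j <;> simp
    exact (hM j).trans (prod_mono (closedBall_subset_closedBall this)
      (Ico_subset_Ico (by linarith) this))
  refine ⟨F, hF, fun j => ⟨(hF j).1, ne_top_of_le_ne_top (volume_box_ne_top _)
    (measure_mono (hsub j))⟩, ⟨_, hsub⟩, ?_⟩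
  unfold D3
  rw [Fin.sum_univ_three]
  linarith [hd 0, hd 1, hd 2]

lemma vol_le_of_D3 {G : Type*} [AddCommGroup G] [MeasureSpace G] {E F : Tri G}
    (hE : Fm E) (hF : Fm F) (j : Fin 3) : volume.real (F j) ≤ volume.real (E j) + D3 E F := by
  have h1 := abs_vol_sub_le (hE j).1 (hF j).1 (hE j).2 (hF j).2
  have h2 := sd_le_D3 E F j
  have := (abs_le.1 h1).1
  linarith

/-- Riesz's inequality for Steiner symmetrization. -/
lemma T_le_St {E : Tri (Vec n × ℝ)} (hE : Fm E) : T E ≤ T fun j => St (E j) := by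
  set M := ∑ j, volume.real (E j) + 1
  have hEM : ∀ j, volume.real (E j) + 1 ≤ M := fun j => by
    have := Finset.single_le_sum (f := fun j => volume.real (E j)) (fun _ _ => measureReal_nonneg)
      (Finset.mem_univ j)
    linarith
  have hM0 : 0 < M := lt_of_lt_of_le (by positivity) (hEM 0)
  refine le_of_forall_pos_le_add fun ε hε => ?_
  obtain ⟨F, hF, hFm, ⟨R, hR⟩, hd⟩ := exists_step_triple hE
    (show 0 < min 1 (ε / (2 * M)) by positivity)
  have hd1 := hd.trans_le (min_le_left _ _)
  have hd2 := hd.trans_le (min_le_right _ _)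
  have hFM : ∀ j, volume.real (F j) ≤ M := fun j => by
    linarith [vol_le_of_D3 hE hFm j, hEM j]
  have hEM' : ∀ j, volume.real (E j) ≤ M := fun j => by linarith [hEM j]
  have h1 := T_lipschitz hE hFm hEM' hFM
  have h2 : T F ≤ T fun j => St (F j) :=
    flow_step (Q := fun A => T F ≤ T A) (fun γ hγ h0 => h0.trans (hγ.mono 1 (by simp))) hF hR le_rfl
  have h3 := T_lipschitz (Fm_St hE) (Fm_St hFm) (M := M)
    (fun j => (volume_real_St (hE j).1 (hE j).2).trans_le (hEM' j))
    (fun j => (volume_real_St (hFm j).1 (hFm j).2).trans_le (hFM j))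
  have h4 := D3_St_le hE hFm
  have h5 : M * D3 E F ≤ ε / 2 := by
    have := mul_le_mul_of_nonneg_left hd2.le hM0.le
    have e : M * (ε / (2 * M)) = ε / 2 := by field_simp
    linarith
  have h6 := mul_le_mul_of_nonneg_left h4 hM0.le
  have := (abs_le.1 h1).2
  have := (abs_le.1 h3).1
  linarith

/-- The one-dimensional Riesz inequality. -/
lemma T_le_iv {A : Tri ℝ} (hA : Fm A) :
    T A ≤ T fun j => iv 0 (volume.real (A j) / 2) := by
  have hP : Fm (fun _ : Fin 3 => (univ : Set (Vec 0))) := fun _ => ⟨MeasurableSet.univ, by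
    simp⟩
  have h1 := T_prod hP hA
  have h2 := T_prod hP (Fm_iv (fun _ => 0) (fun j => volume.real (A j) / 2))
  have hF : Fm (fun j => (univ : Set (Vec 0)) ×ˢ A j) := fun j =>
    ⟨MeasurableSet.univ.prod (hA j).1, by
      rw [volume_eq_prod, prod_prod]; exact mul_ne_top (hP j).2 (hA j).2⟩
  have h3 := T_le_St hF
  have h4 : (fun j => St ((univ : Set (Vec 0)) ×ˢ A j))
      = fun j => univ ×ˢ iv 0 (volume.real (A j) / 2) := by
    funext j
    ext ⟨x, t⟩
    have : len ((univ : Set (Vec 0)) ×ˢ A j) x = volume.real (A j) := by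
      unfold len; congr 1; ext t; simp
    simp [St, iv, this]
  rw [h4, h1, h2] at h3
  have h5 : 0 < T (fun _ : Fin 3 => (univ : Set (Vec 0))) := by
    unfold T tri one
    simp [volume_eq_prod]
  exact le_of_mul_le_mul_left h3 h5

end step

/-! ### Transport under additive measure-preserving equivalences -/

section transport
variable {G H : Type*} [AddCommGroup G] [MeasureSpace G] [AddCommGroup H] [MeasureSpace H]

lemma sd_preimage (φ : G ≃ᵐ H) (hφ : MeasurePreserving φ) (A B : Set H) :
    sd (φ ⁻¹' A) (φ ⁻¹' B) = sd A B := by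
  unfold sd Measure.real
  rw [← preimage_symmDiff, hφ.measure_preimage_equiv]

lemma volume_preimage (φ : G ≃ᵐ H) (hφ : MeasurePreserving φ) (A : Set H) :
    volume.real (φ ⁻¹' A) = volume.real A := by
  unfold Measure.real
  rw [hφ.measure_preimage_equiv]

lemma Fm_preimage (φ : G ≃ᵐ H) (hφ : MeasurePreserving φ) {A : Tri H} (hA : Fm A) :
    Fm (fun j => φ ⁻¹' (A j)) := fun j =>
  ⟨φ.measurable (hA j).1, by rw [hφ.measure_preimage_equiv]; exact (hA j).2⟩

lemma D3_preimage (φ : G ≃ᵐ H) (hφ : MeasurePreserving φ) (A B : Tri H) :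
    D3 (fun j => φ ⁻¹' (A j)) (fun j => φ ⁻¹' (B j)) = D3 A B := by
  unfold D3
  simp_rw [sd_preimage φ hφ]

lemma T_preimage [SFinite (volume : Measure G)] [SFinite (volume : Measure H)]
    (φ : G ≃ᵐ H) (hφ : MeasurePreserving φ)
    (hadd : ∀ x y, φ (x + y) = φ x + φ y) (A : Tri H) :
    T (fun j => φ ⁻¹' (A j)) = T A := by
  have h0 : φ 0 = 0 := by simpa using hadd 0 0
  have hneg : ∀ x, φ (-x) = -φ x := fun x => by
    have := hadd x (-x)
    rw [add_neg_cancel, h0] at this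
    grind
  have hp : MeasurePreserving (MeasurableEquiv.prodCongr φ φ) := hφ.prod hφ
  have := hp.integral_comp' (fun p : H × H => one (A 0) p.1 * one (A 1) p.2 * one (A 2) (-(p.1 + p.2)))
  unfold T tri
  rw [← this]
  refine integral_congr_ae (.of_forall fun p => ?_)
  have e : ∀ j x, one (φ ⁻¹' (A j)) x = one (A j) (φ x) := fun j x => rfl
  simp only [e, hneg, hadd]
  rfl

end transport

/-! ### Orthonormal frames -/

section frames
variable {n : ℕ}

/-- A frame: a linear isometry from `ℝ^(n+1)` to the orthogonal sum `ℝ^n ⊕ ℝ`. -/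
abbrev Frame (n : ℕ) := Vec (n + 1) ≃ₗᵢ[ℝ] WithLp 2 (Vec n × ℝ)

/-- The frame as a linear homeomorphism onto the plain product. -/
def fr (L : Frame n) : Vec (n + 1) ≃L[ℝ] Vec n × ℝ :=
  L.toContinuousLinearEquiv.trans (WithLp.prodContinuousLinearEquiv 2 ℝ (Vec n) ℝ)

/-- The frame as a measurable equivalence. -/
def frm (L : Frame n) : Vec (n + 1) ≃ᵐ Vec n × ℝ := (fr L).toHomeomorph.toMeasurableEquiv

lemma frm_apply (L : Frame n) (x : Vec (n + 1)) : frm L x = fr L x := rfl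

lemma frm_add (L : Frame n) (x y : Vec (n + 1)) : frm L (x + y) = frm L x + frm L y :=
  map_add (fr L) x y

lemma mp_frm (L : Frame n) : MeasurePreserving (frm L) := by
  have h1 : MeasurePreserving L := L.measurePreserving
  have h2 := WithLp.volume_preserving_ofLp (Vec n) ℝ
  exact h2.comp h1

lemma norm_fr (L : Frame n) (x : Vec (n + 1)) : ‖(fr L x).1‖ ^ 2 + (fr L x).2 ^ 2 = ‖x‖ ^ 2 := by
  have := WithLp.prod_norm_sq_eq_of_L2 (L x)
  rw [L.norm_map] at this
  rw [this, Real.norm_eq_abs, sq_abs]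
  rfl

lemma exists_frame (n : ℕ) : Nonempty (Frame n) := by
  have h : Module.finrank ℝ (WithLp 2 (Vec n × ℝ)) = n + 1 := by
    rw [(WithLp.linearEquiv 2 ℝ (Vec n × ℝ)).finrank_eq]; simp
  exact ⟨(EuclideanSpace.basisFun (Fin (n+1)) ℝ).equiv
    (stdOrthonormalBasis ℝ (WithLp 2 (Vec n × ℝ))) (finCongr h.symm)⟩

lemma exists_frame_dir {e : Vec (n + 1)} (he : ‖e‖ = 1) : ∃ L : Frame n, fr L e = (0, 1) := by
  obtain ⟨L⟩ := exists_frame n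
  set w : WithLp 2 (Vec n × ℝ) := WithLp.toLp 2 (0, 1) with hw
  have hn : ‖L e‖ = ‖w‖ := by
    rw [L.norm_map, he]
    simp [hw]
  refine ⟨L.trans ((Submodule.span ℝ {L e - w})ᗮ.reflection), ?_⟩
  have := Submodule.reflection_sub hn
  change WithLp.ofLp ((Submodule.span ℝ {L e - w})ᗮ.reflection (L e)) = _
  rw [this]

/-- The ball of radius `r` in frame coordinates. -/
def Bq (n : ℕ) (r : ℝ) : Set (Vec n × ℝ) := {p | ‖p.1‖ ^ 2 + p.2 ^ 2 ≤ r ^ 2}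

lemma frm_preimage_Bq (L : Frame n) {r : ℝ} (hr : 0 ≤ r) :
    frm L ⁻¹' (Bq n r) = cb (n+1) r := by
  ext x
  simp only [mem_preimage, Bq, mem_ofPred_eq, frm_apply, norm_fr, mem_closedBall_zero_iff]
  exact pow_le_pow_iff_left₀ (norm_nonneg x) hr two_ne_zero

lemma frm_preimage_ball (L : Frame n) {r : ℝ} (hr : 0 ≤ r) :
    (frm L).symm ⁻¹' (cb (n+1) r) = Bq n r := by
  rw [← frm_preimage_Bq L hr, ← preimage_comp]
  simp

lemma measurableSet_Bq (r : ℝ) : MeasurableSet (Bq n r) := by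
  unfold Bq
  apply measurableSet_le <;> fun_prop

lemma volume_Bq {r : ℝ} (hr : 0 ≤ r) :
    volume (Bq n r) = volume (cb (n+1) r) := by
  obtain ⟨L⟩ := exists_frame n
  rw [← frm_preimage_Bq L hr, (mp_frm L).measure_preimage_equiv]

lemma volume_Bq_ne_top {r : ℝ} (hr : 0 ≤ r) : volume (Bq n r) ≠ ⊤ := by
  rw [volume_Bq hr]
  exact measure_closedBall_lt_top.ne

lemma fiber_Bq (r : ℝ) (x : Vec n) : Prod.mk x ⁻¹' (Bq n r) =
    if ‖x‖ ^ 2 ≤ r ^ 2 then Icc (-√(r ^ 2 - ‖x‖ ^ 2)) (√(r ^ 2 - ‖x‖ ^ 2)) else ∅ := by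
  ext t
  split_ifs with h
  · simp only [Bq, mem_preimage, mem_ofPred_eq, mem_Icc]
    rw [← abs_le, ← Real.sqrt_sq_eq_abs, Real.sqrt_le_sqrt_iff (by linarith)]
    constructor <;> intro h <;> linarith
  · simp only [Bq, mem_preimage, mem_ofPred_eq, mem_empty_iff_false, iff_false]
    nlinarith [sq_nonneg t]

lemma len_Bq (r : ℝ) (x : Vec n) : len (Bq n r) x = 2 * √(r ^ 2 - ‖x‖ ^ 2) := by
  unfold len
  rw [fiber_Bq]
  split_ifs with h
  · rw [Real.volume_real_Icc_of_le (by linarith [Real.sqrt_nonneg (r ^ 2 - ‖x‖ ^ 2)])]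
    ring
  · rw [Real.sqrt_eq_zero_of_nonpos (by linarith)]
    simp

lemma fiber_Bq_ae (r : ℝ) (x : Vec n) :
    sd (Prod.mk x ⁻¹' (Bq n r)) (iv 0 (√(r ^ 2 - ‖x‖ ^ 2))) = 0 := by
  rw [fiber_Bq]
  unfold sd iv
  split_ifs with h
  · set s := √(r ^ 2 - ‖x‖ ^ 2)
    have : symmDiff (Icc (-s) s) (Ico (0 - s) (0 + s)) ⊆ {s} := by grind
    exact le_antisymm ((measureReal_mono this (by simp)).trans (by simp [Measure.real])) measureReal_nonneg
  · rw [Real.sqrt_eq_zero_of_nonpos (by linarith)]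
    simp

lemma sd_St_Bq {r : ℝ} (hr : 0 ≤ r) : sd (St (Bq n r)) (Bq n r) = 0 := by
  rw [← integral_sd_fiber (measurableSet_St (measurableSet_Bq r))
    (volume_St_ne_top (measurableSet_Bq r) (volume_Bq_ne_top hr)) (measurableSet_Bq r)
    (volume_Bq_ne_top hr)]
  refine integral_eq_zero_of_ae (.of_forall fun x => ?_)
  have h := fiber_Bq_ae r x
  rw [sd_comm] at h
  have e : Prod.mk x ⁻¹' (St (Bq n r)) = iv 0 (√(r ^ 2 - ‖x‖ ^ 2)) := by
    rw [fiber_St, len_Bq]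
    unfold iv
    congr 1 <;> ring
  simp only [e, h]
  rfl

lemma sd_St_left_Bq {E : Set (Vec n × ℝ)} (hE : MeasurableSet E) (h : volume E ≠ ⊤) {r : ℝ}
    (hr : 0 ≤ r) : sd (St E) (Bq n r) = ∫ x, |len E x - len (Bq n r) x| := by
  have hB := measurableSet_Bq (n := n) r
  have hB' := volume_Bq_ne_top (n := n) hr
  have hS := volume_St_ne_top hE h
  have hSB := volume_St_ne_top hB hB'
  rw [← sd_St hE h hB hB']
  apply le_antisymm
  · have := sd_triangle hS hSB hB'
    rw [sd_St_Bq hr] at this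
    linarith
  · have := sd_triangle hS hB' hSB
    rw [sd_comm (Bq n r), sd_St_Bq hr] at this
    linarith

/-- The `L¹` distance between fibre lengths falls short of the symmetric difference by twice the
overlap of the fibre lengths of the two differences. -/
lemma integral_abs_len_sub {E F : Set (Vec n × ℝ)} (hE : MeasurableSet E) (h : volume E ≠ ⊤)
    (hF : MeasurableSet F) (h' : volume F ≠ ⊤) :
    ∫ x, |len E x - len F x| =
      sd E F - 2 * ∫ x, min (len (E \ F) x) (len (F \ E) x) := by
  have hEF := measure_ne_top_of_subset (sdiff_subset (s := E) (t := F)) h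
  have hFE := measure_ne_top_of_subset (sdiff_subset (s := F) (t := E)) h'
  have i1 := integrable_len (hE.diff hF) hEF
  have i2 := integrable_len (hF.diff hE) hFE
  rw [← integral_sd_fiber hE h hF h', ← integral_const_mul]
  have i3 : Integrable (fun x => 2 * min (len (E \ F) x) (len (F \ E) x)) :=
    (i1.inf i2).const_mul 2
  rw [← integral_sub (integrable_sd_fiber hE h hF h') i3]
  refine integral_congr_ae ?_
  filter_upwards [ae_fiber_ne_top hE h, ae_fiber_ne_top hF h'] with x h1 h2
  have m1 : MeasurableSet (Prod.mk x ⁻¹' E) := measurable_prodMk_left hE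
  have m2 : MeasurableSet (Prod.mk x ⁻¹' F) := measurable_prodMk_left hF
  have e1 : len E x = len (E \ F) x + volume.real (Prod.mk x ⁻¹' E ∩ Prod.mk x ⁻¹' F) := by
    rw [add_comm]; exact (measureReal_inter_add_sdiff m2 h1).symm
  have e2 : len F x = len (F \ E) x + volume.real (Prod.mk x ⁻¹' E ∩ Prod.mk x ⁻¹' F) := by
    rw [add_comm, inter_comm]; exact (measureReal_inter_add_sdiff m1 h2).symm
  have e3 : sd (Prod.mk x ⁻¹' E) (Prod.mk x ⁻¹' F) = len (E \ F) x + len (F \ E) x := by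
    unfold sd
    exact measureReal_symmDiff_eq m1 m2 h1 h2
  rw [e1, e2, e3]
  grind

/-- The set `E` in the coordinates of the frame. -/
def inF (L : Frame n) (E : Set (Vec (n + 1))) : Set (Vec n × ℝ) := (frm L).symm ⁻¹' E

/-- Steiner symmetrization along the last axis of a frame. -/
def SL (L : Frame n) (E : Set (Vec (n + 1))) : Set (Vec (n + 1)) :=
  frm L ⁻¹' St (inF L E)

lemma mp_frm_symm (L : Frame n) : MeasurePreserving (frm L).symm := (mp_frm L).symm _

lemma preimage_inF (L : Frame n) (E : Set (Vec (n + 1))) : frm L ⁻¹' (inF L E) = E := by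
  unfold inF; rw [← preimage_comp]; simp

lemma frm_symm_add (L : Frame n) (x y : Vec n × ℝ) :
    (frm L).symm (x + y) = (frm L).symm x + (frm L).symm y := by
  apply (frm L).injective
  rw [frm_add]; simp

lemma measurableSet_inF (L : Frame n) {E : Set (Vec (n + 1))} (hE : MeasurableSet E) :
    MeasurableSet (inF L E) := (frm L).symm.measurable hE

lemma volume_inF (L : Frame n) (E : Set (Vec (n + 1))) : volume (inF L E) = volume E :=
  (mp_frm_symm L).measure_preimage_equiv E

lemma Fm_inF (L : Frame n) {E : Tri (Vec (n + 1))} (hE : Fm E) :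
    Fm (fun j => inF L (E j)) := Fm_preimage _ (mp_frm_symm L) hE

lemma T_inF (L : Frame n) (E : Tri (Vec (n + 1))) : T (fun j => inF L (E j)) = T E :=
  T_preimage _ (mp_frm_symm L) (frm_symm_add L) E

lemma sd_inF (L : Frame n) (E F : Set (Vec (n + 1))) : sd (inF L E) (inF L F) = sd E F :=
  sd_preimage _ (mp_frm_symm L) E F

lemma inF_ball (L : Frame n) {r : ℝ} (hr : 0 ≤ r) : inF L (cb (n+1) r) = Bq n r :=
  frm_preimage_ball L hr

lemma inF_SL (L : Frame n) (E : Set (Vec (n + 1))) : inF L (SL L E) = St (inF L E) := by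
  unfold SL; rw [inF, ← preimage_comp]; simp

lemma Fm_SL (L : Frame n) {E : Tri (Vec (n + 1))} (hE : Fm E) :
    Fm (fun j => SL L (E j)) := Fm_preimage _ (mp_frm L) (Fm_St (Fm_inF L hE))

lemma volume_SL (L : Frame n) {E : Set (Vec (n + 1))} (hE : MeasurableSet E) (h : volume E ≠ ⊤) :
    volume.real (SL L E) = volume.real E := by
  unfold SL
  rw [volume_preimage _ (mp_frm L)]
  unfold Measure.real
  rw [volume_St (measurableSet_inF L hE) (by rw [← volume_inF L] at h; exact h)]
  rw [volume_inF L E]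

lemma T_le_SL (L : Frame n) {E : Tri (Vec (n + 1))} (hE : Fm E) :
    T E ≤ T (fun j => SL L (E j)) := by
  unfold SL
  rw [T_preimage _ (mp_frm L) (frm_add L) (fun j => St (inF L (E j))), ← T_inF L E]
  exact T_le_St (Fm_inF L hE)

lemma sd_SL_ball (L : Frame n) {E : Set (Vec (n + 1))} (hE : MeasurableSet E) (h : volume E ≠ ⊤)
    {r : ℝ} (hr : 0 ≤ r) : sd (SL L E) (cb (n+1) r) = sd E (cb (n+1) r) -
      2 * ∫ x, min (len (inF L E \ Bq n r) x) (len (Bq n r \ inF L E) x) := by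
  have h' : volume (inF L E) ≠ ⊤ := by rw [volume_inF]; exact h
  rw [← sd_inF L, inF_SL, inF_ball L hr, sd_St_left_Bq (measurableSet_inF L hE) h' hr,
    integral_abs_len_sub (measurableSet_inF L hE) h' (measurableSet_Bq r) (volume_Bq_ne_top hr),
    ← inF_ball L hr, sd_inF]

lemma sd_SL_ball_le (L : Frame n) {E : Set (Vec (n + 1))} (hE : MeasurableSet E)
    (h : volume E ≠ ⊤) {r : ℝ} (hr : 0 ≤ r) :
    sd (SL L E) (cb (n+1) r) ≤ sd E (cb (n+1) r) := by
  rw [sd_SL_ball L hE h hr]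
  have : 0 ≤ ∫ x, min (len (inF L E \ Bq n r) x) (len (Bq n r \ inF L E) x) :=
    integral_nonneg fun x => le_min (len_nonneg _ _) (len_nonneg _ _)
  linarith

lemma SL_subset_ball (L : Frame n) {E : Set (Vec (n + 1))} {R : ℝ} (hR : 0 ≤ R)
    (hE : E ⊆ cb (n+1) R) : SL L E ⊆ cb (n+1) R := by
  have h : inF L E ⊆ Bq n R := by rw [← inF_ball L hR]; exact preimage_mono hE
  rw [← frm_preimage_Bq L hR]
  apply preimage_mono
  rintro ⟨x, t⟩ ⟨h1, h2⟩
  simp only at h1 h2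
  have h3 : len (inF L E) x ≤ 2 * √(R ^ 2 - ‖x‖ ^ 2) := by
    rw [← len_Bq]
    unfold len
    have hb : volume (Prod.mk x ⁻¹' Bq n R) ≠ ⊤ := by
      rw [fiber_Bq]
      split_ifs <;> simp
    exact measureReal_mono (preimage_mono h) hb
  have h5 : 0 < √(R ^ 2 - ‖x‖ ^ 2) := by linarith
  have h6 := Real.sqrt_pos.1 h5
  have h7 := Real.sq_sqrt h6.le
  have h8 : t ^ 2 ≤ R ^ 2 - ‖x‖ ^ 2 := by nlinarith
  show ‖x‖ ^ 2 + t ^ 2 ≤ R ^ 2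
  linarith

end frames

/-! ### Steiner symmetrization drives sets to balls -/

section shift
variable {X : Type*} [NormedAddCommGroup X] [NormedSpace ℝ X] [FiniteDimensional ℝ X]
  [MeasureSpace X] [BorelSpace X] [(volume : Measure X).IsAddHaarMeasure]

/-- Fubini for a set of pairs `(a, a')` in the coordinates `a` and `v = a' - a`. -/
lemma integral_shift {G : Set (X × X)} (hG : MeasurableSet G) (h : volume G ≠ ⊤) :
    Integrable (fun v : X => volume.real {a : X | (a, a + v) ∈ G}) ∧
    ∫ v : X, volume.real {a : X | (a, a + v) ∈ G} = volume.real G := by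
  have mp : MeasurePreserving (fun q : X × X => (q.2, q.2 + q.1)) :=
    (measurePreserving_prod_add volume volume).comp measurePreserving_swap
  have hm := mp.measurable hG
  set G' := (fun q : X × X => (q.2, q.2 + q.1)) ⁻¹' G
  have hv : volume G' = volume G := mp.measure_preimage hG.nullMeasurableSet
  have hf : (volume.prod volume) G' ≠ ⊤ := by rw [← volume_eq_prod, hv]; exact h
  refine ⟨integrable_measure_prodMk_left hm hf, ?_⟩
  have := integral_toReal (μ := volume) (measurable_measure_prodMk_left (ν := (volume : Measure X)) hm).aemeasurable
    (ae_measure_lt_top hm hf)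
  rw [← prod_apply hm, ← volume_eq_prod, hv] at this
  exact this

end shift

section decrease
variable {n : ℕ}

lemma closedBall_pos {m : ℕ} (x : Vec m) {r : ℝ} (hr : 0 < r) :
    0 < volume.real (closedBall x r) :=
  toReal_pos (measure_closedBall_pos volume x hr).ne' measure_closedBall_lt_top.ne

lemma min_len_of_shift {A A' : Set (Vec n × ℝ)} (hA : MeasurableSet A) (h : volume A ≠ ⊤)
    (hA' : MeasurableSet A') (h' : volume A' ≠ ⊤) (t : ℝ) :
    volume.real {p : Vec n × ℝ | p ∈ A ∧ p + (0, t) ∈ A'} ≤ ∫ x, min (len A x) (len A' x) := by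
  set P := {p : Vec n × ℝ | p ∈ A ∧ p + (0, t) ∈ A'}
  have hPm : MeasurableSet P := hA.inter ((measurable_add_const _) hA')
  have hPf : volume P ≠ ⊤ := measure_ne_top_of_subset (fun p hp => hp.1) h
  rw [← integral_len hPm hPf]
  refine integral_mono_ae (integrable_len hPm hPf) ((integrable_len hA h).inf (integrable_len hA' h')) ?_
  filter_upwards [ae_fiber_ne_top hA h, ae_fiber_ne_top hA' h'] with x h1 h2
  refine le_min (measureReal_mono (fun s hs => hs.1) h1) ?_
  have e : volume ((fun s => s + t) ⁻¹' (Prod.mk x ⁻¹' A')) = volume (Prod.mk x ⁻¹' A') :=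
    measure_preimage_add_right _ _ _
  unfold len
  rw [← measureReal_congr (s := Prod.mk x ⁻¹' P) (Filter.EventuallyEq.refl _ _)]
  calc volume.real (Prod.mk x ⁻¹' P) ≤ volume.real ((fun s => s + t) ⁻¹' (Prod.mk x ⁻¹' A')) := by
        refine measureReal_mono (fun s hs => ?_) (by rw [e]; exact h2)
        have := hs.2
        simpa using this
    _ = _ := by unfold Measure.real; rw [e]

lemma volume_sdiff_eq {E B : Set (Vec (n+1))} (hE : MeasurableSet E) (h : volume E ≠ ⊤)
    (hB : MeasurableSet B) (h' : volume B ≠ ⊤) (hv : volume.real E = volume.real B) :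
    volume.real (E \ B) = sd E B / 2 ∧ volume.real (B \ E) = sd E B / 2 := by
  have e1 : volume.real E = volume.real (E ∩ B) + volume.real (E \ B) :=
    (measureReal_inter_add_sdiff hB h).symm
  have e2 : volume.real B = volume.real (E ∩ B) + volume.real (B \ E) := by
    rw [inter_comm]; exact (measureReal_inter_add_sdiff hE h').symm
  have e3 : sd E B = volume.real (E \ B) + volume.real (B \ E) :=
    measureReal_symmDiff_eq hE hB h h'
  constructor <;> linarith

lemma exists_frame_vec {v : Vec (n+1)} (hv : v ≠ 0) :
    ∃ L : Frame n, (fr L v) = (0, ‖v‖) := by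
  have hv' : ‖v‖ ≠ 0 := norm_ne_zero_iff.2 hv
  obtain ⟨L, hL⟩ := exists_frame_dir (n := n) (e := ‖v‖⁻¹ • v) (by
    rw [norm_smul, norm_inv, norm_norm, inv_mul_cancel₀ hv'])
  refine ⟨L, ?_⟩
  have : v = ‖v‖ • (‖v‖⁻¹ • v) := by rw [smul_smul, mul_inv_cancel₀ hv', one_smul]
  conv_lhs => rw [this]
  rw [map_smul, hL]
  simp

lemma inF_sdiff (L : Frame n) (E F : Set (Vec (n+1))) : inF L (E \ F) = inF L E \ inF L F := rfl

lemma shift_le_min {A A' : Set (Vec (n+1))} (hA : MeasurableSet A) (h : volume A ≠ ⊤)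
    (hA' : MeasurableSet A') (h' : volume A' ≠ ⊤) {L : Frame n} {v : Vec (n+1)} {t : ℝ}
    (hL : fr L v = (0, t)) :
    volume.real {a | a ∈ A ∧ a + v ∈ A'} ≤ ∫ x, min (len (inF L A) x) (len (inF L A') x) := by
  rw [← volume_inF L] at h h'
  refine le_trans (le_of_eq ?_) (min_len_of_shift (measurableSet_inF L hA) h
    (measurableSet_inF L hA') h' t)
  rw [← volume_preimage (frm L) (mp_frm L)]
  congr 1
  ext a
  simp only [mem_ofPred_eq, mem_preimage, inF]
  have : frm L a + (0, t) = frm L (a + v) := by rw [frm_add, frm_apply L v, hL]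
  rw [this]
  simp

/-- Averaging over all directions, one symmetrization brings a set closer to its ball. -/
lemma exists_decrease {E : Set (Vec (n+1))} (hE : MeasurableSet E) {R : ℝ} (hR : 0 < R)
    (hER : E ⊆ cb (n+1) R) {r : ℝ} (hr : 0 ≤ r) (hrR : r ≤ R)
    (hv : volume.real E = volume.real (cb (n+1) r)) :
    ∃ L : Frame n, sd (SL L E) (cb (n+1) r) ≤ sd E (cb (n+1) r) -
      (sd E (cb (n+1) r)) ^ 2 / (4 * volume.real (cb (n+1) (2 * R))) := by
  set B := cb (n+1) r with hBdef
  have hB : MeasurableSet B := isClosed_closedBall.measurableSet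
  have hBf : volume B ≠ ⊤ := measure_closedBall_lt_top.ne
  have hf : volume E ≠ ⊤ := measure_ne_top_of_subset hER measure_closedBall_lt_top.ne
  set V := volume.real (cb (n+1) (2 * R)) with hV
  have hVpos : 0 < V := closedBall_pos _ (by linarith)
  obtain ⟨e1, e2⟩ := volume_sdiff_eq hE hf hB hBf hv
  set D := sd E B with hD
  have hDn : 0 ≤ D := sd_nonneg _ _
  set A := E \ B with hA
  set A' := B \ E with hA'
  have mA : MeasurableSet A := hE.diff hB
  have mA' : MeasurableSet A' := hB.diff hE
  have fA : volume A ≠ ⊤ := measure_ne_top_of_subset sdiff_subset hf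
  have fA' : volume A' ≠ ⊤ := measure_ne_top_of_subset sdiff_subset hBf
  rcases hDn.eq_or_lt with h0 | hpos
  · obtain ⟨L⟩ := exists_frame n
    refine ⟨L, ?_⟩
    have := sd_SL_ball_le L hE hf hr
    rw [← hBdef, ← hD, ← h0] at this
    rw [← h0]; simpa using this
  obtain ⟨i1, i2⟩ := integral_shift (mA.prod mA') (by
    rw [volume_eq_prod, prod_prod]; exact mul_ne_top fA fA')
  have i3 : volume.real (A ×ˢ A') = D ^ 2 / 4 := by
    rw [volume_eq_prod, measureReal_prod_prod, e1, e2]; ring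
  rw [i3] at i2
  have hex : ∃ v : Vec (n+1), v ≠ 0 ∧ D ^ 2 / (8 * V) ≤ volume.real {a | (a, a + v) ∈ A ×ˢ A'} := by
    by_contra hcon
    push Not at hcon
    have hle : ∫ v : Vec (n+1), volume.real {a | (a, a + v) ∈ A ×ˢ A'} ≤
        ∫ v : Vec (n+1), (cb (n+1) (2 * R)).indicator (fun _ => D ^ 2 / (8 * V)) v := by
      refine integral_mono_ae i1 ((integrable_indicator_iff isClosed_closedBall.measurableSet).2
        (integrableOn_const measure_closedBall_lt_top.ne)) ?_
      have : ∀ᵐ v : Vec (n+1), v ≠ 0 := by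
        simp [ae_iff]
      filter_upwards [this] with v hv0
      by_cases hvR : v ∈ cb (n+1) (2 * R)
      · rw [indicator_of_mem hvR]; exact (hcon v hv0).le
      · rw [indicator_of_notMem hvR]
        have : {a | (a, a + v) ∈ A ×ˢ A'} = ∅ := by
          ext a
          simp only [mem_ofPred_eq, mem_empty_iff_false, iff_false]
          rintro ⟨h1, h2⟩
          apply hvR
          have h3 := mem_closedBall_zero_iff.1 (hER h1.1)
          have h4 := mem_closedBall_zero_iff.1 h2.1
          simp only at h3 h4
          rw [mem_closedBall_zero_iff]
          have : v = (a + v) - a := by abel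
          rw [this]
          exact (norm_sub_le _ _).trans (by linarith)
        rw [this]; simp
    rw [i2, integral_indicator_const _ isClosed_closedBall.measurableSet, ← hV, smul_eq_mul] at hle
    have : V * (D ^ 2 / (8 * V)) = D ^ 2 / 8 := by field_simp
    nlinarith
  obtain ⟨v, hv0, hvN⟩ := hex
  obtain ⟨L, hL⟩ := exists_frame_vec hv0
  refine ⟨L, ?_⟩
  have key := shift_le_min mA fA mA' fA' hL
  rw [hA, hA', inF_sdiff, inF_sdiff, hBdef, inF_ball L hr, ← hBdef, ← hA, ← hA'] at key
  rw [sd_SL_ball L hE hf hr]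
  have e : D ^ 2 / (4 * V) = 2 * (D ^ 2 / (8 * V)) := by field_simp; norm_num
  rw [e]
  have : volume.real {a | (a, a + v) ∈ A ×ˢ A'} = volume.real {a | a ∈ A ∧ a + v ∈ A'} := rfl
  linarith

/-- The three closed balls of radii `r j`. -/
def ball3 (n : ℕ) (r : Fin 3 → ℝ) : Tri (Vec n) := fun j => cb n (r j)

lemma Fm_ball3 (r : Fin 3 → ℝ) : Fm (ball3 n r) := fun _ =>
  ⟨isClosed_closedBall.measurableSet, measure_closedBall_lt_top.ne⟩

/-- A nonempty class of bounded triples with the measures of given balls, closed under all Steiner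
symmetrizations, contains triples arbitrarily close to the balls. -/
lemma exists_near_ball {r : Fin 3 → ℝ} (hr : ∀ j, 0 ≤ r j) {R : ℝ} (hR : 0 < R)
    (hrR : ∀ j, r j ≤ R) (Q : (Tri (Vec (n+1))) → Prop)
    (hmeas : ∀ E, Q E → ∀ j, MeasurableSet (E j))
    (hbd : ∀ E, Q E → ∀ j, E j ⊆ cb (n+1) R)
    (hvol : ∀ E, Q E → ∀ j, volume.real (E j) = volume.real (ball3 (n+1) r j))
    (hSL : ∀ E, Q E → ∀ L : Frame n, Q (fun j => SL L (E j)))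
    {E₀ : Tri (Vec (n+1))} (hE₀ : Q E₀) {ε : ℝ} (hε : 0 < ε) :
    ∃ E, Q E ∧ D3 E (ball3 (n+1) r) < ε := by
  set S := {x | ∃ E, Q E ∧ x = D3 E (ball3 (n+1) r)}
  have hne : S.Nonempty := ⟨_, E₀, hE₀, rfl⟩
  have hbdd : BddBelow S := ⟨0, by rintro x ⟨E, _, rfl⟩; exact D3_nonneg _ _⟩
  set m := sInf S with hm
  have hm0 : 0 ≤ m := le_csInf hne (by rintro x ⟨E, _, rfl⟩; exact D3_nonneg _ _)
  suffices h : m = 0 by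
    obtain ⟨x, ⟨E, hE, rfl⟩, hx⟩ := exists_lt_of_csInf_lt hne (show sInf S < ε by rw [← hm, h]; exact hε)
    exact ⟨E, hE, hx⟩
  by_contra hmne
  set V := volume.real (cb (n+1) (2 * R))
  have hVpos : 0 < V := closedBall_pos _ (by linarith)
  set δ := (m / 3) ^ 2 / (4 * V) with hδ
  have hδpos : 0 < δ := by positivity
  obtain ⟨x, ⟨E, hE, rfl⟩, hx⟩ := exists_lt_of_csInf_lt hne (show sInf S < m + δ by rw [← hm]; linarith)
  have hmE : m ≤ D3 E (ball3 (n+1) r) := csInf_le hbdd ⟨E, hE, rfl⟩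
  have hj : ∃ j, m / 3 ≤ sd (E j) (ball3 (n+1) r j) := by
    by_contra hcon
    push Not at hcon
    unfold D3 at hmE
    rw [Fin.sum_univ_three] at hmE
    linarith [hcon 0, hcon 1, hcon 2]
  obtain ⟨j, hj⟩ := hj
  obtain ⟨L, hL⟩ := exists_decrease (hmeas E hE j) hR (hbd E hE j) (hr j) (hrR j) (hvol E hE j)
  have h1 : ∀ i, sd (SL L (E i)) (ball3 (n+1) r i) ≤ sd (E i) (ball3 (n+1) r i) - if i = j then δ else 0 := by
    intro i
    have hf : volume (E i) ≠ ⊤ := measure_ne_top_of_subset (hbd E hE i) measure_closedBall_lt_top.ne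
    split_ifs with hij
    · subst hij
      refine hL.trans ?_
      have : δ ≤ (sd (E i) (cb (n+1) (r i))) ^ 2 / (4 * V) := by
        rw [hδ]
        gcongr
        exact hj
      change _ ≤ sd (E i) (cb (n+1) (r i)) - δ
      linarith
    · rw [sub_zero]
      exact sd_SL_ball_le L (hmeas E hE i) hf (hr i)
  have h2 : D3 (fun i => SL L (E i)) (ball3 (n+1) r) ≤ D3 E (ball3 (n+1) r) - δ := by
    unfold D3
    refine (Finset.sum_le_sum fun i _ => h1 i).trans ?_
    rw [Finset.sum_sub_distrib]
    simp
  have h3 : m ≤ D3 (fun i => SL L (E i)) (ball3 (n+1) r) := csInf_le hbdd ⟨_, hSL E hE L, rfl⟩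
  linarith

/-- A bounded set can be modified, by a set of the least possible measure, to have a prescribed
measure. -/
lemma exists_repair {F : Set (Vec (n+1))} (hF : MeasurableSet F) {R v : ℝ} (hR : 0 ≤ R)
    (hFR : F ⊆ cb (n+1) R) (hv0 : 0 ≤ v)
    (hv : v ≤ volume.real (cb (n+1) R)) :
    ∃ F', MeasurableSet F' ∧ F' ⊆ cb (n+1) R ∧ volume.real F' = v ∧
      sd F F' = |volume.real F - v| := by
  have hF' : volume F ≠ ⊤ := measure_ne_top_of_subset hFR measure_closedBall_lt_top.ne
  set β : ℝ → ℝ := fun t => volume.real (cb (n+1) t) with hβ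
  have mB : ∀ t, MeasurableSet (cb (n+1) t) := fun t =>
    isClosed_closedBall.measurableSet
  have fB : ∀ t, volume (cb (n+1) t) ≠ ⊤ := fun t =>
    measure_closedBall_lt_top.ne
  have hβc : ContinuousOn β (Icc 0 R) := by
    have : ∀ t ∈ Icc 0 R, β t = t ^ (n+1) * volume.real (ball (0 : Vec (n+1)) 1) := by
      intro t ht
      simp only [hβ, Measure.real]
      rw [Measure.addHaar_closedBall _ _ ht.1, ENNReal.toReal_mul, ENNReal.toReal_ofReal (by have := ht.1; positivity)]
      simp
    exact ContinuousOn.congr (by fun_prop) this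
  -- measures of sets squeezed between `F ∩ ball t` increments vary continuously with `t`
  have key : ∀ g : ℝ → ℝ, (∀ s ∈ Icc 0 R, ∀ t ∈ Icc 0 R, s ≤ t → |g s - g t| ≤ β t - β s) →
      ContinuousOn g (Icc 0 R) := by
    intro g hg t ht
    rw [continuousWithinAt_iff]
    intro ε hε
    obtain ⟨δ, hδ, h⟩ := continuousWithinAt_iff.1 (hβc t ht) ε hε
    refine ⟨δ, hδ, fun {s} hs hst => ?_⟩
    have h1 := h hs hst
    rw [Real.dist_eq] at h1 ⊢
    rcases le_total s t with hle | hle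
    · exact (hg s hs t ht hle).trans_lt (by rw [abs_sub_comm] at h1; exact (le_abs_self _).trans_lt h1)
    · rw [abs_sub_comm]
      exact (hg t ht s hs hle).trans_lt ((le_abs_self _).trans_lt h1)
  have hfb0 : volume (cb (n+1) 0) = 0 := by simp [closedBall_zero]
  rcases le_total (volume.real F) v with hle | hle
  · have hc := key (fun t => volume.real (F ∪ cb (n+1) t)) (by
      intro s hs t ht hst
      have hsub : F ∪ cb (n+1) s ⊆ F ∪ cb (n+1) t :=
        union_subset_union_right _ (closedBall_subset_closedBall hst)
      have hft : volume (F ∪ cb (n+1) t) ≠ ⊤ := by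
        exact (measure_union_lt_top (lt_top_iff_ne_top.2 hF') (lt_top_iff_ne_top.2 (fB t))).ne
      rw [abs_sub_comm, abs_of_nonneg (sub_nonneg.2 (measureReal_mono hsub hft)),
        ← measureReal_sdiff hsub (hF.union (mB s)) hft]
      have := measureReal_sdiff (μ := volume) (closedBall_subset_closedBall (x := (0 : Vec (n+1))) hst) (mB s)
        (fB t)
      rw [← this]
      refine measureReal_mono ?_ (measure_ne_top_of_subset sdiff_subset (fB t))
      rintro x ⟨h1 | h1, h2⟩
      · exact absurd (Or.inl h1) h2
      · exact ⟨h1, fun h3 => h2 (Or.inr h3)⟩)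
    have h0 : volume.real (F ∪ cb (n+1) 0) ≤ v := by
      refine le_trans (measureReal_union_le _ _) ?_
      simp only [Measure.real, hfb0] at hle ⊢
      simpa using hle
    have h1 : v ≤ volume.real (F ∪ cb (n+1) R) := by
      rw [union_eq_self_of_subset_left hFR]; exact hv
    obtain ⟨t, ht, h⟩ := intermediate_value_Icc hR hc ⟨h0, h1⟩
    simp only at h
    refine ⟨_, hF.union (mB t), union_subset hFR (closedBall_subset_closedBall ht.2), h, ?_⟩
    unfold sd
    rw [Set.symmDiff_def, sdiff_eq_empty.2 subset_union_left, empty_union,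
      measureReal_sdiff subset_union_left hF (measure_union_lt_top (lt_top_iff_ne_top.2 hF') (lt_top_iff_ne_top.2 (fB t))).ne, h, abs_sub_comm, abs_of_nonneg (by linarith)]
  · have hc := key (fun t => volume.real (F ∩ cb (n+1) t)) (by
      intro s hs t ht hst
      have hsub : F ∩ cb (n+1) s ⊆ F ∩ cb (n+1) t :=
        inter_subset_inter_right _ (closedBall_subset_closedBall hst)
      have hft : volume (F ∩ cb (n+1) t) ≠ ⊤ :=
        measure_ne_top_of_subset inter_subset_left hF'
      rw [abs_sub_comm, abs_of_nonneg (sub_nonneg.2 (measureReal_mono hsub hft)),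
        ← measureReal_sdiff hsub (hF.inter (mB s)) hft]
      have := measureReal_sdiff (μ := volume) (closedBall_subset_closedBall (x := (0 : Vec (n+1))) hst) (mB s)
        (fB t)
      rw [← this]
      refine measureReal_mono ?_ (measure_ne_top_of_subset sdiff_subset (fB t))
      rintro x ⟨h1, h2⟩
      exact ⟨h1.2, fun h3 => h2 ⟨h1.1, h3⟩⟩)
    have h0 : volume.real (F ∩ cb (n+1) 0) ≤ v := by
      refine le_trans (measureReal_mono inter_subset_right (fB 0)) ?_
      simp only [Measure.real, hfb0]
      simpa using hv0
    have h1 : v ≤ volume.real (F ∩ cb (n+1) R) := by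
      rw [inter_eq_self_of_subset_left hFR]; exact hle
    obtain ⟨t, ht, h⟩ := intermediate_value_Icc hR hc ⟨h0, h1⟩
    simp only at h
    refine ⟨_, hF.inter (mB t), inter_subset_left.trans hFR, h, ?_⟩
    unfold sd
    rw [Set.symmDiff_def, sdiff_eq_empty.2 inter_subset_left, union_empty,
      measureReal_sdiff inter_subset_left (hF.inter (mB t)) hF', h, abs_of_nonneg (by linarith)]

/-- Truncation to a bounded triple with exactly the measures of the balls. -/
lemma exists_bounded_repair {r : Fin 3 → ℝ} {E : Tri (Vec (n+1))}
    (hE : Fm E) {δ : ℝ} (hvol : ∀ j, |volume.real (E j) - volume.real (ball3 (n+1) r j)| ≤ δ) {ε : ℝ}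
    (hε : 0 < ε) : ∃ R > 0, (∀ j, r j ≤ R) ∧ ∃ E' : Tri (Vec (n+1)),
      (∀ j, MeasurableSet (E' j)) ∧ (∀ j, E' j ⊆ cb (n+1) R) ∧
      (∀ j, volume.real (E' j) = volume.real (ball3 (n+1) r j)) ∧ D3 E E' < 3 * δ + ε := by
  have h1 : ∀ j, ∃ N : ℕ, ∀ k ≥ N, sd (E j) (E j ∩ cb (n+1) k) < ε / 6 := by
    intro j
    have hlim : Filter.Tendsto (fun k : ℕ => volume (E j \ cb (n+1) (k:ℝ))) Filter.atTop
        (nhds 0) := by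
      have : (⋂ k : ℕ, E j \ cb (n+1) (k:ℝ)) = ∅ := by
        ext x
        simp only [mem_iInter, mem_sdiff, mem_closedBall_zero_iff, mem_empty_iff_false, iff_false]
        intro h
        obtain ⟨k, hk⟩ := exists_nat_ge ‖x‖
        exact (h k).2 hk
      rw [← measure_empty (μ := (volume : Measure (Vec (n+1)))), ← this]
      refine tendsto_measure_iInter_atTop
        (fun k => ((hE j).1.diff isClosed_closedBall.measurableSet).nullMeasurableSet) ?_
        ⟨0, measure_ne_top_of_subset sdiff_subset (hE j).2⟩
      intro a b hab
      exact sdiff_subset_sdiff_right (closedBall_subset_closedBall (by exact_mod_cast hab))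
    have := (tendsto_toReal zero_ne_top).comp hlim
    have h2 := this.eventually_lt_const (show (0 : ENNReal).toReal < ε / 6 by simpa using by positivity)
    obtain ⟨N, hN⟩ := Filter.eventually_atTop.1 h2
    refine ⟨N, fun k hk => ?_⟩
    have e : symmDiff (E j) (E j ∩ cb (n+1) (k:ℝ)) = E j \ cb (n+1) (k:ℝ) := by
      grind
    unfold sd
    rw [e]
    exact hN k hk
  choose N hN using h1
  obtain ⟨k, hk⟩ := exists_nat_ge (max 1 (max (max (r 0) (r 1)) (r 2)))
  set K : ℕ := max k (max (N 0) (max (N 1) (N 2))) with hK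
  have hkK : (k : ℝ) ≤ (K : ℝ) := by exact_mod_cast le_max_left _ _
  have hNK : ∀ j, N j ≤ K := by intro j; fin_cases j <;> simp [hK]
  have hK1 : (1 : ℝ) ≤ K := (le_max_left _ _).trans (hk.trans hkK)
  have hrK : ∀ j, r j ≤ K := by
    intro j
    refine le_trans ?_ (hk.trans hkK)
    fin_cases j <;> simp
  have hB : ∀ t, MeasurableSet (cb (n+1) t) := fun t =>
    isClosed_closedBall.measurableSet
  have h2 : ∀ j, ∃ F', MeasurableSet F' ∧ F' ⊆ cb (n+1) (K:ℝ) ∧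
      volume.real F' = volume.real (ball3 (n+1) r j) ∧
      sd (E j ∩ cb (n+1) (K:ℝ)) F' =
        |volume.real (E j ∩ cb (n+1) (K:ℝ)) - volume.real (ball3 (n+1) r j)| := fun j =>
    exists_repair ((hE j).1.inter (hB _)) (by linarith) inter_subset_right measureReal_nonneg
      (measureReal_mono (closedBall_subset_closedBall (hrK j)) measure_closedBall_lt_top.ne)
  choose E' m1 m2 m3 m4 using h2
  refine ⟨K, by linarith, hrK, E', m1, m2, m3, ?_⟩
  have h3 : ∀ j, sd (E j) (E' j) < δ + ε / 3 := by
    intro j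
    have fi : volume (E j ∩ cb (n+1) (K:ℝ)) ≠ ⊤ :=
      measure_ne_top_of_subset inter_subset_left (hE j).2
    have fe : volume (E' j) ≠ ⊤ := measure_ne_top_of_subset (m2 j) measure_closedBall_lt_top.ne
    have t1 := sd_triangle (hE j).2 fi fe
    have t2 := hN j K (hNK j)
    have t3 := abs_vol_sub_le (hE j).1 ((hE j).1.inter (hB (K:ℝ))) (hE j).2 fi
    rw [m4 j] at t1
    rw [abs_sub_comm] at t3
    linarith [hvol j, abs_sub_le (volume.real (E j ∩ cb (n+1) (K:ℝ))) (volume.real (E j))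
      (volume.real (ball3 (n+1) r j))]
  unfold D3
  rw [Fin.sum_univ_three]
  linarith [h3 0, h3 1, h3 2]

/-- The Riesz–Sobolev inequality. -/
lemma riesz_sobolev {r : Fin 3 → ℝ} (hr : ∀ j, 0 ≤ r j) {E : Tri (Vec (n+1))}
    (hE : Fm E) (hvol : ∀ j, volume.real (E j) = volume.real (ball3 (n+1) r j)) :
    T E ≤ T (ball3 (n+1) r) := by
  set M := ∑ j, volume.real (ball3 (n+1) r j)
  have hMj : ∀ j, volume.real (ball3 (n+1) r j) ≤ M := fun j =>
    Finset.single_le_sum (f := fun j => volume.real (ball3 (n+1) r j))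
      (fun _ _ => measureReal_nonneg) (Finset.mem_univ j)
  have hM0 : 0 ≤ M := measureReal_nonneg.trans (hMj 0)
  refine le_of_forall_pos_le_add fun ε hε => ?_
  set δ := ε / (2 * (M + 1)) with hδ
  have hδ0 : 0 < δ := by positivity
  obtain ⟨R, hR, hrR, E', m1, m2, m3, m4⟩ := exists_bounded_repair hE (δ := 0)
    (fun j => by rw [hvol j, sub_self, abs_zero]) hδ0
  rw [mul_zero, zero_add] at m4
  have hFm : ∀ F : Tri (Vec (n+1)), (∀ j, MeasurableSet (F j)) →
      (∀ j, F j ⊆ cb (n+1) R) → Fm F := fun F h1 h2 j =>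
    ⟨h1 j, measure_ne_top_of_subset (h2 j) measure_closedBall_lt_top.ne⟩
  obtain ⟨F, ⟨f1, f2, f3, f4⟩, hF⟩ := exists_near_ball hr hR hrR
    (fun F => (∀ j, MeasurableSet (F j)) ∧ (∀ j, F j ⊆ cb (n+1) R) ∧
      (∀ j, volume.real (F j) = volume.real (ball3 (n+1) r j)) ∧ T E' ≤ T F)
    (fun _ h => h.1) (fun _ h => h.2.1) (fun _ h => h.2.2.1)
    (fun F h L => ⟨fun j => ((Fm_SL L (hFm F h.1 h.2.1)) j).1,
      fun j => SL_subset_ball L hR.le (h.2.1 j),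
      fun j => by rw [volume_SL L (h.1 j) (hFm F h.1 h.2.1 j).2]; exact h.2.2.1 j,
      h.2.2.2.trans (T_le_SL L (hFm F h.1 h.2.1))⟩)
    ⟨m1, m2, m3, le_rfl⟩ hδ0
  have t1 := T_lipschitz hE (hFm E' m1 m2) (M := M) (fun j => by rw [hvol]; exact hMj j)
    (fun j => by rw [m3]; exact hMj j)
  have t2 := T_lipschitz (hFm F f1 f2) (Fm_ball3 r) (M := M) (fun j => by rw [f3]; exact hMj j) hMj
  have t3 := (abs_le.1 t1).2
  have t4 := (abs_le.1 t2).2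
  have t5 : M * D3 E E' ≤ M * δ := by gcongr
  have t6 : M * D3 F (ball3 (n+1) r) ≤ M * δ := by gcongr
  have t7 : 2 * (M * δ) ≤ ε := by
    rw [hδ]
    have : 2 * (M * (ε / (2 * (M + 1)))) = ε * (M / (M + 1)) := by field_simp
    rw [this]
    have : M / (M + 1) ≤ 1 := (div_le_one (by positivity)).2 (by linarith)
    nlinarith
  linarith

end decrease

/-! ### Local stability on the line -/

/-- A function bounded by one and of large integral must live far from any given point. -/
lemma bathtub {g : ℝ → ℝ} (hg : Nice g) (c : ℝ) (hi : Integrable (fun x => |g x| * |x - c|)) :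
    (∫ x, |g x|) ^ 2 / 8 ≤ ∫ x, |g x| * |x - c| := by
  set M := ∫ x, |g x| with hM
  have hM0 : 0 ≤ M := integral_nonneg fun x => abs_nonneg _
  have hJ : MeasurableSet (Ico (c - M / 4) (c + M / 4)) := measurableSet_Ico
  have hJi : Integrable (one (Ico (c - M / 4) (c + M / 4))) := integrable_one hJ (by simp)
  have h1 : ∫ x, M / 4 * (|g x| - one (Ico (c - M / 4) (c + M / 4)) x) = M ^ 2 / 8 := by
    rw [integral_const_mul, integral_sub hg.int.abs hJi, integral_one hJ, ← hM]
    have : volume.real (Ico (c - M / 4) (c + M / 4)) = M / 2 := by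
      rw [Real.volume_real_Ico_of_le (by linarith)]; ring
    rw [this]; ring
  rw [← h1]
  refine integral_mono ((hg.int.abs.sub hJi).const_mul _) hi fun x => ?_
  have hb := hg.bdd x
  have h0 := abs_nonneg (g x)
  dsimp only
  by_cases hx : x ∈ Ico (c - M / 4) (c + M / 4)
  · rw [one_mem hx]
    have : M / 4 * (|g x| - 1) ≤ 0 := mul_nonpos_of_nonneg_of_nonpos (by linarith) (by linarith)
    exact this.trans (by positivity)
  · rw [one_notMem hx, sub_zero, mul_comm]
    refine mul_le_mul_of_nonneg_left ?_ h0
    grind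

/-- The signed indicator of the interval between `a` and `a + N`. -/
def chi (a N : ℝ) (x : ℝ) : ℝ := one (Ico a (a + N)) x - one (Ico (a + N) a) x

lemma nice_chi (a N : ℝ) : Nice (chi a N) :=
  nice_sub_one measurableSet_Ico (by simp) measurableSet_Ico (by simp)

lemma integrable_mul_sub {g : ℝ → ℝ} (hg : Integrable g) {R : ℝ} (hs : ∀ x, R < |x| → g x = 0)
    (c : ℝ) : Integrable (fun x => g x * (x - c)) := by
  have : (fun x => g x * (x - c)) = fun x => g x * ((Icc (-R) R).indicator (fun x => x - c) x) := by
    funext x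
    by_cases hx : x ∈ Icc (-R) R
    · rw [indicator_of_mem hx]
    · grind
  rw [this]
  refine hg.mul_bdd (c := |R| + |c|) ?_ ?_
  · exact ((measurable_id.sub_const c).indicator measurableSet_Icc).aestronglyMeasurable
  · refine .of_forall fun x => ?_
    rw [Real.norm_eq_abs]
    by_cases hx : x ∈ Icc (-R) R
    · rw [indicator_of_mem hx]
      grind
    · rw [indicator_of_notMem hx, abs_zero]
      positivity

lemma integral_chi_mul (a N : ℝ) : ∫ x, chi a N x * (x - (a + N)) = - N ^ 2 / 2 := by
  have e : ∀ b c : ℝ, b ≤ c → ∀ z, ∫ x, one (Ico b c) x * (x - z) = ((c - z) ^ 2 - (b - z) ^ 2) / 2 := by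
    intro b c h z
    have : (fun x => one (Ico b c) x * (x - z)) = (Ico b c).indicator (fun x => x - z) := by
      funext x
      by_cases hx : x ∈ Ico b c
      · rw [one_mem hx, indicator_of_mem hx]; ring
      · rw [one_notMem hx, indicator_of_notMem hx]; ring
    rw [this, integral_indicator measurableSet_Ico, integral_Ico_eq_integral_Ioo,
      ← integral_Ioc_eq_integral_Ioo, ← intervalIntegral.integral_of_le h]
    rw [intervalIntegral.integral_sub (by simp) (by simp)]
    simp; ring
  unfold chi
  rcases le_total 0 N with h | h
  · have : Ico (a + N) a = ∅ := by simp [h]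
    simp only [this]
    have h0 : ∀ x : ℝ, one (∅ : Set ℝ) x = 0 := fun x => one_notMem (by simp)
    simp [*]
  · have : Ico a (a + N) = ∅ := by simp [h]
    simp only [this]
    have h0 : ∀ x : ℝ, one (∅ : Set ℝ) x = 0 := fun x => one_notMem (by simp)
    simp only [h0, zero_sub, neg_mul, integral_neg]
    rw [e _ _ (by linarith)]; ring

/-- Energy cost of moving mass across an endpoint `a`: the part `N ^ 2 / 2` is unavoidable, and the
deviation from the optimal interval profile is paid for quadratically. -/
lemma end_cost {g : ℝ → ℝ} (hg : Nice g) {a R : ℝ} (hs : ∀ x, R < |x| → g x = 0)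
    (hp : ∀ x, a < x → 0 ≤ g x) (hn : ∀ x, x < a → g x ≤ 0) :
    (∫ x, g x) ^ 2 / 2 + (∫ x, |g x - chi a (∫ x, g x) x|) ^ 2 / 8 ≤ ∫ x, g x * (x - a) := by
  set N := ∫ x, g x with hN
  set c := a + N with hc
  set R' := max R (|a| + |c|)
  have hs' : ∀ x, R' < |x| → g x = 0 := fun x hx => hs x ((le_max_left _ _).trans_lt hx)
  have hchi : ∀ x, R' < |x| → chi a N x = 0 := by
    intro x hx
    unfold chi
    rw [one_notMem, one_notMem, sub_zero]
    · grind
    · grind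
  have hsp : ∀ x, R' < |x| → g x - chi a N x = 0 := fun x hx => by rw [hs' x hx, hchi x hx, sub_zero]
  have hpb : ∀ x, x ≠ a → (g x - chi a N x) * (x - c) = |g x - chi a N x| * |x - c| ∧
      |g x - chi a N x| ≤ 1 := by
    intro x hx
    have hb := abs_le.1 (hg.bdd x)
    have key : (0 ≤ g x - chi a N x ∧ c ≤ x ∨ g x - chi a N x ≤ 0 ∧ x ≤ c) ∧
        |g x - chi a N x| ≤ 1 := by
      rw [abs_le]
      unfold chi
      rcases lt_or_gt_of_ne hx with h | h
      · have h1 := hn x h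
        rw [one_notMem (A := Ico a (a + N)) (by simp [h])]
        by_cases h2 : c ≤ x
        · rw [one_mem (show x ∈ Ico (a + N) a from ⟨h2, h⟩)]
          grind
        · rw [one_notMem (by rintro ⟨h3, -⟩; exact h2 h3)]
          grind
      · have h1 := hp x h
        rw [one_notMem (A := Ico (a + N) a) (by simp [h.le])]
        by_cases h2 : x < c
        · rw [one_mem (show x ∈ Ico a (a + N) from ⟨h.le, h2⟩)]
          grind
        · rw [one_notMem (by rintro ⟨-, h3⟩; exact h2 h3)]
          grind
    refine ⟨?_, key.2⟩
    rcases key.1 with ⟨h1, h2⟩ | ⟨h1, h2⟩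
    · rw [abs_of_nonneg h1, abs_of_nonneg (by linarith)]
    · grind
  -- modify at the point `a` so that the bound by one holds everywhere
  set k : ℝ → ℝ := fun x => if x = a then 0 else g x - chi a N x with hk
  have hka : k =ᵐ[volume] fun x => g x - chi a N x := by
    have : ∀ᵐ x : ℝ, x ≠ a := by simp [ae_iff]
    filter_upwards [this] with x hx
    simp [hk, hx]
  have hpi : Integrable (fun x => g x - chi a N x) := hg.int.sub (nice_chi a N).int
  have hkn : Nice k := by
    refine ⟨?_, hpi.congr hka.symm, fun x => ?_⟩
    · exact Measurable.ite (measurableSet_singleton a) measurable_const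
        (hg.meas.sub (nice_chi a N).meas)
    · grind
  have ae1 : (fun x => |k x| * |x - c|) =ᵐ[volume] fun x => (g x - chi a N x) * (x - c) := by
    have : ∀ᵐ x : ℝ, x ≠ a := by simp [ae_iff]
    filter_upwards [this] with x hx
    grind
  have i1 := integrable_mul_sub hpi hsp c
  have B := bathtub hkn c (i1.congr ae1.symm)
  rw [integral_congr_ae ae1] at B
  have eM : ∫ x, |k x| = ∫ x, |g x - chi a N x| := by
    refine integral_congr_ae ?_
    filter_upwards [hka] with x hx; rw [hx]
  rw [eM] at B
  have i2 := integrable_mul_sub (nice_chi a N).int hchi c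
  have e1 : ∫ x, g x * (x - a) = (∫ x, (g x - chi a N x) * (x - c)) + (∫ x, chi a N x * (x - c))
      + N * ∫ x, g x := by
    have i12 : Integrable (fun x => (g x - chi a N x) * (x - c) + chi a N x * (x - c)) := i1.add i2
    rw [← integral_const_mul, ← integral_add i1 i2, ← integral_add i12 (hg.int.const_mul N)]
    refine integral_congr_ae (.of_forall fun x => ?_)
    simp only [hc]; ring
  rw [integral_chi_mul] at e1
  rw [e1, ← hN]
  nlinarith

/-- Decomposition of `1_A - 1_{[-a, a)}` into a part `p` near `a`, a part `m` near `-a` and a far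
part `r`, together with the resulting estimates. The endpoints of `A` have moved by `u + w` and
`w - u` outwards, `q` is the far mass, and `M` is the deviation from an interval. -/
structure Ends (A : Set ℝ) (a κ η : ℝ) (p m r : ℝ → ℝ) (u w q M : ℝ) : Prop where
  np : Nice p
  nm : Nice m
  nr : Nice r
  npm : Nice (p + m)
  hf : one A - one (iv 0 a) = p + m + r
  sp : ∀ x, p x ≠ 0 → |x - a| ≤ κ
  sm : ∀ x, m x ≠ 0 → |x + a| ≤ κ
  ip : ∫ x, p x = u + w
  im : ∫ x, m x = w - u
  iq : ∫ x, |r x| = q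
  inear : ∫ x, |(p + m) x| ≤ η
  hw : |w| ≤ q / 2
  hu : |u| ≤ η
  hq : q ≤ η
  hM : 0 ≤ M
  lin : ∀ a1 a2, 4 * κ ≤ a1 + a2 - a → 4 * κ ≤ a + a1 - a2 → 4 * κ ≤ a + a2 - a1 →
    ∫ x, (one A - one (iv 0 a)) x * tent a1 a2 x ≤ -(u ^ 2 + w ^ 2 + M ^ 2 / 16 + κ * q)
  hsd : sd A (iv u a) ≤ M + 2 * q

lemma tent_eq {a1 a2 z : ℝ} (h1 : |z| ≤ a1 + a2) (h2 : a1 ≤ a2 + |z|) (h3 : a2 ≤ a1 + |z|) :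
    tent a1 a2 z = a1 + a2 - |z| := by
  unfold tent
  grind

/-- The pointwise inequality behind the linear term. -/
lemma lin_pt {a κ a1 a2 f x : ℝ} (hκ : 0 < κ) (ha : 4 * κ ≤ a) (h1 : 4 * κ ≤ a1 + a2 - a)
    (h2 : 4 * κ ≤ a + a1 - a2) (h3 : 4 * κ ≤ a + a2 - a1)
    (hin : |x| < a → f ≤ 0) (hout : a < |x| → 0 ≤ f) :
    (|x - a| ≤ κ → f * (tent a1 a2 x - (a1 + a2 - a)) = - (f * (x - a))) ∧
    (|x + a| ≤ κ → f * (tent a1 a2 x - (a1 + a2 - a)) = - (f * (-x - a))) ∧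
    (κ < |x - a| → κ < |x + a| → f * (tent a1 a2 x - (a1 + a2 - a)) ≤ - (κ * |f|)) := by
  refine ⟨fun h => ?_, fun h => ?_, fun h h' => ?_⟩
  · have h := abs_le.1 h
    have hx : |x| = x := abs_of_nonneg (by linarith)
    rw [tent_eq (by rw [hx]; linarith) (by rw [hx]; linarith) (by rw [hx]; linarith), hx]; ring
  · have h := abs_le.1 h
    have hx : |x| = -x := abs_of_nonpos (by linarith)
    rw [tent_eq (by rw [hx]; linarith) (by rw [hx]; linarith) (by rw [hx]; linarith), hx]; ring
  · rcases le_or_gt |x| a with hx | hx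
    · have hx' : |x| ≤ a - κ := by grind
      have hf := hin (by linarith)
      have ha' : |a - κ| = a - κ := abs_of_nonneg (by linarith)
      have := tent_anti a1 a2 (z := x) (z' := a - κ) (by rw [ha']; exact hx')
      rw [tent_eq (by rw [ha']; linarith) (by rw [ha']; linarith) (by rw [ha']; linarith), ha'] at this
      rw [abs_of_nonpos hf]; nlinarith
    · have hx' : a + κ ≤ |x| := by grind
      have hf := hout hx
      have ha' : |a + κ| = a + κ := abs_of_nonneg (by linarith)
      have := tent_anti a1 a2 (z := a + κ) (z' := x) (by rw [ha']; exact hx')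
      rw [tent_eq (z := a + κ) (by rw [ha']; linarith) (by rw [ha']; linarith) (by rw [ha']; linarith), ha'] at this
      rw [abs_of_nonneg hf]; nlinarith

lemma Nice.indicator {f : ℝ → ℝ} (hf : Nice f) {S : Set ℝ} (hS : MeasurableSet S) :
    Nice (S.indicator f) :=
  ⟨hf.meas.indicator hS, hf.int.indicator hS, fun x => by
    by_cases hx : x ∈ S
    · rw [indicator_of_mem hx]; exact hf.bdd x
    · rw [indicator_of_notMem hx]; simp⟩

lemma sd_of_subset {α : Type*} [MeasureSpace α] {A B : Set α} (hA : MeasurableSet A)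
    (hB : volume B ≠ ⊤) (h : A ⊆ B) : sd A B = volume.real B - volume.real A := by
  change volume.real (A \ B ∪ B \ A) = _
  rw [sdiff_eq_empty.2 h, empty_union, measureReal_sdiff h hA hB]

lemma sd_iv_iv {u a w : ℝ} (ha : 0 ≤ a) (haw : 0 ≤ a + w) : sd (iv u (a + w)) (iv u a) = 2 * |w| := by
  rcases le_total 0 w with h | h
  · rw [sd_comm, sd_of_subset (measurableSet_iv _ _) (volume_iv_ne_top _ _), volume_real_iv haw,
      volume_real_iv ha, abs_of_nonneg h]
    · ring
    · exact Ico_subset_Ico (by linarith) (by linarith)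
  · rw [sd_of_subset (measurableSet_iv _ _) (volume_iv_ne_top _ _), volume_real_iv haw,
      volume_real_iv ha, abs_of_nonpos h]
    · ring
    · exact Ico_subset_Ico (by linarith) (by linarith)

lemma chi_pt {a N N' x : ℝ} (h1 : |N| < a) (h2 : |N'| < a) (hx : x ≠ -a) (hx' : x ≠ -a - N') :
    one (iv ((N - N') / 2) (a + (N + N') / 2)) x - one (iv 0 a) x = chi a N x + chi a N' (-x) := by
  classical
  have h1 := abs_lt.1 h1
  have h2 := abs_lt.1 h2
  have e : iv ((N - N') / 2) (a + (N + N') / 2) = Ico (-a - N') (a + N) := by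
    unfold iv; congr 1 <;> ring
  have e' : iv 0 a = Ico (-a) a := by unfold iv; congr 1 <;> ring
  rw [e, e']
  unfold chi
  have F1 : (-x ∈ Ico a (a + N')) ↔ (x ∈ Ico (-a - N') (-a)) := by grind
  have F2 : (-x ∈ Ico (a + N') a) ↔ (x ∈ Ico (-a) (-a - N')) := by grind
  simp only [one_apply, F1, F2]
  grind

/-- Existence of the decomposition `Ends`; the linear term is estimated by `end_cost`. -/
lemma exists_ends {A : Set ℝ} (hA : MeasurableSet A) (hfin : volume A ≠ ⊤) {a κ η : ℝ} (hκ : 0 < κ)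
    (ha : 4 * κ ≤ a) (hη : η ≤ κ) (hvol : volume.real A = 2 * a) (hs : sd A (iv 0 a) ≤ η) :
    ∃ p m r u w q M, Ends A a κ η p m r u w q M := by
  set f : ℝ → ℝ := one A - one (iv 0 a) with hf
  have Nf : Nice f := nice_sub_one hA hfin (measurableSet_iv _ _) (volume_iv_ne_top _ _)
  have hfη : ∫ x, |f x| ≤ η := (sd_eq hA (measurableSet_iv _ _)).le.trans hs
  have hf0 : ∫ x, f x = 0 := by
    simp only [hf, Pi.sub_apply]
    rw [integral_sub (integrable_one hA hfin) (integrable_one (measurableSet_iv _ _) (volume_iv_ne_top _ _)),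
      integral_one hA, integral_one (measurableSet_iv _ _), hvol, volume_real_iv (by linarith)]; ring
  set P : Set ℝ := Icc (a - κ) (a + κ)
  set Q : Set ℝ := Icc (-a - κ) (-a + κ)
  have mP : MeasurableSet P := measurableSet_Icc
  have mQ : MeasurableSet Q := measurableSet_Icc
  have dPQ : ∀ x, x ∈ P → x ∉ Q := by rintro x ⟨h1, h2⟩ ⟨h3, h4⟩; linarith
  set p := P.indicator f with hp
  set m := Q.indicator f with hm
  set r := ((P ∪ Q)ᶜ).indicator f with hr
  have epm : p + m = (P ∪ Q).indicator f := by
    rw [hp, hm, indicator_union_of_disjoint (Set.disjoint_left.2 dPQ)]; rfl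
  have Np : Nice p := Nf.indicator mP
  have Nm : Nice m := Nf.indicator mQ
  have Nr : Nice r := Nf.indicator (mP.union mQ).compl
  have Npm : Nice (p + m) := by rw [epm]; exact Nf.indicator (mP.union mQ)
  have esum : f = p + m + r := by rw [epm, hr, indicator_self_add_compl]
  have ind_le : ∀ S : Set ℝ, MeasurableSet S → ∫ x, |S.indicator f x| ≤ η := by
    intro S hS
    refine le_trans (integral_mono (Nf.indicator hS).int.abs Nf.int.abs fun x => ?_) hfη
    by_cases hx : x ∈ S
    · simp [hx]
    · simp [hx]
  have hin : ∀ x, |x| < a → f x ≤ 0 := by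
    intro x hx
    have hx := abs_lt.1 hx
    simp only [hf, Pi.sub_apply]
    rw [one_mem (A := iv 0 a) ⟨by linarith, by linarith⟩]
    linarith [one_le_one A x]
  have hout : ∀ x, a < |x| → 0 ≤ f x := by
    intro x hx
    simp only [hf, Pi.sub_apply]
    rw [one_notMem (A := iv 0 a)]
    · linarith [one_nonneg A x]
    · rintro ⟨h1, h2⟩
      rw [lt_abs] at hx
      rcases hx with h | h <;> linarith
  set N := ∫ x, p x with hN
  set N' := ∫ x, m x with hN'
  set q := ∫ x, |r x| with hq
  have hNle : |N| ≤ η := (abs_integral_le_integral_abs).trans (ind_le P mP)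
  have hN'le : |N'| ≤ η := (abs_integral_le_integral_abs).trans (ind_le Q mQ)
  have hsum : N + N' + ∫ x, r x = 0 := by
    rw [← hf0, esum]
    simp only [Pi.add_apply]
    have : Integrable (fun x => p x + m x) := Np.int.add Nm.int
    rw [integral_add this Nr.int, integral_add Np.int Nm.int]
  have hrq : |∫ x, r x| ≤ q := abs_integral_le_integral_abs
  set m' : ℝ → ℝ := fun x => m (-x) with hm'
  have Nm' : Nice m' := ⟨Nm.meas.comp measurable_neg, Nm.int.comp_neg, fun x => Nm.bdd _⟩
  have iN' : ∫ x, m' x = N' := integral_neg_eq_self m volume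
  have suppP : ∀ x, p x ≠ 0 → |x - a| ≤ κ := by
    intro x hx
    have : x ∈ P := by by_contra h; exact hx (by simp [hp, h])
    rw [abs_le]; exact ⟨by linarith [this.1], by linarith [this.2]⟩
  have suppQ : ∀ x, m x ≠ 0 → |x + a| ≤ κ := by
    intro x hx
    have : x ∈ Q := by by_contra h; exact hx (by simp [hm, h])
    rw [abs_le]; exact ⟨by linarith [this.1], by linarith [this.2]⟩
  have suppP' : ∀ x, a + κ < |x| → p x = 0 := by
    intro x hx
    by_contra h
    have := abs_le.1 (suppP x h)
    rw [lt_abs] at hx; rcases hx with h | h <;> linarith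
  have suppQ0 : ∀ x, a + κ < |x| → m x = 0 := by
    intro x hx
    by_contra h
    have := abs_le.1 (suppQ x h)
    rw [lt_abs] at hx; rcases hx with h | h <;> linarith
  have suppQ' : ∀ x, a + κ < |x| → m' x = 0 := fun x hx => suppQ0 (-x) (by rwa [abs_neg])
  have C1 := end_cost Np (a := a) suppP' (fun x hx => by
      by_cases h : x ∈ P
      · rw [hp, indicator_of_mem h]; exact hout x (hx.trans_le (le_abs_self x))
      · rw [hp, indicator_of_notMem h]) (fun x hx => by
      by_cases h : x ∈ P
      · rw [hp, indicator_of_mem h]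
        exact hin x (by rw [abs_of_nonneg (by linarith [h.1])]; exact hx)
      · rw [hp, indicator_of_notMem h])
  have C2 := end_cost Nm' (a := a) suppQ' (fun x hx => by
      by_cases h : -x ∈ Q
      · simp only [hm', hm, indicator_of_mem h]
        exact hout (-x) (by rw [abs_neg]; exact (hx.trans_le (le_abs_self x)))
      · simp only [hm', hm, indicator_of_notMem h, le_refl]) (fun x hx => by
      by_cases h : -x ∈ Q
      · simp only [hm', hm, indicator_of_mem h]
        exact hin (-x) (by rw [abs_neg, abs_of_nonneg (by linarith [h.2])]; exact hx)
      · simp only [hm', hm, indicator_of_notMem h, le_refl])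
  rw [iN'] at C2
  rw [← hN] at C1
  set μ := ∫ x, |p x - chi a N x| with hμ
  set μ' := ∫ x, |m' x - chi a N' x| with hμ'
  have hw : |(N + N') / 2| ≤ q / 2 := by
    rw [abs_div, abs_two]
    have : N + N' = - ∫ x, r x := by linarith
    rw [this, abs_neg]; linarith
  have hu : |(N - N') / 2| ≤ η := by
    have b1 := abs_le.1 hNle
    have b2 := abs_le.1 hN'le
    rw [abs_le]; constructor <;> linarith
  refine ⟨p, m, r, (N - N') / 2, (N + N') / 2, q, μ + μ', ⟨Np, Nm, Nr, Npm, esum, suppP, suppQ,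
    by rw [← hN]; ring, by rw [← hN']; ring, rfl, by rw [epm]; exact ind_le _ (mP.union mQ), hw, hu,
    ind_le _ (mP.union mQ).compl, by positivity, ?_, ?_⟩⟩
  · intro a1 a2 h1 h2 h3
    have itent : Integrable (fun x => f x * tent a1 a2 x) := by
      refine Nf.int.mul_bdd (c := |2 * a1|) (continuous_tent a1 a2).aestronglyMeasurable
        (.of_forall fun x => ?_)
      rw [Real.norm_eq_abs, abs_of_nonneg (tent_nonneg _ _ _)]
      unfold tent
      exact max_le (abs_nonneg _) (((min_le_left _ _).trans (min_le_left _ _)).trans (le_abs_self _))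
    have e1 : ∫ x, f x * tent a1 a2 x = ∫ x, f x * (tent a1 a2 x - (a1 + a2 - a)) := by
      have : ∀ x, f x * (tent a1 a2 x - (a1 + a2 - a)) = f x * tent a1 a2 x - f x * (a1 + a2 - a) :=
        fun x => by ring
      simp only [this]
      rw [integral_sub itent (Nf.int.mul_const _), integral_mul_const, hf0]; ring
    have i0 : Integrable (fun x => f x * (tent a1 a2 x - (a1 + a2 - a))) := by
      refine (itent.sub (Nf.int.mul_const (a1 + a2 - a))).congr
        (.of_forall fun x => ?_)
      simp only [Pi.sub_apply]; ring
    have i1 := integrable_mul_sub Np.int suppP' a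
    have i2' := integrable_mul_sub Nm'.int suppQ' a
    have i2 : Integrable (fun x => m x * (-x - a)) := by
      have := i2'.comp_neg
      simpa [hm'] using this
    have e2 : ∫ x, m x * (-x - a) = ∫ x, m' x * (x - a) := by
      rw [← integral_neg_eq_self (fun x => m x * (-x - a)) volume]
      simp [hm']
    have i12 : Integrable (fun x => -(p x * (x - a)) - m x * (-x - a)) := i1.neg.sub i2
    have key : ∫ x, f x * (tent a1 a2 x - (a1 + a2 - a))
        ≤ ∫ x, ((-(p x * (x - a)) - m x * (-x - a)) - κ * |r x|) := by
      refine integral_mono i0 (i12.sub (Nr.int.abs.const_mul κ)) fun x => ?_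
      have L := lin_pt hκ ha h1 h2 h3 (hin x) (hout x)
      dsimp only
      by_cases hxP : x ∈ P
      · have hxQ := dPQ x hxP
        have er : r x = 0 := by simp [hr, hxP]
        have em : m x = 0 := by simp [hm, hxQ]
        have ep : p x = f x := by simp [hp, hxP]
        rw [er, em, ep, L.1 (abs_le.2 ⟨by linarith [hxP.1], by linarith [hxP.2]⟩)]; simp
      · by_cases hxQ : x ∈ Q
        · have er : r x = 0 := by simp [hr, hxQ]
          have em : m x = f x := by simp [hm, hxQ]
          have ep : p x = 0 := by simp [hp, hxP]
          rw [er, em, ep, L.2.1 (abs_le.2 ⟨by linarith [hxQ.1], by linarith [hxQ.2]⟩)]; simp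
        · have er : r x = f x := by simp [hr, hxQ, hxP]
          have em : m x = 0 := by simp [hm, hxQ]
          have ep : p x = 0 := by simp [hp, hxP]
          rw [er, em, ep]
          have := L.2.2 (by
            by_contra! h
            have h := abs_le.1 h
            exact hxP ⟨by linarith, by linarith⟩) (by
            by_contra! h
            have h := abs_le.1 h
            exact hxQ ⟨by linarith, by linarith⟩)
          linarith
    rw [e1]
    refine key.trans ?_
    rw [integral_sub i12 (Nr.int.abs.const_mul κ), integral_const_mul]
    have : ∫ x, (-(p x * (x - a)) - m x * (-x - a)) = -(∫ x, p x * (x - a)) - ∫ x, m x * (-x - a) := by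
      have i1n : Integrable (fun x => -(p x * (x - a))) := i1.neg
      rw [integral_sub i1n i2, integral_neg]
    rw [this, e2]
    nlinarith [sq_nonneg (μ - μ')]
  · have ht := sd_triangle (A := A) (B := iv ((N - N') / 2) (a + (N + N') / 2)) (C := iv ((N - N') / 2) a)
      hfin (volume_iv_ne_top _ _) (volume_iv_ne_top _ _)
    have b1 := abs_le.1 hNle
    have b2 := abs_le.1 hN'le
    rw [sd_iv_iv (by linarith) (by linarith)] at ht
    suffices h : sd A (iv ((N - N') / 2) (a + (N + N') / 2)) ≤ μ + μ' + q by linarith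
    rw [← sd_eq hA (measurableSet_iv _ _)]
    have n2 : Nice (fun x => chi a N' (-x)) :=
      ⟨(nice_chi a N').meas.comp measurable_neg, (nice_chi a N').int.comp_neg,
        fun x => (nice_chi a N').bdd _⟩
    have eμ' : μ' = ∫ x, |m x - chi a N' (-x)| := by
      rw [hμ', ← integral_neg_eq_self (fun x => |m x - chi a N' (-x)|) volume]
      simp [hm']
    have j1 : Integrable (fun x => |p x - chi a N x|) := (Np.int.sub (nice_chi a N).int).abs
    have j2 : Integrable (fun x => |m x - chi a N' (-x)|) := (Nm.int.sub n2.int).abs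
    have j12 : Integrable (fun x => |p x - chi a N x| + |m x - chi a N' (-x)|) := j1.add j2
    rw [eμ', hμ, hq, ← integral_add j1 j2, ← integral_add j12 Nr.int.abs]
    refine integral_mono_ae ?_ (j12.add Nr.int.abs) ?_
    · exact (nice_sub_one hA hfin (measurableSet_iv _ _) (volume_iv_ne_top _ _)).int.abs
    · have g1 : ∀ᵐ x : ℝ, x ≠ -a := by simp [ae_iff]
      have g2 : ∀ᵐ x : ℝ, x ≠ -a - N' := by simp [ae_iff]
      filter_upwards [g1, g2] with x h1 h2
      have := chi_pt (a := a) (N := N) (N' := N') (x := x) (by linarith) (by linarith) h1 h2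
      have e3 : one A x - one (iv ((N - N') / 2) (a + (N + N') / 2)) x
          = (p x - chi a N x) + (m x - chi a N' (-x)) + r x := by
        have := congrFun esum x
        simp only [hf, Pi.sub_apply, Pi.add_apply] at this
        linarith
      rw [e3]
      exact (abs_add_le _ _).trans (by linarith [abs_add_le (p x - chi a N x) (m x - chi a N' (-x))])

/-- On the parts near the endpoints the third interval acts only through its constant values `0` and
`1`, so the quadratic term depends on the masses alone. -/
lemma Ends.tri_near {A A' : Set ℝ} {a a' b κ η η' : ℝ} {p m r p' m' r' : ℝ → ℝ}
    {u w q M u' w' q' M' : ℝ} (h : Ends A a κ η p m r u w q M)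
    (h' : Ends A' a' κ η' p' m' r' u' w' q' M') (hκ : 0 < κ)
    (h1 : 4 * κ ≤ a + a' - b) (h2 : 4 * κ ≤ a + b - a') (h3 : 4 * κ ≤ a' + b - a) :
    tri (p + m) (p' + m') (one (iv 0 b)) = 2 * w * w' - 2 * u * u' := by
  have pt : ∀ z : ℝ × ℝ, (p + m) z.1 * (p' + m') z.2 * one (iv 0 b) (-(z.1 + z.2))
      = p z.1 * m' z.2 + m z.1 * p' z.2 := by
    rintro ⟨x, y⟩
    simp only [Pi.add_apply]
    have out : b < |x + y| → one (iv 0 b) (-(x + y)) = 0 := fun h => one_notMem (by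
      rintro ⟨c1, c2⟩
      rw [lt_abs] at h; rcases h with h | h <;> linarith)
    have inn : |x + y| < b → one (iv 0 b) (-(x + y)) = 1 := fun h => one_mem (by
      have := abs_lt.1 h
      exact ⟨by linarith, by linarith⟩)
    have e1 : p x * p' y * one (iv 0 b) (-(x + y)) = 0 := by
      by_cases c1 : p x = 0
      · rw [c1]; ring
      by_cases c2 : p' y = 0
      · rw [c2]; ring
      have d1 := abs_le.1 (h.sp x c1)
      have d2 := abs_le.1 (h'.sp y c2)
      rw [out (by rw [lt_abs]; left; linarith)]; ring
    have e2 : m x * m' y * one (iv 0 b) (-(x + y)) = 0 := by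
      by_cases c1 : m x = 0
      · rw [c1]; ring
      by_cases c2 : m' y = 0
      · rw [c2]; ring
      have d1 := abs_le.1 (h.sm x c1)
      have d2 := abs_le.1 (h'.sm y c2)
      rw [out (by rw [lt_abs]; right; linarith)]; ring
    have e3 : p x * m' y * one (iv 0 b) (-(x + y)) = p x * m' y := by
      by_cases c1 : p x = 0
      · rw [c1]; ring
      by_cases c2 : m' y = 0
      · rw [c2]; ring
      have d1 := abs_le.1 (h.sp x c1)
      have d2 := abs_le.1 (h'.sm y c2)
      rw [inn (by rw [abs_lt]; constructor <;> linarith)]; ring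
    have e4 : m x * p' y * one (iv 0 b) (-(x + y)) = m x * p' y := by
      by_cases c1 : m x = 0
      · rw [c1]; ring
      by_cases c2 : p' y = 0
      · rw [c2]; ring
      have d1 := abs_le.1 (h.sm x c1)
      have d2 := abs_le.1 (h'.sp y c2)
      rw [inn (by rw [abs_lt]; constructor <;> linarith)]; ring
    linear_combination e1 + e2 + e3 + e4
  unfold tri
  simp only [pt]
  have i1 : Integrable (fun z : ℝ × ℝ => p z.1 * m' z.2) := h.np.int.mul_prod h'.nm.int
  have i2 : Integrable (fun z : ℝ × ℝ => m z.1 * p' z.2) := h.nm.int.mul_prod h'.np.int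
  rw [integral_add i1 i2]
  have I1 : ∫ z : ℝ × ℝ, p z.1 * m' z.2 = (u + w) * (w' - u') := by
    rw [← h.ip, ← h'.im]; exact integral_prod_mul (μ := volume) (ν := volume) p m'
  have I2 : ∫ z : ℝ × ℝ, m z.1 * p' z.2 = (w - u) * (u' + w') := by
    rw [← h.im, ← h'.ip]; exact integral_prod_mul (μ := volume) (ν := volume) m p'
  rw [I1, I2]; ring

lemma tri_pert2 {n r n' r' b : ℝ → ℝ} {η q q' : ℝ} (hn : Nice n) (hr : Nice r)
    (hn' : Nice n') (hr' : Nice r') (hf' : Nice (n' + r')) (hb : Nice b)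
    (h1 : ∫ x, |n x| ≤ η) (h2 : ∫ x, |(n' + r') x| ≤ η) (hq : ∫ x, |r x| = q)
    (hq' : ∫ x, |r' x| = q') :
    tri (n + r) (n' + r') b ≤ tri n n' b + η * (q + q') := by
  rw [tri_add0 hn hr hf' hb, tri_add1 hn hn' hr' hb]
  have a1 := le_of_abs_le (abs_tri_le01 hr hf' hb)
  have a2 := le_of_abs_le (abs_tri_le01 hn hr' hb)
  rw [hq] at a1
  rw [hq'] at a2
  have q0 : 0 ≤ q := hq ▸ integral_nonneg fun x => abs_nonneg _
  have q0' : 0 ≤ q' := hq' ▸ integral_nonneg fun x => abs_nonneg _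
  nlinarith

/-- Half the difference of the measures of the right and left halves of a set. -/
def sg (A : Set ℝ) : ℝ := (volume.real (A ∩ Ioi 0) - volume.real (A ∩ Iic 0)) / 2

lemma sg_iv {u a : ℝ} (h : |u| ≤ a) : sg (iv u a) = u := by
  have h := abs_le.1 h
  unfold sg iv
  have e1 : volume.real (Ico (u - a) (u + a) ∩ Ioi 0) = u + a := by
    have : (Ico (u - a) (u + a) ∩ Ioi 0 : Set ℝ) = Ioo 0 (u + a) := by grind
    rw [this, Real.volume_real_Ioo_of_le (by linarith)]; ring
  have e2 : volume.real (Ico (u - a) (u + a) ∩ Iic 0) = a - u := by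
    have : (Ico (u - a) (u + a) ∩ Iic 0 : Set ℝ) =ᵐ[volume] Ico (u - a) 0 := by
      have g : ∀ᵐ x : ℝ, x ≠ 0 := by simp [ae_iff]
      have g' : ∀ᵐ x : ℝ, x ≠ u + a := by simp [ae_iff]
      rw [Filter.eventuallyEq_set]
      filter_upwards [g, g'] with x hx hx'
      grind
    rw [measureReal_congr this, Real.volume_real_Ico_of_le (by linarith)]; ring
  rw [e1, e2]; ring

lemma sg_lip {A B : Set ℝ} (hA : MeasurableSet A) (hB : MeasurableSet B) (hA' : volume A ≠ ⊤)
    (hB' : volume B ≠ ⊤) : |sg A - sg B| ≤ sd A B / 2 := by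
  have fin : ∀ {S S' : Set ℝ}, volume S ≠ ⊤ → volume (S ∩ S') ≠ ⊤ := fun h =>
    measure_ne_top_of_subset inter_subset_left h
  have h1 := abs_vol_sub_le (hA.inter (measurableSet_Ioi (a := (0 : ℝ)))) (hB.inter (measurableSet_Ioi (a := (0 : ℝ))))
    (fin hA') (fin hB')
  have h2 := abs_vol_sub_le (hA.inter (measurableSet_Iic (a := (0 : ℝ)))) (hB.inter (measurableSet_Iic (a := (0 : ℝ))))
    (fin hA') (fin hB')
  have h3 : sd (A ∩ Ioi 0) (B ∩ Ioi 0) + sd (A ∩ Iic 0) (B ∩ Iic 0) = sd A B := by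
    unfold sd
    have e1 : symmDiff (A ∩ Ioi 0) (B ∩ Ioi 0) = symmDiff A B ∩ Ioi 0 := by grind
    have e2 : symmDiff (A ∩ Iic 0) (B ∩ Iic 0) = symmDiff A B \ Ioi 0 := by grind
    rw [e1, e2]
    exact measureReal_inter_add_sdiff measurableSet_Ioi (symmDiff_ne_top hA' hB')
  unfold sg
  grind

set_option maxHeartbeats 1000000 in
/-- Stability of the one-dimensional Riesz–Sobolev inequality near symmetric intervals whose
half-lengths satisfy strict triangle inequalities: the deficit controls the sum of the approximate
centres and the distance to intervals with these centres. -/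
lemma oneD_local {θ : ℝ} (hθ : 0 < θ) : ∃ η > 0, ∃ C > 0, ∀ (A : Tri ℝ) (a : Fin 3 → ℝ),
    Fm A → (∀ j, volume.real (A j) = 2 * a j) → θ ≤ a 0 + a 1 - a 2 → θ ≤ a 0 + a 2 - a 1 →
    θ ≤ a 1 + a 2 - a 0 → (∀ j, sd (A j) (iv 0 (a j)) ≤ η) →
    (sg (A 0) + sg (A 1) + sg (A 2)) ^ 2 ≤ C * (T (fun j => iv 0 (a j)) - T A) ∧
    ∀ j, sd (A j) (iv (sg (A j)) (a j)) ^ 2 ≤ C * (T (fun j => iv 0 (a j)) - T A) := by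
  set κ := θ / 4 with hκd
  have hκ : 0 < κ := by positivity
  have hθκ : θ = 4 * κ := by rw [hκd]; ring
  set η := min (κ / 8) 1
  have hη0 : 0 < η := lt_min (by positivity) one_pos
  have hη1 : η ≤ κ / 8 := min_le_left _ _
  have hη2 : η ≤ 1 := min_le_right _ _
  refine ⟨η, hη0, 1000 * (1 + 1 / κ), by positivity, ?_⟩
  intro A a hA hvol g0 g1 g2 hs
  rw [hθκ] at g0 g1 g2
  have hapos : ∀ j, 4 * κ ≤ a j := by
    intro j; fin_cases j <;> simp only [Fin.zero_eta, Fin.mk_one, Fin.reduceFinMk] <;> linarith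
  choose p m r u w q M hE using fun j => exists_ends (hA j).1 (hA j).2 hκ (hapos j)
    (by linarith) (hvol j) (hs j)
  set I : Tri ℝ := fun j => iv 0 (a j)
  have hIF : Fm I := Fm_iv _ _
  set f : Fin 3 → ℝ → ℝ := fun j => one (A j) - one (I j) with hf
  have Nf : ∀ j, Nice (f j) := fun j =>
    nice_sub_one (hA j).1 (hA j).2 (measurableSet_iv _ _) (volume_iv_ne_top _ _)
  have fη : ∀ j, ∫ x, |f j x| ≤ η := fun j =>
    (sd_eq (hA j).1 (measurableSet_iv _ _)).le.trans (hs j)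
  have eA : ∀ j, one (I j) + f j = one (A j) := fun j => by simp [hf]
  have ex := tri_expand (b := fun j => one (I j)) (f := f) (fun j => hIF.nice j) Nf
    (fun j => by rw [eA]; exact hA.nice j)
  simp only [eA] at ex
  have ef : ∀ j, f j = (p j + m j) + r j := fun j => (hE j).hf
  have lin : ∀ j k l, 4 * κ ≤ a k + a l - a j → 4 * κ ≤ a j + a k - a l → 4 * κ ≤ a j + a l - a k →
      tri (f j) (one (I k)) (one (I l)) ≤ -(u j ^ 2 + w j ^ 2 + M j ^ 2 / 16 + κ * q j) := by
    intro j k l h1 h2 h3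
    rw [tri_eq_iter (Nf j) (hIF.nice k) (hIF.nice l)]
    have : ∀ x, ∫ y, one (I k) y * one (I l) (-(x + y)) = tent (a k) (a l) x := fun x =>
      integral_one_mul_one_iv (by linarith [hapos k]) (by linarith [hapos l]) x
    simp only [this]
    exact (hE j).lin _ _ h1 h2 h3
  have quad : ∀ j k l, 4 * κ ≤ a j + a k - a l → 4 * κ ≤ a j + a l - a k → 4 * κ ≤ a k + a l - a j →
      tri (f j) (f k) (one (I l)) ≤ 2 * w j * w k - 2 * u j * u k + η * (q j + q k) := by
    intro j k l h1 h2 h3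
    rw [← (hE j).tri_near (hE k) hκ h1 h2 h3, ef j, ef k]
    refine tri_pert2 (hE j).npm (hE j).nr (hE k).npm (hE k).nr ?_ (hIF.nice l)
      (hE j).inear ?_ (hE j).iq (hE k).iq
    · rw [← ef k]; exact Nf k
    · rw [← ef k]; exact fη k
  have cub : tri (f 0) (f 1) (f 2) ≤ η * (q 0 + q 1 + q 2) := by
    have h1 : tri (f 0) (f 1) (f 2) ≤ tri (p 0 + m 0) (p 1 + m 1) (f 2) + η * (q 0 + q 1) := by
      rw [ef 0, ef 1]
      refine tri_pert2 (hE 0).npm (hE 0).nr (hE 1).npm (hE 1).nr ?_ (Nf 2)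
        (hE 0).inear ?_ (hE 0).iq (hE 1).iq
      · rw [← ef 1]; exact Nf 1
      · rw [← ef 1]; exact fη 1
    have h2 : tri (p 0 + m 0) (p 1 + m 1) (p 2 + m 2) = 0 := by
      unfold tri
      have : ∀ z : ℝ × ℝ, (p 0 + m 0) z.1 * (p 1 + m 1) z.2 * (p 2 + m 2) (-(z.1 + z.2)) = 0 := by
        rintro ⟨x, y⟩
        have sup : ∀ j x, (p j + m j) x ≠ 0 → |x - a j| ≤ κ ∨ |x + a j| ≤ κ := by
          intro j x h
          by_contra! hc
          have c1 : p j x = 0 := by by_contra c; linarith [(hE j).sp x c]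
          have c2 : m j x = 0 := by by_contra c; linarith [(hE j).sm x c]
          exact h (by simp [c1, c2])
        by_contra h
        have n0 : (p 0 + m 0) x ≠ 0 := fun c => h (by simp only [c]; ring)
        have n1 : (p 1 + m 1) y ≠ 0 := fun c => h (by simp only [c]; ring)
        have n2 : (p 2 + m 2) (-(x + y)) ≠ 0 := fun c => h (by simp only [c]; ring)
        have s0 := sup 0 x n0
        have s1 := sup 1 y n1
        have s2 := sup 2 _ n2
        rw [abs_le, abs_le] at s0 s1 s2
        grind
      simp only [this, integral_zero]
    have h3 : tri (p 0 + m 0) (p 1 + m 1) (f 2) ≤ η * q 2 := by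
      rw [ef 2, tri_add2 (hE 0).npm (hE 1).npm (hE 2).npm (hE 2).nr, h2, zero_add]
      refine (le_of_abs_le (abs_tri_le02 (hE 0).npm (hE 1).npm (hE 2).nr)).trans ?_
      rw [(hE 2).iq]
      refine mul_le_mul_of_nonneg_right (hE 0).inear ?_
      rw [← (hE 2).iq]; exact integral_nonneg fun x => abs_nonneg _
    linarith
  have l0 := lin 0 1 2 g2 g0 g1
  have l1 := lin 1 0 2 (by linarith) (by linarith) (by linarith)
  have l2 := lin 2 0 1 (by linarith) (by linarith) (by linarith)
  have q01 := quad 0 1 2 g0 g1 g2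
  have q02 := quad 0 2 1 (by linarith) (by linarith) (by linarith)
  have q12 := quad 1 2 0 (by linarith) (by linarith) (by linarith)
  rw [tri_swap01 (one (I 0)) (f 1) (one (I 2)), tri_swap12 (one (I 0)) (one (I 1)) (f 2),
    tri_swap01 (one (I 0)) (f 2) (one (I 1)), tri_swap12 (f 0) (one (I 1)) (f 2),
    tri_swap01 (one (I 0)) (f 1) (f 2), tri_swap12 (f 1) (one (I 0)) (f 2)] at ex
  set δ := T I - T A
  have eδ : δ = tri (one (I 0)) (one (I 1)) (one (I 2)) - tri (one (A 0)) (one (A 1)) (one (A 2)) := rfl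
  have q0 : ∀ j, 0 ≤ q j := fun j => by
    rw [← (hE j).iq]; exact integral_nonneg fun x => abs_nonneg _
  have ww : ∀ j k, 2 * w j * w k ≤ η * q j / 2 := by
    intro j k
    have h1 := (hE j).hw
    have h2 := (hE k).hw
    have h3 := (hE k).hq
    have : w j * w k ≤ |w j| * |w k| := by rw [← abs_mul]; exact le_abs_self _
    have h4 : |w j| * |w k| ≤ q j / 2 * (η / 2) :=
      mul_le_mul h1 (by linarith) (abs_nonneg _) (by linarith [q0 j])
    linarith
  have w01 := ww 0 1
  have w02 := ww 0 2
  have w12 := ww 1 2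
  have main : (u 0 + u 1 + u 2) ^ 2 + (M 0 ^ 2 + M 1 ^ 2 + M 2 ^ 2) / 16
      + κ / 2 * (q 0 + q 1 + q 2) ≤ δ := by
    have k0 := mul_le_mul_of_nonneg_right hη1 (q0 0)
    have k1 := mul_le_mul_of_nonneg_right hη1 (q0 1)
    have k2 := mul_le_mul_of_nonneg_right hη1 (q0 2)
    have := q0 0; have := q0 1; have := q0 2
    have := mul_nonneg hκ.le (q0 0); have := mul_nonneg hκ.le (q0 1)
    have := mul_nonneg hκ.le (q0 2)
    linarith [sq_nonneg (w 0), sq_nonneg (w 1), sq_nonneg (w 2)]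
  have hδ0 : 0 ≤ δ := by
    refine le_trans ?_ main
    have := q0 0; have := q0 1; have := q0 2
    positivity
  have Mb : ∀ j, M j ^ 2 ≤ 16 * δ := by
    have := q0 0; have := q0 1; have := q0 2
    have : 0 ≤ κ / 2 * (q 0 + q 1 + q 2) := by positivity
    intro j
    fin_cases j <;> simp only [Fin.zero_eta, Fin.mk_one, Fin.reduceFinMk] <;>
      linarith [sq_nonneg (u 0 + u 1 + u 2), sq_nonneg (M 0), sq_nonneg (M 1), sq_nonneg (M 2)]
  have qb : ∀ j, q j ^ 2 ≤ 2 * δ / κ := by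
    have := mul_nonneg hκ.le (q0 0); have := mul_nonneg hκ.le (q0 1)
    have := mul_nonneg hκ.le (q0 2)
    have : ∀ j, κ * q j ≤ 2 * δ := by
      intro j
      fin_cases j <;> simp only [Fin.zero_eta, Fin.mk_one, Fin.reduceFinMk] <;>
        linarith [sq_nonneg (u 0 + u 1 + u 2), sq_nonneg (M 0), sq_nonneg (M 1), sq_nonneg (M 2)]
    intro j
    have h1 : q j ^ 2 ≤ q j := by
      have := (hE j).hq
      rw [sq]; exact mul_le_of_le_one_left (q0 j) (this.trans hη2)
    rw [le_div_iff₀ hκ]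
    have h2 := mul_le_mul_of_nonneg_right h1 hκ.le
    linarith [this j]
  set S : Fin 3 → ℝ := fun j => sd (A j) (iv (u j) (a j))
  have Sb : ∀ j, S j ^ 2 ≤ (32 + 16 / κ) * δ := by
    intro j
    have h1 : S j ^ 2 ≤ (M j + 2 * q j) ^ 2 :=
      pow_le_pow_left₀ (sd_nonneg _ _) (hE j).hsd 2
    have h2 : (M j + 2 * q j) ^ 2 ≤ 2 * M j ^ 2 + 8 * q j ^ 2 := by
      linarith [sq_nonneg (M j - 2 * q j)]
    grind
  have us : ∀ j, |sg (A j) - u j| ≤ S j / 2 := by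
    intro j
    have := sg_lip (hA j).1 (measurableSet_iv (u j) (a j)) (hA j).2 (volume_iv_ne_top _ _)
    rwa [sg_iv ((hE j).hu.trans (by linarith [hapos j]))] at this
  have hK : (0 : ℝ) < 1 / κ := by positivity
  have eK : 16 / κ = 16 * (1 / κ) := by ring
  rw [eK] at Sb
  constructor
  · have hx : sg (A 0) + sg (A 1) + sg (A 2) = (u 0 + u 1 + u 2) + (sg (A 0) - u 0)
      + (sg (A 1) - u 1) + (sg (A 2) - u 2) := by ring
    have sq : ∀ j, (sg (A j) - u j) ^ 2 ≤ S j ^ 2 / 4 := by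
      intro j
      rw [← sq_abs]
      have := pow_le_pow_left₀ (abs_nonneg _) (us j) 2
      linarith
    have h4 : ∀ x y z t : ℝ, (x + y + z + t) ^ 2 ≤ 4 * (x ^ 2 + y ^ 2 + z ^ 2 + t ^ 2) := by
      intro x y z t
      linarith [sq_nonneg (x - y), sq_nonneg (x - z), sq_nonneg (x - t), sq_nonneg (y - z),
        sq_nonneg (y - t), sq_nonneg (z - t)]
    have hu : (u 0 + u 1 + u 2) ^ 2 ≤ δ := by
      have := q0 0; have := q0 1; have := q0 2
      have : 0 ≤ κ / 2 * (q 0 + q 1 + q 2) := by positivity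
      linarith [sq_nonneg (M 0), sq_nonneg (M 1), sq_nonneg (M 2)]
    rw [hx]
    refine (h4 _ _ _ _).trans ?_
    have := mul_nonneg hK.le hδ0
    grind
  · intro j
    have h1 : sd (A j) (iv (sg (A j)) (a j)) ≤ 2 * S j := by
      have t := sd_triangle (hA j).2 (volume_iv_ne_top (u j) (a j)) (volume_iv_ne_top (sg (A j)) (a j))
      have t2 := sd_iv_le (u j) (sg (A j)) (a j)
      grind
    have h2 := pow_le_pow_left₀ (sd_nonneg _ _) h1 2
    have := mul_nonneg hK.le hδ0
    linarith [Sb j]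

/-! ### Expansion of the functional around balls -/

/-- Quantitative strict admissibility of a triple of radii, normalised to unit scale. -/
structure Adm (g : ℝ) (r : Fin 3 → ℝ) : Prop where
  lo : ∀ j, g ≤ r j
  hi : ∀ j, r j ≤ 1 / g
  t0 : g ≤ r 0 + r 1 - r 2
  t1 : g ≤ r 0 + r 2 - r 1
  t2 : g ≤ r 1 + r 2 - r 0

variable {n : ℕ}

lemma one_Bq_eq {r t : ℝ} {z : Vec n} (h : t ≠ √(r ^ 2 - ‖z‖ ^ 2)) :
    one (Bq n r) (z, t) = one (iv 0 (√(r ^ 2 - ‖z‖ ^ 2))) t := by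
  have e : one (Bq n r) (z, t) = one (Prod.mk z ⁻¹' (Bq n r)) t := rfl
  rw [e, fiber_Bq]
  split_ifs with hz
  · by_cases ht : t ∈ iv 0 (√(r ^ 2 - ‖z‖ ^ 2))
    · rw [one_mem ht, one_mem]
      exact ⟨by linarith [ht.1], by linarith [ht.2]⟩
    · rw [one_notMem ht, one_notMem]
      rintro ⟨h1, h2⟩
      exact ht ⟨by linarith, by linarith [lt_of_le_of_ne h2 h]⟩
  · have : √(r ^ 2 - ‖z‖ ^ 2) = 0 := Real.sqrt_eq_zero_of_nonpos (by push Not at hz; linarith)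
    rw [this, one_notMem (by simp), one_notMem]
    rintro ⟨h1, h2⟩
    linarith

/-- The convolution kernel of two centred balls, which is the first variation of the functional. -/
def ker (n : ℕ) (b c : ℝ) (x : Vec (n + 1)) : ℝ :=
  ∫ y, one (cb (n+1) b) y * one (cb (n+1) c) (-(x + y))

/-- Radial profile of the kernel, computed by slicing along the direction of the point. -/
def prof (n : ℕ) (b c τ : ℝ) : ℝ :=
  ∫ z : Vec n, tent (√(b ^ 2 - ‖z‖ ^ 2)) (√(c ^ 2 - ‖z‖ ^ 2)) τ

lemma prof_aux {b c : ℝ} (hb : 0 ≤ b) (τ : ℝ) :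
    Integrable (fun z : Vec n => tent (√(b ^ 2 - ‖z‖ ^ 2)) (√(c ^ 2 - ‖z‖ ^ 2)) τ) ∧
    prof n b c τ = ∫ p : Vec n × ℝ, one (Bq n b) p * one (Bq n c) (-((0, τ) + p)) := by
  have hi : Integrable (fun p : Vec n × ℝ => one (Bq n b) p * one (Bq n c) (-((0, τ) + p))) := by
    refine (integrable_one (measurableSet_Bq b) (volume_Bq_ne_top hb)).mul_bdd (c := 1) ?_ ?_
    · exact ((measurable_one (measurableSet_Bq c)).comp (by fun_prop)).aestronglyMeasurable
    · refine .of_forall fun p => ?_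
      rw [Real.norm_eq_abs, abs_of_nonneg (one_nonneg _ _)]; exact one_le_one _ _
  have e : ∀ z : Vec n, ∫ t : ℝ, one (Bq n b) (z, t) * one (Bq n c) (-((0, τ) + (z, t)))
      = tent (√(b ^ 2 - ‖z‖ ^ 2)) (√(c ^ 2 - ‖z‖ ^ 2)) τ := by
    intro z
    rw [← integral_one_mul_one_iv (Real.sqrt_nonneg _) (Real.sqrt_nonneg _)]
    refine integral_congr_ae ?_
    have h1 : ∀ᵐ t : ℝ, t ≠ √(b ^ 2 - ‖z‖ ^ 2) := by simp [ae_iff]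
    have h2 : ∀ᵐ t : ℝ, t ≠ - τ - √(c ^ 2 - ‖z‖ ^ 2) := by simp [ae_iff]
    filter_upwards [h1, h2] with t h1 h2
    have e2 : (-((0, τ) + (z, t)) : Vec n × ℝ) = (-z, -(τ + t)) := by
      ext <;> simp
    rw [e2, one_Bq_eq h1, one_Bq_eq, norm_neg]
    rw [norm_neg]
    intro h; apply h2; linarith
  rw [volume_eq_prod] at hi
  constructor
  · have := hi.integral_prod_left
    simpa only [e] using this
  · rw [volume_eq_prod, integral_prod _ hi]
    simp only [e]; rfl

lemma exists_frame_vec' (v : Vec (n+1)) : ∃ L : Frame n, (fr L v) = (0, ‖v‖) := by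
  by_cases hv : v = 0
  · obtain ⟨L⟩ := exists_frame n
    exact ⟨L, by rw [hv, map_zero, norm_zero]; rfl⟩
  · exact exists_frame_vec hv

lemma ker_eq_prof {b c : ℝ} (hb : 0 ≤ b) (hc : 0 ≤ c) (x : Vec (n+1)) :
    ker n b c x = prof n b c ‖x‖ := by
  obtain ⟨L, hL⟩ := exists_frame_vec' x
  rw [(prof_aux hb _).2, ← (mp_frm L).integral_comp' ]
  unfold ker
  refine integral_congr_ae (.of_forall fun y => ?_)
  have e1 : ∀ {s : ℝ} (_ : 0 ≤ s) (y : Vec (n+1)), one (cb (n+1) s) y = one (Bq n s) (frm L y) := by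
    intro s hs y
    rw [← frm_preimage_Bq L hs]; rfl
  dsimp only
  rw [e1 hb, e1 hc]
  congr 2
  rw [frm_apply, frm_apply, map_neg, map_add, hL]

lemma sqrt_close {b z : ℝ} (hb : 0 ≤ b) (hz : 0 ≤ z) : b - z ≤ √(b ^ 2 - z ^ 2) ∧ √(b ^ 2 - z ^ 2) ≤ b := by
  constructor
  · rcases le_or_gt b z with h | h
    · exact le_trans (by linarith) (Real.sqrt_nonneg _)
    · apply Real.le_sqrt_of_sq_le; nlinarith
  · rw [Real.sqrt_le_left hb]; nlinarith

/-- The profile decreases at a definite rate across the critical radius. -/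
lemma prof_slope {g a b c : ℝ} (hg : 0 < g) (ha : g ≤ a) (hb : 0 ≤ b) (hc : 0 ≤ c)
    (h1 : g ≤ b + c - a) (h2 : g ≤ a + c - b) (h3 : g ≤ a + b - c) {τ τ' s : ℝ}
    (hs0 : 0 ≤ s) (hs : s ≤ g / 4) (hτ : 0 ≤ τ) (hττ : τ ≤ τ' - s)
    (hlo : τ ≤ a) (hhi : a ≤ τ') (hor : τ = a ∨ τ' = a) :
    prof n b c τ' + volume.real (cb n (g / 4)) * s ≤ prof n b c τ := by
  set Z := cb n (g / 4) with hZ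
  have hZm : MeasurableSet Z := isClosed_closedBall.measurableSet
  have hZi : Integrable (one Z) := integrable_one hZm measure_closedBall_lt_top.ne
  have e : volume.real Z * s = ∫ z, one Z z * s := by
    rw [integral_mul_const, integral_one hZm]
  unfold prof
  rw [e, ← integral_add (prof_aux hb τ').1 (hZi.mul_const s)]
  refine integral_mono ((prof_aux hb τ').1.add (hZi.mul_const s)) (prof_aux hb τ).1 fun z => ?_
  dsimp only
  have hτ' : |τ'| = τ' := abs_of_nonneg (by linarith)
  have hτa : |τ| = τ := abs_of_nonneg hτ
  by_cases hz : z ∈ Z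
  · rw [one_mem hz, one_mul]
    have hzn : ‖z‖ ≤ g / 4 := by simpa [hZ] using hz
    have B := sqrt_close hb (norm_nonneg z)
    have C := sqrt_close hc (norm_nonneg z)
    rcases hor with h | h
    · have m := tent_anti (√(b ^ 2 - ‖z‖ ^ 2)) (√(c ^ 2 - ‖z‖ ^ 2)) (z := a + s) (z' := τ')
        (by rw [abs_of_nonneg (by linarith), hτ']; linarith)
      have ea : |a + s| = a + s := abs_of_nonneg (by linarith)
      rw [tent_eq (z := a + s) (by linarith) (by linarith) (by linarith)] at m
      rw [tent_eq (z := τ) (by linarith) (by linarith) (by linarith)]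
      linarith
    · have ea : |a - s| = a - s := abs_of_nonneg (by linarith)
      have m := tent_anti (√(b ^ 2 - ‖z‖ ^ 2)) (√(c ^ 2 - ‖z‖ ^ 2)) (z := τ) (z' := a - s)
        (by rw [hτa, ea]; linarith)
      rw [tent_eq (z := a - s) (by linarith) (by linarith) (by linarith)] at m
      rw [tent_eq (z := τ') (by linarith) (by linarith) (by linarith)]
      linarith
  · rw [one_notMem hz, zero_mul, add_zero]
    exact tent_anti _ _ (by rw [hτ', hτa]; linarith)

/-- Points of `E Δ B` at distance at least `s` from the sphere of radius `a`. -/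
def farS (E : Set (Vec (n+1))) (a s : ℝ) : Set (Vec (n+1)) :=
  {x | x ∈ symmDiff E (cb (n+1) a) ∧ s ≤ |‖x‖ - a|}

lemma measurableSet_farS {E : Set (Vec (n+1))} (hE : MeasurableSet E) (a s : ℝ) :
    MeasurableSet (farS E a s) := by
  refine (hE.symmDiff isClosed_closedBall.measurableSet).inter (?_ : MeasurableSet {x | s ≤ |‖x‖ - a|})
  exact measurableSet_le measurable_const (by fun_prop)

lemma farS_fin {E : Set (Vec (n+1))} (hE : volume E ≠ ⊤) (a s : ℝ) :
    volume (farS E a s) ≠ ⊤ :=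
  measure_ne_top_of_subset (fun _ h => h.1) (symmDiff_ne_top hE measure_closedBall_lt_top.ne)

/-- The first variation is negative, with mass far from the sphere paying proportionally. -/
lemma lin_far {g a b c : ℝ} (hg : 0 < g) (ha : g ≤ a) (hb : 0 ≤ b) (hc : 0 ≤ c)
    (h1 : g ≤ b + c - a) (h2 : g ≤ a + c - b) (h3 : g ≤ a + b - c) {E : Set (Vec (n+1))}
    (hE : MeasurableSet E) (hE' : volume E ≠ ⊤)
    (hv : volume.real E = volume.real (cb (n+1) a))
    {s : ℝ} (hs0 : 0 ≤ s) (hs : s ≤ 1) :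
    tri (one E - one (cb (n+1) a)) (one (cb (n+1) b))
      (one (cb (n+1) c)) ≤
      - (volume.real (cb n (g / 4)) * min 1 (g / 4) * s *
        volume.real (farS E a s)) := by
  set B := cb (n+1) a with hB
  have hBm : MeasurableSet B := isClosed_closedBall.measurableSet
  have hBf : volume B ≠ ⊤ := measure_closedBall_lt_top.ne
  set f := one E - one B with hf
  have Nf : Nice f := nice_sub_one hE hE' hBm hBf
  have Nb : ∀ t : ℝ, Nice (one (cb (n+1) t)) := fun t =>
    nice_one isClosed_closedBall.measurableSet measure_closedBall_lt_top.ne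
  have hf0 : ∫ x, f x = 0 := by
    simp only [hf, Pi.sub_apply]
    rw [integral_sub (integrable_one hE hE') (integrable_one hBm hBf), integral_one hE,
      integral_one hBm, hv, sub_self]
  set k := prof n b c a
  set w := volume.real (cb n (g / 4))
  set m := min 1 (g / 4)
  have hm0 : 0 < m := lt_min one_pos (by positivity)
  have hms : m * s ≤ g / 4 := by
    have : m * s ≤ m * 1 := mul_le_mul_of_nonneg_left hs hm0.le
    linarith [min_le_right 1 (g / 4)]
  have hms' : m * s ≤ s := by
    have : m * s ≤ 1 * s := mul_le_mul_of_nonneg_right (min_le_left _ _) hs0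
    linarith
  rw [tri_eq_iter Nf (Nb b) (Nb c)]
  have ek : ∀ x, ∫ y, one (cb (n+1) b) y *
    one (cb (n+1) c) (-(x + y)) = prof n b c ‖x‖ := fun x => ker_eq_prof hb hc x
  simp only [ek]
  have hFi : Integrable (one (farS E a s)) :=
    integrable_one (measurableSet_farS hE a s) (farS_fin hE' a s)
  have ifk : Integrable (fun x => f x * prof n b c ‖x‖) := by
    have := (tri_integrable Nf (Nb b) (Nb c).meas (Nb c).bdd)
    rw [volume_eq_prod] at this
    have := this.integral_prod_left
    refine this.congr (.of_forall fun x => ?_)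
    dsimp only
    rw [← ek x, ← integral_const_mul]
    grind
  have e1 : ∫ x, f x * prof n b c ‖x‖ = ∫ x, (f x * prof n b c ‖x‖ - f x * k) := by
    rw [integral_sub ifk (Nf.int.mul_const k), integral_mul_const, hf0]; ring
  have e2 : -(w * m * s * volume.real (farS E a s)) = ∫ x, -(w * (m * s)) * one (farS E a s) x := by
    rw [integral_const_mul, integral_one (measurableSet_farS hE a s)]; ring
  rw [e1, e2]
  refine integral_mono (ifk.sub (Nf.int.mul_const k)) (hFi.const_mul _) fun x => ?_
  dsimp only
  have hx0 := norm_nonneg x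
  by_cases hx : ‖x‖ ≤ a
  · have hxB : x ∈ B := by simpa [hB] using hx
    have hfx : f x = one E x - 1 := by simp [hf, one_mem hxB]
    have hle : f x ≤ 0 := by rw [hfx]; linarith [one_le_one E x]
    by_cases hF : x ∈ farS E a s
    · rw [one_mem hF]
      have hxE : x ∉ E := by
        rcases hF.1 with h | h
        · exact absurd hxB h.2
        · exact h.2
      have : f x = -1 := by rw [hfx, one_notMem hxE]; ring
      have hd := hF.2
      rw [abs_of_nonpos (by linarith)] at hd
      have := prof_slope (n := n) hg ha hb hc h1 h2 h3 (τ := ‖x‖) (τ' := a) (s := m * s) (by positivity) hms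
        hx0 (by linarith) hx le_rfl (Or.inr rfl)
      rw [‹f x = -1›]
      linarith
    · rw [one_notMem hF]
      have := prof_slope (n := n) hg ha hb hc h1 h2 h3 (τ := ‖x‖) (τ' := a) (s := 0) le_rfl (by positivity)
        hx0 (by linarith) hx le_rfl (Or.inr rfl)
      nlinarith
  · push Not at hx
    have hxB : x ∉ B := by simpa [hB] using hx
    have hfx : f x = one E x := by simp [hf, one_notMem hxB]
    have hle : 0 ≤ f x := by rw [hfx]; exact one_nonneg E x
    by_cases hF : x ∈ farS E a s
    · rw [one_mem hF]
      have hxE : x ∈ E := by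
        rcases hF.1 with h | h
        · exact h.1
        · exact absurd h.1 hxB
      have : f x = 1 := by rw [hfx, one_mem hxE]
      have hd := hF.2
      rw [abs_of_nonneg (by linarith)] at hd
      have := prof_slope (n := n) hg ha hb hc h1 h2 h3 (τ := a) (τ' := ‖x‖) (s := m * s) (by positivity) hms
        (by linarith) (by linarith) le_rfl hx.le (Or.inl rfl)
      rw [‹f x = 1›]
      linarith
    · rw [one_notMem hF]
      have := prof_slope (n := n) hg ha hb hc h1 h2 h3 (τ := a) (τ' := ‖x‖) (s := 0) le_rfl (by positivity)
        (by linarith) (by linarith) le_rfl hx.le (Or.inl rfl)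
      nlinarith

/-- Non-concentration: the part of `E_j Δ B_j` at distance `s` from the sphere has measure at most
`K D² / s`. -/
def NC (K D : ℝ) (r : Fin 3 → ℝ) (E : Tri (Vec (n+1))) : Prop :=
  ∀ j, ∀ s, 0 ≤ s → s ≤ 1 → s * volume.real (farS (E j) (r j) s) ≤ K * D ^ 2

/-- Either the deficit already dominates the squared distance, or the perturbation does not
concentrate away from the spheres. -/
lemma nc_or {g : ℝ} (hg : 0 < g) : ∃ K > 0, ∀ (r : Fin 3 → ℝ) (E : Tri (Vec (n+1))), Adm g r →
    Fm E → (∀ j, volume.real (E j) = volume.real (ball3 (n+1) r j)) →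
    (D3 E (ball3 (n+1) r)) ^ 2 ≤ T (ball3 (n+1) r) - T E ∨ NC K (D3 E (ball3 (n+1) r)) r E := by
  set c := volume.real (cb n (g / 4)) * min 1 (g / 4)
  have hc0 : 0 < c := mul_pos (closedBall_pos 0 (by positivity)) (lt_min one_pos (by positivity))
  refine ⟨3 / c, by positivity, fun r E hr hE hv => ?_⟩
  set B := ball3 (n+1) r
  set D := D3 E B with hD
  by_cases hdef : D ^ 2 ≤ T B - T E
  · exact Or.inl hdef
  right
  push Not at hdef
  have hBF : Fm B := Fm_ball3 r
  set f : Fin 3 → Vec (n+1) → ℝ := fun j => one (E j) - one (B j) with hf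
  have Nf : ∀ j, Nice (f j) := fun j => nice_sub_one (hE j).1 (hE j).2 (hBF j).1 (hBF j).2
  have eA : ∀ j, one (B j) + f j = one (E j) := fun j => by simp [hf]
  have ex := tri_expand (b := fun j => one (B j)) (f := f) (fun j => hBF.nice j) Nf
    (fun j => by rw [eA]; exact hE.nice j)
  simp only [eA] at ex
  rw [tri_swap01 (one (B 0)) (f 1) (one (B 2)), tri_swap12 (one (B 0)) (one (B 1)) (f 2),
    tri_swap01 (one (B 0)) (f 2) (one (B 1))] at ex
  have hr0 : ∀ j, 0 ≤ r j := fun j => hg.le.trans (hr.lo j)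
  have fd : ∀ j, ∫ x, |f j x| = sd (E j) (B j) := fun j => sd_eq (hE j).1 (hBF j).1
  have q1 := le_of_abs_le (abs_tri_le01 (Nf 0) (Nf 1) (hBF.nice 2))
  have q2 := le_of_abs_le (abs_tri_le02 (Nf 0) (hBF.nice 1) (Nf 2))
  have q3 := le_of_abs_le (abs_tri_le12 (hBF.nice 0) (Nf 1) (Nf 2))
  have q4 := le_of_abs_le (abs_tri_le01 (Nf 0) (Nf 1) (Nf 2))
  rw [fd, fd] at q1 q2 q3 q4
  have s0 := sd_nonneg (E 0) (B 0)
  have s1 := sd_nonneg (E 1) (B 1)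
  have s2 := sd_nonneg (E 2) (B 2)
  have eD : D = sd (E 0) (B 0) + sd (E 1) (B 1) + sd (E 2) (B 2) := by
    rw [hD]; unfold D3; rw [Fin.sum_univ_three]
  have hquad : sd (E 0) (B 0) * sd (E 1) (B 1) + sd (E 0) (B 0) * sd (E 2) (B 2)
      + sd (E 1) (B 1) * sd (E 2) (B 2) + sd (E 0) (B 0) * sd (E 1) (B 1) ≤ 2 * D ^ 2 := by
    nlinarith
  have hT : T B - T E = tri (one (B 0)) (one (B 1)) (one (B 2)) - tri (one (E 0)) (one (E 1)) (one (E 2)) := rfl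
  have t0 := hr.t0
  have t1 := hr.t1
  have t2 := hr.t2
  have L0 : ∀ s, 0 ≤ s → s ≤ 1 → tri (f 0) (one (B 1)) (one (B 2)) ≤ -(c * s * volume.real (farS (E 0) (r 0) s)) :=
    fun s h h' => lin_far hg (hr.lo 0) (hr0 1) (hr0 2) t2 t1 t0 (hE 0).1 (hE 0).2 (hv 0) h h'
  have L1 : ∀ s, 0 ≤ s → s ≤ 1 → tri (f 1) (one (B 0)) (one (B 2)) ≤ -(c * s * volume.real (farS (E 1) (r 1) s)) :=
    fun s h h' => lin_far hg (hr.lo 1) (hr0 0) (hr0 2) (by linarith) (by linarith) (by linarith) (hE 1).1 (hE 1).2 (hv 1) h h'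
  have L2 : ∀ s, 0 ≤ s → s ≤ 1 → tri (f 2) (one (B 0)) (one (B 1)) ≤ -(c * s * volume.real (farS (E 2) (r 2) s)) :=
    fun s h h' => lin_far hg (hr.lo 2) (hr0 0) (hr0 1) (by linarith) (by linarith) (by linarith) (hE 2).1 (hE 2).2 (hv 2) h h'
  have z0 := L0 0 le_rfl zero_le_one
  have z1 := L1 0 le_rfl zero_le_one
  have z2 := L2 0 le_rfl zero_le_one
  simp only [mul_zero, zero_mul, neg_zero] at z0 z1 z2
  intro j s hs0 hs1
  rw [div_mul_eq_mul_div, le_div_iff₀ hc0]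
  have l0 := L0 s hs0 hs1
  have l1 := L1 s hs0 hs1
  have l2 := L2 s hs0 hs1
  fin_cases j <;> simp only [Fin.zero_eta, Fin.mk_one, Fin.reduceFinMk] <;> linarith

/-! ### Stability of the additive functional equation -/

/-- Integral of a function of three vectors over the plane `x₀ + x₁ + x₂ = 0`. -/
def JJ {n : ℕ} (W : (Fin 3 → Vec n) → ℝ≥0∞) : ℝ≥0∞ :=
  ∫⁻ x, ∫⁻ y, W ![x, y, -(x + y)]

lemma measurable_three :
    Measurable (fun p : Vec n × Vec n => (![p.1, p.2, -(p.1 + p.2)] : Fin 3 → Vec n)) := by fun_prop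

lemma JJ_swap01 {W : (Fin 3 → Vec n) → ℝ≥0∞} (hW : Measurable W) :
    JJ (fun x => W ![x 1, x 0, x 2]) = JJ W := by
  unfold JJ
  rw [lintegral_lintegral_swap]
  · refine lintegral_congr fun x => lintegral_congr fun y => ?_
    simp [add_comm]
  · fun_prop

lemma JJ_swap12 (W : (Fin 3 → Vec n) → ℝ≥0∞) :
    JJ (fun x => W ![x 0, x 2, x 1]) = JJ W := by
  unfold JJ
  refine lintegral_congr fun x => ?_
  have h1 : ∀ g : Vec n → ℝ≥0∞, ∫⁻ y, g (-(x + y)) = ∫⁻ y, g y := by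
    intro g
    rw [← lintegral_add_left_eq_self g (-x)]
    have h2 := (measurePreserving_neg (volume : Measure (Vec n))).lintegral_comp_emb
      (MeasurableEquiv.neg (Vec n)).measurableEmbedding (fun y => g (-x + y))
    rw [← h2]
    refine lintegral_congr fun y => ?_
    congr 1
    abel
  rw [← h1]
  refine lintegral_congr fun y => ?_
  simp

/-- If two functions of independent variables are close, both are close to a constant value. -/
lemma two_fun {A B : Set (Vec n)} (hB0 : volume B ≠ 0) (hBt : volume B ≠ ⊤) {p q : Vec n → ℝ}
    (hp : Measurable p) (hq : Measurable q) {ε : ℝ≥0∞}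
    (h : ∫⁻ x in A, ∫⁻ y in B, ‖p x - q y‖ₑ ≤ ε) :
    ∃ y0 ∈ B, (∫⁻ x in A, ‖p x - q y0‖ₑ) * volume B ≤ ε ∧
      (∫⁻ y in B, ‖q y - q y0‖ₑ) * volume A ≤ 2 * ε := by
  have hm : Measurable (fun z : Vec n × Vec n => ‖p z.1 - q z.2‖ₑ) :=
    ((hp.comp measurable_fst).sub (hq.comp measurable_snd)).enorm
  have hsw : ∫⁻ y in B, ∫⁻ x in A, ‖p x - q y‖ₑ = ∫⁻ x in A, ∫⁻ y in B, ‖p x - q y‖ₑ :=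
    (lintegral_lintegral_swap (f := fun x y => ‖p x - q y‖ₑ) hm.aemeasurable).symm
  have hm2 : Measurable (fun y => ∫⁻ x in A, ‖p x - q y‖ₑ) :=
    Measurable.lintegral_prod_left' hm
  obtain ⟨y0, hy0, hle⟩ := exists_le_setLAverage hB0 hBt hm2.aemeasurable
  have h1 : (∫⁻ x in A, ‖p x - q y0‖ₑ) * volume B ≤ ε := by
    rw [setLAverage_eq, hsw] at hle
    calc _ ≤ (∫⁻ x in A, ∫⁻ y in B, ‖p x - q y‖ₑ) / volume B * volume B := by gcongr
      _ = ∫⁻ x in A, ∫⁻ y in B, ‖p x - q y‖ₑ := ENNReal.div_mul_cancel hB0 hBt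
      _ ≤ ε := h
  refine ⟨y0, hy0, h1, ?_⟩
  have h2 : ∀ y, ‖q y - q y0‖ₑ * volume A
      ≤ (∫⁻ x in A, ‖p x - q y‖ₑ) + ∫⁻ x in A, ‖p x - q y0‖ₑ := by
    intro y
    rw [← lintegral_add_left (by fun_prop), ← setLIntegral_const]
    refine lintegral_mono fun x => ?_
    have : q y - q y0 = -(p x - q y) + (p x - q y0) := by ring
    rw [this]
    exact (enorm_add_le _ _).trans (by rw [enorm_neg])
  calc (∫⁻ y in B, ‖q y - q y0‖ₑ) * volume A = ∫⁻ y in B, ‖q y - q y0‖ₑ * volume A :=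
        (lintegral_mul_const _ (by fun_prop)).symm
    _ ≤ ∫⁻ y in B, ((∫⁻ x in A, ‖p x - q y‖ₑ) + ∫⁻ x in A, ‖p x - q y0‖ₑ) :=
        lintegral_mono h2
    _ = (∫⁻ y in B, ∫⁻ x in A, ‖p x - q y‖ₑ) + (∫⁻ x in A, ‖p x - q y0‖ₑ) * volume B := by simp
    _ ≤ ε + ε := by rw [hsw]; exact add_le_add h h1
    _ = 2 * ε := (two_mul _).symm

/-- A bounded nearly additive function on an interval is nearly linear. -/
lemma near_add_1d {H : ℝ → ℝ} {ρ e M : ℝ} (hρ : 0 < ρ) (he : 0 ≤ e)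
    (hM : ∀ t, |t| ≤ ρ → |H t| ≤ M)
    (h : ∀ s t, |s| ≤ ρ → |t| ≤ ρ → |s + t| ≤ ρ → |H (s + t) - H s - H t| ≤ e) :
    ∃ κ : ℝ, ∀ t, |t| ≤ ρ → |H t - κ * t| ≤ 5 * e := by
  set κ := H ρ / ρ with hκ
  refine ⟨κ, ?_⟩
  set F : ℝ → ℝ := fun t => H t - κ * t with hF
  have hFρ : F ρ = 0 := by simp only [hF, hκ]; field_simp; ring
  have hadd : ∀ s t, |s| ≤ ρ → |t| ≤ ρ → |s + t| ≤ ρ → |F (s + t) - F s - F t| ≤ e := by grind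
  -- the bound improves by halving: from `N` to `N / 2 + 3 e / 2`
  have himp : ∀ N, (∀ t, 0 ≤ t → t ≤ ρ → |F t| ≤ N) →
      ∀ t, 0 ≤ t → t ≤ ρ → |F t| ≤ N / 2 + 3 * e / 2 := by
    intro N hN
    have hhalf : ∀ t, 0 ≤ t → t ≤ ρ / 2 → |F t| ≤ N / 2 + e / 2 := by
      intro t h0 h1
      have a1 := hadd t t (by rw [abs_of_nonneg h0]; linarith) (by rw [abs_of_nonneg h0]; linarith)
        (by rw [abs_of_nonneg (by linarith)]; linarith)
      have a2 := hN (t + t) (by linarith) (by linarith)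
      rw [abs_le] at *
      constructor <;> linarith [a1.1, a1.2, a2.1, a2.2]
    intro t h0 h1
    by_cases ht : t ≤ ρ / 2
    · linarith [hhalf t h0 ht]
    · push Not at ht
      have a1 := hadd t (ρ - t) (by rw [abs_of_nonneg h0]; linarith)
        (by rw [abs_of_nonneg (by linarith)]; linarith)
        (by rw [abs_of_nonneg (by linarith)]; linarith)
      have a2 := hhalf (ρ - t) (by linarith) (by linarith)
      rw [show t + (ρ - t) = ρ by ring, hFρ] at a1
      rw [abs_le] at *
      constructor <;> linarith [a1.1, a1.2, a2.1, a2.2]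
  have hpos : ∀ t, 0 ≤ t → t ≤ ρ → |F t| ≤ 3 * e := by
    set S : Set ℝ := (fun t => |F t|) '' Icc 0 ρ
    have hbd : BddAbove S := by
      refine ⟨M + |κ| * ρ, ?_⟩
      rintro _ ⟨t, ht, rfl⟩
      have b1 := hM t (by rw [abs_of_nonneg ht.1]; exact ht.2)
      have b2 : |κ * t| ≤ |κ| * ρ := by
        rw [abs_mul, abs_of_nonneg ht.1]
        exact mul_le_mul_of_nonneg_left ht.2 (abs_nonneg _)
      exact (abs_sub _ _).trans (by linarith)
    have hne : S.Nonempty := ⟨_, ⟨0, ⟨le_rfl, hρ.le⟩, rfl⟩⟩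
    have hs : sSup S ≤ sSup S / 2 + 3 * e / 2 := by
      refine csSup_le hne ?_
      rintro _ ⟨t, ht, rfl⟩
      exact himp _ (fun t h0 h1 => le_csSup hbd ⟨t, ⟨h0, h1⟩, rfl⟩) t ht.1 ht.2
    intro t h0 h1
    have := le_csSup hbd (⟨t, ⟨h0, h1⟩, rfl⟩ : |F t| ∈ S)
    linarith
  intro t ht
  rw [abs_le] at ht
  change |F t| ≤ 5 * e
  by_cases h0 : 0 ≤ t
  · linarith [hpos t h0 ht.2]
  · push Not at h0
    have a0 := hadd 0 0 (by simpa using hρ.le) (by simpa using hρ.le) (by simpa using hρ.le)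
    have a1 := hadd t (-t) (by rw [abs_le]; exact ht)
      (by rw [abs_neg, abs_le]; exact ht) (by simpa using hρ.le)
    have a2 := hpos (-t) (by linarith) (by linarith)
    rw [add_neg_cancel] at a1
    rw [add_zero] at a0
    rw [abs_le] at *
    constructor <;> linarith [a1.1, a1.2, a2.1, a2.2, a0.1, a0.2]

/-- A bounded nearly additive function on a ball is nearly linear. -/
lemma near_add {G : Vec n → ℝ} {ρ e M : ℝ} (hρ : 0 < ρ) (he : 0 ≤ e)
    (hM : ∀ w, ‖w‖ ≤ ρ → |G w| ≤ M)
    (h : ∀ v w, ‖v‖ ≤ ρ → ‖w‖ ≤ ρ → ‖v + w‖ ≤ ρ → |G (v + w) - G v - G w| ≤ e) :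
    ∃ a : Vec n, ∀ w, ‖w‖ ≤ ρ → |G w - inner ℝ a w| ≤ (6 * n + 1) * e := by
  classical
  set b := EuclideanSpace.basisFun (Fin n) ℝ
  have h1 : ∀ i, ∃ κ : ℝ, ∀ t, |t| ≤ ρ → |G (t • b i) - κ * t| ≤ 5 * e := by
    intro i
    have hn : ∀ t : ℝ, ‖t • b i‖ = |t| := fun t => by
      rw [norm_smul, b.norm_eq_one, mul_one, Real.norm_eq_abs]
    refine near_add_1d (H := fun t => G (t • b i)) hρ he (fun t ht => hM _ ((hn t).trans_le ht)) ?_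
    intro s t hs ht hst
    simp only [add_smul]
    exact h _ _ ((hn s).trans_le hs) ((hn t).trans_le ht)
      (by rw [← add_smul]; exact (hn _).trans_le hst)
  choose κ hκ using h1
  set a : Vec n := ∑ i, κ i • b i with ha
  refine ⟨a, ?_⟩
  intro w hw
  have hcoord : ∀ i, |inner ℝ (b i) w| ≤ ρ := fun i => by
    refine (abs_real_inner_le_norm _ _).trans ?_
    rw [b.norm_eq_one, one_mul]; exact hw
  have hpart : ∀ S : Finset (Fin n), ‖∑ i ∈ S, (inner ℝ (b i) w : ℝ) • b i‖ ≤ ρ := by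
    intro S
    have e1 : ‖∑ i ∈ S, (inner ℝ (b i) w : ℝ) • b i‖ ^ 2 ≤ ‖w‖ ^ 2 := by
      have e2 : ‖∑ i ∈ S, (inner ℝ (b i) w : ℝ) • b i‖ ^ 2 = ∑ i ∈ S, (inner ℝ (b i) w : ℝ) ^ 2 := by
        rw [← real_inner_self_eq_norm_sq, b.orthonormal.inner_sum]
        simp [sq]
      rw [e2, ← b.sum_sq_inner_right w]
      exact Finset.sum_le_sum_of_subset_of_nonneg (Finset.subset_univ _)
        fun i _ _ => by positivity
    exact ((pow_le_pow_iff_left₀ (norm_nonneg _) (norm_nonneg _) two_ne_zero).1 e1).trans hw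
  have hsum : ∀ S : Finset (Fin n), |G (∑ i ∈ S, (inner ℝ (b i) w : ℝ) • b i)
      - ∑ i ∈ S, κ i * inner ℝ (b i) w| ≤ (6 * S.card + 1) * e := by
    intro S
    induction S using Finset.induction_on with
    | empty =>
      have := h 0 0 (by simpa using hρ.le) (by simpa using hρ.le) (by simpa using hρ.le)
      simp only [add_zero, sub_self, zero_sub, abs_neg] at this
      simpa using this
    | insert i S hi ih =>
      have e0 := hpart (insert i S)
      rw [Finset.sum_insert hi] at e0 ⊢
      rw [Finset.sum_insert hi, Finset.card_insert_of_notMem hi]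
      have e1 := h ((inner ℝ (b i) w : ℝ) • b i) (∑ i ∈ S, (inner ℝ (b i) w : ℝ) • b i)
        (by rw [norm_smul, b.norm_eq_one, mul_one, Real.norm_eq_abs]; exact hcoord i)
        (hpart S) e0
      have e2 := hκ i _ (hcoord i)
      push_cast
      rw [abs_le] at *
      constructor <;> linarith [e1.1, e1.2, e2.1, e2.2, ih.1, ih.2]
  have hfin := hsum Finset.univ
  have hw' : ∑ i, (inner ℝ (b i) w : ℝ) • b i = w := b.sum_repr' w
  rw [hw', Finset.card_univ, Fintype.card_fin] at hfin
  have hin : inner ℝ a w = ∑ i, κ i * inner ℝ (b i) w := by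
    rw [ha, sum_inner]
    simp [real_inner_smul_left]
  rwa [hin]

lemma shift_le {A A' : Set (Vec n)} (hA : MeasurableSet A) (hA' : MeasurableSet A')
    (F : Vec n → ℝ≥0∞) (w : Vec n) (h : ∀ x ∈ A, x + w ∈ A') :
    ∫⁻ x in A, F (x + w) ≤ ∫⁻ x in A', F x := by
  rw [← lintegral_indicator hA, ← lintegral_indicator hA',
    ← lintegral_add_right_eq_self (A'.indicator F) w]
  refine lintegral_mono fun x => ?_
  by_cases hx : x ∈ A
  · simp [hx, h x hx]
  · simp [hx]

lemma mem_cb {s : ℝ} {x : Vec n} : x ∈ cb n s ↔ ‖x‖ ≤ s := by simp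

lemma measurableSet_cb (s : ℝ) : MeasurableSet (cb n s) := isClosed_closedBall.measurableSet

lemma volume_cb_ne_zero {s : ℝ} (hs : 0 < s) : volume (cb n s) ≠ 0 :=
  (measure_closedBall_pos volume _ hs).ne'

lemma volume_cb_ne_top (s : ℝ) : volume (cb n s) ≠ ⊤ := measure_closedBall_lt_top.ne

/-- A function with small `L¹` increments is close to a constant. -/
lemma const_of_increments {δ : ℝ} (hδ : 0 < δ) {p : Vec n → ℝ} (hp : Measurable p) {K : ℝ≥0∞}
    (h : ∀ w, ‖w‖ ≤ δ → ∫⁻ x in cb n (2 * δ), ‖p x - p (x - w)‖ₑ ≤ K) :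
    ∃ b, (∫⁻ x in cb n (δ / 2), ‖p x - b‖ₑ) * volume (cb n (δ / 2)) ≤ volume (cb n δ) * K := by
  have hm : Measurable (fun z : Vec n × Vec n => ‖p z.1 - p (z.1 - z.2)‖ₑ) := by fun_prop
  have h1 : ∫⁻ x in cb n (δ / 2), ∫⁻ y in cb n (δ / 2), ‖p x - p y‖ₑ ≤ volume (cb n δ) * K := by
    calc ∫⁻ x in cb n (δ / 2), ∫⁻ y in cb n (δ / 2), ‖p x - p y‖ₑ
        ≤ ∫⁻ x in cb n (δ / 2), ∫⁻ w in cb n δ, ‖p x - p (x - w)‖ₑ := by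
          refine setLIntegral_mono' (measurableSet_cb _) fun x hx => ?_
          have e1 := shift_le (n := n) (measurableSet_cb (δ / 2)) (measurableSet_cb (n := n) δ)
            (fun w => ‖p x - p (x + w)‖ₑ) (-x) (by
              intro y hy
              rw [mem_cb] at *
              have := norm_add_le y (-x)
              rw [norm_neg] at this
              linarith)
          have e2 : ∫⁻ w in cb n δ, ‖p x - p (x - w)‖ₑ = ∫⁻ w in cb n δ, ‖p x - p (x + w)‖ₑ := by
            rw [← lintegral_indicator (measurableSet_cb _), ← lintegral_indicator (measurableSet_cb _)]
            rw [← lintegral_neg_eq_self]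
            refine lintegral_congr fun w => ?_
            by_cases hw : w ∈ cb n δ
            · have hw' : -w ∈ cb n δ := by rw [mem_cb] at *; rwa [norm_neg]
              simp [*]
            · have hw' : -w ∉ cb n δ := by rw [mem_cb] at *; rwa [norm_neg]
              simp [*]
          rw [e2]
          refine le_trans (le_of_eq ?_) e1
          simp
      _ ≤ ∫⁻ x in cb n (2 * δ), ∫⁻ w in cb n δ, ‖p x - p (x - w)‖ₑ :=
          lintegral_mono_set (closedBall_subset_closedBall (by linarith))
      _ = ∫⁻ w in cb n δ, ∫⁻ x in cb n (2 * δ), ‖p x - p (x - w)‖ₑ :=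
          lintegral_lintegral_swap (f := fun x w => ‖p x - p (x - w)‖ₑ) hm.aemeasurable
      _ ≤ ∫⁻ w in cb n δ, K :=
          setLIntegral_mono' (measurableSet_cb _) fun w hw => h w (mem_cb.1 hw)
      _ = volume (cb n δ) * K := by rw [setLIntegral_const, mul_comm]
  obtain ⟨y0, -, hy, -⟩ := two_fun (volume_cb_ne_zero (by positivity)) (volume_cb_ne_top _) hp hp h1
  exact ⟨_, hy⟩

/-- Near solutions of `f₀(x) + f₁(y) + f₂(-x-y) = 0` near the origin are nearly affine. -/
lemma patch {δ : ℝ} (hδ : 0 < δ) : ∃ C : ℝ≥0∞, C ≠ ⊤ ∧ C ≠ 0 ∧ ∀ f0 f1 f2 : Vec n → ℝ,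
    Measurable f0 → Measurable f1 → Measurable f2 → (∀ x, |f1 x| ≤ 1) →
    ∀ ε : ℝ≥0∞, ∫⁻ x in cb n (8 * δ), ∫⁻ y in cb n (8 * δ),
      ‖f0 x + f1 y + f2 (-(x + y))‖ₑ ≤ ε →
    ∃ (a : Vec n) (b0 b1 : ℝ), ∫⁻ x in cb n (δ / 4), ‖f0 x - inner ℝ a x - b0‖ₑ ≤ C * ε ∧
      ∫⁻ x in cb n (δ / 4), ‖f1 x - inner ℝ a x - b1‖ₑ ≤ C * ε ∧
      ∫⁻ x in cb n (δ / 4), ‖f2 x - inner ℝ a x - (-b0 - b1)‖ₑ ≤ C * ε := by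
  have nz : ∀ s : ℝ, 0 < s → volume (cb n s) ≠ 0 := fun s hs => volume_cb_ne_zero hs
  have nt : ∀ s : ℝ, volume (cb n s) ≠ ⊤ := fun s => volume_cb_ne_top s
  set v := volume (cb n (2 * δ)) with hv
  set v1 := volume (cb n δ) with hv1
  set v2 := volume (cb n (δ / 2)) with hv2
  set v4 := volume (cb n (δ / 4)) with hv4
  have hv0 := nz (2 * δ) (by positivity)
  have hvt := nt (2 * δ)
  have hv10 := nz δ hδ
  have hv1t := nt δ
  have hv20 := nz (δ / 2) (by positivity)
  have hv2t := nt (δ / 2)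
  have hv40 := nz (δ / 4) (by positivity)
  have hv4t := nt (δ / 4)
  rw [← hv] at hv0 hvt
  rw [← hv1] at hv10 hv1t
  rw [← hv2] at hv20 hv2t
  rw [← hv4] at hv40 hv4t
  -- error of the approximate additivity of the increments, per unit of `ε`
  set k : ℝ≥0∞ := (6 * n + 1) * (6 / (v * v1)) with hk
  have hkt : k ≠ ⊤ := by
    refine ENNReal.mul_ne_top ?_ ?_
    · exact ENNReal.add_ne_top.2 ⟨ENNReal.mul_ne_top (by simp) (by simp), by simp⟩
    · exact ENNReal.div_ne_top (by simp) (mul_ne_zero hv0 hv10)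
  set K1 : ℝ≥0∞ := 4 / v + k * v with hK1
  have hK1t : K1 ≠ ⊤ := ENNReal.add_ne_top.2
    ⟨ENNReal.div_ne_top (by simp) hv0, ENNReal.mul_ne_top hkt hvt⟩
  set K2 : ℝ≥0∞ := v1 * K1 / v2 with hK2
  have hK2t : K2 ≠ ⊤ := ENNReal.div_ne_top (ENNReal.mul_ne_top hv1t hK1t) hv20
  set K3 : ℝ≥0∞ := (1 + v4 * K2 + v4 * K2) / v4 with hK3
  have hK3t : K3 ≠ ⊤ := ENNReal.div_ne_top (by
    simp only [ne_eq, ENNReal.add_eq_top, ENNReal.one_ne_top, false_or, or_self]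
    exact ENNReal.mul_ne_top hv4t hK2t) hv40
  refine ⟨K2 + K3 + 1, ?_, by simp, ?_⟩
  · simp [hK2t, hK3t]
  intro f0 f1 f2 m0 m1 m2 hb ε hε
  by_cases hεt : ε = ⊤
  · simp [*]
  set Φ : Vec n → Vec n → ℝ≥0∞ := fun x y => ‖f0 x + f1 y + f2 (-(x + y))‖ₑ with hΦ
  have mΦ : Measurable (fun z : Vec n × Vec n => Φ z.1 z.2) := by simp only [hΦ]; fun_prop
  have hG : ∀ w : Vec n, ‖w‖ ≤ 2 * δ → ∃ γ : ℝ, |γ| ≤ 2 ∧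
      (∫⁻ x in cb n (2 * δ), ‖f0 x - f0 (x - w) - γ‖ₑ) * v ≤ 2 * ε ∧
      (∫⁻ y in cb n (2 * δ), ‖f1 (y + w) - f1 y - γ‖ₑ) * v ≤ 4 * ε := by
    intro w hw
    have e1 : ∫⁻ x in cb n (2 * δ), ∫⁻ y in cb n (2 * δ),
        ‖(f0 x - f0 (x - w)) - (f1 (y + w) - f1 y)‖ₑ ≤ 2 * ε := by
      have s1 : ∫⁻ x in cb n (2 * δ), ∫⁻ y in cb n (2 * δ), Φ x y ≤ ε := by
        refine le_trans (le_trans (lintegral_mono fun x => lintegral_mono_set ?_)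
          (lintegral_mono_set ?_)) hε
        all_goals exact closedBall_subset_closedBall (by linarith)
      have s2 : ∫⁻ x in cb n (2 * δ), ∫⁻ y in cb n (2 * δ), Φ (x - w) (y + w) ≤ ε := by
        refine le_trans (lintegral_mono fun x => shift_le (measurableSet_cb _)
          (measurableSet_cb (8 * δ)) (fun y => Φ (x - w) y) w fun y hy => ?_) ?_
        · rw [mem_cb] at *
          linarith [norm_add_le y w]
        · refine le_trans ?_ hε
          simp only [sub_eq_add_neg]
          refine shift_le (measurableSet_cb _) (measurableSet_cb (8 * δ))
            (fun x => ∫⁻ y in cb n (8 * δ), Φ x y) (-w) fun x hx => ?_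
          rw [mem_cb] at *
          have := norm_add_le x (-w)
          rw [norm_neg] at this
          linarith
      have mA : Measurable (fun x => ∫⁻ y in cb n (2 * δ), Φ x y) :=
        Measurable.lintegral_prod_right' mΦ
      calc _ ≤ ∫⁻ x in cb n (2 * δ), ((∫⁻ y in cb n (2 * δ), Φ x y) +
            ∫⁻ y in cb n (2 * δ), Φ (x - w) (y + w)) := by
              refine lintegral_mono fun x => ?_
              dsimp only
              rw [← lintegral_add_left (by simp only [hΦ]; fun_prop)]
              refine lintegral_mono fun y => ?_
              have : (f0 x - f0 (x - w)) - (f1 (y + w) - f1 y)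
                  = (f0 x + f1 y + f2 (-(x + y)))
                    + -(f0 (x - w) + f1 (y + w) + f2 (-((x - w) + (y + w)))) := by
                rw [show (x - w) + (y + w) = x + y by abel]; ring
              rw [this]
              exact (enorm_add_le _ _).trans (by rw [enorm_neg])
        _ = (∫⁻ x in cb n (2 * δ), ∫⁻ y in cb n (2 * δ), Φ x y) +
            ∫⁻ x in cb n (2 * δ), ∫⁻ y in cb n (2 * δ), Φ (x - w) (y + w) :=
              lintegral_add_left mA _
        _ ≤ ε + ε := add_le_add s1 s2
        _ = 2 * ε := (two_mul ε).symm
    obtain ⟨y0, -, h1, h2⟩ := two_fun (p := fun x => f0 x - f0 (x - w))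
      (q := fun y => f1 (y + w) - f1 y) hv0 hvt (by fun_prop) (by fun_prop) e1
    refine ⟨_, ?_, h1, h2.trans (by rw [← mul_assoc]; norm_num)⟩
    grind
  choose! γ hγb hγ0 hγ1 using hG
  have hdiv : ∀ {X c : ℝ≥0∞}, X * v ≤ c * ε → X ≤ c / v * ε := by
    intro X c h
    rw [← ENNReal.mul_div_right_comm]
    exact (ENNReal.le_div_iff_mul_le (Or.inl hv0) (Or.inl hvt)).2 h
  have hδ2 : δ ≤ 2 * δ := by linarith
  have hadd : ∀ w u : Vec n, ‖w‖ ≤ δ → ‖u‖ ≤ δ → ‖w + u‖ ≤ δ →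
      |γ (w + u) - γ w - γ u| ≤ (6 / (v * v1) * ε).toReal := by
    intro w u hw hu hwu
    have i1 := hdiv (hγ0 (w + u) (hwu.trans hδ2))
    have i2 := hdiv (hγ0 w (hw.trans hδ2))
    have i3 := hdiv (hγ0 u (hu.trans hδ2))
    have sub1 : cb n δ ⊆ cb n (2 * δ) := closedBall_subset_closedBall hδ2
    have j1 := (lintegral_mono_set (f := fun x => ‖f0 x - f0 (x - (w + u)) - γ (w + u)‖ₑ)
      (μ := volume) sub1).trans i1
    have j2 := (lintegral_mono_set (f := fun x => ‖f0 x - f0 (x - w) - γ w‖ₑ)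
      (μ := volume) sub1).trans i2
    have j3 : ∫⁻ x in cb n δ, ‖f0 (x - w) - f0 (x - w - u) - γ u‖ₑ ≤ 2 / v * ε := by
      refine le_trans ?_ i3
      have := shift_le (measurableSet_cb (n := n) δ) (measurableSet_cb (2 * δ))
        (fun x => ‖f0 x - f0 (x - u) - γ u‖ₑ) (-w) (by
          intro x hx
          rw [mem_cb] at *
          have := norm_add_le x (-w)
          rw [norm_neg] at this
          linarith)
      simpa only [sub_eq_add_neg] using this
    have tot : ‖γ (w + u) - γ w - γ u‖ₑ * v1 ≤ 6 / v * ε := by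
      calc ‖γ (w + u) - γ w - γ u‖ₑ * v1
          = ∫⁻ x in cb n δ, ‖γ (w + u) - γ w - γ u‖ₑ := by rw [setLIntegral_const]
        _ ≤ ∫⁻ x in cb n δ, (‖f0 x - f0 (x - (w + u)) - γ (w + u)‖ₑ +
            (‖f0 x - f0 (x - w) - γ w‖ₑ + ‖f0 (x - w) - f0 (x - w - u) - γ u‖ₑ)) := by
            refine lintegral_mono fun x => ?_
            have : γ (w + u) - γ w - γ u = -(f0 x - f0 (x - (w + u)) - γ (w + u)) +
                ((f0 x - f0 (x - w) - γ w) + (f0 (x - w) - f0 (x - w - u) - γ u)) := by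
              rw [show x - w - u = x - (w + u) by abel]; ring
            rw [this]
            refine (enorm_add_le _ _).trans ?_
            rw [enorm_neg]
            gcongr
            exact enorm_add_le _ _
        _ ≤ 2 / v * ε + (2 / v * ε + 2 / v * ε) := by
            rw [lintegral_add_left (by fun_prop), lintegral_add_left (by fun_prop)]
            exact add_le_add j1 (add_le_add j2 j3)
        _ = 6 / v * ε := by
            simp only [ENNReal.div_eq_inv_mul]
            ring
    have t2 : ‖γ (w + u) - γ w - γ u‖ₑ ≤ 6 / (v * v1) * ε := by
      have := (ENNReal.le_div_iff_mul_le (Or.inl hv10) (Or.inl hv1t)).2 tot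
      refine this.trans (le_of_eq ?_)
      rw [ENNReal.div_eq_inv_mul, ENNReal.div_eq_inv_mul, ENNReal.div_eq_inv_mul,
        ENNReal.mul_inv (Or.inl hv0) (Or.inl hvt)]
      ring
    have hfin : 6 / (v * v1) * ε ≠ ⊤ :=
      ENNReal.mul_ne_top (ENNReal.div_ne_top (by simp) (mul_ne_zero hv0 hv10)) hεt
    have := ENNReal.toReal_mono hfin t2
    assumption
  obtain ⟨a, ha⟩ := near_add hδ ENNReal.toReal_nonneg
    (fun w hw => hγb w (hw.trans hδ2)) hadd
  have ha' : ∀ w, ‖w‖ ≤ δ → ‖γ w - inner ℝ a w‖ₑ ≤ k * ε := by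
    intro w hw
    rw [← ofReal_norm, Real.norm_eq_abs]
    refine (ENNReal.ofReal_le_ofReal (ha w hw)).trans (le_of_eq ?_)
    rw [ENNReal.ofReal_mul (by positivity), ENNReal.ofReal_toReal
      (ENNReal.mul_ne_top (ENNReal.div_ne_top (by simp) (mul_ne_zero hv0 hv10)) hεt), hk]
    rw [ENNReal.ofReal_add (by positivity) (by norm_num), ENNReal.ofReal_mul (by norm_num)]
    simp [mul_assoc]
  have hKle : ∀ c : ℝ≥0∞, c ≤ 4 → c / v * ε + k * ε * v ≤ K1 * ε := by
    intro c hc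
    rw [hK1, add_mul]
    gcongr ?_ + ?_
    · gcongr
    · exact le_of_eq (by ring)
  have inc0 : ∀ w, ‖w‖ ≤ δ → ∫⁻ x in cb n (2 * δ),
      ‖(f0 x - inner ℝ a x) - (f0 (x - w) - inner ℝ a (x - w))‖ₑ ≤ K1 * ε := by
    intro w hw
    calc _ ≤ ∫⁻ x in cb n (2 * δ), (‖f0 x - f0 (x - w) - γ w‖ₑ + k * ε) := by
          refine lintegral_mono fun x => ?_
          have : (f0 x - inner ℝ a x) - (f0 (x - w) - inner ℝ a (x - w))
              = (f0 x - f0 (x - w) - γ w) + (γ w - inner ℝ a w) := by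
            rw [inner_sub_right]; ring
          rw [this]
          exact (enorm_add_le _ _).trans (add_le_add le_rfl (ha' w hw))
      _ ≤ 2 / v * ε + k * ε * v := by
          rw [lintegral_add_left (by fun_prop), setLIntegral_const]
          exact add_le_add (hdiv (hγ0 w (hw.trans hδ2))) le_rfl
      _ ≤ K1 * ε := hKle 2 (by norm_num)
  have inc1 : ∀ w, ‖w‖ ≤ δ → ∫⁻ x in cb n (2 * δ),
      ‖(f1 x - inner ℝ a x) - (f1 (x - w) - inner ℝ a (x - w))‖ₑ ≤ K1 * ε := by
    intro w hw
    have hw' : ‖-w‖ ≤ δ := by rwa [norm_neg]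
    calc _ ≤ ∫⁻ x in cb n (2 * δ), (‖f1 (x + -w) - f1 x - γ (-w)‖ₑ + k * ε) := by
          refine lintegral_mono fun x => ?_
          have : (f1 x - inner ℝ a x) - (f1 (x - w) - inner ℝ a (x - w))
              = -((f1 (x + -w) - f1 x - γ (-w)) + (γ (-w) - inner ℝ a (-w))) := by
            rw [inner_sub_right, inner_neg_right, ← sub_eq_add_neg]; ring
          rw [this, enorm_neg]
          exact (enorm_add_le _ _).trans (add_le_add le_rfl (ha' _ hw'))
      _ ≤ 4 / v * ε + k * ε * v := by
          rw [lintegral_add_left (by fun_prop), setLIntegral_const]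
          exact add_le_add (hdiv (hγ1 _ (hw'.trans hδ2))) le_rfl
      _ ≤ K1 * ε := hKle 4 le_rfl
  have min_ : Measurable fun x : Vec n => (inner ℝ a x : ℝ) :=
    (continuous_const.inner continuous_id).measurable
  obtain ⟨b0, hb0⟩ := const_of_increments hδ (m0.sub min_) inc0
  obtain ⟨b1, hb1⟩ := const_of_increments hδ (m1.sub min_) inc1
  have hdiv2 : ∀ {X : ℝ≥0∞}, X * v2 ≤ v1 * (K1 * ε) → X ≤ K2 * ε := by
    intro X h
    have := (ENNReal.le_div_iff_mul_le (Or.inl hv20) (Or.inl hv2t)).2 h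
    refine this.trans (le_of_eq ?_)
    rw [hK2, ENNReal.div_eq_inv_mul, ENNReal.div_eq_inv_mul]
    ring
  have h0 : ∫⁻ x in cb n (δ / 2), ‖f0 x - inner ℝ a x - b0‖ₑ ≤ K2 * ε := hdiv2 hb0
  have h1 : ∫⁻ x in cb n (δ / 2), ‖f1 x - inner ℝ a x - b1‖ₑ ≤ K2 * ε := hdiv2 hb1
  have sub4 : cb n (δ / 4) ⊆ cb n (δ / 2) := closedBall_subset_closedBall (by linarith)
  have hK2le : K2 * ε ≤ (K2 + K3 + 1) * ε := by
    gcongr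
    rw [add_assoc]
    exact le_self_add
  refine ⟨a, b0, b1, ((lintegral_mono_set sub4).trans h0).trans hK2le,
    ((lintegral_mono_set sub4).trans h1).trans hK2le, ?_⟩
  have hK3le : K3 * ε ≤ (K2 + K3 + 1) * ε := by
    gcongr
    rw [add_assoc, add_comm K2, add_assoc]
    exact le_self_add
  refine le_trans ?_ hK3le
  set h2 : Vec n → ℝ := fun z => f2 z - inner ℝ a z - (-b0 - b1) with hh2
  have key : (∫⁻ z in cb n (δ / 4), ‖h2 z‖ₑ) * v4 ≤ (1 + v4 * K2 + v4 * K2) * ε := by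
    set P0 : Vec n → ℝ≥0∞ := fun x => ‖f0 x - inner ℝ a x - b0‖ₑ
    set P1 : Vec n → ℝ≥0∞ := fun x => ‖f1 x - inner ℝ a x - b1‖ₑ
    have mP0 : Measurable P0 := ((m0.sub min_).sub_const _).enorm
    have hneg : ∀ (F : Vec n → ℝ≥0∞), ∫⁻ x in cb n (δ / 4), F x = ∫⁻ x in cb n (δ / 4), F (-x) := by
      intro F
      rw [← lintegral_indicator (measurableSet_cb _), ← lintegral_indicator (measurableSet_cb _),
        ← lintegral_neg_eq_self]
      refine lintegral_congr fun w => ?_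
      have : -w ∈ cb n (δ / 4) ↔ w ∈ cb n (δ / 4) := by simp only [mem_cb, norm_neg]
      by_cases hw : w ∈ cb n (δ / 4)
      · simp [*]
      · simp [*]
    have pt : ∀ x z : Vec n, ‖h2 z‖ₑ ≤ Φ x (-z - x) + (P0 x + P1 (-z - x)) := by
      intro x z
      have e : h2 z = (f0 x + f1 (-z - x) + f2 (-(x + (-z - x)))) +
          (-(f0 x - inner ℝ a x - b0) + -(f1 (-z - x) - inner ℝ a (-z - x) - b1)) := by
        rw [show -(x + (-z - x)) = z by abel, inner_sub_right, inner_neg_right]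
        simp only [hh2]; ring
      rw [e]
      refine (enorm_add_le _ _).trans (add_le_add le_rfl ((enorm_add_le _ _).trans ?_))
      rw [enorm_neg, enorm_neg]
    have int1 : ∀ (F : Vec n → ℝ≥0∞) (x : Vec n) (s : ℝ), ‖x‖ ≤ δ / 4 → δ / 2 ≤ s →
        ∫⁻ z in cb n (δ / 4), F (-z - x) ≤ ∫⁻ y in cb n s, F y := by
      intro F x s hx hs
      rw [hneg]
      simp only [neg_neg, sub_eq_add_neg]
      refine shift_le (measurableSet_cb _) (measurableSet_cb _) F (-x) fun y hy => ?_
      rw [mem_cb] at *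
      have := norm_add_le y (-x)
      rw [norm_neg] at this
      linarith
    have each : ∀ x ∈ cb n (δ / 4), ∫⁻ z in cb n (δ / 4), ‖h2 z‖ₑ
        ≤ (∫⁻ y in cb n (8 * δ), Φ x y) + (P0 x * v4 + K2 * ε) := by
      intro x hx
      rw [mem_cb] at hx
      have mm : Measurable fun z => Φ x (-z - x) := by simp only [hΦ]; fun_prop
      calc ∫⁻ z in cb n (δ / 4), ‖h2 z‖ₑ
          ≤ ∫⁻ z in cb n (δ / 4), (Φ x (-z - x) + (P0 x + P1 (-z - x))) :=
            lintegral_mono fun z => pt x z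
        _ = (∫⁻ z in cb n (δ / 4), Φ x (-z - x)) + (P0 x * v4
            + ∫⁻ z in cb n (δ / 4), P1 (-z - x)) := by
            rw [lintegral_add_left mm, lintegral_add_left measurable_const, setLIntegral_const]
        _ ≤ _ := by
            exact add_le_add (int1 (Φ x) x _ hx (by linarith))
              (add_le_add le_rfl ((int1 P1 x _ hx le_rfl).trans h1))
    calc (∫⁻ z in cb n (δ / 4), ‖h2 z‖ₑ) * v4
        = ∫⁻ x in cb n (δ / 4), ∫⁻ z in cb n (δ / 4), ‖h2 z‖ₑ := by rw [setLIntegral_const]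
      _ ≤ ∫⁻ x in cb n (δ / 4), ((∫⁻ y in cb n (8 * δ), Φ x y) + (P0 x * v4 + K2 * ε)) :=
          setLIntegral_mono' (measurableSet_cb _) each
      _ = (∫⁻ x in cb n (δ / 4), ∫⁻ y in cb n (8 * δ), Φ x y)
          + ((∫⁻ x in cb n (δ / 4), P0 x) * v4 + K2 * ε * v4) := by
          rw [lintegral_add_left (Measurable.lintegral_prod_right' mΦ),
            lintegral_add_left (mP0.mul_const _), setLIntegral_const, lintegral_mul_const _ mP0]
      _ ≤ ε + (K2 * ε * v4 + K2 * ε * v4) := by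
          gcongr
          · exact (lintegral_mono_set
              (closedBall_subset_closedBall (by linarith))).trans hε
          · exact (lintegral_mono_set sub4).trans h0
      _ = (1 + v4 * K2 + v4 * K2) * ε := by ring
  have := (ENNReal.le_div_iff_mul_le (Or.inl hv40) (Or.inl hv4t)).2 key
  refine this.trans (le_of_eq ?_)
  rw [hK3, ENNReal.div_eq_inv_mul, ENNReal.div_eq_inv_mul]
  ring

/-! ### Propagation of the affine approximation along lines -/

/-- One propagation step: smallness of `F₁`, `F₂` on balls about `c₁ z`, `c₂ z` gives smallness
of `F₀` on a slightly larger ball. -/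
lemma step_line {F0 F1 F2 : Vec n → ℝ≥0∞} {W : (Fin 3 → Vec n) → ℝ≥0∞}
    (hF0 : Measurable F0) (hF1 : Measurable F1) (hF2 : Measurable F2) (hW : Measurable W)
    {c0 c1 c2 s δ : ℝ} (hs : 0 ≤ s) (hδ : 0 < δ) (hc : c0 + c1 + c2 = 0)
    (H : ∀ z x0 x1 x2 : Vec n, ‖z‖ ≤ s → x0 + x1 + x2 = 0 → ‖x0 - c0 • z‖ ≤ 2 * δ →
      ‖x1 - c1 • z‖ ≤ 2 * δ → ‖x2 - c2 • z‖ ≤ 2 * δ → F0 x0 ≤ W ![x0, x1, x2] + (F1 x1 + F2 x2)) :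
    (∫⁻ x in cb n (|c0| * s + 5 / 4 * δ), F0 x) * volume (cb n (δ / 4)) ≤ JJ W +
      volume (cb n (|c0| * s + 5 / 4 * δ)) *
        ((∫⁻ x in cb n (|c1| * s + δ), F1 x) + ∫⁻ x in cb n (|c2| * s + δ), F2 x) := by
  obtain ⟨σ, hσ1, hσc⟩ : ∃ σ : ℝ, |σ| = 1 ∧ σ * c0 = |c0| := by
    rcases le_total 0 c0 with h | h
    · exact ⟨1, by simp, by rw [abs_of_nonneg h, one_mul]⟩
    · exact ⟨-1, by simp, by rw [abs_of_nonpos h]; ring⟩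
  have hσσ : σ * σ = 1 := by rw [← abs_mul_abs_self, hσ1]; norm_num
  set R0 := |c0| * s + 5 / 4 * δ
  have hR0p : 0 < R0 := by positivity
  set β0 := s * c0 + σ * (5 / 4 * δ) with hβ0
  set β1 := s * c1 - σ * (5 / 8 * δ) with hβ1
  set β2 := s * c2 - σ * (5 / 8 * δ) with hβ2
  have hsum : β0 + β1 + β2 = 0 := by nlinarith
  have hβσ : β0 = σ * R0 := by grind
  have hβa : |β0| = R0 := by rw [hβσ, abs_mul, hσ1, one_mul, abs_of_pos hR0p]
  have hβne : β0 ≠ 0 := by rw [← abs_pos, hβa]; exact hR0p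
  have hsm : ∀ c, |s * c - σ * (5 / 8 * δ)| ≤ |c| * s + 5 / 8 * δ := by
    intro c
    refine (abs_sub _ _).trans ?_
    rw [abs_mul, abs_mul, hσ1, abs_of_nonneg hs, abs_of_nonneg (by positivity : 0 ≤ 5 / 8 * δ)]
    linarith
  -- the inequality at the points `(x, (β₁/β₀) x + u, (β₂/β₀) x - u)`
  have hscale : ∀ (x : Vec n) (b : ℝ), ‖x‖ ≤ R0 → ‖(b / β0) • x‖ ≤ |b| := by
    intro x b hx
    rw [norm_smul, Real.norm_eq_abs, abs_div, hβa, div_mul_eq_mul_div, div_le_iff₀ hR0p]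
    gcongr
  have pt : ∀ x ∈ cb n R0, ∀ u ∈ cb n (δ / 4), F0 x ≤
      W ![x, u + (β1 / β0) • x, -(x + (u + (β1 / β0) • x))] +
      (F1 (u + (β1 / β0) • x) + F2 (-u + (β2 / β0) • x)) := by
    intro x hx u hu
    rw [mem_cb] at hx hu
    have e2 : -u + (β2 / β0) • x = -(x + (u + (β1 / β0) • x)) := by
      have h1 : β2 / β0 = -1 - β1 / β0 := by field_simp; linarith
      rw [h1, sub_smul, neg_one_smul]; abel
    rw [e2]
    have hz := hscale x s hx
    rw [abs_of_nonneg hs] at hz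
    have gen : ∀ (b c : ℝ), (b / β0) • x - c • ((s / β0) • x) = ((b - s * c) / β0) • x := by
      intro b c
      rw [smul_smul, ← sub_smul]; congr 1; ring
    refine H ((s / β0) • x) _ _ _ hz (by abel) ?_ ?_ ?_
    · have h1 : x - c0 • ((s / β0) • x) = (β0 / β0) • x - c0 • ((s / β0) • x) := by
        rw [div_self hβne, one_smul]
      rw [h1, gen]
      refine (hscale x _ hx).trans ?_
      rw [hβ0, add_sub_cancel_left, abs_mul, hσ1, abs_of_pos (by positivity)]
      linarith
    · rw [add_sub_assoc, gen]
      refine (norm_add_le _ _).trans ?_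
      have := hscale x (β1 - s * c1) hx
      rw [hβ1, show s * c1 - σ * (5 / 8 * δ) - s * c1 = -(σ * (5 / 8 * δ)) by ring, abs_neg, abs_mul,
        hσ1, abs_of_pos (by positivity : 0 < 5 / 8 * δ)] at this
      rw [hβ1, show s * c1 - σ * (5 / 8 * δ) - s * c1 = -(σ * (5 / 8 * δ)) by ring]
      linarith
    · rw [← e2, add_sub_assoc, gen]
      refine (norm_add_le _ _).trans ?_
      have := hscale x (β2 - s * c2) hx
      rw [hβ2, show s * c2 - σ * (5 / 8 * δ) - s * c2 = -(σ * (5 / 8 * δ)) by ring, abs_neg, abs_mul,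
        hσ1, abs_of_pos (by positivity : 0 < 5 / 8 * δ)] at this
      rw [hβ2, show s * c2 - σ * (5 / 8 * δ) - s * c2 = -(σ * (5 / 8 * δ)) by ring, norm_neg]
      linarith
  have hW2 : Measurable fun p : Vec n × Vec n => W ![p.1, p.2, -(p.1 + p.2)] :=
    hW.comp measurable_three
  have hneg : ∀ (F : Vec n → ℝ≥0∞), ∫⁻ x in cb n (δ / 4), F (-x) = ∫⁻ x in cb n (δ / 4), F x := by
    intro F
    rw [← lintegral_indicator (measurableSet_cb _), ← lintegral_indicator (measurableSet_cb _),
      ← lintegral_neg_eq_self (μ := volume) ((cb n (δ / 4)).indicator F)]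
    refine lintegral_congr fun w => ?_
    have : -w ∈ cb n (δ / 4) ↔ w ∈ cb n (δ / 4) := by simp only [mem_cb, norm_neg]
    by_cases hw : w ∈ cb n (δ / 4)
    · simp [*]
    · simp [*]
  have sh : ∀ (F : Vec n → ℝ≥0∞) (x : Vec n) (c : ℝ), ‖x‖ ≤ R0 →
      ∫⁻ u in cb n (δ / 4), F (u + ((s * c - σ * (5 / 8 * δ)) / β0) • x)
        ≤ ∫⁻ y in cb n (|c| * s + δ), F y := by
    intro F x c hx
    refine shift_le (measurableSet_cb _) (measurableSet_cb _) F _ fun u hu => ?_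
    rw [mem_cb] at *
    refine (norm_add_le _ _).trans ?_
    linarith [(hscale x (s * c - σ * (5 / 8 * δ)) hx).trans (hsm c)]
  have each : ∀ x ∈ cb n R0, F0 x * volume (cb n (δ / 4)) ≤
      (∫⁻ y, W ![x, y, -(x + y)]) +
      ((∫⁻ x in cb n (|c1| * s + δ), F1 x) + ∫⁻ x in cb n (|c2| * s + δ), F2 x) := by
    intro x hx
    rw [← setLIntegral_const]
    refine (setLIntegral_mono' (measurableSet_cb _) (pt x hx)).trans ?_
    rw [mem_cb] at hx
    have mW : Measurable fun u => W ![x, u + (β1 / β0) • x, -(x + (u + (β1 / β0) • x))] :=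
      (hW2.comp (measurable_const.prodMk (measurable_id.add_const _)))
    have mF1 : Measurable fun u => F1 (u + (β1 / β0) • x) := hF1.comp (measurable_id.add_const _)
    rw [lintegral_add_left mW, lintegral_add_left mF1]
    refine add_le_add ?_ (add_le_add ?_ ?_)
    · refine (setLIntegral_le_lintegral _ _).trans (le_of_eq ?_)
      exact lintegral_add_right_eq_self (fun y => W ![x, y, -(x + y)]) _
    · exact sh F1 x c1 hx
    · rw [hneg (fun u => F2 (u + (β2 / β0) • x))]
      exact sh F2 x c2 hx
  calc (∫⁻ x in cb n R0, F0 x) * volume (cb n (δ / 4))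
      = ∫⁻ x in cb n R0, F0 x * volume (cb n (δ / 4)) := (lintegral_mul_const _ hF0).symm
    _ ≤ ∫⁻ x in cb n R0, ((∫⁻ y, W ![x, y, -(x + y)]) +
        ((∫⁻ x in cb n (|c1| * s + δ), F1 x) + ∫⁻ x in cb n (|c2| * s + δ), F2 x)) :=
        setLIntegral_mono' (measurableSet_cb _) each
    _ = (∫⁻ x in cb n R0, ∫⁻ y, W ![x, y, -(x + y)]) +
        ((∫⁻ x in cb n (|c1| * s + δ), F1 x) + ∫⁻ x in cb n (|c2| * s + δ), F2 x)
          * volume (cb n R0) := by simp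
    _ ≤ _ := by
        rw [mul_comm (volume (cb n R0))]
        exact add_le_add (setLIntegral_le_lintegral _ _) le_rfl

/-- Propagation along a line from a small ball to radius `S`. -/
lemma prop_line {δ C0 : ℝ} (hδ : 0 < δ) (hC0 : 1 ≤ C0) : ∃ C : ℝ≥0∞, C ≠ ⊤ ∧
    ∀ (F : Fin 3 → Vec n → ℝ≥0∞) (W : (Fin 3 → Vec n) → ℝ≥0∞) (c : Fin 3 → ℝ) (S : ℝ) (ε : ℝ≥0∞),
    (∀ i, Measurable (F i)) → Measurable W → S ≤ C0 → (∀ i, |c i| ≤ C0) →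
    c 0 + c 1 + c 2 = 0 → JJ W ≤ ε → (∀ i, ∫⁻ x in cb n δ, F i x ≤ ε) →
    (∀ z x0 x1 x2 : Vec n, ‖z‖ ≤ S → x0 + x1 + x2 = 0 → ‖x0 - c 0 • z‖ ≤ 2 * δ →
      ‖x1 - c 1 • z‖ ≤ 2 * δ → ‖x2 - c 2 • z‖ ≤ 2 * δ →
      F 0 x0 ≤ W ![x0, x1, x2] + (F 1 x1 + F 2 x2) ∧
      F 1 x1 ≤ W ![x0, x1, x2] + (F 0 x0 + F 2 x2) ∧
      F 2 x2 ≤ W ![x0, x1, x2] + (F 1 x1 + F 0 x0)) →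
    ∀ i, ∫⁻ x in cb n (|c i| * S), F i x ≤ C * ε := by
  set τ := δ / (4 * C0) with hτ
  have hτp : 0 < τ := by positivity
  set N := ⌈C0 / τ⌉₊
  set v := volume (cb n (δ / 4))
  have hv0 : v ≠ 0 := volume_cb_ne_zero (by positivity)
  have hvt : v ≠ ⊤ := volume_cb_ne_top _
  set V0 := volume (cb n (C0 * (C0 + 1) + 2 * δ))
  -- constants of the iteration
  let K : ℕ → ℝ≥0∞ := fun k => Nat.rec 1 (fun _ c => (1 + V0 * (2 * c)) / v) k
  have hK1 : ∀ k, K (k + 1) = (1 + V0 * (2 * K k)) / v := fun k => rfl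
  have hKt : ∀ k, K k ≠ ⊤ := by
    intro k
    induction k with
    | zero => exact one_ne_top
    | succ k ih =>
      rw [hK1]
      refine div_ne_top (add_ne_top.2 ⟨by simp, ?_⟩) hv0
      exact mul_ne_top (volume_cb_ne_top _) (mul_ne_top (by simp) ih)
  refine ⟨∑ k ∈ Finset.range (N + 2), K k, sum_ne_top.2 fun k _ => hKt k, ?_⟩
  intro F W c S ε hF hW hS hc hsum hJ h0 H
  by_cases hS0 : S < 0
  · intro i
    rcases (abs_nonneg (c i)).lt_or_eq with h | h
    · have : cb n (|c i| * S) = ∅ := closedBall_eq_empty.2 (mul_neg_of_pos_of_neg h hS0)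
      rw [this]; simp
    · rw [← h, zero_mul]
      refine (lintegral_mono_set (closedBall_subset_closedBall hδ.le)).trans ((h0 i).trans ?_)
      have h1 : (1 : ℝ≥0∞) ≤ ∑ k ∈ Finset.range (N + 2), K k :=
        Finset.single_le_sum (f := K) (fun _ _ => zero_le) (Finset.mem_range.2 (by omega : 0 < N + 2))
      calc ε = 1 * ε := (one_mul ε).symm
        _ ≤ _ := by gcongr
  push Not at hS0
  have main : ∀ k : ℕ, k * τ ≤ S + τ → ∀ i, ∫⁻ x in cb n (|c i| * (k * τ) + δ), F i x ≤ K k * ε := by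
    intro k
    induction k with
    | zero =>
      intro _ i
      have : K 0 = 1 := rfl
      rw [this, one_mul, Nat.cast_zero, zero_mul, mul_zero, zero_add]
      exact h0 i
    | succ k ih =>
      intro hk
      push_cast at hk
      set s := (k : ℝ) * τ
      have hsS : s ≤ S := by linarith
      have hs0 : 0 ≤ s := by positivity
      have ih' := ih (by linarith)
      have hbig : ∀ i, |c i| * (((k + 1 : ℕ) : ℝ) * τ) + δ ≤ |c i| * s + 5 / 4 * δ := by
        intro i
        have h1 : |c i| * τ ≤ C0 * τ := mul_le_mul_of_nonneg_right (hc i) hτp.le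
        have h2 : C0 * τ = δ / 4 := by rw [hτ]; field_simp
        grind
      have hvol : ∀ i, volume (cb n (|c i| * s + 5 / 4 * δ)) ≤ V0 := by
        intro i
        refine measure_mono (closedBall_subset_closedBall ?_)
        have : |c i| * s ≤ C0 * (C0 + 1) := mul_le_mul (hc i) (by linarith) hs0 (by linarith)
        linarith
      have fin : ∀ i j l, (∫⁻ x in cb n (|c i| * s + 5 / 4 * δ), F i x) * v ≤ ε +
          volume (cb n (|c i| * s + 5 / 4 * δ)) * ((∫⁻ x in cb n (|c j| * s + δ), F j x)
            + ∫⁻ x in cb n (|c l| * s + δ), F l x) →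
          ∫⁻ x in cb n (|c i| * (((k + 1 : ℕ) : ℝ) * τ) + δ), F i x ≤ K (k + 1) * ε := by
        intro i j l h
        refine (lintegral_mono_set (closedBall_subset_closedBall (hbig i))).trans ?_
        have h2 : (∫⁻ x in cb n (|c i| * s + 5 / 4 * δ), F i x) * v
            ≤ ε + V0 * (K k * ε + K k * ε) := by
          refine h.trans (add_le_add le_rfl ?_)
          exact mul_le_mul' (hvol i) (add_le_add (ih' j) (ih' l))
        have h3 := (ENNReal.le_div_iff_mul_le (Or.inl hv0) (Or.inl hvt)).2 h2
        refine h3.trans (le_of_eq ?_)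
        rw [hK1, ENNReal.div_eq_inv_mul, ENNReal.div_eq_inv_mul]
        ring
      have S0 := step_line (W := W) (hF 0) (hF 1) (hF 2) hW hs0 hδ hsum
        (fun z x0 x1 x2 hz hx a0 a1 a2 => (H z x0 x1 x2 (hz.trans hsS) hx a0 a1 a2).1)
      have m1 : Measurable fun x : Fin 3 → Vec n => W ![x 1, x 0, x 2] := by fun_prop
      have m2 : Measurable fun x : Fin 3 → Vec n => W ![x 2, x 1, x 0] := by fun_prop
      have S1 := step_line (W := fun x => W ![x 1, x 0, x 2]) (hF 1) (hF 0) (hF 2) m1 hs0 hδ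
        (c0 := c 1) (c1 := c 0) (c2 := c 2) (by linarith)
        (fun z x0 x1 x2 hz hx a0 a1 a2 => (H z x1 x0 x2 (hz.trans hsS)
          (by rw [← hx]; abel) a1 a0 a2).2.1)
      have S2 := step_line (W := fun x => W ![x 2, x 1, x 0]) (hF 2) (hF 1) (hF 0) m2 hs0 hδ
        (c0 := c 2) (c1 := c 1) (c2 := c 0) (by linarith)
        (fun z x0 x1 x2 hz hx a0 a1 a2 => (H z x2 x1 x0 (hz.trans hsS)
          (by rw [← hx]; abel) a2 a1 a0).2.2)
      have J1 : JJ (fun x => W ![x 1, x 0, x 2]) = JJ W := JJ_swap01 hW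
      have J2 : JJ (fun x => W ![x 2, x 1, x 0]) = JJ W := by
        have m3 : Measurable fun x : Fin 3 → Vec n => W ![x 0, x 2, x 1] := by fun_prop
        have e6 := JJ_swap01 m3
        have e7 := JJ_swap12 W
        simp only [Matrix.cons_val_zero, Matrix.cons_val_one, Matrix.cons_val] at e6 e7
        rw [← e7, ← e6, ← JJ_swap12]
        rfl
      rw [J1] at S1
      rw [J2] at S2
      intro i
      fin_cases i
      · exact fin 0 1 2 (S0.trans (add_le_add hJ le_rfl))
      · exact fin 1 0 2 (S1.trans (add_le_add hJ le_rfl))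
      · exact fin 2 1 0 (S2.trans (add_le_add hJ le_rfl))
  set k := ⌈S / τ⌉₊
  have hk1 : S ≤ k * τ := by
    have := Nat.le_ceil (S / τ)
    rwa [div_le_iff₀ hτp] at this
  have hk2 : k * τ ≤ S + τ := by
    have := (Nat.ceil_lt_add_one (div_nonneg hS0 hτp.le)).le
    have h2 := mul_le_mul_of_nonneg_right this hτp.le
    rw [add_mul, div_mul_cancel₀ _ hτp.ne', one_mul] at h2
    exact h2
  have hkN : k < N + 2 := by
    have : k ≤ N := Nat.ceil_mono (div_le_div_of_nonneg_right hS hτp.le)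
    omega
  intro i
  refine (lintegral_mono_set (closedBall_subset_closedBall ?_)).trans
    ((main k hk2 i).trans ?_)
  · linarith [mul_le_mul_of_nonneg_left hk1 (abs_nonneg (c i))]
  · gcongr
    exact Finset.single_le_sum (f := K) (fun _ _ => zero_le) (Finset.mem_range.2 hkN)

/-- Near solutions of `f₀ + f₁ + f₂ = 0` on a region of the plane `x₀ + x₁ + x₂ = 0` containing
neighbourhoods of suitable lines are nearly affine. -/
lemma affine_approx {δ C0 : ℝ} (hδ : 0 < δ) (hC0 : 1 ≤ C0) : ∃ C : ℝ≥0∞, C ≠ ⊤ ∧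
    ∀ (f : Fin 3 → Vec n → ℝ) (Ω : Set (Fin 3 → Vec n)) (c : Fin 3 → Fin 3 → ℝ) (S : Fin 3 → ℝ),
    (∀ i, Measurable (f i)) → (∀ i x, |f i x| ≤ 1) → MeasurableSet Ω → (∀ j, S j ≤ C0) →
    (∀ j i, |c j i| ≤ C0) → (∀ j, c j j = 1) → (∀ j, c j 0 + c j 1 + c j 2 = 0) →
    (∀ x : Fin 3 → Vec n, x 0 + x 1 + x 2 = 0 → (∀ i, ‖x i‖ ≤ 64 * δ) → x ∈ Ω) →
    (∀ j z (x : Fin 3 → Vec n), ‖z‖ ≤ S j → x 0 + x 1 + x 2 = 0 →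
      (∀ i, ‖x i - c j i • z‖ ≤ 2 * δ) → x ∈ Ω) →
    ∃ (a : Vec n) (b : Fin 3 → ℝ), b 0 + b 1 + b 2 = 0 ∧
      ∀ j, ∫⁻ x in cb n (S j), ‖f j x - inner ℝ a x - b j‖ₑ
        ≤ C * JJ (Ω.indicator fun x => ‖f 0 (x 0) + f 1 (x 1) + f 2 (x 2)‖ₑ) := by
  obtain ⟨C1, hC1, -, h1⟩ := patch (n := n) (δ := 4 * δ) (by positivity)
  obtain ⟨C2, hC2, h2⟩ := prop_line (n := n) hδ hC0
  refine ⟨C2 * (C1 + 1), mul_ne_top hC2 (add_ne_top.2 ⟨hC1, by simp⟩), ?_⟩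
  intro f Ω c S hf hb hΩm hS hc hcj hcs hΩ0 hΩ
  set W : (Fin 3 → Vec n) → ℝ≥0∞ :=
    Ω.indicator fun x => ‖f 0 (x 0) + f 1 (x 1) + f 2 (x 2)‖ₑ with hW
  have mW : Measurable W := by
    refine Measurable.indicator ?_ hΩm
    have : ∀ i, Measurable fun x : Fin 3 → Vec n => f i (x i) :=
      fun i => (hf i).comp (measurable_pi_apply i)
    exact (((this 0).add (this 1)).add (this 2)).enorm
  have hp : ∫⁻ x in cb n (8 * (4 * δ)), ∫⁻ y in cb n (8 * (4 * δ)),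
      ‖f 0 x + f 1 y + f 2 (-(x + y))‖ₑ ≤ JJ W := by
    calc _ ≤ ∫⁻ x in cb n (8 * (4 * δ)), ∫⁻ y in cb n (8 * (4 * δ)), W ![x, y, -(x + y)] := by
          refine setLIntegral_mono' (measurableSet_cb _) fun x hx =>
            setLIntegral_mono' (measurableSet_cb _) fun y hy => ?_
          rw [mem_cb] at hx hy
          have : (![x, y, -(x + y)] : Fin 3 → Vec n) ∈ Ω := by
            refine hΩ0 _ (by simp) fun i => ?_
            fin_cases i
            · simp; linarith
            · simp; linarith
            · have := norm_add_le x y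
              simp only [Fin.reduceFinMk, Matrix.cons_val, norm_neg]
              linarith
          simp only [hW]
          rw [indicator_of_mem this]
          simp
      _ ≤ JJ W := (lintegral_mono fun x => setLIntegral_le_lintegral _ _).trans
          (setLIntegral_le_lintegral _ _)
  obtain ⟨a, b0, b1, e0, e1, e2⟩ := h1 (f 0) (f 1) (f 2) (hf 0) (hf 1) (hf 2) (hb 1) _ hp
  rw [show 4 * δ / 4 = δ by ring] at e0 e1 e2
  set b : Fin 3 → ℝ := ![b0, b1, -b0 - b1] with hbdef
  refine ⟨a, b, by simp [hbdef], ?_⟩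
  have hbs : b 0 + b 1 + b 2 = 0 := by simp [hbdef]
  set F : Fin 3 → Vec n → ℝ≥0∞ := fun i x => ‖f i x - inner ℝ a x - b i‖ₑ
  have min_ : Measurable fun x : Vec n => (inner ℝ a x : ℝ) :=
    (continuous_const.inner continuous_id).measurable
  have mF : ∀ i, Measurable (F i) := fun i => (((hf i).sub min_).sub_const _).enorm
  have hcle : C1 * JJ W ≤ (C1 + 1) * JJ W := by gcongr; exact le_self_add
  intro j
  have key := h2 F W (c j) (S j) ((C1 + 1) * JJ W) mF mW (hS j) (hc j) (hcs j)
    (by calc JJ W = 1 * JJ W := (one_mul _).symm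
          _ ≤ _ := by gcongr; exact le_add_self)
    (by
      intro i
      fin_cases i
      · exact e0.trans hcle
      · exact e1.trans hcle
      · exact e2.trans hcle)
    (by
      intro z x0 x1 x2 hz hx a0 a1 a2
      have hmem : (![x0, x1, x2] : Fin 3 → Vec n) ∈ Ω := by
        refine hΩ j z _ hz (by simpa using hx) fun i => ?_
        fin_cases i
        · exact a0
        · exact a1
        · exact a2
      have hWx : W ![x0, x1, x2] = ‖f 0 x0 + f 1 x1 + f 2 x2‖ₑ := by
        simp only [hW]
        rw [indicator_of_mem hmem]
        simp
      have hi : (inner ℝ a x0 : ℝ) + inner ℝ a x1 + inner ℝ a x2 = 0 := by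
        rw [← inner_add_right, ← inner_add_right, hx, inner_zero_right]
      rw [hWx]
      have gen : ∀ u p q r : ℝ, p = u + (-q + -r) → ‖p‖ₑ ≤ ‖u‖ₑ + (‖q‖ₑ + ‖r‖ₑ) := by
        intro u p q r h
        rw [h]
        refine (enorm_add_le _ _).trans (add_le_add le_rfl ((enorm_add_le _ _).trans ?_))
        rw [enorm_neg, enorm_neg]
      refine ⟨gen _ _ _ _ ?_, gen _ _ _ _ ?_, gen _ _ _ _ ?_⟩ <;> linarith)
    j
  rw [hcj j, abs_one, one_mul, ← mul_assoc] at key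
  exact key

/-! ### Geometry of the sections of an admissible triple of balls -/

/-- Half-length of the vertical section of the ball of radius `r` over `x`. -/
def hl (r : ℝ) (x : Vec n) : ℝ := √(r ^ 2 - ‖x‖ ^ 2)

lemma hl_nonneg (r : ℝ) (x : Vec n) : 0 ≤ hl r x := Real.sqrt_nonneg _

lemma measurable_hl (r : ℝ) : Measurable (hl r : Vec n → ℝ) := by unfold hl; fun_prop

/-- Triples of base points over which the three sections are long and satisfy strict triangle
inequalities. -/
def Om (n : ℕ) (r : Fin 3 → ℝ) (θ : ℝ) : Set (Fin 3 → Vec n) :=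
  {x | (∀ i, θ ≤ hl (r i) (x i)) ∧ θ ≤ hl (r 0) (x 0) + hl (r 1) (x 1) - hl (r 2) (x 2) ∧
    θ ≤ hl (r 0) (x 0) + hl (r 2) (x 2) - hl (r 1) (x 1) ∧
    θ ≤ hl (r 1) (x 1) + hl (r 2) (x 2) - hl (r 0) (x 0)}

lemma measurableSet_Om (r : Fin 3 → ℝ) (θ : ℝ) : MeasurableSet (Om n r θ) := by
  have m : ∀ i, Measurable fun x : Fin 3 → Vec n => hl (r i) (x i) :=
    fun i => (measurable_hl _).comp (measurable_pi_apply i)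
  refine MeasurableSet.inter (s₁ := {x : Fin 3 → Vec n | ∀ i, θ ≤ hl (r i) (x i)}) ?_
    (MeasurableSet.inter ?_ (MeasurableSet.inter ?_ ?_))
  · have : {x : Fin 3 → Vec n | ∀ i, θ ≤ hl (r i) (x i)} = ⋂ i, {x | θ ≤ hl (r i) (x i)} := by
      ext x; simp
    rw [this]
    exact MeasurableSet.iInter fun i => measurableSet_le measurable_const (m i)
  · exact measurableSet_le measurable_const (((m 0).add (m 1)).sub (m 2))
  · exact measurableSet_le measurable_const (((m 0).add (m 2)).sub (m 1))
  · exact measurableSet_le measurable_const (((m 1).add (m 2)).sub (m 0))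

/-- The foot parameter of the triangle with sides `r₀, r₁, r₂` over the base `r₀`. -/
def foot (r0 r1 r2 : ℝ) : ℝ := (1 + (r1 ^ 2 - r2 ^ 2) / r0 ^ 2) / 2

lemma foot_bounds {g r0 r1 r2 : ℝ} (hg : 0 < g) (hg1 : g ≤ 1) (l0 : g ≤ r0) (l1 : g ≤ r1)
    (l2 : g ≤ r2) (u0 : r0 ≤ 1 / g) (t0 : g ≤ r0 + r1 - r2)
    (t1 : g ≤ r0 + r2 - r1) (t2 : g ≤ r1 + r2 - r0) :
    ∃ h : ℝ, g ^ 4 / 4 ≤ h ∧ r1 ^ 2 = h + foot r0 r1 r2 ^ 2 * r0 ^ 2 ∧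
      r2 ^ 2 = h + (1 - foot r0 r1 r2) ^ 2 * r0 ^ 2 := by
  have p0 : 0 < r0 := hg.trans_le l0
  set L := foot r0 r1 r2 with hL
  have hLr : L * r0 ^ 2 = (r0 ^ 2 + r1 ^ 2 - r2 ^ 2) / 2 := by
    rw [hL, foot]; field_simp; ring
  refine ⟨r1 ^ 2 - L ^ 2 * r0 ^ 2, ?_, by ring, by linear_combination 2 * hLr⟩
  have ug : r0 * g ≤ 1 := by rwa [le_div_iff₀ hg] at u0
  have f1 : g ^ 3 / 2 ≤ r1 - L * r0 := by
    have h1 : g * g ≤ (r1 - L * r0) * (2 * r0) := by nlinarith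
    nlinarith
  have f2 : g / 2 ≤ r1 + L * r0 := by nlinarith
  calc g ^ 4 / 4 = g ^ 3 / 2 * (g / 2) := by ring
    _ ≤ (r1 - L * r0) * (r1 + L * r0) :=
      mul_le_mul f1 f2 (by positivity) ((by positivity : (0:ℝ) ≤ g ^ 3 / 2).trans f1)
    _ = _ := by ring

lemma foot_abs {g r0 r1 r2 : ℝ} (hg : 0 < g) (hg1 : g ≤ 1) (l0 : g ≤ r0) (l1 : g ≤ r1)
    (l2 : g ≤ r2) (u0 : r0 ≤ 1 / g) (u1 : r1 ≤ 1 / g) (u2 : r2 ≤ 1 / g) (t0 : g ≤ r0 + r1 - r2)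
    (t1 : g ≤ r0 + r2 - r1) (t2 : g ≤ r1 + r2 - r0) :
    |foot r0 r1 r2| ≤ 1 / g ^ 2 ∧ |1 - foot r0 r1 r2| ≤ 1 / g ^ 2 := by
  obtain ⟨h, hh, e1, e2⟩ := foot_bounds hg hg1 l0 l1 l2 u0 t0 t1 t2
  have hh0 : 0 ≤ h := (by positivity : (0:ℝ) ≤ g ^ 4 / 4).trans hh
  have gen : ∀ L R : ℝ, R ≤ 1 / g → 0 ≤ R → R ^ 2 = h + L ^ 2 * r0 ^ 2 → |L| ≤ 1 / g ^ 2 := by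
    intro L R hR hR0 e
    have h1 : |L| * r0 ≤ R := by
      refine abs_le_of_sq_le_sq' ?_ hR0 |>.2
      rw [mul_pow, sq_abs]; linarith
    have h2 : |L| * g ≤ 1 / g :=
      (mul_le_mul_of_nonneg_left l0 (abs_nonneg _)).trans (h1.trans hR)
    rw [le_div_iff₀ (by positivity)]
    rw [le_div_iff₀ hg] at h2
    linarith
  grind

/-- Lower bounds for the sections, and for their triangle gaps, along the central line. -/
lemma gaps_on_line {g κ r0 r1 r2 t : ℝ} (hg : 0 < g) (hg1 : g ≤ 1) (hκ : 0 < κ) (hκ1 : κ ≤ 1)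
    (l0 : g ≤ r0) (l1 : g ≤ r1) (l2 : g ≤ r2) (u0 : r0 ≤ 1 / g) (u1 : r1 ≤ 1 / g)
    (u2 : r2 ≤ 1 / g) (t0 : g ≤ r0 + r1 - r2) (t1 : g ≤ r0 + r2 - r1) (t2 : g ≤ r1 + r2 - r0)
    (ht0 : 0 ≤ t) (ht : t ≤ (1 - κ) * r0) :
    let a0 := √(r0 ^ 2 - t ^ 2)
    let a1 := √(r1 ^ 2 - (foot r0 r1 r2 * t) ^ 2)
    let a2 := √(r2 ^ 2 - ((1 - foot r0 r1 r2) * t) ^ 2)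
    let θ := g ^ 7 * κ / 16
    θ ≤ a0 ∧ θ ≤ a1 ∧ θ ≤ a2 ∧ θ ≤ a0 + a1 - a2 ∧ θ ≤ a0 + a2 - a1 ∧ θ ≤ a1 + a2 - a0 := by
  intro a0 a1 a2 θ
  obtain ⟨h, hh, e1, e2⟩ := foot_bounds hg hg1 l0 l1 l2 u0 t0 t1 t2
  set L := foot r0 r1 r2
  have p0 : 0 < r0 := hg.trans_le l0
  have hh0 : 0 < h := (by positivity : (0:ℝ) < g ^ 4 / 4).trans_le hh
  have hin : (g * κ) ^ 2 ≤ r0 ^ 2 - t ^ 2 := by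
    have h1 : t ^ 2 ≤ ((1 - κ) * r0) ^ 2 := pow_le_pow_left₀ ht0 ht 2
    have h2 : (g * κ) ^ 2 ≤ r0 ^ 2 * κ := by
      have h3 : g ^ 2 ≤ r0 ^ 2 := pow_le_pow_left₀ hg.le l0 2
      calc (g * κ) ^ 2 = g ^ 2 * (κ * κ) := by ring
        _ ≤ r0 ^ 2 * (1 * κ) := by gcongr
        _ = _ := by ring
    nlinarith
  have q0 : 0 ≤ r0 ^ 2 - t ^ 2 := (sq_nonneg _).trans hin
  have s0 : a0 ^ 2 = r0 ^ 2 - t ^ 2 := Real.sq_sqrt q0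
  have w1 : r1 ^ 2 - (L * t) ^ 2 = h + L ^ 2 * a0 ^ 2 := by rw [s0, e1]; ring
  have w2 : r2 ^ 2 - ((1 - L) * t) ^ 2 = h + (1 - L) ^ 2 * a0 ^ 2 := by rw [s0, e2]; ring
  have s1 : a1 ^ 2 = h + L ^ 2 * a0 ^ 2 := by rw [← w1]; exact Real.sq_sqrt (by rw [w1]; positivity)
  have s2 : a2 ^ 2 = h + (1 - L) ^ 2 * a0 ^ 2 := by
    rw [← w2]; exact Real.sq_sqrt (by rw [w2]; positivity)
  have n0 : 0 ≤ a0 := Real.sqrt_nonneg _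
  have n1 : 0 ≤ a1 := Real.sqrt_nonneg _
  have n2 : 0 ≤ a2 := Real.sqrt_nonneg _
  have b0 : g * κ ≤ a0 := Real.le_sqrt_of_sq_le hin
  have c1 : a1 ≤ 1 / g := by
    refine le_trans (Real.sqrt_le_iff.2 ⟨hg.le.trans l1, ?_⟩) u1
    linarith [sq_nonneg (L * t)]
  have c2 : a2 ≤ 1 / g := by
    refine le_trans (Real.sqrt_le_iff.2 ⟨hg.le.trans l2, ?_⟩) u2
    linarith [sq_nonneg ((1 - L) * t)]
  set k := g ^ 5 / 16 with hk
  have hkp : 0 < k := by positivity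
  have pw : ∀ m l : ℕ, l ≤ m → g ^ m ≤ g ^ l := fun m l h => pow_le_pow_of_le_one hg.le hg1 h
  -- the excess of the slanted sides over their projections
  have exc : ∀ M A : ℝ, 0 ≤ A → A ≤ 1 / g → A ^ 2 = h + M ^ 2 * a0 ^ 2 → |M| * a0 + k ≤ A := by
    intro M A hA hA1 e
    have m1 : |M| * a0 ≤ A := by
      refine (abs_le_of_sq_le_sq' ?_ hA).2
      rw [mul_pow, sq_abs]; linarith
    refine (abs_le_of_sq_le_sq' ?_ hA).2
    have m2 : |M| * a0 * k ≤ g ^ 4 / 16 := by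
      calc |M| * a0 * k ≤ 1 / g * k := by gcongr; exact m1.trans hA1
        _ = g ^ 4 / 16 := by rw [hk]; field_simp
    have m3 : k ^ 2 ≤ g ^ 4 / 16 := by
      have := pw 10 4 (by norm_num)
      calc k ^ 2 = g ^ 10 / 256 := by rw [hk]; ring
        _ ≤ _ := by linarith [pow_pos hg 4]
    have : (|M| * a0 + k) ^ 2 = M ^ 2 * a0 ^ 2 + 2 * (|M| * a0 * k) + k ^ 2 := by
      rw [← sq_abs M]; ring
    rw [this, e]
    linarith [pow_pos hg 4]
  have x1 := exc L a1 n1 c1 s1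
  have x2 := exc (1 - L) a2 n2 c2 s2
  have hLa : a0 ≤ |L| * a0 + |1 - L| * a0 := by
    rw [← add_mul]
    refine le_mul_of_one_le_left n0 ?_
    calc (1:ℝ) = |L + (1 - L)| := by norm_num
      _ ≤ _ := abs_add_le _ _
  have hLb : |1 - 2 * L| * a0 ≤ |L| * a0 + |1 - L| * a0 := by
    rw [← add_mul]
    refine mul_le_mul_of_nonneg_right ?_ n0
    calc |1 - 2 * L| = |(1 - L) - L| := by ring_nf
      _ ≤ |1 - L| + |L| := abs_sub _ _
      _ = _ := add_comm _ _
  have hθ1 : θ ≤ k := by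
    have e : θ = k * (g ^ 2 * κ) := by simp only [θ, hk]; ring
    rw [e]
    refine mul_le_of_le_one_right hkp.le (mul_le_one₀ (pow_le_one₀ hg.le hg1) hκ.le hκ1)
  have hθ0 : θ ≤ g * κ := by
    have e : θ = g * κ * (g ^ 6 / 16) := by simp only [θ]; ring
    rw [e]
    refine mul_le_of_le_one_right (by positivity) ?_
    linarith [pow_le_one₀ hg.le hg1 (n := 6)]
  -- both sides of `(a₂ - a₁)(a₁ + a₂) = (1 - 2L) a₀²`
  have prod : (a2 - a1) * (a1 + a2) = (1 - 2 * L) * a0 * a0 := by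
    linear_combination s2 - s1
  have sumpos : 0 < a1 + a2 := by linarith
  have sumle : a1 + a2 ≤ 2 / g := by rw [show 2 / g = 1 / g + 1 / g by ring]; linarith
  have bound : |a2 - a1| ≤ a0 - θ := by
    have h1 : |a2 - a1| * (a1 + a2) ≤ (a1 + a2 - 2 * k) * a0 := by
      calc |a2 - a1| * (a1 + a2) = |(a2 - a1) * (a1 + a2)| := by
            rw [abs_mul, abs_of_pos sumpos]
        _ = |1 - 2 * L| * a0 * a0 := by rw [prod, abs_mul, abs_mul, abs_of_nonneg n0]
        _ ≤ (a1 + a2 - 2 * k) * a0 := by gcongr; linarith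
    have h2 : θ * (a1 + a2) ≤ 2 * k * a0 := by
      calc θ * (a1 + a2) ≤ θ * (2 / g) := by gcongr
        _ = 2 * k * (g * κ) := by simp only [θ, hk]; field_simp
        _ ≤ 2 * k * a0 := by gcongr
    refine le_of_mul_le_mul_right ?_ sumpos
    linarith
  rw [abs_le] at bound
  refine ⟨hθ0.trans b0, by linarith, by linarith, by linarith, by linarith, by linarith⟩

/-- Lines through the origin of the plane `x₀ + x₁ + x₂ = 0` with neighbourhoods in `Om`,
reaching every base point in the interior of each of the three balls. -/
lemma line_geom {g κ : ℝ} (hg : 0 < g) (hg1 : g ≤ 1) (hκ : 0 < κ) (hκ1 : κ ≤ 1) :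
    ∃ δ > 0, ∃ θ > 0, ∀ r : Fin 3 → ℝ, Adm g r → ∃ c : Fin 3 → Fin 3 → ℝ,
      (∀ j i, |c j i| ≤ 1 / g ^ 2) ∧ (∀ j, c j j = 1) ∧ (∀ j, c j 0 + c j 1 + c j 2 = 0) ∧
      ∀ j (z : Vec n) (x : Fin 3 → Vec n), ‖z‖ ≤ (1 - κ) * r j →
        (∀ i, ‖x i - c j i • z‖ ≤ 64 * δ) → x ∈ Om n r θ := by
  set θ0 := g ^ 7 * κ / 16 with hθ0
  have hθp : 0 < θ0 := by positivity
  have hθ1 : θ0 ≤ 1 := by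
    have h1 : g ^ 7 * κ ≤ 1 := mul_le_one₀ (pow_le_one₀ hg.le hg1) hκ.le hκ1
    rw [hθ0]; linarith
  set δ := θ0 ^ 2 * g / (64 * 144) with hδ
  have hδp : 0 < δ := by positivity
  have hgi : 1 ≤ 1 / g ^ 2 := by
    rw [le_div_iff₀ (by positivity), one_mul]; exact pow_le_one₀ hg.le hg1
  refine ⟨δ, hδp, θ0 / 2, by positivity, ?_⟩
  intro r hr
  have l := hr.lo
  have u := hr.hi
  have t0 := hr.t0
  have t1 := hr.t1
  have t2 := hr.t2
  have A0 := foot_abs hg hg1 (l 0) (l 1) (l 2) (u 0) (u 1) (u 2) t0 t1 t2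
  have A1 := foot_abs hg hg1 (l 1) (l 0) (l 2) (u 1) (u 0) (u 2) (by linarith) t2 t1
  have A2 := foot_abs hg hg1 (l 2) (l 0) (l 1) (u 2) (u 0) (u 1) (by linarith) (by linarith) t0
  set L0 := foot (r 0) (r 1) (r 2)
  set L1 := foot (r 1) (r 0) (r 2)
  set L2 := foot (r 2) (r 0) (r 1)
  -- perturbation of a section
  have pert : ∀ (i : Fin 3) (c : ℝ) (z x : Vec n), |c| * ‖z‖ ≤ r i → ‖x - c • z‖ ≤ 64 * δ →
      |hl (r i) x - √(r i ^ 2 - (|c| * ‖z‖) ^ 2)| ≤ θ0 / 6 := by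
    intro i c z x hcz hx
    have h1 : |‖x‖ - |c| * ‖z‖| ≤ 64 * δ := by
      have := abs_norm_sub_norm_le x (c • z)
      rw [norm_smul, Real.norm_eq_abs] at this
      exact this.trans hx
    have hδ1 : 64 * δ ≤ 1 := by
      have : θ0 ^ 2 * g ≤ 1 := mul_le_one₀ (pow_le_one₀ hθp.le hθ1) hg.le hg1
      rw [hδ]; linarith
    have hgi' : 1 ≤ 1 / g := by rw [le_div_iff₀ hg, one_mul]; exact hg1
    have h2 : |‖x‖ ^ 2 - (|c| * ‖z‖) ^ 2| ≤ (θ0 / 6) ^ 2 := by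
      have e : ‖x‖ ^ 2 - (|c| * ‖z‖) ^ 2 = (‖x‖ - |c| * ‖z‖) * (‖x‖ + |c| * ‖z‖) := by ring
      have p : 0 ≤ |c| * ‖z‖ := by positivity
      rw [e, abs_mul, abs_of_nonneg (add_nonneg (norm_nonneg x) p)]
      have h3 : ‖x‖ + |c| * ‖z‖ ≤ 3 * (1 / g) := by
        have := (abs_le.1 h1).2
        linarith [u i]
      calc |‖x‖ - |c| * ‖z‖| * (‖x‖ + |c| * ‖z‖) ≤ 64 * δ * (3 * (1 / g)) :=
            mul_le_mul h1 h3 (add_nonneg (norm_nonneg x) p) (by positivity)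
        _ = θ0 ^ 2 / 48 := by rw [hδ]; field_simp; norm_num
        _ ≤ (θ0 / 6) ^ 2 := by
            have h5 : 0 ≤ θ0 ^ 2 / 144 := by positivity
            linarith
    rw [hl]
    have key : ∀ p q : ℝ, |p - q| ≤ (θ0 / 6) ^ 2 → √p - √q ≤ θ0 / 6 := by
      intro p q h
      have h5 : √p ≤ √q + θ0 / 6 := by
        refine Real.sqrt_le_iff.2 ⟨by positivity, ?_⟩
        have := (abs_le.1 h).2
        rcases le_total 0 q with hq | hq
        · have e := Real.sq_sqrt hq
          have : 0 ≤ √q * (θ0 / 6) := by positivity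
          calc p ≤ q + (θ0 / 6) ^ 2 := by linarith
            _ ≤ (√q + θ0 / 6) ^ 2 := by rw [add_sq, e]; linarith
        · rw [Real.sqrt_eq_zero_of_nonpos hq, zero_add]; linarith
      linarith
    rw [abs_le]
    constructor
    · have := key (r i ^ 2 - (|c| * ‖z‖) ^ 2) (r i ^ 2 - ‖x‖ ^ 2) (by
        rw [show r i ^ 2 - (|c| * ‖z‖) ^ 2 - (r i ^ 2 - ‖x‖ ^ 2)
          = ‖x‖ ^ 2 - (|c| * ‖z‖) ^ 2 by ring]; exact h2)
      linarith
    · exact key _ _ (by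
        rw [show r i ^ 2 - ‖x‖ ^ 2 - (r i ^ 2 - (|c| * ‖z‖) ^ 2)
          = -(‖x‖ ^ 2 - (|c| * ‖z‖) ^ 2) by ring, abs_neg]; exact h2)
  -- the sections along a line with coefficients of absolute values `d i`
  have fin : ∀ (z : Vec n) (x : Fin 3 → Vec n) (c : Fin 3 → ℝ),
      (∀ i, ‖x i - c i • z‖ ≤ 64 * δ) →
      (∀ i, θ0 ≤ √(r i ^ 2 - (c i * ‖z‖) ^ 2)) →
      θ0 ≤ √(r 0 ^ 2 - (c 0 * ‖z‖) ^ 2) + √(r 1 ^ 2 - (c 1 * ‖z‖) ^ 2)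
        - √(r 2 ^ 2 - (c 2 * ‖z‖) ^ 2) →
      θ0 ≤ √(r 0 ^ 2 - (c 0 * ‖z‖) ^ 2) + √(r 2 ^ 2 - (c 2 * ‖z‖) ^ 2)
        - √(r 1 ^ 2 - (c 1 * ‖z‖) ^ 2) →
      θ0 ≤ √(r 1 ^ 2 - (c 1 * ‖z‖) ^ 2) + √(r 2 ^ 2 - (c 2 * ‖z‖) ^ 2)
        - √(r 0 ^ 2 - (c 0 * ‖z‖) ^ 2) → x ∈ Om n r (θ0 / 2) := by
    intro z x c hx h0 h1 h2 h3
    have P : ∀ i, |hl (r i) (x i) - √(r i ^ 2 - (c i * ‖z‖) ^ 2)| ≤ θ0 / 6 := by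
      intro i
      have e : (c i * ‖z‖) ^ 2 = (|c i| * ‖z‖) ^ 2 := by rw [mul_pow, mul_pow, sq_abs]
      rw [e]
      refine pert i (c i) z (x i) ?_ (hx i)
      have hpos := Real.sqrt_pos.1 (hθp.trans_le (h0 i))
      rw [e] at hpos
      refine (abs_le_of_sq_le_sq' ?_ (hg.le.trans (l i))).2
      linarith
    have P0 := abs_le.1 (P 0)
    have P1 := abs_le.1 (P 1)
    have P2 := abs_le.1 (P 2)
    refine ⟨fun i => ?_, by linarith, by linarith, by linarith⟩
    have := abs_le.1 (P i)
    linarith [h0 i]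
  refine ⟨![![1, -L0, -(1 - L0)], ![-L1, 1, -(1 - L1)], ![-L2, -(1 - L2), 1]], ?_, ?_, ?_, ?_⟩
  · intro j i
    fin_cases j <;> fin_cases i <;>
      simp only [Fin.zero_eta, Fin.mk_one, Fin.reduceFinMk, Matrix.cons_val_zero,
        Matrix.cons_val_one, Matrix.cons_val, abs_neg, abs_one] <;>
      first | exact hgi | exact A0.1 | exact A0.2 | exact A1.1 | exact A1.2 | exact A2.1 | exact A2.2
  · intro j
    fin_cases j <;> simp
  · intro j
    fin_cases j <;> simp only [Fin.zero_eta, Fin.mk_one, Fin.reduceFinMk, Matrix.cons_val_zero,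
        Matrix.cons_val_one, Matrix.cons_val] <;> ring
  · intro j z x hz hx
    have hneg : ∀ p : ℝ, (-p * ‖z‖) ^ 2 = (p * ‖z‖) ^ 2 := fun p => by ring
    fin_cases j <;> simp only [Fin.zero_eta, Fin.mk_one, Fin.reduceFinMk] at hz hx
    · obtain ⟨g0, g1, g2, g3, g4, g5⟩ := gaps_on_line hg hg1 hκ hκ1 (l 0) (l 1) (l 2) (u 0) (u 1)
        (u 2) t0 t1 t2 (norm_nonneg z) hz
      refine fin z x ![1, -L0, -(1 - L0)] hx (fun i => ?_) ?_ ?_ ?_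
      · fin_cases i <;> simp only [Fin.zero_eta, Fin.mk_one, Fin.reduceFinMk, Matrix.cons_val_zero,
          Matrix.cons_val_one, Matrix.cons_val, one_mul, hneg] <;> assumption
      all_goals
        simp only [Matrix.cons_val_zero, Matrix.cons_val_one, Matrix.cons_val, one_mul, hneg]
        linarith
    · obtain ⟨g0, g1, g2, g3, g4, g5⟩ := gaps_on_line hg hg1 hκ hκ1 (l 1) (l 0) (l 2) (u 1) (u 0)
        (u 2) (by linarith) t2 t1 (norm_nonneg z) hz
      refine fin z x ![-L1, 1, -(1 - L1)] hx (fun i => ?_) ?_ ?_ ?_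
      · fin_cases i <;> simp only [Fin.zero_eta, Fin.mk_one, Fin.reduceFinMk, Matrix.cons_val_zero,
          Matrix.cons_val_one, Matrix.cons_val, one_mul, hneg] <;> assumption
      all_goals
        simp only [Matrix.cons_val_zero, Matrix.cons_val_one, Matrix.cons_val, one_mul, hneg]
        linarith
    · obtain ⟨g0, g1, g2, g3, g4, g5⟩ := gaps_on_line hg hg1 hκ hκ1 (l 2) (l 0) (l 1) (u 2) (u 0)
        (u 1) (by linarith) (by linarith) t0 (norm_nonneg z) hz
      refine fin z x ![-L2, -(1 - L2), 1] hx (fun i => ?_) ?_ ?_ ?_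
      · fin_cases i <;> simp only [Fin.zero_eta, Fin.mk_one, Fin.reduceFinMk, Matrix.cons_val_zero,
          Matrix.cons_val_one, Matrix.cons_val, one_mul, hneg] <;> assumption
      all_goals
        simp only [Matrix.cons_val_zero, Matrix.cons_val_one, Matrix.cons_val, one_mul, hneg]
        linarith

/-! ### Fibres far from the sphere, and thin cones -/

/-- Euclidean norm on `Vec n × ℝ` (whose product norm is the sup norm). -/
def Nq (p : Vec n × ℝ) : ℝ := √(‖p.1‖ ^ 2 + p.2 ^ 2)

lemma Nq_nonneg (p : Vec n × ℝ) : 0 ≤ Nq p := Real.sqrt_nonneg _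

lemma Nq_sq (p : Vec n × ℝ) : Nq p ^ 2 = ‖p.1‖ ^ 2 + p.2 ^ 2 := Real.sq_sqrt (by positivity)

lemma measurable_Nq : Measurable (Nq : Vec n × ℝ → ℝ) :=
  ((measurable_fst.norm.pow_const 2).add (measurable_snd.pow_const 2)).sqrt

lemma norm_fst_le_Nq (p : Vec n × ℝ) : ‖p.1‖ ≤ Nq p :=
  abs_le_of_sq_le_sq' (by rw [Nq_sq]; linarith [sq_nonneg p.2]) (Nq_nonneg p) |>.2

lemma abs_snd_le_Nq (p : Vec n × ℝ) : |p.2| ≤ Nq p :=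
  abs_le_of_sq_le_sq (by rw [Nq_sq]; linarith [sq_nonneg ‖p.1‖]) (Nq_nonneg p)

lemma mem_Bq {r : ℝ} (hr : 0 ≤ r) {p : Vec n × ℝ} : p ∈ Bq n r ↔ Nq p ≤ r := by
  rw [Nq, Real.sqrt_le_left hr]; rfl

lemma Nq_smul {c : ℝ} (hc : 0 ≤ c) (p : Vec n × ℝ) : Nq (c • p) = c * Nq p := by
  rw [Nq, Nq, ← Real.sqrt_sq hc, ← Real.sqrt_mul (by positivity), Real.sqrt_sq hc]
  congr 1
  simp only [Prod.smul_fst, Prod.smul_snd, norm_smul, Real.norm_eq_abs, smul_eq_mul, mul_pow,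
    sq_abs]
  ring

lemma Nq_frm (L : Frame n) (x : Vec (n + 1)) : Nq (frm L x) = ‖x‖ := by
  rw [Nq, frm_apply, norm_fr, Real.sqrt_sq (norm_nonneg x)]

lemma norm_frm_symm (L : Frame n) (p : Vec n × ℝ) : ‖(frm L).symm p‖ = Nq p := by
  rw [← Nq_frm L, MeasurableEquiv.apply_symm_apply]

/-- The part of `E Δ B_a` at distance at least `s` from the sphere of radius `a`, in a frame. -/
def farq (E : Set (Vec n × ℝ)) (a s : ℝ) : Set (Vec n × ℝ) :=
  {p | p ∈ symmDiff E (Bq n a) ∧ s ≤ |Nq p - a|}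

lemma measurableSet_farq {E : Set (Vec n × ℝ)} (hE : MeasurableSet E) (a s : ℝ) :
    MeasurableSet (farq E a s) :=
  (hE.symmDiff (measurableSet_Bq a)).inter
    (measurableSet_le measurable_const (measurable_Nq.sub_const a).abs)

lemma farq_inF (L : Frame n) (E : Set (Vec (n + 1))) {a : ℝ} (ha : 0 ≤ a) (s : ℝ) :
    farq (inF L E) a s = inF L (farS E a s) := by
  ext p
  simp only [farq, farS, inF, mem_ofPred_eq, mem_preimage, norm_frm_symm, ← frm_preimage_ball L ha]
  rfl

lemma volume_farq_ne_top {E : Set (Vec n × ℝ)} (h : volume E ≠ ⊤) {a : ℝ} (ha : 0 ≤ a) (s : ℝ) :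
    volume (farq E a s) ≠ ⊤ :=
  measure_ne_top_of_subset (fun _ hp => hp.1) (symmDiff_ne_top h (volume_Bq_ne_top ha))

lemma cone_shell {C : Set (Vec n × ℝ)} (hC : MeasurableSet C) (hs : ∀ p ∈ C, ∀ c > (0:ℝ), c • p ∈ C)
    {ρ₁ ρ₂ : ℝ} (h1 : 0 < ρ₁) (h12 : ρ₁ ≤ ρ₂) :
    volume.real (C ∩ {p | ρ₁ < Nq p ∧ Nq p ≤ ρ₂})
      = (ρ₂ ^ (n + 1) - ρ₁ ^ (n + 1)) * volume.real (C ∩ Bq n 1) := by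
  have key : ∀ ρ > (0:ℝ), volume.real (C ∩ Bq n ρ) = ρ ^ (n + 1) * volume.real (C ∩ Bq n 1) := by
    intro ρ hρ
    have e : C ∩ Bq n ρ = (fun p : Vec n × ℝ => ρ • p) '' (C ∩ Bq n 1) := by
      ext p
      constructor
      · rintro ⟨hp, hb⟩
        refine ⟨ρ⁻¹ • p, ⟨hs p hp _ (inv_pos.2 hρ), ?_⟩, by simp [smul_smul, hρ.ne']⟩
        rw [mem_Bq hρ.le] at hb
        rw [mem_Bq zero_le_one, Nq_smul (inv_pos.2 hρ).le, inv_mul_le_iff₀ hρ, mul_one]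
        exact hb
      · rintro ⟨q, ⟨hq, hb⟩, rfl⟩
        refine ⟨hs q hq _ hρ, ?_⟩
        rw [mem_Bq zero_le_one] at hb
        rw [mem_Bq hρ.le, Nq_smul hρ.le]
        nlinarith
    have e2 : volume (C ∩ Bq n ρ) = ENNReal.ofReal (ρ ^ (n + 1)) * volume (C ∩ Bq n 1) := by
      rw [e, image_smul, addHaar_smul]
      congr 2
      rw [abs_of_nonneg (by positivity)]
      congr 1
      simp [Module.finrank_prod]
    rw [Measure.real, e2, ENNReal.toReal_mul, ENNReal.toReal_ofReal (by positivity)]; rfl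
  have e : C ∩ {p | ρ₁ < Nq p ∧ Nq p ≤ ρ₂} = (C ∩ Bq n ρ₂) \ (C ∩ Bq n ρ₁) := by
    ext p
    simp only [mem_inter_iff, mem_ofPred_eq, mem_sdiff, mem_Bq h1.le, mem_Bq (h1.le.trans h12)]
    grind
  have hsub : C ∩ Bq n ρ₁ ⊆ C ∩ Bq n ρ₂ := fun p hp => ⟨hp.1, (mem_Bq (h1.le.trans h12)).2
      (((mem_Bq h1.le).1 hp.2).trans h12)⟩
  rw [e, measureReal_sdiff hsub (hC.inter (measurableSet_Bq _))
      (measure_ne_top_of_subset inter_subset_right (volume_Bq_ne_top (h1.le.trans h12))),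
    key _ h1, key _ (h1.trans_le h12)]
  ring

lemma cone_shell_le {g : ℝ} (hg : 0 < g) {C : Set (Vec n × ℝ)} (hC : MeasurableSet C)
    (hs : ∀ p ∈ C, ∀ c > (0:ℝ), c • p ∈ C) {a s : ℝ} (ha : g ≤ a) (ha' : a ≤ 1 / g) (h0 : 0 ≤ s)
    (hsa : s ≤ a / 2) :
    volume.real (C ∩ {p | |Nq p - a| < s})
      ≤ 2 * (n + 1) * (2 / g) ^ n * volume.real (C ∩ Bq n 1) * s := by
  have h1 := cone_shell hC hs (ρ₁ := a - s) (ρ₂ := a + s) (by linarith) (by linarith)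
  have h2 : volume.real (C ∩ {p | |Nq p - a| < s})
      ≤ volume.real (C ∩ {p | a - s < Nq p ∧ Nq p ≤ a + s}) := by
    refine measureReal_mono (fun p hp => ⟨hp.1, ?_⟩) (measure_ne_top_of_subset (s := Bq n (a + s))
      (fun p hp => (mem_Bq (by linarith)).2 hp.2.2) (volume_Bq_ne_top (by linarith)))
    have hp2 : |Nq p - a| < s := hp.2
    have := abs_lt.1 hp2
    exact ⟨by linarith, by linarith⟩
  have h3 : (a + s) ^ (n + 1) - (a - s) ^ (n + 1) ≤ 2 * (n + 1) * (2 / g) ^ n * s := by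
    have h4 := abs_pow_sub_pow_le (a + s) (a - s) (n + 1)
    have h5 : max |a + s| |a - s| ≤ 2 / g := by
      rw [abs_of_nonneg (by linarith), abs_of_nonneg (by linarith)]
      grind
    have h6 : max |a + s| |a - s| ^ n ≤ (2 / g) ^ n := by gcongr
    have h7 : |a + s - (a - s)| = 2 * s := by grind
    rw [h7, Nat.add_sub_cancel] at h4
    push_cast at h4
    have h8 : 2 * s * (n + 1) * max |a + s| |a - s| ^ n ≤ 2 * s * (n + 1) * (2 / g) ^ n := by gcongr
    have := le_abs_self ((a + s) ^ (n + 1) - (a - s) ^ (n + 1))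
    linarith
  rw [h1] at h2
  have h9 := mul_le_mul_of_nonneg_right h3 (measureReal_nonneg (μ := volume) (s := C ∩ Bq n 1))
  linarith

lemma volume_real_cb_pos {s : ℝ} (hs : 0 < s) : 0 < volume.real (cb n s) :=
  toReal_pos (volume_cb_ne_zero hs) (volume_cb_ne_top s)

/-- Mass of `E Δ B_a` over the fibres near the rim: the part near the sphere lies in a thin cone. -/
lemma edge_bound {g : ℝ} (hg : 0 < g) : ∃ C > 0, ∀ (E : Set (Vec n × ℝ)) (a κ s : ℝ),
    volume E ≠ ⊤ → g ≤ a → a ≤ 1 / g → 0 < κ → κ ≤ 1 / 4 → 0 ≤ s → s ≤ κ * a →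
    volume.real (symmDiff E (Bq n a) ∩ {p | (1 - κ) * a < ‖p.1‖})
      ≤ volume.real (farq E a s) + C * √κ * s := by
  refine ⟨2 * (n + 1) * (2 / g) ^ n * (volume.real (cb n 1) * 4), by
    have := volume_real_cb_pos (n := n) one_pos
    positivity, fun E a κ s hE ha ha' hκ hκ1 hs hsa => ?_⟩
  have ha0 : 0 < a := hg.trans_le ha
  set C : Set (Vec n × ℝ) := {p | (1 - 2 * κ) * Nq p ≤ ‖p.1‖} with hC
  have hCm : MeasurableSet C :=
    measurableSet_le (measurable_Nq.const_mul _) measurable_fst.norm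
  have h1 := cone_shell_le hg hCm (fun p hp c hc => by
    simp only [hC, mem_ofPred_eq, Nq_smul hc.le, Prod.smul_fst, norm_smul, Real.norm_eq_abs,
      abs_of_pos hc] at hp ⊢
    nlinarith) ha ha' hs (by nlinarith)
  have h2 : volume.real (C ∩ Bq n 1) ≤ volume.real (cb n 1) * (4 * √κ) := by
    have e : volume.real (cb n 1 ×ˢ Icc (-(2 * √κ)) (2 * √κ)) = volume.real (cb n 1) * (4 * √κ) := by
      rw [volume_eq_prod, measureReal_prod_prod]
      congr 1
      rw [Measure.real, Real.volume_Icc, ENNReal.toReal_ofReal (by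
        have := Real.sqrt_nonneg κ; linarith)]
      ring
    rw [← e]
    refine measureReal_mono ?_ ?_
    · rintro p ⟨hp, hb⟩
      rw [mem_Bq zero_le_one] at hb
      refine ⟨mem_cb.2 ((norm_fst_le_Nq p).trans hb), ?_⟩
      have h0 := Nq_nonneg p
      have h3 : ((1 - 2 * κ) * Nq p) ^ 2 ≤ ‖p.1‖ ^ 2 :=
        pow_le_pow_left₀ (mul_nonneg (by linarith) h0) hp 2
      have h4 := Nq_sq p
      have h5 : p.2 ^ 2 ≤ (2 * √κ) ^ 2 := by
        rw [mul_pow, Real.sq_sqrt hκ.le]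
        have h6 : Nq p ^ 2 ≤ 1 := by nlinarith
        have h7 : p.2 ^ 2 ≤ 4 * κ * Nq p ^ 2 := by nlinarith [mul_nonneg (sq_nonneg κ) (sq_nonneg (Nq p))]
        nlinarith
      exact abs_le_of_sq_le_sq' h5 (by positivity)
    · rw [volume_eq_prod, prod_prod]
      exact mul_ne_top (volume_cb_ne_top _) (by rw [Real.volume_Icc]; simp)
  have h3 : symmDiff E (Bq n a) ∩ {p | (1 - κ) * a < ‖p.1‖}
      ⊆ farq E a s ∪ (C ∩ {p | |Nq p - a| < s}) := by
    rintro p ⟨hp, he⟩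
    rcases le_or_gt s |Nq p - a| with h | h
    · exact Or.inl ⟨hp, h⟩
    · refine Or.inr ⟨?_, h⟩
      have := (abs_lt.1 h).2
      simp only [hC, mem_ofPred_eq] at he ⊢
      nlinarith
  have h4 : volume.real (symmDiff E (Bq n a) ∩ {p | (1 - κ) * a < ‖p.1‖})
      ≤ volume.real (farq E a s) + volume.real (C ∩ {p | |Nq p - a| < s}) := by
    refine (measureReal_mono h3 ?_).trans (measureReal_union_le _ _)
    refine (measure_union_lt_top (volume_farq_ne_top hE ha0.le s).lt_top ?_).ne
    refine (measure_ne_top_of_subset (s := Bq n (a + s)) (fun p hp => ?_)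
      (volume_Bq_ne_top (by linarith))).lt_top
    have hp2 : |Nq p - a| < s := hp.2
    have := (abs_lt.1 hp2).2
    exact (mem_Bq (by linarith)).2 (by linarith)
  have h5 : 2 * (n + 1) * (2 / g) ^ n * volume.real (C ∩ Bq n 1) * s
      ≤ 2 * (n + 1) * (2 / g) ^ n * (volume.real (cb n 1) * (4 * √κ)) * s := by gcongr
  linarith

/-- Fibrewise, `E Δ B_a` in a shell of thickness `s` is short where the fibre of the ball is long. -/
lemma len_le_far {g θ : ℝ} (hg : 0 < g) (hθ : 0 < θ) {E : Set (Vec n × ℝ)} {a s : ℝ} (ha : g ≤ a)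
    (ha' : a ≤ 1 / g) (hs : 0 ≤ s) (hsa : s ≤ a) {x : Vec n} (hx : θ ≤ hl a x)
    (hf : volume (Prod.mk x ⁻¹' E) ≠ ⊤) :
    len (symmDiff E (Bq n a)) x ≤ len (farq E a s) x + 12 * s / (g * θ) := by
  have hpos : 0 < a ^ 2 - ‖x‖ ^ 2 := Real.sqrt_pos.1 (hθ.trans_le hx)
  have hh : hl a x ^ 2 = a ^ 2 - ‖x‖ ^ 2 := Real.sq_sqrt hpos.le
  set h := hl a x
  set e := 3 * s / (g * θ) with he
  have he0 : 0 ≤ e := by positivity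
  have hBf : volume (Prod.mk x ⁻¹' Bq n a) ≠ ⊤ := by
    rw [fiber_Bq]; split_ifs <;> simp [Real.volume_Icc]
  have hsub : Prod.mk x ⁻¹' symmDiff E (Bq n a)
      ⊆ Prod.mk x ⁻¹' farq E a s ∪ (Icc (h - e) (h + e) ∪ Icc (-h - e) (-h + e)) := by
    intro t ht
    rcases le_or_gt s |Nq (x, t) - a| with h1 | h1
    · exact Or.inl ⟨ht, h1⟩
    right
    have h2 := abs_lt.1 h1
    have h3 : |t ^ 2 - h ^ 2| ≤ 3 * s / g := by
      have e1 : t ^ 2 - h ^ 2 = (Nq (x, t) - a) * (Nq (x, t) + a) := by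
        have := Nq_sq (x, t)
        linarith
      have h4 : 0 ≤ Nq (x, t) + a := by linarith [Nq_nonneg (x, t)]
      rw [e1, abs_mul, abs_of_nonneg h4]
      have h5 : Nq (x, t) + a ≤ 3 * (1 / g) := by linarith
      calc _ ≤ s * (3 * (1 / g)) := mul_le_mul h1.le h5 h4 hs
        _ = _ := by ring
    have h4 : |(|t| - h)| ≤ e := by
      have e1 : t ^ 2 - h ^ 2 = (|t| - h) * (|t| + h) := by
        rw [← sq_abs t]; ring
      rw [e1, abs_mul, abs_of_nonneg (add_nonneg (abs_nonneg t) (hθ.le.trans hx))] at h3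
      have h5 : |(|t| - h)| * θ ≤ |(|t| - h)| * (|t| + h) :=
        mul_le_mul_of_nonneg_left (by linarith [abs_nonneg t]) (abs_nonneg _)
      rw [he, ← div_div, le_div_iff₀ hθ]
      linarith
    grind
  have hfar : volume (Prod.mk x ⁻¹' farq E a s) ≠ ⊤ :=
    measure_ne_top_of_subset (fun t ht => ht.1) (symmDiff_ne_top hf hBf)
  have hI : ∀ u : ℝ, volume.real (Icc (u - e) (u + e)) = 2 * e := fun u => by
    rw [Measure.real, Real.volume_Icc, ENNReal.toReal_ofReal (by linarith)]; ring
  have hI' : ∀ u : ℝ, volume (Icc (u - e) (u + e)) < ⊤ := fun u => by simp [Real.volume_Icc]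
  refine (measureReal_mono hsub (measure_union_lt_top hfar.lt_top
    (measure_union_lt_top (hI' h) (hI' (-h)))).ne).trans ?_
  refine (measureReal_union_le _ _).trans ?_
  have h6 := measureReal_union_le (μ := volume) (Icc (h - e) (h + e)) (Icc (-h - e) (-h + e))
  rw [hI h, hI (-h)] at h6
  have : 12 * s / (g * θ) = 4 * e := by rw [he]; ring
  rw [this]
  unfold len
  linarith

/-- The base points over which the ball has a long fibre but `E Δ B_a` is not short. -/
def badX (E : Set (Vec n × ℝ)) (a θ η : ℝ) : Set (Vec n) :=
  {x | θ ≤ hl a x ∧ η < len (symmDiff E (Bq n a)) x}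

lemma measurableSet_badX {E : Set (Vec n × ℝ)} (hE : MeasurableSet E) (a θ η : ℝ) :
    MeasurableSet (badX E a θ η) :=
  (measurableSet_le measurable_const (measurable_hl a)).inter
    (measurableSet_lt measurable_const (measurable_len (hE.symmDiff (measurableSet_Bq a))))

/-- Bad base points carry a definite length of far points. -/
lemma bad_bound {g θ η : ℝ} (hg : 0 < g) (hθ : 0 < θ) {E : Set (Vec n × ℝ)} {a s : ℝ}
    (hE : MeasurableSet E) (hf : volume E ≠ ⊤) (ha : g ≤ a)
    (ha' : a ≤ 1 / g) (hs : 0 ≤ s) (hsa : s ≤ a) (hη : 0 < η) (hsη : 12 * s / (g * θ) ≤ η / 2) :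
    volume.real (symmDiff E (Bq n a) ∩ {p | p.1 ∈ badX E a θ η}) ≤ 2 * volume.real (farq E a s) ∧
    volume (badX E a θ η) ≤ ENNReal.ofReal (2 / η * volume.real (farq E a s)) := by
  have ha0 : 0 < a := hg.trans_le ha
  have hm := hE.symmDiff (measurableSet_Bq (n := n) a)
  have hmf := symmDiff_ne_top hf (volume_Bq_ne_top (n := n) ha0.le)
  have hX := measurableSet_badX hE a θ η
  set X := badX E a θ η
  have hFm := measurableSet_farq hE a s
  have hFf := volume_farq_ne_top hf ha0.le s
  have hpt : ∀ᵐ x : Vec n, x ∈ X → len (symmDiff E (Bq n a)) x ≤ 2 * len (farq E a s) x := by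
    filter_upwards [ae_fiber_ne_top hE hf] with x hx hxX
    have := len_le_far hg hθ ha ha' hs hsa hxX.1 hx
    linarith [hxX.2]
  have h1 : volume.real (symmDiff E (Bq n a) ∩ {p | p.1 ∈ X}) ≤ 2 * volume.real (farq E a s) := by
    have hm' : MeasurableSet (symmDiff E (Bq n a) ∩ {p | p.1 ∈ X}) := hm.inter (measurable_fst hX)
    have hf' : volume (symmDiff E (Bq n a) ∩ {p | p.1 ∈ X}) ≠ ⊤ :=
      measure_ne_top_of_subset inter_subset_left hmf
    rw [← integral_len hm' hf', ← integral_len hFm hFf, ← integral_const_mul]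
    refine integral_mono_ae (integrable_len hm' hf') ((integrable_len hFm hFf).const_mul 2) ?_
    filter_upwards [hpt] with x hx
    by_cases hxX : x ∈ X
    · refine le_trans (le_of_eq ?_) (hx hxX)
      unfold len; congr 1; ext t; simp [hxX]
    · have : len (symmDiff E (Bq n a) ∩ {p | p.1 ∈ X}) x = 0 := by
        unfold len
        have : Prod.mk x ⁻¹' (symmDiff E (Bq n a) ∩ {p | p.1 ∈ X}) = ∅ := by
          ext t; simp [hxX]
        rw [this]; simp
      rw [this]
      have := len_nonneg (farq E a s) x
      positivity
  refine ⟨h1, ?_⟩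
  have h2 := mul_meas_ge_le_lintegral (μ := volume) (f := fun x : Vec n =>
    ENNReal.ofReal (2 / η * len (farq E a s) x))
    ((measurable_len hFm).const_mul _).ennreal_ofReal 1
  rw [one_mul, ← ofReal_integral_eq_lintegral_ofReal ((integrable_len hFm hFf).const_mul _)
    (.of_forall fun x => mul_nonneg (by positivity) (len_nonneg _ x)),
    integral_const_mul, integral_len hFm hFf] at h2
  refine le_trans (measure_mono_ae ?_) h2
  filter_upwards [hpt] with x hx hxX
  have h3 := hx hxX
  have h4 := hxX.2
  show 1 ≤ ENNReal.ofReal _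
  rw [one_le_ofReal, div_mul_eq_mul_div, le_div_iff₀ hη]
  linarith

/-! ### Fibrewise shifts and their additive relation -/

/-- The point of the plane `x₀ + x₁ + x₂ = 0` with the given first two coordinates. -/
def tq (q : Vec n × Vec n) : Fin 3 → Vec n := ![q.1, q.2, -(q.1 + q.2)]

lemma measurable_tq : Measurable (tq : Vec n × Vec n → Fin 3 → Vec n) := measurable_three

lemma fib3_eq (E : Tri (Vec n × ℝ)) (q : Vec n × Vec n) :
    fib3 E q = fun j => Prod.mk (tq q j) ⁻¹' E j := by
  funext j; fin_cases j <;> rfl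

lemma JJ_eq {W : (Fin 3 → Vec n) → ℝ≥0∞} (hW : Measurable W) :
    JJ W = ∫⁻ q : Vec n × Vec n, W (tq q) := by
  rw [volume_eq_prod, lintegral_prod (fun q => W (tq q)) (hW.comp measurable_tq).aemeasurable]; rfl

lemma ae_tq {P : Vec n → Prop} (h : ∀ᵐ x, P x) (j : Fin 3) : ∀ᵐ q : Vec n × Vec n, P (tq q j) := by
  fin_cases j
  · exact quasiMeasurePreserving_fst.ae h
  · exact quasiMeasurePreserving_snd.ae h
  · have h1 : ∀ᵐ x : Vec n, P (-x) := (quasiMeasurePreserving_neg volume).ae h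
    have h2 : ∀ᵐ q : Vec n × Vec n, P (-q.2) := quasiMeasurePreserving_snd.ae h1
    exact (measurePreserving_prod_add (volume : Measure (Vec n))
      (volume : Measure (Vec n))).quasiMeasurePreserving.ae h2

/-- Base points whose fibre is close to the fibre of the ball. -/
def goodX (E : Set (Vec n × ℝ)) (a η : ℝ) : Set (Vec n) :=
  {x | volume (Prod.mk x ⁻¹' E) ≠ ⊤ ∧ len (symmDiff E (Bq n a)) x ≤ η}

/-- Centre of the fibre, set to `0` over base points which are not good. -/
def shf (E : Set (Vec n × ℝ)) (a η : ℝ) : Vec n → ℝ :=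
  (goodX E a η).indicator fun x => sg (Prod.mk x ⁻¹' E)

/-- Distance from the fibre to the interval of the same length and centre, set to `0` over base
points which are not good. -/
def dev (E : Set (Vec n × ℝ)) (a η : ℝ) : Vec n → ℝ :=
  (goodX E a η).indicator fun x => sd (Prod.mk x ⁻¹' E) (iv (sg (Prod.mk x ⁻¹' E)) (len E x / 2))

lemma measurableSet_goodX {E : Set (Vec n × ℝ)} (hE : MeasurableSet E) (a η : ℝ) :
    MeasurableSet (goodX E a η) :=
  MeasurableSet.inter
    (s₁ := {x : Vec n | volume (Prod.mk x ⁻¹' E) ≠ ⊤})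
    ((measurable_measure_prodMk_left hE) (measurableSet_singleton ⊤).compl)
    (measurableSet_le (measurable_len (hE.symmDiff (measurableSet_Bq a))) measurable_const)

lemma measurable_sg_fiber {E : Set (Vec n × ℝ)} (hE : MeasurableSet E) :
    Measurable fun x : Vec n => sg (Prod.mk x ⁻¹' E) := by
  have h1 := measurable_len (hE.inter (measurable_snd (measurableSet_Ioi (a := (0:ℝ)))))
  have h2 := measurable_len (hE.inter (measurable_snd (measurableSet_Iic (a := (0:ℝ)))))
  exact (h1.sub h2).div_const 2

lemma measurable_shf {E : Set (Vec n × ℝ)} (hE : MeasurableSet E) (a η : ℝ) :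
    Measurable (shf E a η) :=
  (measurable_sg_fiber hE).indicator (measurableSet_goodX hE a η)

lemma measurable_dev {E : Set (Vec n × ℝ)} (hE : MeasurableSet E) (a η : ℝ) :
    Measurable (dev E a η) := by
  refine Measurable.indicator ?_ (measurableSet_goodX hE a η)
  have h1 : Measurable fun p : Vec n × ℝ => sg (Prod.mk p.1 ⁻¹' E) :=
    (measurable_sg_fiber hE).comp measurable_fst
  have h2 : Measurable fun p : Vec n × ℝ => len E p.1 / 2 :=
    ((measurable_len hE).div_const 2).comp measurable_fst
  have h3 : MeasurableSet {p : Vec n × ℝ | p.2 ∈ iv (sg (Prod.mk p.1 ⁻¹' E)) (len E p.1 / 2)} :=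
    (measurableSet_le (h1.sub h2) measurable_snd).inter (measurableSet_lt measurable_snd (h1.add h2))
  exact measurable_len (hE.symmDiff h3)

lemma volume_fiber_Bq (a : ℝ) (x : Vec n) : volume (Prod.mk x ⁻¹' Bq n a) ≠ ⊤ := by
  rw [fiber_Bq]; split_ifs <;> simp [Real.volume_Icc]

lemma measurableSet_fiber {E : Set (Vec n × ℝ)} (hE : MeasurableSet E) (x : Vec n) :
    MeasurableSet (Prod.mk x ⁻¹' E) := measurable_prodMk_left hE

lemma sd_fiber_iv {E : Set (Vec n × ℝ)} (a : ℝ) {x : Vec n} (hf : volume (Prod.mk x ⁻¹' E) ≠ ⊤) :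
    sd (Prod.mk x ⁻¹' E) (iv 0 (hl a x)) ≤ len (symmDiff E (Bq n a)) x := by
  have := sd_triangle hf (volume_fiber_Bq a x) (volume_iv_ne_top 0 (hl a x))
  rw [hl, fiber_Bq_ae, ← hl] at this
  rw [len_symmDiff]; linarith

lemma sd_iv_half {u a b : ℝ} (ha : 0 ≤ a) (hb : 0 ≤ b) : sd (iv u a) (iv u b) = 2 * |a - b| := by
  have := sd_iv_iv (u := u) (a := b) (w := a - b) hb (by linarith)
  rwa [show b + (a - b) = a by ring] at this

/-- Elementary estimates on a fibre of finite length. -/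
lemma fiber_facts {E : Set (Vec n × ℝ)} (hE : MeasurableSet E) {a : ℝ} {x : Vec n}
    (hf : volume (Prod.mk x ⁻¹' E) ≠ ⊤) :
    |len E x / 2 - hl a x| ≤ len (symmDiff E (Bq n a)) x / 2 ∧
    |sg (Prod.mk x ⁻¹' E)| ≤ len (symmDiff E (Bq n a)) x / 2 ∧
    sd (Prod.mk x ⁻¹' E) (iv 0 (len E x / 2)) ≤ 2 * len (symmDiff E (Bq n a)) x ∧
    sd (Prod.mk x ⁻¹' E) (iv (sg (Prod.mk x ⁻¹' E)) (len E x / 2))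
      ≤ 3 * len (symmDiff E (Bq n a)) x := by
  have hm := sd_fiber_iv a hf
  have hM := measurableSet_fiber hE x
  have h0 := hl_nonneg a x
  have hl0 : 0 ≤ len E x / 2 := by have := len_nonneg E x; positivity
  have h1 : |len E x / 2 - hl a x| ≤ len (symmDiff E (Bq n a)) x / 2 := by
    have := abs_vol_sub_le hM (measurableSet_iv 0 (hl a x)) hf (volume_iv_ne_top _ _)
    rw [volume_real_iv h0] at this
    have e : len E x / 2 - hl a x = (volume.real (Prod.mk x ⁻¹' E) - 2 * hl a x) / 2 := by
      unfold len; ring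
    rw [e, abs_div, abs_of_pos (two_pos : (0:ℝ) < 2)]
    linarith
  have h2 : |sg (Prod.mk x ⁻¹' E)| ≤ len (symmDiff E (Bq n a)) x / 2 := by
    have := sg_lip hM (measurableSet_iv 0 (hl a x)) hf (volume_iv_ne_top _ _)
    rw [sg_iv (by rw [abs_zero]; exact h0), sub_zero] at this
    linarith
  have h3 : sd (Prod.mk x ⁻¹' E) (iv 0 (len E x / 2)) ≤ 2 * len (symmDiff E (Bq n a)) x := by
    have t := sd_triangle hf (volume_iv_ne_top 0 (hl a x)) (volume_iv_ne_top 0 (len E x / 2))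
    rw [sd_iv_half h0 hl0, abs_sub_comm] at t
    linarith
  refine ⟨h1, h2, h3, ?_⟩
  have t := sd_triangle hf (volume_iv_ne_top 0 (len E x / 2))
    (volume_iv_ne_top (sg (Prod.mk x ⁻¹' E)) (len E x / 2))
  have t2 := sd_iv_le 0 (sg (Prod.mk x ⁻¹' E)) (len E x / 2)
  rw [zero_sub, abs_neg] at t2
  linarith

lemma abs_shf_le {E : Set (Vec n × ℝ)} (hE : MeasurableSet E) {a η : ℝ} (hη : 0 ≤ η) (x : Vec n) :
    |shf E a η x| ≤ η / 2 := by
  unfold shf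
  by_cases h : x ∈ goodX E a η
  · rw [indicator_of_mem h]
    linarith [(fiber_facts (a := a) hE h.1).2.1, h.2]
  · rw [indicator_of_notMem h, abs_zero]; linarith

lemma abs_shf_le_len {E : Set (Vec n × ℝ)} (hE : MeasurableSet E) {a η : ℝ} (x : Vec n) :
    |shf E a η x| ≤ len (symmDiff E (Bq n a)) x / 2 := by
  unfold shf
  have := len_nonneg (symmDiff E (Bq n a)) x
  by_cases h : x ∈ goodX E a η
  · rw [indicator_of_mem h]
    linarith [(fiber_facts (a := a) hE h.1).2.1]
  · rw [indicator_of_notMem h, abs_zero]; linarith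

lemma dev_nonneg (E : Set (Vec n × ℝ)) (a η : ℝ) (x : Vec n) : 0 ≤ dev E a η x :=
  indicator_nonneg (fun _ _ => sd_nonneg _ _) x

lemma dev_le {E : Set (Vec n × ℝ)} (hE : MeasurableSet E) {a η : ℝ} (hη : 0 ≤ η) (x : Vec n) :
    dev E a η x ≤ 3 * η := by
  unfold dev
  by_cases h : x ∈ goodX E a η
  · rw [indicator_of_mem h]
    linarith [(fiber_facts (a := a) hE h.1).2.2.2, h.2]
  · rw [indicator_of_notMem h]; linarith

/-- Distance from a fibre to a shifted fibre of the ball. -/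
lemma fiber_shift_le {E : Set (Vec n × ℝ)} (hE : MeasurableSet E) {a η : ℝ} {x : Vec n}
    (hf : volume (Prod.mk x ⁻¹' E) ≠ ⊤) (l : ℝ) :
    sd (Prod.mk x ⁻¹' E) (iv l (hl a x)) ≤ |len E x - len (Bq n a) x| + dev E a η x
      + {x | η < len (symmDiff E (Bq n a)) x}.indicator (len (symmDiff E (Bq n a))) x
      + 2 * |shf E a η x - l| := by
  have h0 := hl_nonneg a x
  have hl0 : 0 ≤ len E x / 2 := by have := len_nonneg E x; positivity
  by_cases hx : len (symmDiff E (Bq n a)) x ≤ η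
  · have hg : x ∈ goodX E a η := ⟨hf, hx⟩
    rw [indicator_of_notMem (by simpa using hx), dev, shf, indicator_of_mem hg, indicator_of_mem hg]
    set s := sg (Prod.mk x ⁻¹' E)
    have t1 := sd_triangle hf (volume_iv_ne_top s (len E x / 2)) (volume_iv_ne_top l (hl a x))
    have t2 := sd_triangle (volume_iv_ne_top s (len E x / 2)) (volume_iv_ne_top s (hl a x))
      (volume_iv_ne_top l (hl a x))
    have t3 := sd_iv_le s l (hl a x)
    rw [sd_iv_half hl0 h0] at t2
    have e : |len E x - len (Bq n a) x| = 2 * |len E x / 2 - hl a x| := by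
      rw [len_Bq, ← hl, show len E x - 2 * hl a x = 2 * (len E x / 2 - hl a x) by ring, abs_mul,
        abs_of_pos (two_pos : (0:ℝ) < 2)]
    linarith
  · have hg : x ∉ goodX E a η := fun h => hx h.2
    rw [indicator_of_mem (by simpa using hx), dev, shf, indicator_of_notMem hg,
      indicator_of_notMem hg]
    have t1 := sd_triangle hf (volume_iv_ne_top 0 (hl a x)) (volume_iv_ne_top l (hl a x))
    have t2 := sd_iv_le 0 l (hl a x)
    have := sd_fiber_iv a hf
    have := abs_nonneg (len E x - len (Bq n a) x)
    linarith

lemma T_fib3_le {E : Tri (Vec n × ℝ)} (hE : Fm E) {q : Vec n × Vec n}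
    (hf : ∀ j, volume (Prod.mk (tq q j) ⁻¹' E j) ≠ ⊤) :
    T (fib3 E q) ≤ T (fib3 (fun j => St (E j)) q) ∧
    T (fib3 (fun j => St (E j)) q) = T (fun j => iv 0 (len (E j) (tq q j) / 2)) := by
  have e : fib3 (fun j => St (E j)) q = fun j => iv 0 (len (E j) (tq q j) / 2) := by
    rw [fib3_eq]
    funext j
    rw [fiber_St, iv, zero_sub, zero_add]
  refine ⟨?_, by rw [e]⟩
  rw [e, fib3_eq]
  exact T_le_iv fun j => ⟨measurableSet_fiber (hE j).1 _, hf j⟩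

/-- The integrand to which the one-dimensional stability estimate applies. -/
def WW (r : Fin 3 → ℝ) (η : ℝ) (E : Tri (Vec n × ℝ)) (x : Fin 3 → Vec n) : ℝ≥0∞ :=
  ‖shf (E 0) (r 0) η (x 0) + shf (E 1) (r 1) η (x 1) + shf (E 2) (r 2) η (x 2)‖ₑ
    + ∑ j, ENNReal.ofReal (dev (E j) (r j) η (x j))

lemma measurable_WW (r : Fin 3 → ℝ) (η : ℝ) {E : Tri (Vec n × ℝ)} (hE : Fm E) :
    Measurable (WW r η E) := by
  have h : ∀ j, Measurable fun x : Fin 3 → Vec n => shf (E j) (r j) η (x j) :=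
    fun j => (measurable_shf (hE j).1 (r j) η).comp (measurable_pi_apply j)
  have h' : ∀ j, Measurable fun x : Fin 3 → Vec n => dev (E j) (r j) η (x j) :=
    fun j => (measurable_dev (hE j).1 (r j) η).comp (measurable_pi_apply j)
  exact (((h 0).add (h 1)).add (h 2)).enorm.add
    (Finset.measurable_sum _ fun j _ => (h' j).ennreal_ofReal)

/-- Pointwise bound for the integrand: by the one-dimensional deficit over good triples, by a
constant over the others. -/
lemma WW_le {θ : ℝ} (hθ : 0 < θ) : ∃ η > 0, η ≤ 1 / 3 ∧ ∃ C > 0, ∀ (r : Fin 3 → ℝ)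
    (E : Tri (Vec n × ℝ)) (τ : ℝ) (q : Vec n × Vec n), Fm E → 0 < τ →
    (∀ j, volume (Prod.mk (tq q j) ⁻¹' E j) ≠ ⊤) → tq q ∈ Om n r θ →
    WW r η E (tq q)
      ≤ ENNReal.ofReal (C / τ * (T (fib3 (fun j => St (E j)) q) - T (fib3 E q)) + 4 * τ)
        + 4 * ∑ j, (badX (E j) (r j) θ η).indicator 1 (tq q j) := by
  obtain ⟨η', hη', C, hC, H⟩ := oneD_local (θ := θ / 2) (by linarith)
  set η := min (η' / 2) (min (θ / 3) (1 / 3))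
  have hη0 : 0 < η := lt_min (by linarith) (lt_min (by linarith) (by norm_num))
  have hη1 : η ≤ η' / 2 := min_le_left _ _
  have hη2 : η ≤ θ / 3 := (min_le_right _ _).trans (min_le_left _ _)
  have hη3 : η ≤ 1 / 3 := (min_le_right _ _).trans (min_le_right _ _)
  refine ⟨η, hη0, hη3, 4 * C, by linarith, fun r E τ q hE hτ hf hO => ?_⟩
  obtain ⟨hT, hT'⟩ := T_fib3_le hE hf
  set df := T (fib3 (fun j => St (E j)) q) - T (fib3 E q) with hdf
  by_cases hgood : ∀ j, tq q j ∈ goodX (E j) (r j) η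
  · refine le_trans ?_ le_self_add
    have F := fun j => fiber_facts (a := r j) (hE j).1 (hf j)
    have G := fun j => (hgood j).2
    have A := fun j => abs_le.1 (F j).1
    obtain ⟨-, o1, o2, o3⟩ := hO
    have h := H (fib3 E q) (fun j => len (E j) (tq q j) / 2)
      (by rw [fib3_eq]; exact fun j => ⟨measurableSet_fiber (hE j).1 _, hf j⟩)
      (by rw [fib3_eq]; intro j; unfold len; ring)
      (by linarith [A 0, A 1, A 2, G 0, G 1, G 2])
      (by linarith [A 0, A 1, A 2, G 0, G 1, G 2])
      (by linarith [A 0, A 1, A 2, G 0, G 1, G 2])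
      (by rw [fib3_eq]; intro j; linarith [(F j).2.2.1, G j])
    rw [← hT'] at h
    obtain ⟨h1, h2⟩ := h
    have amgm : ∀ z : ℝ, z ^ 2 ≤ C * df → |z| ≤ C / τ * df + τ := by
      intro z hz
      have h3 : |z| ^ 2 ≤ C * df := by rwa [sq_abs]
      have e : C / τ * df = C * df / τ := by ring
      rw [e, ← _root_.sub_le_iff_le_add, le_div_iff₀ hτ]
      nlinarith [sq_nonneg (|z| - τ), abs_nonneg z]
    have S : ∀ j, shf (E j) (r j) η (tq q j) = sg (fib3 E q j) := fun j => by
      rw [shf, indicator_of_mem (hgood j), fib3_eq]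
    have V : ∀ j, dev (E j) (r j) η (tq q j)
        = sd (fib3 E q j) (iv (sg (fib3 E q j)) (len (E j) (tq q j) / 2)) := fun j => by
      rw [dev, indicator_of_mem (hgood j), fib3_eq]
    have n0 : ∀ j, 0 ≤ dev (E j) (r j) η (tq q j) := fun j => dev_nonneg _ _ _ _
    have v : ∀ j, dev (E j) (r j) η (tq q j) ≤ C / τ * df + τ := fun j => by
      rw [V j]; exact (le_abs_self _).trans (amgm _ (h2 j))
    have s := amgm _ h1
    unfold WW
    rw [S 0, S 1, S 2, ← ofReal_norm, ← ofReal_sum_of_nonneg fun j _ => n0 j,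
      ← ofReal_add (norm_nonneg _) (Finset.sum_nonneg fun j _ => n0 j), Real.norm_eq_abs]
    refine ofReal_le_ofReal ?_
    rw [Fin.sum_univ_three]
    grind
  · push Not at hgood
    obtain ⟨i, hi⟩ := hgood
    have hb : tq q i ∈ badX (E i) (r i) θ η := ⟨hO.1 i, by
      by_contra hcon; exact hi ⟨hf i, not_lt.1 hcon⟩⟩
    have h1 : (1:ℝ≥0∞) ≤ ∑ j, (badX (E j) (r j) θ η).indicator 1 (tq q j) := by
      have := Finset.single_le_sum (f := fun j => (badX (E j) (r j) θ η).indicator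
        (1 : Vec n → ℝ≥0∞) (tq q j)) (fun _ _ => zero_le) (Finset.mem_univ i)
      simpa only [indicator_of_mem hb, Pi.one_apply] using this
    refine le_trans ?_ (le_trans (mul_le_mul_right h1 4) le_add_self)
    have v : ∀ j, ENNReal.ofReal (dev (E j) (r j) η (tq q j)) ≤ 1 := fun j =>
      ofReal_le_one.2 (by linarith [dev_le (a := r j) (hE j).1 hη0.le (tq q j)])
    have s : ‖shf (E 0) (r 0) η (tq q 0) + shf (E 1) (r 1) η (tq q 1)
        + shf (E 2) (r 2) η (tq q 2)‖ₑ ≤ 1 := by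
      rw [← ofReal_norm, Real.norm_eq_abs]
      refine ofReal_le_one.2 ?_
      have a := fun j => abs_shf_le (a := r j) (hE j).1 hη0.le (tq q j)
      grind
    unfold WW
    rw [Fin.sum_univ_three, mul_one]
    calc _ ≤ (1:ℝ≥0∞) + (1 + 1 + 1) := add_le_add s (add_le_add (add_le_add (v 0) (v 1)) (v 2))
      _ = 4 := by norm_num

/-! ### Integrating the fibrewise estimates -/

lemma norm_le_of_Om {g θ : ℝ} (hθ : 0 < θ) {r : Fin 3 → ℝ} (hr : Adm g r) (hg : 0 < g)
    {x : Fin 3 → Vec n} (hx : x ∈ Om n r θ) (i : Fin 3) : ‖x i‖ ≤ 1 / g := by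
  have h1 : 0 < r i ^ 2 - ‖x i‖ ^ 2 := Real.sqrt_pos.1 (hθ.trans_le (hx.1 i))
  have h2 := (abs_le_of_sq_le_sq' (show ‖x i‖ ^ 2 ≤ r i ^ 2 by linarith)
    (hg.le.trans (hr.lo i))).2
  exact h2.trans (hr.hi i)

lemma volume_tq_le (X : Set (Vec n)) (hX : MeasurableSet X) (s : ℝ) (j : Fin 3) :
    volume {q : Vec n × Vec n | (q.1 ∈ cb n s ∧ q.2 ∈ cb n s) ∧ tq q j ∈ X}
      ≤ volume (cb n s) * volume X := by
  fin_cases j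
  · refine (measure_mono (t := X ×ˢ cb n s) fun q hq => ⟨hq.2, hq.1.2⟩).trans (le_of_eq ?_)
    rw [volume_eq_prod, prod_prod, mul_comm]
  · refine (measure_mono (t := cb n s ×ˢ X) fun q hq => ⟨hq.1.1, hq.2⟩).trans (le_of_eq ?_)
    rw [volume_eq_prod, prod_prod]
  · have hm : MeasurableSet {q : Vec n × Vec n | q.1 ∈ cb n s ∧ -(q.1 + q.2) ∈ X} :=
      (measurable_fst (measurableSet_cb s)).inter ((measurable_fst.add measurable_snd).neg hX)
    refine (measure_mono (t := {q : Vec n × Vec n | q.1 ∈ cb n s ∧ -(q.1 + q.2) ∈ X})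
      fun q hq => ⟨hq.1.1, hq.2⟩).trans ?_
    rw [volume_eq_prod, prod_apply hm]
    have h : ∀ x : Vec n, volume (Prod.mk x ⁻¹' {q : Vec n × Vec n | q.1 ∈ cb n s ∧ -(q.1 + q.2) ∈ X})
        ≤ (cb n s).indicator (fun _ => volume X) x := by
      intro x
      by_cases hx : x ∈ cb n s
      · rw [indicator_of_mem hx]
        refine (measure_mono (t := (fun y => x + y) ⁻¹' (Neg.neg ⁻¹' X)) fun y hy => hy.2).trans ?_
        simp
      · rw [indicator_of_notMem hx]
        have : Prod.mk x ⁻¹' {q : Vec n × Vec n | q.1 ∈ cb n s ∧ -(q.1 + q.2) ∈ X} = ∅ := by grind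
        rw [this, measure_empty]
    refine (lintegral_mono h).trans (le_of_eq ?_)
    rw [lintegral_indicator (measurableSet_cb s), setLIntegral_const, mul_comm]

/-- The one-dimensional stability estimate integrated over the base; the square root of the fibrewise
deficit is bounded linearly, at the cost of the term `C * τ`. -/
lemma JJ_star {g θ : ℝ} (hg : 0 < g) (hθ : 0 < θ) : ∃ η > 0, η ≤ 1 / 3 ∧ ∃ C > 0,
    ∀ (r : Fin 3 → ℝ) (E : Tri (Vec n × ℝ)) (τ : ℝ), Adm g r → Fm E → 0 < τ →
    T (fun j => St (E j)) - T E ≤ τ ^ 2 →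
    JJ ((Om n r θ).indicator (WW r η E))
      ≤ ENNReal.ofReal (C * τ) + ENNReal.ofReal C * ∑ j, volume (badX (E j) (r j) θ η) := by
  obtain ⟨η, hη, hη1, C, hC, H⟩ := WW_le (n := n) hθ
  refine ⟨η, hη, hη1, ?_⟩
  set V := volume.real (cb n (1 / g)) with hV
  have hV0 : 0 ≤ V := measureReal_nonneg
  have hVe : volume (cb n (1 / g)) = ENNReal.ofReal V := by
    rw [hV, Measure.real, ENNReal.ofReal_toReal (volume_cb_ne_top _)]
  refine ⟨C + 4 * V ^ 2 + 4 * V, by positivity, fun r E τ hr hE hτ hdef => ?_⟩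
  have hWm : Measurable ((Om n r θ).indicator (WW r η E)) :=
    (measurable_WW r η hE).indicator (measurableSet_Om r θ)
  have hX := fun j => measurableSet_badX (hE j).1 (r j) θ η
  set X := fun j => badX (E j) (r j) θ η
  set R : Set (Vec n × Vec n) := cb n (1 / g) ×ˢ cb n (1 / g) with hR
  set S : Tri (Vec n × Vec n) :=
    fun j => {q | (q.1 ∈ cb n (1 / g) ∧ q.2 ∈ cb n (1 / g)) ∧ tq q j ∈ X j}
  have hRm : MeasurableSet R := (measurableSet_cb _).prod (measurableSet_cb _)
  have hSm : ∀ j, MeasurableSet (S j) := fun j =>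
    hRm.inter (((measurable_pi_apply j).comp measurable_tq) (hX j))
  set df : Vec n × Vec n → ℝ := fun q => T (fib3 (fun j => St (E j)) q) - T (fib3 E q)
  have hI : Integrable df := (integrable_T_fiber (Fm_St hE)).sub (integrable_T_fiber hE)
  have hIe : ∫ q, df q = T (fun j => St (E j)) - T E := by
    rw [T_fiber (Fm_St hE), T_fiber hE,
      ← integral_sub (integrable_T_fiber (Fm_St hE)) (integrable_T_fiber hE)]
  have hfin : ∀ᵐ q : Vec n × Vec n, ∀ j, volume (Prod.mk (tq q j) ⁻¹' E j) ≠ ⊤ :=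
    ae_all_iff.2 fun j => ae_tq (ae_fiber_ne_top (hE j).1 (hE j).2) j
  have hpt : ∀ᵐ q : Vec n × Vec n, (Om n r θ).indicator (WW r η E) (tq q)
      ≤ ENNReal.ofReal (C / τ * df q) + (R.indicator (fun _ => ENNReal.ofReal (4 * τ)) q
        + 4 * ∑ j, (S j).indicator 1 q) := by
    filter_upwards [hfin] with q hq
    by_cases hO : tq q ∈ Om n r θ
    · have h0 := norm_le_of_Om hθ hr hg hO 0
      have h1 := norm_le_of_Om hθ hr hg hO 1
      have hq0 : q.1 ∈ cb n (1 / g) := mem_cb.2 h0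
      have hq1 : q.2 ∈ cb n (1 / g) := mem_cb.2 h1
      have hqR : q ∈ R := ⟨hq0, hq1⟩
      rw [indicator_of_mem hO, indicator_of_mem hqR, ← add_assoc]
      refine (H r E τ q hE hτ hq hO).trans (add_le_add ofReal_add_le (le_of_eq ?_))
      congr 1
      refine Finset.sum_congr rfl fun j _ => ?_
      by_cases hj : tq q j ∈ X j
      · rw [indicator_of_mem hj, indicator_of_mem (show q ∈ S j from ⟨⟨hq0, hq1⟩, hj⟩)]; rfl
      · rw [indicator_of_notMem hj, indicator_of_notMem (fun h : q ∈ S j => hj h.2)]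
    · rw [indicator_of_notMem hO]; exact zero_le
  rw [JJ_eq hWm]
  refine (lintegral_mono_ae hpt).trans ?_
  have m1 : Measurable (R.indicator (fun _ => ENNReal.ofReal (4 * τ))) :=
    measurable_const.indicator hRm
  have m3 : ∀ j, Measurable ((S j).indicator (1 : Vec n × Vec n → ℝ≥0∞)) :=
    fun j => _root_.measurable_one.indicator (hSm j)
  have m2 : Measurable (fun q => ∑ j, (S j).indicator (1 : Vec n × Vec n → ℝ≥0∞) q) :=
    Finset.measurable_sum _ fun j _ => m3 j
  have m4 : Measurable (fun q => R.indicator (fun _ => ENNReal.ofReal (4 * τ)) q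
      + 4 * ∑ j, (S j).indicator (1 : Vec n × Vec n → ℝ≥0∞) q) := m1.add (m2.const_mul 4)
  rw [lintegral_add_right _ m4, lintegral_add_left m1,
    lintegral_const_mul 4 m2, lintegral_finsetSum _ fun j _ => m3 j, lintegral_indicator hRm,
    setLIntegral_const]
  have e1 : ∫⁻ q, ENNReal.ofReal (C / τ * df q) ≤ ENNReal.ofReal (C * τ) := by
    rw [← ofReal_integral_eq_lintegral_ofReal (hI.const_mul _), integral_const_mul, hIe]
    · refine ofReal_le_ofReal ?_
      calc _ ≤ C / τ * τ ^ 2 := mul_le_mul_of_nonneg_left hdef (by positivity)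
        _ = C * τ := by field_simp
    · filter_upwards [hfin] with q hq
      exact mul_nonneg (by positivity) (sub_nonneg.2 (T_fib3_le hE hq).1)
  have e2 : ENNReal.ofReal (4 * τ) * volume R = ENNReal.ofReal (4 * V ^ 2 * τ) := by
    rw [hR, volume_eq_prod, prod_prod, hVe, ← ofReal_mul hV0,
      ← ofReal_mul (by positivity)]
    congr 1; ring
  have e3 : ∀ j, ∫⁻ q, (S j).indicator (1 : Vec n × Vec n → ℝ≥0∞) q
      ≤ ENNReal.ofReal V * volume (X j) := fun j => by
    rw [lintegral_indicator_one (hSm j), ← hVe]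
    exact volume_tq_le (X j) (hX j) _ j
  have e4 : 4 * ∑ j, ∫⁻ q, (S j).indicator (1 : Vec n × Vec n → ℝ≥0∞) q
      ≤ ENNReal.ofReal (4 * V) * ∑ j, volume (X j) := by
    calc _ ≤ 4 * ∑ j, ENNReal.ofReal V * volume (X j) := by gcongr with j; exact e3 j
      _ = _ := by
        rw [← Finset.mul_sum, ofReal_mul (by norm_num), ← mul_assoc]
        norm_num
  calc _ ≤ ENNReal.ofReal (C * τ) + (ENNReal.ofReal (4 * V ^ 2 * τ)
          + ENNReal.ofReal (4 * V) * ∑ j, volume (X j)) :=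
        add_le_add e1 (add_le_add e2.le e4)
    _ ≤ _ := by
        rw [← add_assoc, ← ofReal_add (by positivity) (by positivity)]
        gcongr
        · nlinarith [mul_nonneg hV0 hτ.le]
        · nlinarith [mul_nonneg hV0 hV0]

/-- Restricting an integral over the plane to a neighbourhood of a line. -/
lemma JJ_line {δ S : ℝ} {W : (Fin 3 → Vec n) → ℝ≥0∞} (hW : Measurable W) {h : Vec n → ℝ≥0∞}
    (c : Fin 3 → ℝ) (j : Fin 3) (hcj : c j = 1)
    (hc : c 0 + c 1 + c 2 = 0)
    (H : ∀ (z : Vec n) (x : Fin 3 → Vec n), ‖z‖ ≤ S → x j = z → (∀ i, ‖x i - c i • z‖ ≤ δ) → h z ≤ W x)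
    (hδ : 0 ≤ δ) :
    (∫⁻ x in cb n S, h x) * volume (cb n δ) ≤ JJ W := by
  have base : ∀ (k : ℝ) (W : (Fin 3 → Vec n) → ℝ≥0∞), Measurable W →
      (∀ z y : Vec n, ‖z‖ ≤ S → ‖y‖ ≤ δ → h z ≤ W ![z, k • z + y, -(z + (k • z + y))]) →
      (∫⁻ x in cb n S, h x) * volume (cb n δ) ≤ JJ W := by
    intro k W hW HW
    rw [mul_comm, ← lintegral_const_mul' _ _ (volume_cb_ne_top δ)]
    refine (setLIntegral_mono' (measurableSet_cb S) fun x hx => ?_).trans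
      (setLIntegral_le_lintegral _ _)
    have e : ∫⁻ y, W ![x, y, -(x + y)] = ∫⁻ y, W ![x, k • x + y, -(x + (k • x + y))] :=
      (lintegral_add_left_eq_self (fun y => W ![x, y, -(x + y)]) (k • x)).symm
    rw [e]
    calc volume (cb n δ) * h x = ∫⁻ _ in cb n δ, h x := by rw [setLIntegral_const, mul_comm]
      _ ≤ ∫⁻ y in cb n δ, W ![x, k • x + y, -(x + (k • x + y))] :=
          setLIntegral_mono' (measurableSet_cb δ) fun y hy => HW x y (mem_cb.1 hx) (mem_cb.1 hy)
      _ ≤ _ := setLIntegral_le_lintegral _ _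
  have v0 : ∀ z y : Vec n, ∀ k : ℝ, k • z + y - k • z = y := fun z y k => by module
  have v1 : ∀ z y : Vec n, ∀ k l : ℝ, 1 + k + l = 0 → -(z + (k • z + y)) - l • z = -y := by
    intro z y k l hkl
    have : l = -1 - k := by linarith
    rw [this]; module
  fin_cases j <;> simp only [Fin.zero_eta, Fin.mk_one, Fin.reduceFinMk] at hcj H
  · refine base (c 1) W hW fun z y hz hy => H z _ hz rfl fun i => ?_
    fin_cases i
    · simpa [hcj] using hδ
    · simpa [v0] using hy
    · have := v1 z y (c 1) (c 2) (by linarith)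
      show ‖-(z + (c 1 • z + y)) - c 2 • z‖ ≤ δ
      rw [this, norm_neg]; exact hy
  · rw [← JJ_swap01 hW]
    refine base (c 0) _ (hW.comp ?_) fun z y hz hy => H z _ hz rfl fun i => ?_
    · fun_prop
    · fin_cases i
      · simpa [v0] using hy
      · simpa [hcj] using hδ
      · have := v1 z y (c 0) (c 2) (by linarith)
        show ‖-(z + (c 0 • z + y)) - c 2 • z‖ ≤ δ
        rw [this, norm_neg]; exact hy
  · have m1 : Measurable fun x : Fin 3 → Vec n => W ![x 0, x 2, x 1] := by fun_prop
    rw [← JJ_swap12 W, ← JJ_swap01 m1]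
    refine base (c 0) _ (m1.comp ?_) fun z y hz hy => H z _ hz rfl fun i => ?_
    · fun_prop
    · fin_cases i
      · simpa [v0] using hy
      · have := v1 z y (c 0) (c 1) (by linarith)
        show ‖-(z + (c 0 • z + y)) - c 1 • z‖ ≤ δ
        rw [this, norm_neg]; exact hy
      · simpa [hcj] using hδ

/-- An affine function is controlled by its `L¹` norm on a ball. -/
lemma affine_bound {s : ℝ} (hs : 0 < s) : ∃ C > 0, ∀ (S : ℝ) (a : Vec n) (b Q : ℝ), s ≤ S →
    0 ≤ Q → ∫⁻ x in cb n S, ‖inner ℝ a x + b‖ₑ ≤ ENNReal.ofReal Q → ‖a‖ ≤ C * Q ∧ |b| ≤ C * Q := by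
  set V := volume.real (cb n (s / 2)) with hV
  have hV0 : 0 < V := volume_real_cb_pos (by positivity)
  have hVe : volume (cb n (s / 2)) = ENNReal.ofReal V := by
    rw [hV, Measure.real, ENNReal.ofReal_toReal (volume_cb_ne_top _)]
  refine ⟨4 / (s * V) + 1 / V, by positivity, fun S a b Q hS hQ h => ?_⟩
  set F : Vec n → ℝ≥0∞ := fun x => ‖inner ℝ a x + b‖ₑ with hF
  have hFm : Measurable F :=
    (((continuous_const.inner continuous_id).add continuous_const).measurable).enorm
  have I0 : ∫⁻ x in cb n (s / 2), F x ≤ ENNReal.ofReal Q :=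
    (lintegral_mono_set (closedBall_subset_closedBall (by linarith))).trans h
  have key : ∀ (G : Vec n → ℝ≥0∞) (t : ℝ), 0 ≤ t → ∫⁻ x in cb n (s / 2), G x ≤ ENNReal.ofReal Q →
      (∀ x ∈ cb n (s / 2), ENNReal.ofReal t ≤ G x + F x) → t * V ≤ 2 * Q := by
    intro G t ht hG hGF
    have h1 : ENNReal.ofReal t * volume (cb n (s / 2)) ≤ ENNReal.ofReal Q + ENNReal.ofReal Q := by
      rw [← setLIntegral_const]
      refine (setLIntegral_mono' (measurableSet_cb _) hGF).trans ?_
      rw [lintegral_add_right _ hFm]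
      exact add_le_add hG I0
    rw [hVe, ← ofReal_mul ht, ← ofReal_add hQ hQ,
      ofReal_le_ofReal_iff (by linarith)] at h1
    linarith
  have hen : ∀ u v t : ℝ, t ≤ |u| + |v| → ENNReal.ofReal t ≤ ‖u‖ₑ + ‖v‖ₑ := by
    intro u v t h
    rw [← ofReal_norm, ← ofReal_norm, ← ofReal_add (norm_nonneg _) (norm_nonneg _)]
    exact ofReal_le_ofReal h
  have hb : 2 * |b| * V ≤ 2 * Q := by
    refine key (fun x => F (-x)) _ (by positivity) ?_ fun x hx => hen _ _ _ ?_
    · have e : ∫⁻ x in cb n (s / 2), F (-x) = ∫⁻ x in cb n (s / 2), F x := by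
        rw [← lintegral_indicator (measurableSet_cb _), ← lintegral_indicator (measurableSet_cb _),
          ← lintegral_neg_eq_self]
        refine lintegral_congr fun x => ?_
        simp only [indicator, mem_cb, norm_neg, neg_neg]
      rw [e]; exact I0
    · rw [inner_neg_right]
      grind
  have ha : ‖a‖ * (s / 2) * V ≤ 2 * Q := by
    rcases eq_or_ne a 0 with rfl | ha0
    · simpa using hQ
    set w : Vec n := (s / 2 / ‖a‖) • a with hw
    have hwn : ‖w‖ = s / 2 := by
      rw [hw, norm_smul, Real.norm_eq_abs, abs_of_pos (by positivity)]; field_simp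
    have hwa : inner ℝ a w = ‖a‖ * (s / 2) := by
      rw [hw, real_inner_smul_right, real_inner_self_eq_norm_sq]; field_simp
    refine key (fun x => F (x + w)) _ (by positivity) ?_ fun x hx => hen _ _ _ ?_
    · refine (shift_le (measurableSet_cb _) (measurableSet_cb S) F w fun x hx => ?_).trans h
      rw [mem_cb] at hx ⊢
      linarith [norm_add_le x w]
    · rw [inner_add_right, hwa]
      grind
  have hb' : |b| ≤ 1 / V * Q := by
    rw [div_mul_eq_mul_div, le_div_iff₀ hV0]; linarith
  have ha' : ‖a‖ ≤ 4 / (s * V) * Q := by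
    rw [div_mul_eq_mul_div, le_div_iff₀ (by positivity)]; linarith
  have p1 : 0 ≤ 1 / V * Q := by positivity
  have p2 : 0 ≤ 4 / (s * V) * Q := by positivity
  grind

/-! ### Reassembling the fibres: a shear that almost symmetrises -/

/-- The affine shear `(x, t) ↦ (x, t + ⟨a, x⟩ + b)`. -/
def sh (a : Vec n) (b : ℝ) (p : Vec n × ℝ) : Vec n × ℝ := (p.1, p.2 + (inner ℝ a p.1 + b))

lemma mp_sh (a : Vec n) (b : ℝ) : MeasurePreserving (sh a b) := by
  refine MeasurePreserving.skew_product (f := id) (g := fun x t => t + (inner ℝ a x + b))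
    (MeasurePreserving.id volume) (by fun_prop) ?_
  exact .of_forall fun x => (measurePreserving_add_right volume _).map_eq

lemma len_inter_fst (S : Set (Vec n × ℝ)) (X : Set (Vec n)) (x : Vec n) :
    len (S ∩ {p | p.1 ∈ X}) x = X.indicator (len S) x := by
  by_cases hx : x ∈ X
  · rw [indicator_of_mem hx]
    have : Prod.mk x ⁻¹' (S ∩ {p | p.1 ∈ X}) = Prod.mk x ⁻¹' S := by simp [*]
    rw [len, this, len]
  · rw [indicator_of_notMem hx]
    have : Prod.mk x ⁻¹' (S ∩ {p | p.1 ∈ X}) = ∅ := by simp [*]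
    rw [len, this, measureReal_empty]

lemma sd_sh_fiber {E : Set (Vec n × ℝ)} (hE : MeasurableSet E) {x : Vec n}
    (hf : volume (Prod.mk x ⁻¹' E) ≠ ⊤) (a : Vec n) (b r : ℝ) :
    sd (Prod.mk x ⁻¹' (sh a b ⁻¹' E)) (Prod.mk x ⁻¹' Bq n r)
      ≤ sd (Prod.mk x ⁻¹' E) (iv (inner ℝ a x + b) (hl r x)) := by
  set l := inner ℝ a x + b with hl'
  have e1 : Prod.mk x ⁻¹' (sh a b ⁻¹' E) = (fun t => t + l) ⁻¹' (Prod.mk x ⁻¹' E) := rfl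
  have e2 : iv 0 (hl r x) = (fun t => t + l) ⁻¹' (iv l (hl r x)) := by
    ext t; simp only [iv, mem_Ico, mem_preimage]
    grind
  have e3 : sd (Prod.mk x ⁻¹' (sh a b ⁻¹' E)) (iv 0 (hl r x))
      = sd (Prod.mk x ⁻¹' E) (iv l (hl r x)) := by
    rw [e1, e2, sd, sd, ← preimage_symmDiff, measureReal_def, measureReal_def,
      measure_preimage_add_right]
  have hf' : volume (Prod.mk x ⁻¹' (sh a b ⁻¹' E)) ≠ ⊤ := by simp [*]
  refine (sd_triangle (B := iv 0 (hl r x)) hf' (volume_iv_ne_top _ _)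
    (volume_fiber_Bq r x)).trans (le_of_eq ?_)
  rw [e3, sd_comm (iv _ _), show hl r x = √(r ^ 2 - ‖x‖ ^ 2) from rfl, fiber_Bq_ae, add_zero]

/-- Control of the distance from a sheared set to the ball: the fibre-length discrepancy, the parts
near the edge and over the exceptional base points, and the integrated errors of the shifts. -/
lemma sd_shear_le {E : Set (Vec n × ℝ)} (hE : MeasurableSet E) (hf : volume E ≠ ⊤)
    {r κ θ η Λ P₁ P₂ : ℝ} {a : Vec n} {b : ℝ} (hr : 0 ≤ r) (hΛ0 : 0 ≤ Λ)
    (hP₁ : 0 ≤ P₁) (hP₂ : 0 ≤ P₂)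
    (hθ : ∀ x : Vec n, ‖x‖ ≤ (1 - κ) * r → θ ≤ hl r x)
    (hΛ : ∀ x : Vec n, ‖x‖ ≤ r → |inner ℝ a x + b| ≤ Λ)
    (h1 : ∫⁻ x in cb n ((1 - κ) * r), ENNReal.ofReal (dev E r η x) ≤ ENNReal.ofReal P₁)
    (h2 : ∫⁻ x in cb n ((1 - κ) * r), ‖shf E r η x - inner ℝ a x - b‖ₑ ≤ ENNReal.ofReal P₂) :
    sd (sh a b ⁻¹' E) (Bq n r) ≤ (∫ x, |len E x - len (Bq n r) x|)
      + volume.real (symmDiff E (Bq n r) ∩ {p | (1 - κ) * r < ‖p.1‖})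
      + volume.real (symmDiff E (Bq n r) ∩ {p | p.1 ∈ badX E r θ η})
      + 2 * Λ * volume.real {x : Vec n | (1 - κ) * r < ‖x‖ ∧ ‖x‖ ≤ r} + P₁ + 2 * P₂ := by
  have hB := measurableSet_Bq (n := n) r
  have hBf := volume_Bq_ne_top (n := n) hr
  have hSm : MeasurableSet (symmDiff E (Bq n r)) := hE.symmDiff hB
  have hSf : volume (symmDiff E (Bq n r)) ≠ ⊤ := symmDiff_ne_top hf hBf
  have hsm : MeasurableSet (sh a b ⁻¹' E) := (mp_sh a b).measurable hE
  have hsf : volume (sh a b ⁻¹' E) ≠ ⊤ := by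
    rw [(mp_sh a b).measure_preimage hE.nullMeasurableSet]; exact hf
  set X1 : Set (Vec n) := {x | (1 - κ) * r < ‖x‖}
  set X2 := badX E r θ η
  set A : Set (Vec n) := {x | (1 - κ) * r < ‖x‖ ∧ ‖x‖ ≤ r}
  have hX1 : MeasurableSet X1 := measurableSet_lt measurable_const measurable_norm
  have hX2 : MeasurableSet X2 := measurableSet_badX hE r θ η
  have hA : MeasurableSet A := hX1.inter (measurableSet_le measurable_norm measurable_const)
  have hAf : volume A ≠ ⊤ := measure_ne_top_of_subset (s := cb n r)
    (fun x hx => mem_cb.2 hx.2) (volume_cb_ne_top _)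
  have hM1 : MeasurableSet (symmDiff E (Bq n r) ∩ {p | p.1 ∈ X1}) :=
    hSm.inter (measurable_fst hX1)
  have hM2 : MeasurableSet (symmDiff E (Bq n r) ∩ {p | p.1 ∈ X2}) :=
    hSm.inter (measurable_fst hX2)
  have hF1 : volume (symmDiff E (Bq n r) ∩ {p | p.1 ∈ X1}) ≠ ⊤ :=
    measure_ne_top_of_subset inter_subset_left hSf
  have hF2 : volume (symmDiff E (Bq n r) ∩ {p | p.1 ∈ X2}) ≠ ⊤ :=
    measure_ne_top_of_subset inter_subset_left hSf
  set G : Vec n → ℝ := fun x => |len E x - len (Bq n r) x|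
    + len (symmDiff E (Bq n r) ∩ {p | p.1 ∈ X1}) x
    + len (symmDiff E (Bq n r) ∩ {p | p.1 ∈ X2}) x + 2 * Λ * A.indicator 1 x with hG
  have i1 : Integrable fun x : Vec n => |len E x - len (Bq n r) x| :=
    ((integrable_len hE hf).sub (integrable_len hB hBf)).abs
  have i2 := integrable_len hM1 hF1
  have i3 := integrable_len hM2 hF2
  have i4 : Integrable (A.indicator (1 : Vec n → ℝ)) :=
    (integrable_indicator_iff hA).2 (integrableOn_const hAf)
  have hGi : Integrable G := ((i1.add i2).add i3).add (i4.const_mul _)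
  have i5 : Integrable fun x => 2 * Λ * A.indicator (1 : Vec n → ℝ) x := i4.const_mul _
  have hGe : ∫ x, G x = (∫ x, |len E x - len (Bq n r) x|)
      + volume.real (symmDiff E (Bq n r) ∩ {p | p.1 ∈ X1})
      + volume.real (symmDiff E (Bq n r) ∩ {p | p.1 ∈ X2}) + 2 * Λ * volume.real A := by
    have e1 := integral_add ((i1.add i2).add i3) i5
    have e2 := integral_add (i1.add i2) i3
    have e3 := integral_add i1 i2
    simp only [Pi.add_apply] at e1 e2 e3
    rw [hG, e1, e2, e3, integral_const_mul, integral_len hM1 hF1, integral_len hM2 hF2,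
      integral_indicator_one hA]
  have htwo : ∀ z : ℝ, (2 : ℝ≥0∞) * ENNReal.ofReal z = ENNReal.ofReal (2 * z) := fun z => by simp
  have hG0 : ∀ x, 0 ≤ G x := fun x => by
    have : 0 ≤ A.indicator (1 : Vec n → ℝ) x := indicator_nonneg (fun _ _ => zero_le_one) x
    have := len_nonneg (symmDiff E (Bq n r) ∩ {p | p.1 ∈ X1}) x
    have := len_nonneg (symmDiff E (Bq n r) ∩ {p | p.1 ∈ X2}) x
    simp only [hG]; positivity
  set C := cb n ((1 - κ) * r)
  have hCm : MeasurableSet C := measurableSet_cb _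
  have hpt : ∀ᵐ x : Vec n, ENNReal.ofReal (sd (Prod.mk x ⁻¹' (sh a b ⁻¹' E)) (Prod.mk x ⁻¹' Bq n r))
      ≤ ENNReal.ofReal (G x) + (C.indicator (fun x => ENNReal.ofReal (dev E r η x)) x
        + 2 * C.indicator (fun x => ‖shf E r η x - inner ℝ a x - b‖ₑ) x) := by
    filter_upwards [ae_fiber_ne_top hE hf] with x hx
    have hs := sd_sh_fiber hE hx a b r
    by_cases hxC : x ∈ C
    · have hx' := mem_cb.1 hxC
      rw [indicator_of_mem hxC, indicator_of_mem hxC, Real.enorm_eq_ofReal_abs,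
        htwo _,
        ← ofReal_add (dev_nonneg _ _ _ _) (by positivity),
        ← ofReal_add (hG0 x) (add_nonneg (dev_nonneg _ _ _ _) (by positivity))]
      refine ofReal_le_ofReal (hs.trans ((fiber_shift_le hE (η := η) hx _).trans ?_))
      have hb : {x | η < len (symmDiff E (Bq n r)) x}.indicator (len (symmDiff E (Bq n r))) x
          = len (symmDiff E (Bq n r) ∩ {p | p.1 ∈ X2}) x := by
        rw [len_inter_fst]
        by_cases hm : η < len (symmDiff E (Bq n r)) x
        · rw [indicator_of_mem (show x ∈ {x | η < len (symmDiff E (Bq n r)) x} from hm),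
            indicator_of_mem (show x ∈ X2 from ⟨hθ x hx', hm⟩)]
        · rw [indicator_of_notMem (fun h : x ∈ {x | η < len (symmDiff E (Bq n r)) x} => hm h),
            indicator_of_notMem (fun h : x ∈ X2 => hm h.2)]
      have : 0 ≤ A.indicator (1 : Vec n → ℝ) x := indicator_nonneg (fun _ _ => zero_le_one) x
      have h3 := len_nonneg (symmDiff E (Bq n r) ∩ {p | p.1 ∈ X1}) x
      have h4 : 0 ≤ 2 * Λ * A.indicator (1 : Vec n → ℝ) x := by positivity
      rw [hb, show shf E r η x - inner ℝ a x - b = shf E r η x - (inner ℝ a x + b) by ring]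
      simp only [hG]; linarith
    · have hx1 : x ∈ X1 := by
        by_contra h; exact hxC (mem_cb.2 (not_lt.1 h))
      rw [indicator_of_notMem hxC, indicator_of_notMem hxC, mul_zero, add_zero, add_zero]
      refine ofReal_le_ofReal (hs.trans ?_)
      have ht := sd_triangle (B := iv 0 (hl r x)) hx (volume_iv_ne_top 0 (hl r x))
        (volume_iv_ne_top (inner ℝ a x + b) (hl r x))
      have h5 : sd (iv 0 (hl r x)) (iv (inner ℝ a x + b) (hl r x))
          ≤ 2 * Λ * A.indicator (1 : Vec n → ℝ) x := by
        by_cases hxr : ‖x‖ ≤ r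
        · rw [indicator_of_mem (show x ∈ A from ⟨hx1, hxr⟩)]
          refine (sd_iv_le _ _ _).trans ?_
          rw [zero_sub, abs_neg, Pi.one_apply]; linarith [hΛ x hxr]
        · have h0 : hl r x = 0 := by
            refine Real.sqrt_eq_zero'.2 ?_
            nlinarith
          have : ∀ c, iv c (hl r x) = ∅ := fun c => by rw [h0, iv]; simp
          rw [this, this, sd_self, indicator_of_notMem (fun h : x ∈ A => hxr h.2), mul_zero]
      have h6 := sd_fiber_iv r hx
      have h7 : len (symmDiff E (Bq n r)) x = len (symmDiff E (Bq n r) ∩ {p | p.1 ∈ X1}) x := by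
        rw [len_inter_fst, indicator_of_mem hx1]
      have h3 := len_nonneg (symmDiff E (Bq n r) ∩ {p | p.1 ∈ X2}) x
      have h8 := abs_nonneg (len E x - len (Bq n r) x)
      simp only [hG]; linarith
  have hfin := lintegral_mono_ae hpt
  have m1 : Measurable (C.indicator fun x => ENNReal.ofReal (dev E r η x)) :=
    (measurable_dev hE r η).ennreal_ofReal.indicator hCm
  have m2 : Measurable (C.indicator fun x => ‖shf E r η x - inner ℝ a x - b‖ₑ) :=
    (((measurable_shf hE r η).sub (by fun_prop)).sub measurable_const).enorm.indicator hCm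
  have m3 : Measurable fun x => C.indicator (fun x => ENNReal.ofReal (dev E r η x)) x
      + 2 * C.indicator (fun x => ‖shf E r η x - inner ℝ a x - b‖ₑ) x := m1.add (m2.const_mul 2)
  rw [lintegral_add_right _ m3, lintegral_add_left m1, lintegral_const_mul 2 m2,
    lintegral_indicator hCm, lintegral_indicator hCm,
    ← ofReal_integral_eq_lintegral_ofReal hGi (.of_forall hG0),
    ← ofReal_integral_eq_lintegral_ofReal (integrable_sd_fiber hsm hsf hB hBf)
      (.of_forall fun _ => sd_nonneg _ _), integral_sd_fiber hsm hsf hB hBf] at hfin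
  have hGn : 0 ≤ ∫ x, G x := integral_nonneg hG0
  have h3 := hfin.trans (add_le_add le_rfl (add_le_add h1 (mul_le_mul_right h2 2)))
  rw [htwo _,
    ← ofReal_add hP₁ (by positivity), ← ofReal_add hGn (by positivity),
    ofReal_le_ofReal_iff (by positivity), hGe] at h3
  exact h3.trans (le_of_eq (by simp only [X1, mem_ofPred_eq]; ring))

lemma annulus_le {g : ℝ} (hg : 0 < g) : ∃ C > 0, ∀ r κ : ℝ, g ≤ r → r ≤ 1 / g → 0 ≤ κ → κ ≤ 1 →
    volume.real {x : Vec n | (1 - κ) * r < ‖x‖ ∧ ‖x‖ ≤ r} ≤ C * κ := by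
  refine ⟨n * (1 / g) ^ n * volume.real (cb n 1) + 1, by positivity, fun r κ h1 h2 h3 h4 => ?_⟩
  have hr : 0 ≤ r := hg.le.trans h1
  have hk : 0 ≤ (1 - κ) * r := mul_nonneg (by linarith) hr
  have hle : (1 - κ) * r ≤ r := by nlinarith
  have e : {x : Vec n | (1 - κ) * r < ‖x‖ ∧ ‖x‖ ≤ r} = cb n r \ cb n ((1 - κ) * r) := by
    ext x; rw [mem_sdiff, mem_cb, mem_cb, not_le]; exact and_comm
  have hsub : cb n ((1 - κ) * r) ⊆ cb n r := fun x hx => mem_cb.2 ((mem_cb.1 hx).trans hle)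
  have hv : ∀ s : ℝ, 0 ≤ s → volume.real (cb n s) = s ^ n * volume.real (cb n 1) := fun s hs => by
    rw [cb, addHaar_real_closedBall' _ _ hs, finrank_euclideanSpace_fin, cb]
  rw [e, measureReal_sdiff hsub (measurableSet_cb _) (volume_cb_ne_top _), hv r hr, hv _ hk]
  have hb : 1 - n * κ ≤ (1 - κ) ^ n := by
    have := one_add_mul_le_pow (a := -κ) (by linarith) n
    rw [← sub_eq_add_neg] at this; linarith
  have hp : r ^ n ≤ (1 / g) ^ n := pow_le_pow_left₀ hr h2 n
  calc _ = r ^ n * volume.real (cb n 1) * (1 - (1 - κ) ^ n) := by rw [mul_pow]; ring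
    _ ≤ r ^ n * volume.real (cb n 1) * (n * κ) := by gcongr; linarith
    _ ≤ (1 / g) ^ n * volume.real (cb n 1) * (n * κ) := by gcongr
    _ ≤ _ := by nlinarith

lemma JJ_mono {V W : (Fin 3 → Vec n) → ℝ≥0∞} (h : ∀ x, V x ≤ W x) : JJ V ≤ JJ W :=
  lintegral_mono fun _ => lintegral_mono fun _ => h _

/-- Outside a quadratically small part, the fibre shifts agree with affine functions having a
common linear part, up to the square root of the deficit of the symmetrisation. -/
lemma shift_data {g κ K : ℝ} (hg : 0 < g) (hg1 : g ≤ 1) (hκ : 0 < κ) (hκ1 : κ ≤ 1) (hK : 0 < K) :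
    ∃ θ > 0, ∃ η > 0, ∃ C > 0, ∀ (r : Fin 3 → ℝ) (E : Tri (Vec n × ℝ)) (τ D : ℝ),
      Adm g r → Fm E →
      (∀ j s, 0 ≤ s → s ≤ 1 → s * volume.real (farq (E j) (r j) s) ≤ K * D ^ 2) → 0 < τ →
      T (fun j => St (E j)) - T E ≤ τ ^ 2 →
      ∃ (a : Vec n) (b : Fin 3 → ℝ), b 0 + b 1 + b 2 = 0 ∧ ∀ j,
        (∀ x : Vec n, ‖x‖ ≤ (1 - κ) * r j → θ ≤ hl (r j) x) ∧
        ∫⁻ x in cb n ((1 - κ) * r j), ENNReal.ofReal (dev (E j) (r j) η x)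
          ≤ ENNReal.ofReal (C * (τ + D ^ 2)) ∧
        ∫⁻ x in cb n ((1 - κ) * r j), ‖shf (E j) (r j) η x - inner ℝ a x - b j‖ₑ
          ≤ ENNReal.ofReal (C * (τ + D ^ 2)) ∧
        volume.real (symmDiff (E j) (Bq n (r j)) ∩ {p | p.1 ∈ badX (E j) (r j) θ η})
          ≤ C * (τ + D ^ 2) := by
  obtain ⟨δ, hδ, θ, hθ, HG⟩ := line_geom (n := n) hg hg1 hκ hκ1
  obtain ⟨η, hη, hη1, Cj, hCj, HJ⟩ := JJ_star (n := n) hg hθ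
  have hg2 : 1 ≤ 1 / g ^ 2 := by
    rw [le_div_iff₀ (by positivity)]; nlinarith
  obtain ⟨Ca, hCa, HA⟩ := affine_approx (n := n) hδ hg2
  set s := min g (η * g * θ / 24) with hs
  have hs0 : 0 < s := lt_min hg (by positivity)
  set q := K / s
  have hq : 0 < q := by positivity
  set vδ := volume.real (cb n δ)
  have hvδ : 0 < vδ := volume_real_cb_pos hδ
  set B := Cj * (1 + 6 * q / η)
  set C := B / vδ + Ca.toReal * B + 2 * q with hC
  have hc0 : 0 ≤ Ca.toReal * B := by positivity
  have hc1 : 0 < B / vδ := by positivity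
  refine ⟨θ, hθ, η, hη, C, by positivity, fun r E τ D hr hE hnc hτ hdef => ?_⟩
  obtain ⟨c, c1, c2, c3, c4⟩ := HG r hr
  have hfar : ∀ j, volume.real (farq (E j) (r j) s) ≤ q * D ^ 2 := fun j => by
    have := hnc j s hs0.le ((min_le_left _ _).trans hg1)
    rw [div_mul_eq_mul_div, le_div_iff₀ hs0]; linarith
  have hsη : 12 * s / (g * θ) ≤ η / 2 := by
    rw [div_le_iff₀ (by positivity)]
    have := min_le_right g (η * g * θ / 24)
    rw [← hs] at this; linarith
  have hbad := fun j => bad_bound hg hθ (hE j).1 (hE j).2 (hr.lo j) (hr.hi j) hs0.le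
    ((min_le_left _ _).trans (hr.lo j)) hη hsη
  have hJ : JJ ((Om n r θ).indicator (WW r η E)) ≤ ENNReal.ofReal (B * (τ + D ^ 2)) := by
    refine (HJ r E τ hr hE hτ hdef).trans ?_
    calc _ ≤ ENNReal.ofReal (Cj * τ)
          + ENNReal.ofReal Cj * ∑ _j : Fin 3, ENNReal.ofReal (2 / η * (q * D ^ 2)) := by
          gcongr with j
          exact (hbad j).2.trans (ofReal_le_ofReal
            (mul_le_mul_of_nonneg_left (hfar j) (by positivity)))
      _ = ENNReal.ofReal (Cj * τ + Cj * (6 * q / η * D ^ 2)) := by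
          rw [← ofReal_sum_of_nonneg (fun _ _ => by positivity),
            ← ofReal_mul hCj.le, ← ofReal_add (by positivity) (by
              exact mul_nonneg hCj.le (Finset.sum_nonneg fun _ _ => by positivity))]
          simp only [Finset.sum_const, Finset.card_univ, Fintype.card_fin]
          congr 1; simp only [nsmul_eq_mul]; push_cast; ring
      _ ≤ _ := by
          refine ofReal_le_ofReal ?_
          have h1 : 0 ≤ Cj * (6 * q / η) * τ := by positivity
          have h2 : 0 ≤ Cj * D ^ 2 := by positivity
          simp only [B]; linarith
  obtain ⟨a, b, hb, hab⟩ := HA (fun i => shf (E i) (r i) η) (Om n r θ) c (fun j => (1 - κ) * r j)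
    (fun i => measurable_shf (hE i).1 _ _)
    (fun i x => (abs_shf_le (hE i).1 hη.le x).trans (by linarith)) (measurableSet_Om r θ)
    (fun j => by
      have h1 : (1 - κ) * r j ≤ r j := by nlinarith [hr.lo j]
      have h2 : 1 / g ≤ 1 / g ^ 2 := one_div_le_one_div_of_le (by positivity) (by nlinarith)
      linarith [hr.hi j]) c1 c2 c3
    (fun x _ hx => c4 0 0 x (by
      rw [norm_zero]; exact mul_nonneg (by linarith) (hg.le.trans (hr.lo 0)))
      fun i => by simpa using hx i)
    (fun j z x hz _ hx => c4 j z x hz fun i => (hx i).trans (by linarith))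
  have hle : ∀ y : ℝ, y ≤ C → ENNReal.ofReal (y * (τ + D ^ 2)) ≤ ENNReal.ofReal (C * (τ + D ^ 2)) :=
    fun y hy => ofReal_le_ofReal (mul_le_mul_of_nonneg_right hy (by positivity))
  refine ⟨a, b, hb, fun j => ⟨fun x hx => ?_, ?_, ?_, ?_⟩⟩
  · have := (c4 j x (fun i => c j i • x) hx fun i => by simp; positivity).1 j
    simpa [c2 j] using this
  · have hl := JJ_line (δ := δ) (S := (1 - κ) * r j) (h := fun x => ENNReal.ofReal (dev (E j) (r j) η x))
      ((measurable_WW r η hE).indicator (measurableSet_Om r θ)) (c j) j (c2 j) (c3 j)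
      (fun z x hz hxj hx => by
        rw [indicator_of_mem (c4 j z x hz fun i => (hx i).trans (by linarith)), ← hxj]
        exact (Finset.single_le_sum (f := fun j => ENNReal.ofReal (dev (E j) (r j) η (x j)))
          (fun _ _ => zero_le) (Finset.mem_univ j)).trans le_add_self) hδ.le
    have hvv : volume (cb n δ) = ENNReal.ofReal vδ :=
      (ofReal_toReal (volume_cb_ne_top _)).symm
    refine le_trans ?_ (hle (B / vδ) (by rw [hC]; linarith))
    rw [div_mul_eq_mul_div, ENNReal.ofReal_div_of_pos hvδ, ENNReal.le_div_iff_mul_le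
      (Or.inl (by simpa using hvδ)) (Or.inl ofReal_ne_top), ← hvv]
    exact hl.trans hJ
  · refine (hab j).trans (le_trans ?_ (hle (Ca.toReal * B) (by rw [hC]; linarith)))
    rw [mul_assoc, ofReal_mul toReal_nonneg, ofReal_toReal hCa]
    refine mul_le_mul_right (le_trans (JJ_mono fun x => ?_) hJ) _
    exact indicator_le_indicator le_self_add
  · refine (hbad j).1.trans ?_
    have h1 : 0 ≤ (B / vδ + Ca.toReal * B) * (τ + D ^ 2) := by positivity
    have h2 : 0 ≤ 2 * q * τ := by positivity
    have := hfar j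
    rw [hC]; linarith

/-- In a fixed frame, a near-ball triple whose perturbation does not concentrate away from the
spheres can be sheared so that its distance to the balls is at most the fibre-length discrepancy,
up to the square root of the deficit of the symmetrisation and a small multiple of the distance. -/
lemma shear_approx {g K ε : ℝ} (hg : 0 < g) (hg1 : g ≤ 1) (hK : 0 < K) (hε : 0 < ε) :
    ∃ η₀ > 0, ∃ C > 0, ∀ (r : Fin 3 → ℝ) (E : Tri (Vec n × ℝ)) (τ D : ℝ),
      Adm g r → Fm E → D = D3 E (fun j => Bq n (r j)) →
      (∀ j s, 0 ≤ s → s ≤ 1 → s * volume.real (farq (E j) (r j) s) ≤ K * D ^ 2) →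
      D ≤ η₀ → 0 < τ → T (fun j => St (E j)) - T E ≤ τ ^ 2 →
      ∃ (a : Vec n) (b : Fin 3 → ℝ), b 0 + b 1 + b 2 = 0 ∧
        D3 (fun j => sh a (b j) ⁻¹' E j) (fun j => Bq n (r j))
          ≤ (∑ j, ∫ x, |len (E j) x - len (Bq n (r j)) x|) + C * τ + ε * D := by
  obtain ⟨Ce, hCe, HE⟩ := edge_bound (n := n) hg
  obtain ⟨Ca, hCa, HA⟩ := annulus_le (n := n) hg
  obtain ⟨Cf, hCf, HF⟩ := affine_bound (n := n) (s := g / 2) (by positivity)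
  set M := 12 * K / ε with hM
  have hM0 : 0 < M := by positivity
  set Λ₀ := (1 / g + 1) * Cf with hΛ₀
  set κ := min (1 / 4) (min ((ε / (12 * Ce * M)) ^ 2) (ε / (24 * Λ₀ * Ca))) with hκd
  have hκ : 0 < κ := lt_min (by norm_num) (lt_min (by positivity) (by positivity))
  have hκ4 : κ ≤ 1 / 4 := min_le_left _ _
  have hκe : Ce * √κ * M ≤ ε / 12 := by
    have h1 : √κ ≤ ε / (12 * Ce * M) := by
      rw [Real.sqrt_le_left (by positivity)]
      simp [*]
    rw [le_div_iff₀ (by positivity)] at h1; linarith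
  have hκa : 2 * Λ₀ * Ca * κ ≤ ε / 12 := by
    have h1 : κ ≤ ε / (24 * Λ₀ * Ca) := (min_le_right _ _).trans (min_le_right _ _)
    rw [le_div_iff₀ (by positivity)] at h1; linarith
  obtain ⟨θ, hθ, η, hη, C, hC, HS⟩ := shift_data (n := n) hg hg1 hκ (by linarith) hK
  set C' := 3 * C * (4 + ε)
  have hC'p : 0 < C' := by positivity
  refine ⟨min (ε / (4 * C')) (min (κ * g / M) (1 / M)), lt_min (by positivity)
    (lt_min (by positivity) (by positivity)), C', hC'p,
    fun r E τ D hr hE hD hnc hD0 hτ hdef => ?_⟩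
  obtain ⟨a, b, hb, hab⟩ := HS r E τ D hr hE hnc hτ hdef
  refine ⟨a, b, hb, ?_⟩
  have hDn : 0 ≤ D := hD ▸ D3_nonneg _ _
  have hD1 : D * (4 * C') ≤ ε := by
    have := hD0.trans (min_le_left _ _); rwa [le_div_iff₀ (by positivity)] at this
  have hD2 : D * M ≤ κ * g := by
    have := hD0.trans ((min_le_right _ _).trans (min_le_left _ _))
    rwa [le_div_iff₀ hM0] at this
  have hD3 : D * M ≤ 1 := by
    have := hD0.trans ((min_le_right _ _).trans (min_le_right _ _))
    rwa [le_div_iff₀ hM0] at this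
  set P := C * (τ + D ^ 2)
  have hP0 : 0 ≤ P := by positivity
  have hj : ∀ j, sd (sh a (b j) ⁻¹' E j) (Bq n (r j)) ≤ (∫ x, |len (E j) x - len (Bq n (r j)) x|)
      + ε / 4 * D + (4 + ε) * P := fun j => by
    obtain ⟨k1, k2, k3, k4⟩ := hab j
    have hrj : 0 ≤ r j := hg.le.trans (hr.lo j)
    have hsdj : sd (E j) (Bq n (r j)) ≤ D := hD ▸ sd_le_D3 E (fun j => Bq n (r j)) j
    have hSm : MeasurableSet (symmDiff (E j) (Bq n (r j))) := (hE j).1.symmDiff (measurableSet_Bq _)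
    have hSf : volume (symmDiff (E j) (Bq n (r j))) ≠ ⊤ :=
      symmDiff_ne_top (hE j).2 (volume_Bq_ne_top hrj)
    -- the affine functions are small, being close to shifts controlled by the symmetric difference
    have hQ : ∫⁻ x in cb n ((1 - κ) * r j), ‖inner ℝ a x + b j‖ₑ ≤ ENNReal.ofReal (P + D) := by
      have m1 : Measurable fun x => ‖shf (E j) (r j) η x - inner ℝ a x - b j‖ₑ :=
        (((measurable_shf (hE j).1 _ η).sub (by fun_prop)).sub measurable_const).enorm
      calc _ ≤ ∫⁻ x in cb n ((1 - κ) * r j), (‖shf (E j) (r j) η x - inner ℝ a x - b j‖ₑ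
            + ENNReal.ofReal (len (symmDiff (E j) (Bq n (r j))) x)) := by
            refine lintegral_mono fun x => ?_
            simp only [Real.enorm_eq_ofReal_abs]
            rw [← ofReal_add (abs_nonneg _) (len_nonneg _ _)]
            refine ofReal_le_ofReal ?_
            have h1 := abs_shf_le_len (hE j).1 (a := r j) (η := η) x
            have h2 := abs_sub (shf (E j) (r j) η x) (shf (E j) (r j) η x - inner ℝ a x - b j)
            rw [show shf (E j) (r j) η x - (shf (E j) (r j) η x - inner ℝ a x - b j)
              = inner ℝ a x + b j by ring] at h2
            linarith [len_nonneg (symmDiff (E j) (Bq n (r j))) x]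
        _ ≤ ENNReal.ofReal P + ∫⁻ x, ENNReal.ofReal (len (symmDiff (E j) (Bq n (r j))) x) := by
            rw [lintegral_add_left m1]
            exact add_le_add k3 (setLIntegral_le_lintegral _ _)
        _ ≤ _ := by
            rw [← ofReal_integral_eq_lintegral_ofReal (integrable_len hSm hSf)
              (.of_forall fun _ => len_nonneg _ _), integral_len hSm hSf,
              ofReal_add hP0 hDn]
            exact add_le_add le_rfl (ofReal_le_ofReal hsdj)
    obtain ⟨ha, hbj⟩ := HF ((1 - κ) * r j) a (b j) (P + D) (by nlinarith [hr.lo j])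
      (by positivity) hQ
    have hΛ : ∀ x : Vec n, ‖x‖ ≤ r j → |inner ℝ a x + b j| ≤ Λ₀ * (P + D) := fun x hx => by
      have h1 : |inner ℝ a x| ≤ Cf * (P + D) * (1 / g) := (abs_real_inner_le_norm a x).trans
        (mul_le_mul ha (hx.trans (hr.hi j)) (norm_nonneg _) (by positivity))
      have h2 := abs_add_le (inner ℝ a x) (b j)
      linarith
    have hmain := sd_shear_le (hE j).1 (hE j).2 hrj (Λ := Λ₀ * (P + D)) (by positivity) hP0 hP0 k1 hΛ k2 k3
    have hedge := HE (E j) (r j) κ (D * M) (hE j).2 (hr.lo j) (hr.hi j) hκ hκ4 (by positivity)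
      (hD2.trans (mul_le_mul_of_nonneg_left (hr.lo j) hκ.le))
    have hfar : volume.real (farq (E j) (r j) (D * M)) ≤ ε / 12 * D := by
      rcases hDn.eq_or_lt with h0 | h0
      · rw [← h0, mul_zero]
        refine (measureReal_mono (fun p hp => hp.1) hSf).trans ?_
        rw [← h0] at hsdj; exact hsdj
      · have h1 := hnc j (D * M) (by positivity) hD3
        have h2 : M * volume.real (farq (E j) (r j) (D * M)) ≤ K * D :=
          le_of_mul_le_mul_left (by linarith) h0
        rw [hM, div_mul_eq_mul_div, div_le_iff₀ hε] at h2
        have : K * (12 * volume.real (farq (E j) (r j) (D * M))) ≤ K * (ε * D) := by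
          rw [hM]; linarith
        linarith [le_of_mul_le_mul_left this hK]
    have hann := HA (r j) κ (hr.lo j) (hr.hi j) hκ.le (by linarith)
    have h1 : 2 * (Λ₀ * (P + D)) * volume.real {x : Vec n | (1 - κ) * r j < ‖x‖ ∧ ‖x‖ ≤ r j}
        ≤ ε / 12 * (P + D) :=
      calc _ ≤ 2 * (Λ₀ * (P + D)) * (Ca * κ) := by gcongr
        _ = 2 * Λ₀ * Ca * κ * (P + D) := by ring
        _ ≤ _ := by gcongr
    have h2 : Ce * √κ * (D * M) ≤ ε / 12 * D := by
      calc _ = Ce * √κ * M * D := by ring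
        _ ≤ _ := by gcongr
    have h3 : 0 ≤ ε * P := by positivity
    linarith
  have hsum := Finset.sum_le_sum (fun j (_ : j ∈ Finset.univ) => hj j)
  simp only [Finset.sum_add_distrib, Finset.sum_const, Finset.card_univ, Fintype.card_fin,
    nsmul_eq_mul] at hsum
  refine hsum.trans ?_
  have h4 : C' * D ^ 2 ≤ ε / 4 * D := by nlinarith
  linarith

/-! ### A direction in which symmetrisation strictly contracts -/

/-- A small cap of a thin spherical shell has measure at most a small multiple of the thickness;
this needs ambient dimension at least two. -/
lemma cap_bound (hn : 1 ≤ n) {g : ℝ} (hg : 0 < g) : ∃ C > 0, ∀ (x : Vec (n + 1)) (a s κ : ℝ),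
    g ≤ a → a ≤ 1 / g → 0 ≤ s → s ≤ a / 2 → 0 < κ → 2 * κ / g ≤ 1 →
    volume.real {y : Vec (n + 1) | ‖x - y‖ < κ ∧ |‖y‖ - a| < s} ≤ C * κ * s := by
  set V := volume.real (cb n 1)
  have hV : 0 < V := volume_real_cb_pos one_pos
  refine ⟨2 * (n + 1) * (2 / g) ^ n * (2 * V * (2 / g)), by positivity,
    fun x a s κ h1 h2 h3 h4 h5 h6 => ?_⟩
  obtain ⟨L, hL⟩ := exists_frame_vec' x
  set q := 2 * κ / g with hq
  have hq0 : 0 < q := by positivity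
  set C : Set (Vec n × ℝ) := {p | ‖p.1‖ ≤ q * Nq p}
  have hCm : MeasurableSet C := measurableSet_le measurable_fst.norm (measurable_Nq.const_mul q)
  have hCs : ∀ p ∈ C, ∀ c > (0 : ℝ), c • p ∈ C := fun p hp c hc => by
    have hp' : ‖p.1‖ ≤ q * Nq p := hp
    change ‖c • p.1‖ ≤ q * Nq (c • p)
    rw [norm_smul, Nq_smul hc.le, Real.norm_of_nonneg hc.le]; nlinarith
  have hsub : {y : Vec (n + 1) | ‖x - y‖ < κ ∧ |‖y‖ - a| < s}
      ⊆ frm L ⁻¹' (C ∩ {p | |Nq p - a| < s}) := fun y hy => by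
    obtain ⟨hy1, hy2⟩ : ‖x - y‖ < κ ∧ |‖y‖ - a| < s := hy
    have e : (frm L y).1 = -(fr L (x - y)).1 := by rw [map_sub, Prod.fst_sub, hL]; simp [frm_apply]
    have h7 : ‖(frm L y).1‖ ≤ κ := by
      rw [e, norm_neg]
      have := norm_fr L (x - y)
      exact (abs_le_of_sq_le_sq' (by nlinarith [sq_nonneg (fr L (x - y)).2, norm_nonneg (x - y)])
        h5.le).2
    have h8 := (abs_lt.1 hy2).1
    refine ⟨?_, by rw [mem_ofPred_eq, Nq_frm]; exact hy2⟩
    change ‖(frm L y).1‖ ≤ q * Nq (frm L y)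
    rw [Nq_frm]
    refine h7.trans ?_
    rw [hq, div_mul_eq_mul_div, le_div_iff₀ hg]; nlinarith
  have hcap : C ∩ Bq n 1 ⊆ cb n q ×ˢ Icc (-1 : ℝ) 1 := fun p hp => by
    have h7 : Nq p ≤ 1 := (mem_Bq zero_le_one).1 hp.2
    have h8 : ‖p.1‖ ≤ q * Nq p := hp.1
    exact ⟨mem_cb.2 (h8.trans (by nlinarith)), abs_le.1 ((abs_snd_le_Nq p).trans h7)⟩
  have hfin : volume (cb n q ×ˢ Icc (-1 : ℝ) 1) ≠ ⊤ := by
    rw [volume_eq_prod, prod_prod]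
    exact mul_ne_top (volume_cb_ne_top _) (by simp)
  have hcv : volume.real (C ∩ Bq n 1) ≤ 2 * V * q := by
    refine (measureReal_mono hcap hfin).trans ?_
    rw [volume_eq_prod, measureReal_prod_prod, cb,
      addHaar_real_closedBall' _ _ hq0.le, finrank_euclideanSpace_fin, Real.volume_real_Icc]
    have : q ^ n ≤ q := pow_le_of_le_one hq0.le h6 (by omega)
    norm_num
    nlinarith
  have hfin2 : volume (C ∩ {p | |Nq p - a| < s}) ≠ ⊤ :=
    measure_ne_top_of_subset (s := Bq n (a + s)) (fun p hp => by
      have : |Nq p - a| < s := hp.2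
      exact (mem_Bq (by linarith)).2 (by linarith [(abs_lt.1 this).2]))
      (volume_Bq_ne_top (by linarith))
  calc _ ≤ volume.real (frm L ⁻¹' (C ∩ {p | |Nq p - a| < s})) :=
        measureReal_mono hsub (by
          rw [(mp_frm L).measure_preimage_equiv]; exact hfin2)
    _ = volume.real (C ∩ {p | |Nq p - a| < s}) := volume_preimage _ (mp_frm L) _
    _ ≤ 2 * (n + 1) * (2 / g) ^ n * volume.real (C ∩ Bq n 1) * s :=
        cone_shell_le hg hCm hCs h1 h2 h3 h4
    _ ≤ 2 * (n + 1) * (2 / g) ^ n * (2 * V * q) * s := by gcongr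
    _ = _ := by rw [hq]; ring

/-- Away from the equator, lines meet a thin spherical shell in short sets. -/
lemma shell_fiber {k s a R : ℝ} (hk : 0 < k) (hs : 0 ≤ s) (ha : 0 ≤ a) (haR : a + s ≤ R) (x : Vec n) :
    volume {t : ℝ | k ≤ |t| ∧ |Nq (x, t) - a| < s} ≤ ENNReal.ofReal (8 * s * R / k) := by
  set W := {t : ℝ | k ≤ |t| ∧ |Nq (x, t) - a| < s}
  rcases W.eq_empty_or_nonempty with h | ⟨t₀, ht₀⟩
  · rw [h, measure_empty]; exact zero_le
  set l := 2 * s * R / k with hl'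
  have hR : 0 ≤ R := by linarith
  have hl0 : 0 ≤ l := by positivity
  have hsub : W ⊆ Icc (|t₀| - l) (|t₀| + l) ∪ Icc (-|t₀| - l) (-|t₀| + l) := fun t ht => by
    obtain ⟨h1, h2⟩ : k ≤ |t| ∧ |Nq (x, t) - a| < s := ht
    obtain ⟨h3, h4⟩ : k ≤ |t₀| ∧ |Nq (x, t₀) - a| < s := ht₀
    have e1 := Nq_sq (x, t)
    have e2 := Nq_sq (x, t₀)
    simp only at e1 e2
    obtain ⟨h5, h6⟩ := abs_lt.1 h2
    obtain ⟨h7, h8⟩ := abs_lt.1 h4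
    have h9 : |Nq (x, t) ^ 2 - Nq (x, t₀) ^ 2| ≤ 2 * s * (2 * R) := by
      rw [sq_sub_sq, abs_mul, mul_comm]
      refine mul_le_mul (abs_le.2 ⟨by linarith, by linarith⟩) ?_ (abs_nonneg _) (by linarith)
      rw [abs_of_nonneg (add_nonneg (Nq_nonneg _) (Nq_nonneg _))]; linarith
    have h10 : |Nq (x, t) ^ 2 - Nq (x, t₀) ^ 2| = |(|t| - |t₀|)| * (|t| + |t₀|) := by
      rw [show Nq (x, t) ^ 2 - Nq (x, t₀) ^ 2 = (|t| - |t₀|) * (|t| + |t₀|) by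
        rw [e1, e2]; ring_nf; rw [sq_abs, sq_abs], abs_mul,
        abs_of_nonneg (add_nonneg (abs_nonneg t) (abs_nonneg t₀))]
    have h11 : |(|t| - |t₀|)| ≤ l := by
      rw [hl', le_div_iff₀ hk]
      have : |(|t| - |t₀|)| * (2 * k) ≤ |(|t| - |t₀|)| * (|t| + |t₀|) :=
        mul_le_mul_of_nonneg_left (by linarith) (abs_nonneg _)
      linarith
    obtain ⟨h12, h13⟩ := abs_le.1 h11
    rcases le_total 0 t with h0 | h0
    · rw [abs_of_nonneg h0] at h12 h13
      exact Or.inl ⟨by linarith, by linarith⟩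
    · rw [abs_of_nonpos h0] at h12 h13
      exact Or.inr ⟨by linarith, by linarith⟩
  refine (measure_mono hsub).trans ((measure_union_le _ _).trans ?_)
  rw [Real.volume_Icc, Real.volume_Icc, ← ofReal_add (by linarith) (by linarith)]
  refine ofReal_le_ofReal (le_of_eq ?_)
  rw [hl']; ring

lemma lintegral_shift_fiber {A A' : Set (Vec n × ℝ)} (hA : MeasurableSet A) (hA' : MeasurableSet A')
    {w : ℝ} (hw : 0 < w) :
    ∫⁻ s : ℝ, volume {p : Vec n × ℝ | p ∈ A ∧ p + (0, s * w) ∈ A'}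
      = ENNReal.ofReal w⁻¹ * ∫⁻ x : Vec n, volume (Prod.mk x ⁻¹' A) * volume (Prod.mk x ⁻¹' A') := by
  have hZ : MeasurableSet {z : ℝ × (Vec n × ℝ) | z.2 ∈ A ∧ z.2 + (0, z.1 * w) ∈ A'} := by
    refine (measurable_snd hA).inter ?_
    have : Measurable fun z : ℝ × (Vec n × ℝ) => z.2 + ((0 : Vec n), z.1 * w) := by fun_prop
    exact this hA'
  have h1 := prod_apply (μ := (volume : Measure ℝ)) (ν := (volume : Measure (Vec n × ℝ))) hZ
  rw [prod_apply_symm hZ] at h1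
  have h2 : ∀ p : Vec n × ℝ, volume ((fun s : ℝ => (s, p)) ⁻¹'
      {z : ℝ × (Vec n × ℝ) | z.2 ∈ A ∧ z.2 + (0, z.1 * w) ∈ A'})
      = A.indicator (fun p => ENNReal.ofReal w⁻¹ * volume (Prod.mk p.1 ⁻¹' A')) p := fun p => by
    by_cases hp : p ∈ A
    · rw [indicator_of_mem hp]
      have e : (fun s : ℝ => (s, p)) ⁻¹' {z : ℝ × (Vec n × ℝ) | z.2 ∈ A ∧ z.2 + (0, z.1 * w) ∈ A'}
          = (fun s => s * w) ⁻¹' ((fun t => p.2 + t) ⁻¹' (Prod.mk p.1 ⁻¹' A')) := by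
        ext s
        have : p + ((0 : Vec n), s * w) = (p.1, p.2 + s * w) := by ext <;> simp
        simp [*]
      rw [e, Real.volume_preimage_mul_right hw.ne', measure_preimage_add,
        abs_of_pos (inv_pos.2 hw)]
    · simp [*]
  have hm : Measurable fun x : Vec n => volume (Prod.mk x ⁻¹' A') := measurable_measure_prodMk_left hA'
  have hm2 : Measurable fun x : Vec n => volume (Prod.mk x ⁻¹' A) := measurable_measure_prodMk_left hA
  have hm3 : Measurable (A.indicator fun p : Vec n × ℝ => ENNReal.ofReal w⁻¹ * volume (Prod.mk p.1 ⁻¹' A')) :=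
    ((hm.comp measurable_fst).const_mul _).indicator hA
  have hm4 : Measurable fun x : Vec n => volume (Prod.mk x ⁻¹' A) * volume (Prod.mk x ⁻¹' A') :=
    hm2.mul hm
  refine h1.symm.trans ?_
  simp only [h2]
  rw [volume_eq_prod, lintegral_prod _ hm3.aemeasurable, ← lintegral_const_mul _ hm4]
  refine lintegral_congr fun x => ?_
  have e : (fun t : ℝ => A.indicator (fun p => ENNReal.ofReal w⁻¹ * volume (Prod.mk p.1 ⁻¹' A')) (x, t))
      = (Prod.mk x ⁻¹' A).indicator fun _ => ENNReal.ofReal w⁻¹ * volume (Prod.mk x ⁻¹' A') := rfl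
  rw [e, lintegral_indicator (measurable_prodMk_left hA), setLIntegral_const]; ring

/-- Averaging the shift formula over dilations: if the averaged overlap of `G` along every
direction is at most `h`, and vanishes for shifts longer than `R`, then `G` is small. -/
lemma shift_average {m : ℕ} {G : Set (Vec m × Vec m)} (hG : MeasurableSet G) {R : ℝ} {h : ℝ≥0∞}
    (H : ∀ v : Vec m, ∫⁻ s in Icc (1 : ℝ) 2, volume {a : Vec m | (a, a + s • v) ∈ G} ≤ h)
    (H0 : ∀ v : Vec m, R < ‖v‖ →
      ∫⁻ s in Icc (1 : ℝ) 2, volume {a : Vec m | (a, a + s • v) ∈ G} = 0) :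
    volume G ≤ ENNReal.ofReal (2 ^ m) * (h * volume (cb m R)) := by
  have mp : MeasurePreserving (fun q : Vec m × Vec m => (q.2, q.2 + q.1)) :=
    (measurePreserving_prod_add volume volume).comp measurePreserving_swap
  have hm := mp.measurable hG
  set N : Vec m → ℝ≥0∞ := fun v => volume {a : Vec m | (a, a + v) ∈ G} with hN
  have hNm : Measurable N := measurable_measure_prodMk_left (ν := (volume : Measure (Vec m))) hm
  have hNi : ∫⁻ v, N v = volume G := by
    rw [← mp.measure_preimage hG.nullMeasurableSet, volume_eq_prod, prod_apply hm]; rfl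
  have hsc : ∀ s ∈ Icc (1 : ℝ) 2, ENNReal.ofReal (2 ^ m)⁻¹ * volume G ≤ ∫⁻ v, N (s • v) := fun s hs => by
    have hs0 : 0 < s := by linarith [hs.1]
    have hms : Measurable fun v : Vec m => s • v := by fun_prop
    have e := lintegral_map (μ := (volume : Measure (Vec m))) hNm hms
    rw [← e, show map (fun v : Vec m => s • v) volume = _ from
      map_addHaar_smul volume hs0.ne', lintegral_smul_measure, hNi]
    rw [smul_eq_mul]
    gcongr
    rw [abs_of_pos (by positivity)]
    simp only [finrank_euclideanSpace, Fintype.card_fin]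
    have := hs.2
    gcongr
  have hmeas2 : Measurable (Function.uncurry fun (v : Vec m) (s : ℝ) => N (s • v)) := by
    unfold Function.uncurry; fun_prop
  have key : ENNReal.ofReal (2 ^ m)⁻¹ * volume G ≤ h * volume (cb m R) := by
    calc ENNReal.ofReal (2 ^ m)⁻¹ * volume G
        = ∫⁻ _ in Icc (1 : ℝ) 2, ENNReal.ofReal (2 ^ m)⁻¹ * volume G := by norm_num
      _ ≤ ∫⁻ s in Icc (1 : ℝ) 2, ∫⁻ v, N (s • v) := setLIntegral_mono' measurableSet_Icc hsc
      _ = ∫⁻ v, ∫⁻ s in Icc (1 : ℝ) 2, N (s • v) := (lintegral_lintegral_swap hmeas2.aemeasurable).symm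
      _ ≤ ∫⁻ v, (cb m R).indicator (fun _ => h) v := by
          refine lintegral_mono fun v => ?_
          by_cases hv : ‖v‖ ≤ R
          · simp [*]
          · rw [indicator_of_notMem (by simpa using hv)]; exact (H0 v (not_le.1 hv)).le
      _ = _ := by rw [lintegral_indicator_const isClosed_closedBall.measurableSet]
  calc volume G = ENNReal.ofReal (2 ^ m) * (ENNReal.ofReal (2 ^ m)⁻¹ * volume G) := by
        rw [← mul_assoc, ← ofReal_mul (by positivity), mul_inv_cancel₀ (by positivity)]; simp
    _ ≤ _ := by gcongr

/-- Along lines of a fixed direction, well separated points of a thin spherical shell lie away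
from the equator, where the fibres of the shell are short. -/
lemma overlap_line {A A' : Set (Vec (n+1))} (hA : MeasurableSet A) (hA' : MeasurableSet A')
    {a κ σ R : ℝ} (ha : 0 ≤ a) (hκ : 0 < κ) (hσ : 0 ≤ σ) (hR : a + σ ≤ R) (hκR : 8 * R * σ ≤ κ ^ 2)
    (h1 : ∀ x ∈ A, |‖x‖ - a| < σ) (h2 : ∀ x ∈ A', |‖x‖ - a| < σ) {L : Frame n} {v : Vec (n+1)}
    (hv : κ / 2 ≤ ‖v‖) (hL : fr L v = (0, ‖v‖)) :
    ∫⁻ s in Icc (1 : ℝ) 2, volume {x | (x, x + s • v) ∈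
        {q : Vec (n+1) × Vec (n+1) | (q.1 ∈ A ∧ q.2 ∈ A') ∧ κ ≤ ‖q.1 - q.2‖}}
      ≤ ENNReal.ofReal (2 / κ) * (ENNReal.ofReal (32 * σ * R / κ) *
        ∫⁻ x, min (volume (Prod.mk x ⁻¹' inF L A)) (volume (Prod.mk x ⁻¹' inF L A'))) := by
  have hw : 0 < ‖v‖ := by linarith
  have hPm : ∀ {B : Set (Vec (n+1))}, MeasurableSet B →
      MeasurableSet (inF L B ∩ {p : Vec n × ℝ | κ / 4 ≤ |p.2|}) := fun hB =>
    (measurableSet_inF L hB).inter (measurableSet_le measurable_const (by fun_prop))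
  set P := inF L A ∩ {p : Vec n × ℝ | κ / 4 ≤ |p.2|}
  set P' := inF L A' ∩ {p : Vec n × ℝ | κ / 4 ≤ |p.2|}
  have hfib : ∀ {B : Set (Vec (n+1))}, (∀ x ∈ B, |‖x‖ - a| < σ) → ∀ x : Vec n,
      volume (Prod.mk x ⁻¹' (inF L B ∩ {p : Vec n × ℝ | κ / 4 ≤ |p.2|}))
        ≤ ENNReal.ofReal (32 * σ * R / κ) := fun hB x => by
    refine (measure_mono fun t ht => ?_).trans ((shell_fiber (k := κ / 4) (by linarith) hσ ha hR x).trans_eq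
      (by congr 1; field_simp; ring))
    have h3 := hB _ ht.1
    rw [norm_frm_symm] at h3
    exact ⟨ht.2, h3⟩
  have hsub : ∀ s ∈ Icc (1 : ℝ) 2, volume {x | (x, x + s • v) ∈
        {q : Vec (n+1) × Vec (n+1) | (q.1 ∈ A ∧ q.2 ∈ A') ∧ κ ≤ ‖q.1 - q.2‖}}
      ≤ volume {p : Vec n × ℝ | p ∈ P ∧ p + (0, s * ‖v‖) ∈ P'} := fun s hs => by
    rw [← (mp_frm L).measure_preimage_equiv]
    refine measure_mono fun x hx => ?_
    obtain ⟨⟨h3, h4⟩, h5⟩ : (x ∈ A ∧ x + s • v ∈ A') ∧ κ ≤ ‖x - (x + s • v)‖ := hx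
    have e : frm L x + (0, s * ‖v‖) = frm L (x + s • v) := by
      rw [frm_add, frm_apply L (s • v), map_smul, hL]; simp
    have e1 := norm_fr L x
    have e2 := norm_fr L (x + s • v)
    rw [← frm_apply, ← e] at e2
    rw [← frm_apply] at e1
    simp only [Prod.fst_add, Prod.snd_add, add_zero] at e2
    rw [show x - (x + s • v) = -(s • v) by abel, norm_neg, norm_smul,
      Real.norm_of_nonneg (by linarith [hs.1])] at h5
    set t := (frm L x).2
    set w := s * ‖v‖
    obtain ⟨a1, a2⟩ := abs_lt.1 (h1 _ h3)
    obtain ⟨a3, a4⟩ := abs_lt.1 (h2 _ h4)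
    have hn1 := norm_nonneg x
    have hn2 := norm_nonneg (x + s • v)
    have h6 : |w * (2 * t + w)| ≤ κ ^ 2 / 2 := by
      have e3 : w * (2 * t + w) = (‖x + s • v‖ - ‖x‖) * (‖x + s • v‖ + ‖x‖) := by linarith
      rw [e3, abs_mul, abs_of_nonneg (add_nonneg hn2 hn1)]
      have : |‖x + s • v‖ - ‖x‖| ≤ 2 * σ := abs_le.2 ⟨by linarith, by linarith⟩
      calc _ ≤ 2 * σ * (2 * R) := mul_le_mul this (by linarith) (by linarith) (by linarith)
        _ ≤ _ := by linarith
    have h7 : |2 * t + w| ≤ w / 2 := by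
      rw [abs_mul, abs_of_pos (by linarith)] at h6
      nlinarith
    obtain ⟨b1, b2⟩ := abs_le.1 h7
    refine ⟨⟨by simpa [inF] using h3, ?_⟩, ⟨by rw [e]; simpa [inF] using h4, ?_⟩⟩
    · change κ / 4 ≤ |t|
      exact le_abs.2 (Or.inr (by linarith))
    · change κ / 4 ≤ |t + w|
      exact le_abs.2 (Or.inl (by linarith))
  calc _ ≤ ∫⁻ s in Icc (1 : ℝ) 2, volume {p : Vec n × ℝ | p ∈ P ∧ p + (0, s * ‖v‖) ∈ P'} :=
        setLIntegral_mono' measurableSet_Icc hsub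
    _ ≤ ∫⁻ s : ℝ, volume {p : Vec n × ℝ | p ∈ P ∧ p + (0, s * ‖v‖) ∈ P'} := setLIntegral_le_lintegral _ _
    _ = ENNReal.ofReal ‖v‖⁻¹ * ∫⁻ x : Vec n, volume (Prod.mk x ⁻¹' P) * volume (Prod.mk x ⁻¹' P') :=
        lintegral_shift_fiber (hPm hA) (hPm hA') hw
    _ ≤ _ := by
        rw [← lintegral_const_mul' (ENNReal.ofReal (32 * σ * R / κ)) _ ofReal_ne_top]
        refine mul_le_mul' (ofReal_le_ofReal ?_) (lintegral_mono fun x => ?_)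
        · rw [← inv_div]; exact inv_anti₀ (by linarith) hv
        · rw [← max_mul_min]
          exact mul_le_mul' (max_le (hfib h1 x) (hfib h2 x)) (min_le_min
            (measure_mono (preimage_mono inter_subset_left)) (measure_mono (preimage_mono inter_subset_left)))

lemma lintegral_min_fiber {A A' : Set (Vec n × ℝ)} (hA : MeasurableSet A) (h : volume A ≠ ⊤)
    (hA' : MeasurableSet A') (h' : volume A' ≠ ⊤) :
    ∫⁻ x : Vec n, min (volume (Prod.mk x ⁻¹' A)) (volume (Prod.mk x ⁻¹' A'))
      = ENNReal.ofReal (∫ x, min (len A x) (len A' x)) := by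
  have hi : Integrable fun x => min (len A x) (len A' x) := (integrable_len hA h).inf (integrable_len hA' h')
  rw [ofReal_integral_eq_lintegral_ofReal hi (.of_forall fun x => le_min (len_nonneg _ _) (len_nonneg _ _))]
  refine lintegral_congr_ae ?_
  filter_upwards [ae_fiber_ne_top hA h, ae_fiber_ne_top hA' h'] with x h1 h2
  rw [ofReal_min, len, len, ofReal_measureReal h1, ofReal_measureReal h2]

/-- If `E Δ B` is concentrated near the boundary of the ball `B`, then in some direction the
symmetrisation moves `E` towards `B` by an amount proportional to their distance. -/
lemma contraction (hn : 1 ≤ n) {g K : ℝ} (hg : 0 < g) (hK : 0 < K) : ∃ η₀ > 0, ∃ c > 0,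
    ∀ (E : Set (Vec (n+1))) (a D : ℝ), MeasurableSet E → volume E ≠ ⊤ →
    volume.real E = volume.real (cb (n+1) a) → g ≤ a → a ≤ 1 / g →
    0 < D → D ≤ η₀ → D / 3 ≤ sd E (cb (n+1) a) →
    (∀ s, 0 ≤ s → s ≤ 1 → s * volume.real (farS E a s) ≤ K * D ^ 2) →
    ∃ L : Frame n, c * D ≤ ∫ x, min (len (inF L E \ Bq n a) x) (len (Bq n a \ inF L E) x) := by
  obtain ⟨C₁, hC₁, hcap⟩ := cap_bound (n := n) hn hg
  set M := 12 * K with hM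
  have hM0 : 0 < M := by positivity
  set κ := min (g / 2) (1 / (24 * C₁ * M))
  have hκ0 : 0 < κ := lt_min (by linarith) (by positivity)
  set R := 1 / g + 1
  have hR0 : 0 < R := by positivity
  set V := volume.real (cb (n+1) (2 * R)) with hV
  have hV0 : 0 < V := closedBall_pos _ (by linarith)
  refine ⟨min (1 / M) (min (g / 2 / M) (κ ^ 2 / (8 * R) / M)), by positivity,
    κ ^ 2 / (2 * 288 * 2 ^ (n + 1) * 64 * M * R * V), by positivity,
    fun E a D hE hEf hvol hga hag hD hDη hsd hfar => ?_⟩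
  set c := κ ^ 2 / (2 * 288 * 2 ^ (n + 1) * 64 * M * R * V) with hc
  by_contra hcon
  push Not at hcon
  have q1 : M * D ≤ 1 := by
    have := hDη.trans (min_le_left _ _); rw [le_div_iff₀ hM0] at this; linarith
  have q2 : M * D ≤ g / 2 := by
    have := (hDη.trans (min_le_right _ _)).trans (min_le_left _ _)
    rw [le_div_iff₀ hM0] at this; linarith
  have q3 : 8 * R * (M * D) ≤ κ ^ 2 := by
    have := (hDη.trans (min_le_right _ _)).trans (min_le_right _ _)
    rw [le_div_iff₀ hM0, le_div_iff₀ (by positivity)] at this; linarith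
  clear hDη
  set σ := M * D with hσ
  have hσ0 : 0 < σ := by positivity
  have ha0 : 0 ≤ a := by linarith
  set B := cb (n+1) a with hB
  have mB : MeasurableSet B := isClosed_closedBall.measurableSet
  have fB : volume B ≠ ⊤ := measure_closedBall_lt_top.ne
  obtain ⟨v1, v2⟩ := volume_sdiff_eq hE hEf mB fB hvol
  have mF := measurableSet_farS hE a σ
  have hF : volume.real (farS E a σ) ≤ D / 12 := by
    have := hfar σ hσ0.le q1
    refine le_of_mul_le_mul_left (this.trans_eq ?_) hσ0
    rw [hσ, hM]; ring
  have mA := hE.diff mB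
  have mA' := mB.diff hE
  have fA : volume (E \ B) ≠ ⊤ := measure_ne_top_of_subset sdiff_subset hEf
  have fA' : volume (B \ E) ≠ ⊤ := measure_ne_top_of_subset sdiff_subset fB
  set A := (E \ B) \ farS E a σ
  set A' := (B \ E) \ farS E a σ
  have fA1 : volume A ≠ ⊤ := measure_ne_top_of_subset sdiff_subset fA
  have fA1' : volume A' ≠ ⊤ := measure_ne_top_of_subset sdiff_subset fA'
  have hge : ∀ {X Y : Set (Vec (n+1))}, volume X ≠ ⊤ → volume Y ≠ ⊤ →
      volume.real X - volume.real Y ≤ volume.real (X \ Y) := fun {X Y} hX hY => by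
    have := measureReal_mono (μ := volume) (subset_sdiff_union X Y)
      ((measure_union_lt_top (lt_top_iff_ne_top.2 (measure_ne_top_of_subset sdiff_subset hX))
        (lt_top_iff_ne_top.2 hY)).ne)
    linarith [measureReal_union_le (μ := volume) (X \ Y) Y]
  have lA : D / 12 ≤ volume.real A := by
    have := hge fA (farS_fin hEf a σ); linarith
  have lA' : D / 12 ≤ volume.real A' := by
    have := hge fA' (farS_fin hEf a σ); linarith
  have n1 : ∀ x ∈ A, |‖x‖ - a| < σ := fun x hx => by
    by_contra h; exact hx.2 ⟨Or.inl hx.1, not_lt.1 h⟩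
  have n2 : ∀ x ∈ A', |‖x‖ - a| < σ := fun x hx => by
    by_contra h; exact hx.2 ⟨Or.inr hx.1, not_lt.1 h⟩
  set G := {q : Vec (n+1) × Vec (n+1) | (q.1 ∈ A ∧ q.2 ∈ A') ∧ κ ≤ ‖q.1 - q.2‖}
  have mG : MeasurableSet G := ((measurable_fst (mA.diff mF)).inter (measurable_snd (mA'.diff mF))).inter
    (measurableSet_le measurable_const (measurable_fst.sub measurable_snd).norm)
  have hGlow : ENNReal.ofReal (D / 24 * (D / 12)) ≤ volume G := by
    rw [volume_eq_prod, prod_apply mG]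
    calc ENNReal.ofReal (D / 24 * (D / 12)) ≤ ENNReal.ofReal (D / 24) * volume A := by
          rw [ofReal_mul (by positivity), ← ofReal_measureReal fA1]; gcongr
      _ = ∫⁻ x, A.indicator (fun _ => ENNReal.ofReal (D / 24)) x :=
          (lintegral_indicator_const (mA.diff mF) _).symm
      _ ≤ _ := by
          refine lintegral_mono fun x => ?_
          by_cases hx : x ∈ A
          · rw [indicator_of_mem hx]
            have hsub : A' \ {y | ‖x - y‖ < κ ∧ |‖y‖ - a| < σ} ⊆ Prod.mk x ⁻¹' G := fun y hy =>
              ⟨⟨hx, hy.1⟩, by by_contra h; exact hy.2 ⟨not_le.1 h, n2 y hy.1⟩⟩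
            refine le_trans ?_ (measure_mono hsub)
            have f1 : volume {y : Vec (n+1) | ‖x - y‖ < κ ∧ |‖y‖ - a| < σ} ≠ ⊤ :=
              measure_ne_top_of_subset (s := ball x κ) (fun y hy => by
                rw [mem_ball, dist_comm, dist_eq_norm]; exact hy.1) measure_ball_lt_top.ne
            have e1 := hge fA1' f1
            have e2 := hcap x a σ κ hga hag hσ0.le (by linarith) hκ0 (by
              rw [div_le_one hg]; linarith [min_le_left (g / 2) (1 / (24 * C₁ * M))])
            have e3 : C₁ * κ * σ ≤ D / 24 := by
              have : κ * (24 * C₁ * M) ≤ 1 := by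
                rw [← le_div_iff₀ (by positivity)]; exact min_le_right _ _
              rw [hσ]; nlinarith
            rw [← ofReal_measureReal (measure_ne_top_of_subset sdiff_subset fA1')]
            exact ofReal_le_ofReal (by linarith)
          · rw [indicator_of_notMem hx]; exact zero_le
  have hup := shift_average mG (R := 2 * R)
    (h := ENNReal.ofReal (2 / κ) * (ENNReal.ofReal (32 * σ * R / κ) * ENNReal.ofReal (c * D)))
    (fun v => ?_) (fun v hv => ?_)
  · rw [← ofReal_measureReal (measure_closedBall_lt_top.ne), ← ofReal_mul (by positivity),
      ← ofReal_mul (by positivity), ← ofReal_mul (by positivity),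
      ← ofReal_mul (by positivity)] at hup
    have h1 := (ofReal_le_ofReal_iff (by positivity)).1 (hGlow.trans hup)
    have e : 2 ^ (n + 1) * (2 / κ * (32 * σ * R / κ * (c * D)) * V) = D ^ 2 / 576 := by
      rw [hc, hσ]; field_simp; norm_num
    rw [← hV, e] at h1
    nlinarith [sq_pos_of_pos hD]
  · rcases lt_or_ge ‖v‖ (κ / 2) with hv | hv
    · have : ∀ s ∈ Icc (1 : ℝ) 2, volume {x | (x, x + s • v) ∈ G} = 0 := fun s hs => by
        rw [show {x | (x, x + s • v) ∈ G} = ∅ from ?_, measure_empty]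
        refine eq_empty_of_forall_notMem fun x hx => ?_
        have h5 : κ ≤ ‖x - (x + s • v)‖ := hx.2
        rw [show x - (x + s • v) = -(s • v) by abel, norm_neg, norm_smul,
          Real.norm_of_nonneg (by linarith [hs.1])] at h5
        nlinarith [hs.2, norm_nonneg v]
      rw [setLIntegral_congr_fun measurableSet_Icc this, lintegral_zero]; exact zero_le
    · obtain ⟨L, hL⟩ := exists_frame_vec' v
      refine (overlap_line (mA.diff mF) (mA'.diff mF) ha0 hκ0 hσ0.le (by linarith) q3 n1 n2 hv hL).trans ?_
      gcongr
      calc _ ≤ ∫⁻ x, min (volume (Prod.mk x ⁻¹' (inF L (E \ B)))) (volume (Prod.mk x ⁻¹' (inF L (B \ E)))) :=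
            lintegral_mono fun x => min_le_min (measure_mono fun t ht => ht.1) (measure_mono fun t ht => ht.1)
        _ = ENNReal.ofReal (∫ x, min (len (inF L (E \ B)) x) (len (inF L (B \ E)) x)) :=
            lintegral_min_fiber (measurableSet_inF L mA) (by rwa [volume_inF])
              (measurableSet_inF L mA') (by rwa [volume_inF])
        _ ≤ _ := by
            rw [inF_sdiff, inF_sdiff, hB, inF_ball L ha0]
            exact ofReal_le_ofReal (hcon L).le
  · have : ∀ s ∈ Icc (1 : ℝ) 2, volume {x | (x, x + s • v) ∈ G} = 0 := fun s hs => by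
      rw [show {x | (x, x + s • v) ∈ G} = ∅ from ?_, measure_empty]
      refine eq_empty_of_forall_notMem fun x hx => ?_
      have h1 := (abs_lt.1 (n1 _ hx.1.1)).2
      have h2 := (abs_lt.1 (n2 _ hx.1.2)).2
      have h3 := norm_sub_le (x + s • v) x
      rw [add_sub_cancel_left, norm_smul, Real.norm_of_nonneg (by linarith [hs.1])] at h3
      simp only at h1 h2
      nlinarith [hs.1, norm_nonneg v]
    rw [setLIntegral_congr_fun measurableSet_Icc this, lintegral_zero]

/-! ### The affine symmetry group and the local theorem -/

/-- The affine map `y ↦ ψ y + w` as a measurable equivalence. -/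
def af {m : ℕ} (ψ : Vec m ≃ₗ[ℝ] Vec m) (w : Vec m) : Vec m ≃ᵐ Vec m :=
  ψ.toContinuousLinearEquiv.toHomeomorph.toMeasurableEquiv.trans (MeasurableEquiv.addRight w)

lemma af_apply {m : ℕ} (ψ : Vec m ≃ₗ[ℝ] Vec m) (w y : Vec m) : af ψ w y = ψ y + w := rfl

/-- The symmetries of the trilinear form `T`: a common measure-preserving linear part and three
translations summing to zero. -/
structure Mov {m : ℕ} (ψ : Vec m ≃ₗ[ℝ] Vec m) (v : Fin 3 → Vec m) : Prop where
  mp : MeasurePreserving ψ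
  sum : v 0 + v 1 + v 2 = 0

/-- The action of a symmetry on triples of sets, by preimage. -/
def mv {m : ℕ} (ψ : Vec m ≃ₗ[ℝ] Vec m) (v : Fin 3 → Vec m) (E : Tri (Vec m)) :
    Tri (Vec m) := fun j => af ψ (v j) ⁻¹' E j

section moves
variable {m : ℕ} {ψ : Vec m ≃ₗ[ℝ] Vec m} {v : Fin 3 → Vec m}

lemma mp_af (h : MeasurePreserving ψ) (w : Vec m) : MeasurePreserving (af ψ w) :=
  (measurePreserving_add_right volume w).comp h

lemma mov_refl : Mov (LinearEquiv.refl ℝ (Vec m)) 0 := ⟨MeasurePreserving.id _, by simp⟩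

lemma mv_refl (E : Tri (Vec m)) : mv (LinearEquiv.refl ℝ (Vec m)) 0 E = E := by
  ext j x; simp [mv, af_apply]

lemma Mov.trans {φ : Vec m ≃ₗ[ℝ] Vec m} {w : Fin 3 → Vec m} (h : Mov ψ v) (h' : Mov φ w) :
    Mov (φ.trans ψ) (fun j => ψ (w j) + v j) :=
  ⟨h.mp.comp h'.mp, by
    rw [show ψ (w 0) + v 0 + (ψ (w 1) + v 1) + (ψ (w 2) + v 2)
      = ψ (w 0 + w 1 + w 2) + (v 0 + v 1 + v 2) by simp only [map_add]; abel, h.sum, h'.sum]; simp⟩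

lemma mv_mv {φ : Vec m ≃ₗ[ℝ] Vec m} {w : Fin 3 → Vec m} (E : Tri (Vec m)) :
    mv φ w (mv ψ v E) = mv (φ.trans ψ) (fun j => ψ (w j) + v j) E := by
  ext j x
  simp only [mv, mem_preimage, af_apply, map_add, LinearEquiv.trans_apply, add_assoc]

lemma Fm_mv (h : Mov ψ v) {E : Tri (Vec m)} (hE : Fm E) : Fm (mv ψ v E) := fun j =>
  ⟨(af ψ (v j)).measurable (hE j).1, by
    rw [mv, (mp_af h.mp (v j)).measure_preimage_equiv]; exact (hE j).2⟩

lemma volume_mv (h : Mov ψ v) (E : Tri (Vec m)) (j : Fin 3) :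
    volume.real (mv ψ v E j) = volume.real (E j) := volume_preimage _ (mp_af h.mp (v j)) _

lemma D3_mv (h : Mov ψ v) (E F : Tri (Vec m)) : D3 (mv ψ v E) (mv ψ v F) = D3 E F :=
  Finset.sum_congr rfl fun j _ => sd_preimage _ (mp_af h.mp (v j)) _ _

lemma T_mv (h : Mov ψ v) (E : Tri (Vec m)) : T (mv ψ v E) = T E := by
  have hp : MeasurePreserving (MeasurableEquiv.prodCongr (af ψ (v 0)) (af ψ (v 1))) :=
    (mp_af h.mp (v 0)).prod (mp_af h.mp (v 1))
  have := hp.integral_comp' (fun p => one (E 0) p.1 * one (E 1) p.2 * one (E 2) (-(p.1 + p.2)))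
  unfold T tri
  rw [← this]
  refine integral_congr_ae (.of_forall fun p => ?_)
  have e : -(af ψ (v 0) p.1 + af ψ (v 1) p.2) = af ψ (v 2) (-(p.1 + p.2)) := by
    have := eq_neg_of_add_eq_zero_right h.sum
    simp only [af_apply, map_neg, map_add, this]; abel
  change _ = one (E 0) (af ψ (v 0) p.1) * one (E 1) (af ψ (v 1) p.2) *
    one (E 2) (-(af ψ (v 0) p.1 + af ψ (v 1) p.2))
  rw [e]; rfl

/-- The distance from a triple to the orbit of a triple of centred balls. -/
def dst (E : Tri (Vec m)) (r : Fin 3 → ℝ) : ℝ :=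
  sInf {D | ∃ ψ v, Mov ψ v ∧ D = D3 (mv ψ v E) (ball3 m r)}

lemma dst_le (h : Mov ψ v) (E : Tri (Vec m)) (r : Fin 3 → ℝ) :
    dst E r ≤ D3 (mv ψ v E) (ball3 m r) :=
  csInf_le ⟨0, by rintro _ ⟨_, _, _, rfl⟩; exact D3_nonneg _ _⟩ ⟨ψ, v, h, rfl⟩

lemma dst_le_D3 (E : Tri (Vec m)) (r : Fin 3 → ℝ) : dst E r ≤ D3 E (ball3 m r) := by
  simpa only [mv_refl] using dst_le mov_refl E r

lemma dst_nonneg (E : Tri (Vec m)) (r : Fin 3 → ℝ) : 0 ≤ dst E r :=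
  Real.sInf_nonneg (by rintro _ ⟨_, _, _, rfl⟩; exact D3_nonneg _ _)

lemma exists_near (E : Tri (Vec m)) (r : Fin 3 → ℝ) {D : ℝ} (hD : dst E r < D) :
    ∃ ψ v, Mov ψ v ∧ D3 (mv ψ v E) (ball3 m r) < D := by
  have hne : {D | ∃ ψ v, Mov ψ v ∧ D = D3 (mv ψ v E) (ball3 m r)}.Nonempty := ⟨_, _, _, mov_refl, rfl⟩
  obtain ⟨_, ⟨ψ, v, h, rfl⟩, h2⟩ := exists_lt_of_csInf_lt hne hD
  exact ⟨ψ, v, h, h2⟩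

lemma D3_triangle {G : Type*} [AddCommGroup G] [MeasureSpace G] {A B C : Tri G}
    (hA : Fm A) (hB : Fm B) (hC : Fm C) : D3 A C ≤ D3 A B + D3 B C := by
  unfold D3
  rw [← Finset.sum_add_distrib]
  exact Finset.sum_le_sum fun j _ => sd_triangle (hA j).2 (hB j).2 (hC j).2

lemma dst_lip {E F : Tri (Vec m)} (hE : Fm E) (hF : Fm F) (r : Fin 3 → ℝ) :
    dst E r ≤ dst F r + D3 E F := by
  refine le_of_forall_pos_lt_add fun ε hε => ?_
  obtain ⟨ψ, v, h, h2⟩ := exists_near F r (lt_add_of_pos_right _ hε)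
  have h3 := D3_triangle (Fm_mv h hE) (Fm_mv h hF) (Fm_ball3 r)
  rw [D3_mv h] at h3
  linarith [dst_le h E r]

lemma T_le_of_D3 {E F : Tri (Vec m)} (hE : Fm E) (hF : Fm F) {M : ℝ}
    (h1 : ∀ j, volume.real (E j) ≤ M) (h2 : ∀ j, volume.real (F j) ≤ M) : T E ≤ T F + M * D3 E F := by
  linarith [(abs_le.1 (T_lipschitz hE hF h1 h2)).2]

end moves

/-- A shear in a frame is a symmetry. -/
lemma exists_shear_mov (L : Frame n) (a : Vec n) {b : Fin 3 → ℝ} (hb : b 0 + b 1 + b 2 = 0)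
    (E : Tri (Vec (n+1))) : ∃ ψ v, Mov ψ v ∧
      mv ψ v E = fun j => frm L ⁻¹' (sh a (b j) ⁻¹' inF L (E j)) := by
  let shl : (Vec n × ℝ) ≃ₗ[ℝ] (Vec n × ℝ) :=
    { toFun := sh a 0
      invFun := sh (-a) 0
      map_add' := fun p q => by ext <;> simp [sh, inner_add_right]; ring
      map_smul' := fun c p => by ext <;> simp [sh, inner_smul_right]; ring
      left_inv := fun p => by ext <;> simp [sh]
      right_inv := fun p => by ext <;> simp [sh] }
  refine ⟨((fr L).toLinearEquiv.trans shl).trans (fr L).symm.toLinearEquiv,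
    fun j => (fr L).symm (0, b j), ⟨(mp_frm_symm L).comp ((mp_sh a 0).comp (mp_frm L)), ?_⟩, ?_⟩
  · rw [← map_add, ← map_add]
    simp [hb]
  · funext j
    ext x
    have e : (fr L).symm (sh a 0 (fr L x)) + (fr L).symm (0, b j) = (fr L).symm (sh a (b j) (fr L x)) := by
      rw [← map_add]; congr 1; ext <;> simp [sh, add_assoc]
    change (fr L).symm (sh a 0 (fr L x)) + (fr L).symm (0, b j) ∈ E j ↔
      (fr L).symm (sh a (b j) (fr L x)) ∈ E j
    rw [e]

/-- `contraction`, summed over the triple and including dimension one, where a single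
symmetrisation turns each set into a ball. -/
lemma contract3 {g K : ℝ} (hg : 0 < g) (hK : 0 < K) : ∃ η₀ > 0, ∃ c > 0, c ≤ 1 ∧
    ∀ (r : Fin 3 → ℝ) (E : Tri (Vec (n+1))) (D : ℝ), Adm g r → Fm E →
    (∀ j, volume.real (E j) = volume.real (ball3 (n+1) r j)) →
    D = D3 E (ball3 (n+1) r) → 0 < D → D ≤ η₀ → NC K D r E →
    ∃ L : Frame n, ∑ j, ∫ x, |len (inF L (E j)) x - len (Bq n (r j)) x| ≤ D - 2 * c * D := by
  rcases Nat.eq_zero_or_pos n with rfl | hn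
  · refine ⟨1, one_pos, 1 / 2, by norm_num, by norm_num, fun r E D hr hE hvol _ _ _ _ => ?_⟩
    obtain ⟨L⟩ := exists_frame 0
    refine ⟨L, ?_⟩
    rw [Finset.sum_eq_zero fun j _ => ?_]
    · linarith
    have hrj : 0 ≤ r j := by linarith [hr.lo j]
    have m1 := measurableSet_inF L (hE j).1
    have f1 : volume (inF L (E j)) ≠ ⊤ := by rw [volume_inF]; exact (hE j).2
    have h1 := integral_sub (integrable_len m1 f1)
      (integrable_len (measurableSet_Bq (n := 0) (r j)) (volume_Bq_ne_top hrj))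
    rw [integral_len m1 f1, integral_len (measurableSet_Bq _) (volume_Bq_ne_top hrj)] at h1
    have h2 : volume.real (inF L (E j)) = volume.real (Bq 0 (r j)) := by
      unfold Measure.real
      rw [volume_inF, volume_Bq hrj]; exact hvol j
    rw [h2, sub_self] at h1
    -- the integrands are constant: `Vec 0` is a single point
    have hc : ∀ f : Vec 0 → ℝ, ∫ x, f x = volume.real (univ : Set (Vec 0)) * f 0 := fun f => by
      rw [show f = fun _ => f 0 from funext fun x => congrArg f (Subsingleton.elim _ _), integral_const,
        smul_eq_mul]
    rw [hc] at h1 ⊢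
    rw [← abs_of_nonneg (measureReal_nonneg (μ := volume) (s := (univ : Set (Vec 0)))), ← abs_mul, h1,
      abs_zero]
  · obtain ⟨η₀, h0, c, hc, H⟩ := contraction hn hg hK
    refine ⟨η₀, h0, min c 1, by positivity, min_le_right _ _, fun r E D hr hE hvol hD hD0 hDη hnc => ?_⟩
    obtain ⟨j, hj⟩ : ∃ j, D / 3 ≤ sd (E j) (cb (n+1) (r j)) := by
      by_contra! h
      rw [D3, Fin.sum_univ_three] at hD
      unfold ball3 at hD
      linarith [h 0, h 1, h 2]
    obtain ⟨L, hL⟩ := H (E j) (r j) D (hE j).1 (hE j).2 (hvol j) (hr.lo j) (hr.hi j) hD0 hDη hj (hnc j)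
    refine ⟨L, ?_⟩
    have key : ∀ i, ∫ x, |len (inF L (E i)) x - len (Bq n (r i)) x| ≤
        sd (E i) (ball3 (n+1) r i) - (if i = j then 2 * (min c 1) * D else 0) := fun i => by
      have hri : 0 ≤ r i := by linarith [hr.lo i]
      rw [integral_abs_len_sub (measurableSet_inF L (hE i).1) (by rw [volume_inF]; exact (hE i).2)
        (measurableSet_Bq _) (volume_Bq_ne_top hri), ← inF_ball L hri, sd_inF]
      refine sub_le_sub le_rfl ?_
      split_ifs with hi
      · subst hi
        rw [inF_ball L hri]
        nlinarith [min_le_left c 1]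
      · exact mul_nonneg two_pos.le (integral_nonneg fun x => le_min (len_nonneg _ _) (len_nonneg _ _))
    refine (Finset.sum_le_sum fun i _ => key i).trans_eq ?_
    rw [Finset.sum_sub_distrib, Finset.sum_ite_eq' , hD, D3]
    simp

/-- Stability near the orbit: a near-optimal position of the triple cannot be improved, but
contraction followed by a shear would improve it unless the deficit is comparable to `dst ^ 2`. -/
lemma local_stability {g : ℝ} (hg : 0 < g) (hg1 : g ≤ 1) : ∃ η > 0, ∃ C > 0,
    ∀ (r : Fin 3 → ℝ) (E : Tri (Vec (n+1))), Adm g r → Fm E →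
    (∀ j, volume.real (E j) = volume.real (ball3 (n+1) r j)) → dst E r ≤ η →
    dst E r ^ 2 ≤ C * (T (ball3 (n+1) r) - T E) := by
  obtain ⟨K, hK, Hnc⟩ := nc_or (n := n) hg
  obtain ⟨η₁, hη₁, c, hc, hc1, Hcon⟩ := contract3 (n := n) hg hK
  obtain ⟨η₂, hη₂, C₂, hC₂, Hsh⟩ := shear_approx (n := n) hg hg1 hK hc
  set s₀ := 4 * C₂ / c + 1 with hs₀
  have hs1 : 1 ≤ s₀ := by rw [hs₀]; linarith [show 0 ≤ 4 * C₂ / c by positivity]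
  have hs0 : 0 < s₀ := by linarith
  refine ⟨min η₁ η₂ / 2, by positivity, s₀ ^ 2, by positivity, fun r E hr hE hvol hd => ?_⟩
  have hr0 : ∀ j, 0 ≤ r j := fun j => by linarith [hr.lo j]
  have hRS := riesz_sobolev hr0 hE hvol
  -- `s₀` is so large that a deficit below `(d / s₀)²` makes the error of the shear at most `c d / 4`
  by_contra hcon
  push Not at hcon
  set d := dst E r
  have hd0 : 0 < d := by
    refine (dst_nonneg E r).lt_of_ne fun h => ?_
    nlinarith
  obtain ⟨ψ, v, hm, hD⟩ := exists_near E r (D := (1 + c / 2) * d) (by nlinarith)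
  set F := mv ψ v E with hF
  have hFm : Fm F := Fm_mv hm hE
  have hFv : ∀ j, volume.real (F j) = volume.real (ball3 (n+1) r j) := fun j => by
    rw [hF, volume_mv hm, hvol]
  have hTF : T F = T E := T_mv hm E
  have hdD : d ≤ D3 F (ball3 (n+1) r) := dst_le hm E r
  set D := D3 F (ball3 (n+1) r) with hDd
  have hD2 : D ≤ min η₁ η₂ := by nlinarith
  rcases Hnc r F hr hFm hFv with h1 | hnc
  · rw [hTF] at h1
    nlinarith [mul_self_le_mul_self hd0.le hdD, mul_self_le_mul_self zero_le_one hs1]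
  -- contraction followed by a shear gives a position closer than `d`
  obtain ⟨L, hL⟩ := Hcon r F D hr hFm hFv hDd (by linarith) (hD2.trans (min_le_left _ _)) hnc
  have hBq : ∀ j, inF L (ball3 (n+1) r j) = Bq n (r j) := fun j => inF_ball L (hr0 j)
  have hDq : D = D3 (fun j => inF L (F j)) (fun j => Bq n (r j)) := by
    rw [hDd]; unfold D3
    exact Finset.sum_congr rfl fun j _ => by simp only [← hBq, sd_inF]
  obtain ⟨a, b, hb, hab⟩ := Hsh r (fun j => inF L (F j)) (d / s₀) D hr (Fm_inF L hFm) hDq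
    (fun j s h0 h1 => by
      rw [farq_inF L (F j) (hr0 j) s]
      unfold Measure.real
      rw [volume_inF]; exact hnc j s h0 h1)
    (hD2.trans (min_le_right _ _)) (by positivity) (by
      have h3 : T (fun j => St (inF L (F j))) = T (fun j => SL L (F j)) := by
        rw [← T_inF L]; simp only [inF_SL]
      have h4 := riesz_sobolev hr0 (Fm_SL L hFm) fun j => by
        rw [volume_SL L (hFm j).1 (hFm j).2, hFv]
      rw [h3, T_inF, hTF, div_pow, le_div_iff₀ (by positivity)]
      nlinarith [mul_le_mul_of_nonneg_left h4 (sq_nonneg s₀)])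
  obtain ⟨φ, w, hm', hφ⟩ := exists_shear_mov L a hb F
  have h5 := dst_le (hm.trans hm') E r
  rw [← mv_mv, ← hF, hφ, show ball3 (n+1) r = fun j => frm L ⁻¹' Bq n (r j) from
    funext fun j => (frm_preimage_Bq L (hr0 j)).symm, D3_preimage _ (mp_frm L)] at h5
  have h6 : C₂ * (d / s₀) ≤ c / 4 * d := by
    rw [mul_div_assoc', div_le_iff₀ hs0]
    have : c * s₀ = 4 * C₂ + c := by rw [hs₀]; field_simp
    nlinarith
  nlinarith

/-! ### From local to global stability -/

/-- No symmetrisation jumps over the forbidden zone: if triples whose distance to the orbit lies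
in `[η/2, η]` have deficit at least `2 * c₀`, a triple with deficit below `c₀` and distance
above `η` keeps distance above `η/2`, since it is joined to its symmetrisation by a path along
which `T` does not decrease. -/
lemma no_jump {r : Fin 3 → ℝ} {η c₀ : ℝ} (hη : 0 < η) (hc₀ : 0 < c₀)
    (H : ∀ F : Tri (Vec (n+1)), Fm F → (∀ j, volume.real (F j) = volume.real (ball3 (n+1) r j)) →
      η / 2 ≤ dst F r → dst F r ≤ η → 2 * c₀ ≤ T (ball3 (n+1) r) - T F)
    {E : Tri (Vec (n+1))} (hE : Fm E)
    (hvol : ∀ j, volume.real (E j) = volume.real (ball3 (n+1) r j)) (hdE : η < dst E r)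
    (hTE : T (ball3 (n+1) r) - T E < c₀) (L : Frame n) : η / 2 < dst (fun j => SL L (E j)) r := by
  set M := ∑ j, volume.real (ball3 (n+1) r j) + 1
  have hMj : ∀ j, volume.real (ball3 (n+1) r j) + 1 ≤ M := fun j =>
    add_le_add (Finset.single_le_sum (f := fun j => volume.real (ball3 (n+1) r j))
      (fun _ _ => measureReal_nonneg) (Finset.mem_univ j)) le_rfl
  have hM1 : 1 ≤ M := by
    linarith [hMj 0, measureReal_nonneg (μ := volume) (s := ball3 (n+1) r 0)]
  set ε := min (η / 32) (min 1 (c₀ / (5 * M)))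
  have hε0 : 0 < ε := by positivity
  have e1 : ε ≤ η / 32 := min_le_left _ _
  have e2 : ε ≤ 1 := (min_le_right _ _).trans (min_le_left _ _)
  have e3 : M * (5 * ε) ≤ c₀ := by
    have : ε ≤ c₀ / (5 * M) := (min_le_right _ _).trans (min_le_right _ _)
    rw [le_div_iff₀ (by positivity)] at this; linarith
  have hpull : ∀ {A : Tri (Vec n × ℝ)}, Fm A → Fm fun j => frm L ⁻¹' A j := fun hA =>
    Fm_preimage _ (mp_frm L) hA
  obtain ⟨G, hG1, hG, ⟨R, hGR⟩, hGE⟩ := exists_step_triple (Fm_inF L hE) hε0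
  have hGE' : D3 E (fun j => frm L ⁻¹' G j) < ε := by
    have := D3_preimage (frm L) (mp_frm L) (fun j => inF L (E j)) G
    simp only [preimage_inF] at this
    linarith
  have hGv : ∀ j, |volume.real (G j) - volume.real (ball3 (n+1) r j)| ≤ ε := fun j => by
    rw [← hvol j, ← volume_preimage _ (mp_frm L), abs_sub_comm]
    exact (abs_vol_sub_le (hE j).1 (hpull hG j).1 (hE j).2 (hpull hG j).2).trans
      ((sd_le_D3 E (fun j => frm L ⁻¹' G j) j).trans hGE'.le)
  let Q : (Tri (Vec n × ℝ)) → Prop := fun A =>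
    (∀ j, volume.real (A j) = volume.real (G j)) ∧ T G ≤ T A ∧ 3 * η / 4 < dst (fun j => frm L ⁻¹' A j) r
  have hTG : T E ≤ T G + M * ε := by
    have h1 := T_le_of_D3 hE (hpull hG) (M := M) (fun j => by rw [hvol j]; linarith [hMj j])
      (fun j => by
        rw [volume_preimage _ (mp_frm L)]
        linarith [hMj j, (abs_le.1 (hGv j)).2])
    rw [T_preimage _ (mp_frm L) (frm_add L)] at h1
    nlinarith
  have hQ : PathClosed Q := fun γ hγ ⟨q1, q2, q3⟩ => by
    have i1 : (1 : ℝ) ∈ Icc (0 : ℝ) 1 := ⟨zero_le_one, le_rfl⟩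
    refine ⟨fun j => by rw [hγ.vol 1 i1 j, q1], q2.trans (hγ.mono 1 i1), ?_⟩
    by_contra! hcon
    obtain ⟨Λ, hΛ⟩ := hγ.lip
    set f : ℝ → ℝ := fun s => dst (fun j => frm L ⁻¹' γ s j) r
    have hlip : ∀ s ∈ Icc (0 : ℝ) 1, ∀ t ∈ Icc (0 : ℝ) 1, f s ≤ f t + max Λ 0 * |s - t| := fun s hs t ht => by
      have h1 := dst_lip (hpull (hγ.fm s hs)) (hpull (hγ.fm t ht)) r
      rw [D3_preimage _ (mp_frm L)] at h1
      nlinarith [hΛ s hs t ht, le_max_left Λ 0, abs_nonneg (s - t)]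
    have hcont : ContinuousOn f (Icc 0 1) :=
      (LipschitzOnWith.of_le_add_mul' _ (fun s hs t ht => by
        rw [Real.dist_eq]; exact hlip s hs t ht)).continuousOn
    obtain ⟨s, hs, hs2⟩ := intermediate_value_Icc' zero_le_one hcont ⟨hcon, q3.le⟩
    have hA := hpull (hγ.fm s hs)
    have hAv : ∀ j, volume.real (frm L ⁻¹' γ s j) = volume.real (G j) := fun j => by
      rw [volume_preimage _ (mp_frm L), hγ.vol s hs j, q1]
    obtain ⟨R', _, -, F, f1, f2, f3, f4⟩ := exists_bounded_repair hA
      (fun j => by rw [hAv]; exact hGv j) hε0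
    have hF : Fm F := fun j => ⟨f1 j, measure_ne_top_of_subset (f2 j) measure_closedBall_lt_top.ne⟩
    have d1 := dst_lip hF hA r
    have d2 := dst_lip hA hF r
    have ec : D3 F (fun j => frm L ⁻¹' γ s j) = D3 (fun j => frm L ⁻¹' γ s j) F :=
      Finset.sum_congr rfl fun j _ => sd_comm _ _
    rw [ec] at d1
    change dst (fun j => frm L ⁻¹' γ s j) r = 3 * η / 4 at hs2
    have h3 := H F hF f3 (by linarith) (by linarith)
    have h4 := T_le_of_D3 hA hF (M := M)
      (fun j => by rw [hAv]; linarith [hMj j, (abs_le.1 (hGv j)).2])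
      (fun j => by rw [f3]; linarith [hMj j])
    rw [T_preimage _ (mp_frm L) (frm_add L)] at h4
    have h5 := q2.trans (hγ.mono s hs)
    have h6 : M * D3 (fun j => frm L ⁻¹' γ s j) F ≤ M * (4 * ε) := by gcongr; linarith
    linarith
  obtain ⟨-, -, hfin⟩ := flow_step hQ hG1 hGR ⟨fun _ => rfl, le_rfl, by
    linarith [dst_lip hE (hpull hG) r]⟩
  have h7 := dst_lip (hpull (Fm_St hG)) (Fm_SL L hE) r
  have h8 : D3 (fun j => frm L ⁻¹' St (G j)) (fun j => SL L (E j)) < ε := by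
    have h9 := D3_St_le hG (Fm_inF L hE)
    have h10 : D3 G (fun j => inF L (E j)) = D3 (fun j => inF L (E j)) G :=
      Finset.sum_congr rfl fun j _ => sd_comm _ _
    exact ((D3_preimage _ (mp_frm L) _ _).trans_le h9).trans_lt (by linarith)
  linarith

/-- Quantitative stability of the Riesz–Sobolev inequality for normalised radii. -/
lemma global_stability {g : ℝ} (hg : 0 < g) (hg1 : g ≤ 1) : ∃ c > 0,
    ∀ (r : Fin 3 → ℝ) (E : Tri (Vec (n+1))), Adm g r → Fm E →
    (∀ j, volume.real (E j) = volume.real (ball3 (n+1) r j)) →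
    c * dst E r ^ 2 ≤ T (ball3 (n+1) r) - T E := by
  obtain ⟨η, hη, C, hC, Hloc⟩ := local_stability (n := n) hg hg1
  set c₀ := η ^ 2 / (8 * C) with hc₀
  have hc0 : 0 < c₀ := by positivity
  set W := 6 * volume.real (cb (n+1) (1 / g))
  have hW0 : 0 < W := mul_pos (by norm_num) (closedBall_pos _ (by positivity))
  refine ⟨min (1 / C) (c₀ / W ^ 2), by positivity, fun r E hr hE hvol => ?_⟩
  have hr0 : ∀ j, 0 ≤ r j := fun j => by linarith [hr.lo j]
  rcases le_or_gt (dst E r) η with hd | hd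
  · calc _ ≤ 1 / C * dst E r ^ 2 := by gcongr; exact min_le_left _ _
      _ ≤ _ := by
        rw [one_div, inv_mul_le_iff₀ hC]; exact Hloc r E hr hE hvol hd
  have hzone : ∀ F : Tri (Vec (n+1)), Fm F →
      (∀ j, volume.real (F j) = volume.real (ball3 (n+1) r j)) →
      η / 2 ≤ dst F r → dst F r ≤ η → 2 * c₀ ≤ T (ball3 (n+1) r) - T F := fun F hF hFv h1 h2 => by
    have h3 := Hloc r F hr hF hFv h2
    rw [hc₀, mul_div_assoc', div_le_iff₀ (by positivity)]
    nlinarith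
  -- otherwise all iterated symmetrizations stay outside the zone, while some come close to the balls
  have hdef : c₀ ≤ T (ball3 (n+1) r) - T E := by
    by_contra! hcon
    set M := ∑ j, volume.real (ball3 (n+1) r j)
    have hMj : ∀ j, volume.real (ball3 (n+1) r j) ≤ M := fun j =>
      Finset.single_le_sum (f := fun j => volume.real (ball3 (n+1) r j))
        (fun _ _ => measureReal_nonneg) (Finset.mem_univ j)
    have hM0 : 0 ≤ M := measureReal_nonneg.trans (hMj 0)
    set t := c₀ - (T (ball3 (n+1) r) - T E)
    obtain ⟨R, hR, hrR, E', m1, m2, m3, m4⟩ := exists_bounded_repair hE (δ := 0)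
      (fun j => by rw [hvol j, sub_self, abs_zero]) (ε := min (dst E r - η) (t / (M + 1)))
      (lt_min (by linarith) (div_pos (by linarith) (by linarith)))
    rw [mul_zero, zero_add] at m4
    have hFm : ∀ F : Tri (Vec (n+1)), (∀ j, MeasurableSet (F j)) →
        (∀ j, F j ⊆ cb (n+1) R) → Fm F := fun F h1 h2 j =>
      ⟨h1 j, measure_ne_top_of_subset (h2 j) measure_closedBall_lt_top.ne⟩
    have k1 := dst_lip hE (hFm E' m1 m2) r
    have k2 := T_le_of_D3 hE (hFm E' m1 m2) (M := M) (fun j => by rw [hvol]; exact hMj j)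
      (fun j => by rw [m3]; exact hMj j)
    have k3 := m4.trans_le (min_le_left _ _)
    have k4 := m4.trans_le (min_le_right _ _)
    rw [lt_div_iff₀ (by linarith)] at k4
    obtain ⟨F, ⟨-, -, -, f4, -⟩, hF⟩ := exists_near_ball hr0 hR hrR
      (fun F => (∀ j, MeasurableSet (F j)) ∧ (∀ j, F j ⊆ cb (n+1) R) ∧
        (∀ j, volume.real (F j) = volume.real (ball3 (n+1) r j)) ∧ η < dst F r ∧
        T (ball3 (n+1) r) - T F < c₀)
      (fun _ h => h.1) (fun _ h => h.2.1) (fun _ h => h.2.2.1)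
      (fun F ⟨h1, h2, h3, h4, h5⟩ L => by
        have hF := hFm F h1 h2
        have hS := Fm_SL L hF
        have hv : ∀ j, volume.real (SL L (F j)) = volume.real (ball3 (n+1) r j) := fun j => by
          rw [volume_SL L (h1 j) (hF j).2]; exact h3 j
        have hT := T_le_SL L hF
        refine ⟨fun j => (hS j).1, fun j => SL_subset_ball L hR.le (h2 j), hv, ?_, by linarith⟩
        by_contra! h6
        have h7 := no_jump hη hc0 hzone hF h3 h4 h5 L
        linarith [hzone _ hS hv h7.le h6])
      ⟨m1, m2, m3, by linarith, by
        have := D3_nonneg E E'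
        nlinarith⟩ hη
    linarith [dst_le_D3 F r]
  have hdW : dst E r ≤ W := by
    refine (dst_le_D3 E r).trans ?_
    have : ∀ j, sd (E j) (ball3 (n+1) r j) ≤ 2 * volume.real (cb (n+1) (1 / g)) :=
      fun j => by
        have h1 : volume.real (ball3 (n+1) r j) ≤ volume.real (cb (n+1) (1 / g)) :=
          measureReal_mono (closedBall_subset_closedBall (hr.hi j)) measure_closedBall_lt_top.ne
        have h2 : sd (E j) (ball3 (n+1) r j) ≤ volume.real (E j ∪ ball3 (n+1) r j) :=
          measureReal_mono (fun x hx => hx.imp (·.1) (·.1))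
            (measure_union_lt_top (hE j).2.lt_top (Fm_ball3 r j).2.lt_top).ne
        linarith [measureReal_union_le (μ := volume) (E j) (ball3 (n+1) r j), hvol j]
    unfold D3
    rw [Fin.sum_univ_three]
    linarith [this 0, this 1, this 2]
  have hd0 := dst_nonneg E r
  calc _ ≤ c₀ / W ^ 2 * dst E r ^ 2 := by gcongr; exact min_le_right _ _
    _ ≤ c₀ / W ^ 2 * W ^ 2 := by gcongr
    _ = c₀ := by field_simp
    _ ≤ _ := hdef

/-! ### Dilations, and the passage to convolutions -/

/-- The dilate `l⁻¹ E`, written as a preimage. -/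
def sc {m : ℕ} (l : ℝ) (E : Set (Vec m)) : Set (Vec m) := (fun x => l • x) ⁻¹' E

section scaling
variable {m : ℕ} {l : ℝ}

lemma volume_sc (hl : 0 < l) (E : Set (Vec m)) :
    volume.real (sc l E) = (l ^ m)⁻¹ * volume.real E := by
  rw [sc, measureReal_def, addHaar_preimage_smul _ hl.ne', toReal_mul,
    finrank_euclideanSpace_fin, toReal_ofReal (by positivity),
    abs_of_pos (by positivity), measureReal_def]

lemma sd_sc (hl : 0 < l) (E F : Set (Vec m)) : sd (sc l E) (sc l F) = (l ^ m)⁻¹ * sd E F :=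
  volume_sc hl (symmDiff E F)

lemma Fm_sc (hl : 0 < l) {E : Tri (Vec m)} (hE : Fm E) : Fm (fun j => sc l (E j)) :=
  fun j => ⟨measurable_const_smul l (hE j).1, by
    show volume ((fun x => l • x) ⁻¹' E j) ≠ ⊤
    rw [addHaar_preimage_smul _ hl.ne']
    exact mul_ne_top ofReal_ne_top (hE j).2⟩

lemma T_sc (hl : 0 < l) (E : Tri (Vec m)) :
    T (fun j => sc l (E j)) = (l ^ (2 * m))⁻¹ * T E := by
  have : (volume : Measure (Vec m × Vec m)).IsAddHaarMeasure :=
    inferInstanceAs ((volume : Measure (Vec m)).prod (volume : Measure (Vec m))).IsAddHaarMeasure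
  have h := integral_comp_smul (volume : Measure (Vec m × Vec m))
    (fun p => one (E 0) p.1 * one (E 1) p.2 * one (E 2) (-(p.1 + p.2))) l
  rw [Module.finrank_prod, finrank_euclideanSpace_fin, ← two_mul, abs_of_pos (by positivity),
    smul_eq_mul] at h
  rw [T, tri, T, tri, ← h]
  refine integral_congr_ae (.of_forall fun p => ?_)
  have e : ∀ j x, one (sc l (E j)) x = one (E j) (l • x) := fun j x => rfl
  simp [*]

lemma sc_ball (hl : 0 < l) (R : ℝ) :
    sc l (cb m R) = cb m (R / l) := by
  ext x
  simp only [sc, mem_preimage, mem_closedBall_zero_iff, norm_smul, Real.norm_eq_abs,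
    abs_of_pos hl, le_div_iff₀ hl, mul_comm l]

end scaling

section convolution
variable {m : ℕ} {E : Tri (Vec m)}

/-- The triple `(E₁, E₂, -E₃)`, for which `T` is the integral of a convolution over `E₃`. -/
def tw (E : Tri (Vec m)) : Tri (Vec m) := ![E 0, E 1, Neg.neg ⁻¹' E 2]

lemma Fm_tw (hE : Fm E) : Fm (tw E) := by
  intro j
  fin_cases j
  · exact hE 0
  · exact hE 1
  · exact ⟨measurable_neg (hE 2).1, by
      show volume (Neg.neg ⁻¹' E 2) ≠ ⊤
      rw [measure_preimage_neg]; exact (hE 2).2⟩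

lemma volume_tw (E : Tri (Vec m)) (j : Fin 3) :
    volume.real (tw E j) = volume.real (E j) := by
  fin_cases j
  · rfl
  · rfl
  · show volume.real (Neg.neg ⁻¹' E 2) = _
    rw [measureReal_def, measure_preimage_neg]; rfl

lemma tw_ball3 (r : Fin 3 → ℝ) : tw (ball3 m r) = ball3 m r := by
  funext j
  fin_cases j
  · rfl
  · rfl
  · ext x; simp [tw, ball3]

lemma conv_eq_T (hE : Fm E) : ∫ x in E 2, conv (ind (E 0)) (ind (E 1)) x = T (tw E) := by
  have h := (Fm_tw hE).nice
  have e : T (tw E) = tri (one (tw E 2)) (one (E 0)) (one (E 1)) := by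
    rw [T, tri_swap12, tri_swap01]; rfl
  rw [e, tri_eq_iter (h 2) (hE.nice 0) (hE.nice 1), ← integral_indicator (hE 2).1,
    ← integral_neg_eq_self (fun x => one (tw E 2) x * _)]
  refine integral_congr_ae (.of_forall fun x => ?_)
  have e2 : one (tw E 2) (-x) = one (E 2) x := by
    show (Neg.neg ⁻¹' E 2).indicator _ (-x) = (E 2).indicator _ x
    by_cases hx : x ∈ E 2 <;> simp [indicator, hx]
  have e1 : ∀ y, -(-x + y) = x - y := fun y => by abel
  simp only [e2, e1]
  by_cases hx : x ∈ E 2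
  · rw [indicator_of_mem hx, one_mem hx, one_mul]; rfl
  · rw [indicator_of_notMem hx, one_notMem hx, zero_mul]

lemma sd_image_af {ψ : Vec m ≃ₗ[ℝ] Vec m} (h : MeasurePreserving ψ) (w : Vec m)
    (A B : Set (Vec m)) : sd A ((fun y => ψ y + w) '' B) = sd (af ψ w ⁻¹' A) B := by
  rw [← sd_preimage _ (mp_af h w) A]
  congr 1
  exact preimage_image_eq B (af ψ w).injective

/-- A symmetry of the trilinear form moving `(E₁, E₂, -E₃)` close to the balls competes in the
infimum defining the distance; the sign of the third translation is flipped. -/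
lemma tripleDistance_le {ψ : Vec m ≃ₗ[ℝ] Vec m} {v : Fin 3 → Vec m} (h : Mov ψ v)
    (r : Fin 3 → ℝ) : tripleDistance E (ball3 m r) ≤ D3 (mv ψ v (tw E)) (ball3 m r) := by
  have hneg : ∀ x, MeasurableEquiv.neg (Vec m) x = -x := fun x => rfl
  have h2 : sd (E 2) ((fun y => ψ y + (-v 2)) '' ball3 m r 2)
      = sd (af ψ (v 2) ⁻¹' tw E 2) (ball3 m r 2) := by
    rw [← sd_image_af h.mp, ← sd_preimage (MeasurableEquiv.neg (Vec m))
      (measurePreserving_neg _) (E 2)]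
    congr 1
    ext x
    simp only [mem_preimage, mem_image, ball3, mem_closedBall_zero_iff, hneg]
    constructor
    · rintro ⟨y, hy, hx⟩
      exact ⟨-y, by rwa [norm_neg], by rw [map_neg, ← neg_inj, ← hx]; abel⟩
    · rintro ⟨y, hy, hx⟩
      exact ⟨-y, by rwa [norm_neg], by rw [map_neg, ← hx]; abel⟩
  have hs : D3 (mv ψ v (tw E)) (ball3 m r) = sd (E 0) ((fun y => ψ y + v 0) '' ball3 m r 0)
      + sd (E 1) ((fun y => ψ y + v 1) '' ball3 m r 1)
      + sd (E 2) ((fun y => ψ y + (-v 2)) '' ball3 m r 2) := by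
    rw [D3, Fin.sum_univ_three, h2, sd_image_af h.mp, sd_image_af h.mp]; rfl
  have n0 := sd_nonneg (E 0) ((fun y => ψ y + v 0) '' ball3 m r 0)
  have n1 := sd_nonneg (E 1) ((fun y => ψ y + v 1) '' ball3 m r 1)
  have n2 := sd_nonneg (E 2) ((fun y => ψ y + (-v 2)) '' ball3 m r 2)
  refine csInf_le_of_le (b := max (sd (E 0) ((fun y => ψ y + v 0) '' ball3 m r 0))
    (max (sd (E 1) ((fun y => ψ y + v 1) '' ball3 m r 1))
      (sd (E 2) ((fun y => ψ y + (-v 2)) '' ball3 m r 2))))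
    ⟨0, ?_⟩ ⟨ψ, ![v 0, v 1, -v 2], ?_, h.mp, rfl⟩ ?_
  · rintro _ ⟨_, _, _, _, rfl⟩
    simp
  · show -v 2 = v 0 + v 1
    exact (eq_neg_of_add_eq_zero_left h.sum).symm
  · rw [hs]
    exact max_le (by linarith) (max_le (by linarith) (by linarith))

lemma tripleDistance_nonneg (E F : Tri (Vec m)) : 0 ≤ tripleDistance E F := by
  refine Real.sInf_nonneg ?_
  rintro _ ⟨_, _, _, _, rfl⟩
  simp

lemma tripleDistance_le_dst {l : ℝ} (hl : 0 < l) (R : Fin 3 → ℝ) :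
    tripleDistance E (ball3 m R)
      ≤ l ^ m * dst (fun j => sc l (tw E j)) (fun j => R j / l) := by
  have hp : 0 < l ^ m := by positivity
  rw [← div_le_iff₀' hp]
  refine le_of_forall_gt_imp_ge_of_dense fun D hD => ?_
  obtain ⟨ψ, v, hm, h⟩ := exists_near _ _ hD
  have hm' : Mov ψ (fun j => l • v j) := ⟨hm.mp, by rw [← smul_add, ← smul_add, hm.sum, smul_zero]⟩
  have e : D3 (mv ψ v fun j => sc l (tw E j)) (ball3 m fun j => R j / l)
      = (l ^ m)⁻¹ * D3 (mv ψ (fun j => l • v j) (tw E)) (ball3 m R) := by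
    rw [D3, D3, Finset.mul_sum]
    refine Finset.sum_congr rfl fun j _ => ?_
    rw [← sd_sc hl]
    congr 1
    · ext x
      simp only [mv, sc, mem_preimage, af_apply, smul_add, map_smul]
    · exact (sc_ball hl _).symm
  have h3 := tripleDistance_le (E := E) hm' R
  rw [e, inv_mul_lt_iff₀ hp] at h
  rw [div_le_iff₀' hp]
  linarith

end convolution

lemma adm_of_strict {ρ : ℝ} (hρ : 0 < ρ) {R : Fin 3 → ℝ} (h : RhoStrictlyAdmissible ρ R) :
    ρ ≤ 1 ∧ Adm (ρ ^ 2) (fun j => R j / R 0) := by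
  obtain ⟨hp, ht, hm⟩ := h
  have h0 := hp 0
  have h1 : ρ ≤ 1 := by
    have := hm 0 0
    by_contra! hc
    nlinarith
  have hlo : ∀ j, ρ ≤ R j / R 0 := fun j => by rw [le_div_iff₀ h0]; exact hm 0 j
  have hhi : ∀ j, R j / R 0 ≤ 1 / ρ := fun j => by
    rw [div_le_div_iff₀ h0 hρ]; linarith [hm j 0]
  have key : ∀ i j k : Fin 3, ({i, j, k} : Set (Fin 3)) = Set.univ →
      ρ ^ 2 ≤ R i / R 0 + R j / R 0 - R k / R 0 := by
    intro i j k hk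
    have := ht i j k hk
    rw [← add_div, ← sub_div, le_div_iff₀ h0]
    nlinarith [hm 0 i, hp j, mul_le_mul_of_nonneg_left (hm 0 i) hρ.le,
      mul_pos hρ (hp j)]
  have sq : ρ ^ 2 ≤ ρ := by nlinarith
  refine ⟨h1, fun j => sq.trans (hlo j), fun j => (hhi j).trans ?_, key 0 1 2 ?_, key 0 2 1 ?_,
    key 1 2 0 ?_⟩
  · gcongr
  all_goals
    ext x
    fin_cases x <;> simp

end RS

open RS in
/-- A sharpened Riesz–Sobolev inequality. -/
theorem sharpened_riesz_sobolev (d : ℕ) (hd : 1 ≤ d) (ρ : ℝ) (hρ : 0 < ρ) :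
    ∃ c > (0 : ℝ), ∀ E : Fin 3 → Set (Vec d),
      (∀ j, MeasurableSet (E j)) → (∀ j, volume (E j) ≠ ⊤) →
      RhoStrictlyAdmissible ρ (fun j => (volume (E j)).toReal ^ ((1 : ℝ) / d)) →
      ∫ x in E 2, conv (ind (E 0)) (ind (E 1)) x ≤
        (∫ x in ballStar (E 2), conv (ind (ballStar (E 0))) (ind (ballStar (E 1))) x)
          - c * (tripleDistance E (fun j => ballStar (E j))) ^ 2 := by
  by_cases hρ1 : ρ ≤ 1
  swap
  · exact ⟨1, one_pos, fun E _ _ h => absurd (adm_of_strict hρ h).1 hρ1⟩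
  obtain ⟨n, rfl⟩ : ∃ n, d = n + 1 := ⟨d - 1, by omega⟩
  obtain ⟨c, hc, H⟩ := global_stability (n := n) (g := ρ ^ 2) (by positivity)
    (pow_le_one₀ hρ.le hρ1)
  refine ⟨c, hc, fun E hmE hvE hadm => ?_⟩
  have hE : Fm E := fun j => ⟨hmE j, hvE j⟩
  set ω := (volume (Metric.closedBall (0 : Vec (n + 1)) 1)).toReal
  have hω0 : 0 < ω := closedBall_pos 0 one_pos
  set R : Fin 3 → ℝ := fun j => ((volume (E j)).toReal / ω) ^ ((1 : ℝ) / (n + 1 : ℕ)) with hR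
  -- The radii of the balls are a fixed multiple of the given admissible triple.
  have hRe : ∀ j, R j = (volume (E j)).toReal ^ ((1 : ℝ) / (n + 1 : ℕ))
      / ω ^ ((1 : ℝ) / (n + 1 : ℕ)) :=
    fun j => Real.div_rpow ENNReal.toReal_nonneg hω0.le _
  have hωp : 0 < ω ^ ((1 : ℝ) / (n + 1 : ℕ)) := Real.rpow_pos_of_pos hω0 _
  have hRpos : ∀ j, 0 < R j := fun j => by rw [hRe]; exact div_pos (hadm.1 j) hωp
  have hball : (fun j => ballStar (E j)) = ball3 (n + 1) R := rfl
  have hA : Adm (ρ ^ 2) (fun j => R j / R 0) := by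
    have h := (adm_of_strict hρ hadm).2
    grind
  set l := R 0
  have hl0 : 0 < l := hRpos 0
  have hvol : ∀ j, volume.real (E j) = volume.real (cb (n + 1) (R j)) := by
    intro j
    rw [cb, Measure.addHaar_real_closedBall' _ _ (hRpos j).le, finrank_euclideanSpace_fin, hR,
      ← Real.rpow_natCast, ← Real.rpow_mul (by positivity), one_div,
      inv_mul_cancel₀ (by positivity), Real.rpow_one]
    exact (div_mul_cancel₀ _ hω0.ne').symm
  have key := H (fun j => R j / l) (fun j => sc l (tw E j)) hA (Fm_sc hl0 (Fm_tw hE)) fun j => by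
    rw [volume_sc hl0, volume_tw, hvol, ← volume_sc hl0, sc_ball hl0]; rfl
  have eb : ball3 (n + 1) (fun j => R j / l) = fun j => sc l (ball3 (n + 1) R j) := by
    funext j; exact (sc_ball hl0 _).symm
  rw [eb, T_sc hl0, T_sc hl0, ← mul_sub, le_inv_mul_iff₀ (by positivity)] at key
  have hd := tripleDistance_le_dst (E := E) hl0 R
  have hn := tripleDistance_nonneg E (ball3 (n + 1) R)
  have hb := conv_eq_T (Fm_ball3 (n := n + 1) R)
  rw [tw_ball3] at hb
  rw [hball, conv_eq_T hE]
  have hb' : (∫ x in ballStar (E 2), conv (ind (ballStar (E 0))) (ind (ballStar (E 1))) x)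
    = T (ball3 (n + 1) R) := hb
  rw [hb']
  have sq : tripleDistance E (ball3 (n + 1) R) ^ 2
      ≤ l ^ (2 * (n + 1)) * dst (fun j => sc l (tw E j)) (fun j => R j / l) ^ 2 := by
    refine (pow_le_pow_left₀ hn hd 2).trans (le_of_eq ?_)
    rw [mul_pow, ← pow_mul, mul_comm (n + 1) 2]
  nlinarith
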